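/- Let r, d, s, π be integers with r ≥ 4, r−1 ≤ s ≤ 2r−4, 0 ≤ π ≤ π₀ := s−r+1, and d > d₀(r). Let C ⊂ P^r be an irreducible, reduced, nondegenerate projective curve of degree d, not contained in any surface of degree < s and not contained in any surface of degree s with sectional genus > π. Then the arithmetic genus of C satisfies p_a(C) ≤ G*(r,d,s,π, −binom(π₀−π+1, 2)). -/

import Mathlib

/-!
The genus of `C` is controlled by its general hyperplane section `Γ ⊂ ℙ^{r-1}`: if `h` is the
Hilbert function of `Γ`, then `p_a(C) ≤ ∑ (d - h i)`, so lower bounds for `h` are needed.  The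
general hyperplane is replaced by the generic one, with indeterminate coefficients `u`; the points
of `Γ` are then conjugate, their coordinates generate a single field extension of degree `d`, and
the pieces of the coordinate ring of `Γ` are the powers `V^i` of a finite dimensional subspace `V`
of this field.

A weak form of Green's theorem (`baby_green`) shows that the increments of `h` do not increase once
the increment from `q` to `q + 1` is at most `q + 1`.

* If no increment `σ ≤ s` repeats three times in a row in that range, then `h` grows so fast that,
  above the threshold `d0`, a numerical estimate (`caseC`) gives the bound.
* If such a plateau of height `σ ≤ s` occurs, then the equations of low degree of `Γ` cut out a
  curve of degree at most `σ`.  Differentiating these equations with respect to `u` shows that they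
  come from equations of `C`, so that `C` lies on a surface of degree at most `σ`
  (`exists_surface`).  By hypothesis that surface has degree `s` and sectional genus `p ≤ π`.

In the second case `Γ` lies on the generic section `D` of the surface, a curve of degree `s` and
genus `p`.  Since the monodromy of a generic section leaves no intermediate field
(`GenSec.noStab`), the linear Cauchy–Davenport theorem bounds the Hilbert function of the section
of `D` from below, which yields that of `D` (`curve_hf`, `GenSec.step_persist`).  Up to degree
`m = (d - 1) / s` the Hilbert functions of `Γ` and `D` are compared through the points of `Γ` as a
divisor on `D`; in degree `m + 1` the defect is bounded by Clifford's inequality (`clifford`).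
Summing up (`caseD_num`) gives `G*`.
-/

open scoped BigOperators

noncomputable section

/-- The homogeneous coordinate ring of `ℙ^{n-1}` over `ℂ`: polynomials in `n` variables. -/
abbrev MPoly (n : ℕ) : Type := MvPolynomial (Fin n) ℂ

/-- An ideal is homogeneous if it contains all homogeneous components of its members. -/
def IsHomogIdeal {n : ℕ} (I : Ideal (MPoly n)) : Prop :=
  ∀ f ∈ I, ∀ k : ℕ, MvPolynomial.homogeneousComponent k f ∈ I

/-- The degree-`k` graded piece of the homogeneous coordinate ring of the subscheme `V(I)`. -/
def degQ {n : ℕ} (I : Ideal (MPoly n)) (k : ℕ) : Submodule ℂ (MPoly n ⧸ I) :=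
  (MvPolynomial.homogeneousSubmodule (Fin n) ℂ k).map (Ideal.Quotient.mkₐ ℂ I).toLinearMap

/-- The graded pieces, indexed by `ℤ` (zero in negative degrees). -/
def degQZ {n : ℕ} (I : Ideal (MPoly n)) (t : ℤ) : Submodule ℂ (MPoly n ⧸ I) :=
  if 0 ≤ t then degQ I t.toNat else ⊥

/-- The Hilbert function of the closed subscheme `V(I) ⊆ ℙ^{n-1}`. -/
def hilbNat {n : ℕ} (I : Ideal (MPoly n)) (t : ℤ) : ℕ :=
  Module.finrank ℂ (degQZ I t)

/-- The Hilbert function, as an integer-valued function. -/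
def hilbZ {n : ℕ} (I : Ideal (MPoly n)) (t : ℤ) : ℤ := (hilbNat I t : ℤ)

/-- The irrelevant maximal ideal `(x_0, …, x_{n-1})`. -/
def mId (n : ℕ) : Ideal (MPoly n) := Ideal.span (Set.range MvPolynomial.X)

/-- The space of degree-`t` graded module homomorphisms `m^k → R/I`. -/
def gradedHomSub {n : ℕ} (I : Ideal (MPoly n)) (k : ℕ) (t : ℤ) :
    Submodule ℂ ((mId n ^ k : Ideal (MPoly n)) →ₗ[MPoly n] (MPoly n ⧸ I)) where
  carrier := {φ | ∀ (j : ℕ) (f : MPoly n) (hf : f ∈ mId n ^ k),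
    f ∈ MvPolynomial.homogeneousSubmodule (Fin n) ℂ j → φ ⟨f, hf⟩ ∈ degQZ I ((j : ℤ) + t)}
  add_mem' := by
    intro a b ha hb j f hf hj
    simpa using Submodule.add_mem _ (ha j f hf hj) (hb j f hf hj)
  zero_mem' := by
    intro j f hf hj
    simpa using Submodule.zero_mem _
  smul_mem' := by
    intro c φ hφ j f hf hj
    simpa using Submodule.smul_mem _ c (hφ j f hf hj)

/-- `h⁰(X, 𝒪_X(t))` for `X = V(I)`: the stable value of the dimensions of the graded Hom
modules `Hom(m^k, R/I)_t` (the Deligne formula for twisted global sections). -/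
def h0Nat {n : ℕ} (I : Ideal (MPoly n)) (t : ℤ) : ℕ :=
  ⨆ k : ℕ, Module.finrank ℂ (gradedHomSub I k t)

/-- `h¹(ℙ^{n-1}, 𝓘_X(t)) = h⁰(X, 𝒪_X(t)) − h_X(t)` (valid for the saturated ideal of `X`). -/
def h1INat {n : ℕ} (I : Ideal (MPoly n)) (t : ℤ) : ℕ := h0Nat I t - hilbNat I t

/-- The dimension over `ℂ` of the Hartshorne–Rao module `M(X) = ⊕_t H¹(ℙ, 𝓘_X(t))`. -/
def raoDim {n : ℕ} (I : Ideal (MPoly n)) : ℕ := ∑ᶠ t : ℤ, h1INat I t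

/-- Arithmetically Cohen–Macaulay (for an integral curve): the Hartshorne–Rao module vanishes. -/
def IsACM {n : ℕ} (I : Ideal (MPoly n)) : Prop := ∀ t : ℤ, h0Nat I t = hilbNat I t

/-- Saturation of an ideal with respect to the irrelevant maximal ideal. -/
def satIdeal {n : ℕ} (I : Ideal (MPoly n)) : Ideal (MPoly n) where
  carrier := {f | ∃ k : ℕ, ∀ j : Fin n, MvPolynomial.X j ^ k * f ∈ I}
  zero_mem' := ⟨0, fun j => by simpa using I.zero_mem⟩
  add_mem' := by
    rintro f g ⟨k, hk⟩ ⟨l, hl⟩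
    refine ⟨k + l, fun j => ?_⟩
    have h1 : MvPolynomial.X (R := ℂ) j ^ (k + l) * (f + g)
        = MvPolynomial.X j ^ l * (MvPolynomial.X j ^ k * f)
          + MvPolynomial.X j ^ k * (MvPolynomial.X j ^ l * g) := by ring
    rw [h1]
    exact I.add_mem (I.mul_mem_left _ (hk j)) (I.mul_mem_left _ (hl j))
  smul_mem' := by
    rintro c f ⟨k, hk⟩
    refine ⟨k, fun j => ?_⟩
    have h1 : MvPolynomial.X (R := ℂ) j ^ k * (c • f) = c * (MvPolynomial.X j ^ k * f) := by
      rw [smul_eq_mul]; ring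
    rw [h1]
    exact I.mul_mem_left _ (hk j)

/-- The hyperplane section of `V(I)` by the hyperplane `{ℓ = 0}`, as a closed subscheme
(its saturated homogeneous ideal). -/
def sect {n : ℕ} (I : Ideal (MPoly n)) (ℓ : MPoly n) : Ideal (MPoly n) :=
  satIdeal (I ⊔ Ideal.span {ℓ})

/-- A property `P` holds for a *general* `k`-tuple of linear forms (hyperplanes): it holds on a
nonempty Zariski-open subset of the space of coefficients. -/
def GenericForms (n k : ℕ) (P : (Fin k → MPoly n) → Prop) : Prop :=
  ∃ Q : MvPolynomial (Fin k × Fin n) ℂ, Q ≠ 0 ∧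
    ∀ c : Fin k → Fin n → ℂ, MvPolynomial.eval (fun p => c p.1 p.2) Q ≠ 0 →
      P fun t => ∑ j : Fin n, MvPolynomial.C (c t j) * MvPolynomial.X j

/-- `V(I) ⊆ ℙ^{n-1}` is nondegenerate: contained in no hyperplane. -/
def Nondeg {n : ℕ} (I : Ideal (MPoly n)) : Prop :=
  ∀ f ∈ MvPolynomial.homogeneousSubmodule (Fin n) ℂ 1, f ∈ I → f = 0

/-- `V(I)` is an integral curve: `I` homogeneous prime, with cone of Krull dimension 2. -/
def IsCurve {n : ℕ} (I : Ideal (MPoly n)) : Prop :=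
  IsHomogIdeal I ∧ I.IsPrime ∧ ringKrullDim (MPoly n ⧸ I) = 2

/-- `V(I)` is an integral surface: `I` homogeneous prime, with cone of Krull dimension 3. -/
def IsSurface {n : ℕ} (I : Ideal (MPoly n)) : Prop :=
  IsHomogIdeal I ∧ I.IsPrime ∧ ringKrullDim (MPoly n ⧸ I) = 3

/-- The curve `V(I)` has degree `d` and arithmetic genus `g`: its Hilbert polynomial is
`d·t + 1 − g`. -/
def CurveInv {n : ℕ} (I : Ideal (MPoly n)) (d g : ℤ) : Prop :=
  ∃ N : ℤ, ∀ t : ℤ, N ≤ t → hilbZ I t = d * t + 1 - g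

/-- The surface `V(I)` has degree `s`, sectional genus `π` and arithmetic genus `pa`:
its Hilbert polynomial is `s·choose(t+1, 2) + (1 − π)·t + 1 + pa`. -/
def SurfInv {n : ℕ} (I : Ideal (MPoly n)) (s π pa : ℤ) : Prop :=
  ∃ N : ℤ, ∀ t : ℤ, N ≤ t → hilbZ I t = s * (t * (t + 1) / 2) + (1 - π) * t + 1 + pa

/-- `V(IC)` is not contained in any integral surface of degree `< s`. -/
def NotInSurfDegLT {n : ℕ} (IC : Ideal (MPoly n)) (s : ℤ) : Prop :=
  ∀ (T : Ideal (MPoly n)) (s' π' pa' : ℤ), IsSurface T → SurfInv T s' π' pa' → s' < s →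
    ¬ T ≤ IC

/-- `V(IC)` is not contained in any integral surface of degree `s` with sectional genus `> π`. -/
def NotInSurfSecGT {n : ℕ} (IC : Ideal (MPoly n)) (s π : ℤ) : Prop :=
  ∀ (T : Ideal (MPoly n)) (π' pa' : ℤ), IsSurface T → SurfInv T s π' pa' → π < π' →
    ¬ T ≤ IC

/-- `V(IC)` is not contained in any integral surface of degree `s` with arithmetic genus `< p`. -/
def NotInSurfGenLT {n : ℕ} (IC : Ideal (MPoly n)) (s p : ℤ) : Prop :=
  ∀ (T : Ideal (MPoly n)) (π' pa' : ℤ), IsSurface T → SurfInv T s π' pa' → pa' < p →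
    ¬ T ≤ IC

/-- `binom2 z = z.choose 2` for integers. -/
def binom2 (z : ℤ) : ℤ := z * (z - 1) / 2

/-- The bound `G*(r,d,s,π,p)` of Di Gennaro–Franco, with `m = (d-1)/s`, `ε = (d-1) % s`. -/
def Gstar (r d s π p : ℤ) : ℤ :=
  binom2 ((d - 1) / s) * s + ((d - 1) / s) * ((d - 1) % s + π) - p
    + max 0 ((2 * π - (s - 1 - (d - 1) % s)) / 2)

/-- The numerical function `h_{r,d,s,π}`. -/
def hF (r d s π : ℤ) (i : ℤ) : ℤ :=
  if 1 ≤ i ∧ i ≤ (d - 1) / s then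
    1 - π + i * s - max 0 ((s - r + 1) - π - i + 1)
  else if i = (d - 1) / s + 1 then
    d - max 0 ((2 * π - (s - 1 - (d - 1) % s)) / 2)
  else if (d - 1) / s + 2 ≤ i then d
  else 0

/-- The threshold `d₀(r)`. -/
def d0 (r : ℤ) : ℤ :=
  if r ≤ 6 then 16 * (r - 2) * (2 * r - 3)
  else if r ≤ 11 then 8 * (r - 2) ^ 3
  else 2 ^ (r.toNat + 1)

end
noncomputable section

/-- The affine cone of `V(I)`: common zeroes of the elements of `I`. -/
def zeroCone {n : ℕ} (I : Ideal (MPoly n)) : Set (Fin n → ℂ) :=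
  {a | ∀ f ∈ I, MvPolynomial.eval a f = 0}

/-- Jacobian-criterion smoothness: at every nonzero point of the affine cone (of dimension `c`)
the gradients of the equations span a subspace of dimension `n - c`. -/
def IsSmooth {n : ℕ} (I : Ideal (MPoly n)) (c : ℕ) : Prop :=
  ∀ a ∈ zeroCone I, a ≠ 0 →
    Module.finrank ℂ (Submodule.span ℂ
      {g : Fin n → ℂ | ∃ f ∈ I, g = fun j => MvPolynomial.eval a (MvPolynomial.pderiv j f)})
      = n - c

/-- Castelnuovo's bound for the genus of a nondegenerate integral curve of degree `d`
in `ℙ^R`. -/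
def castelG (R d : ℤ) : ℤ :=
  binom2 ((d - 1) / (R - 1)) * (R - 1) + ((d - 1) / (R - 1)) * ((d - 1) % (R - 1))

/-- The ideal of the projective cone (from `ℙ^{n-1}` to `ℙ^n`) over `V(I)`. -/
def coneIdeal {n : ℕ} (I : Ideal (MPoly n)) : Ideal (MPoly (n + 1)) :=
  Ideal.map (MvPolynomial.rename (Fin.castSucc : Fin n → Fin (n + 1))) I

/-- `J` is the (saturated homogeneous) ideal of a line in `ℙ^{n-1}`: it is generated by
`n - 2` linearly independent linear forms. -/
def IsLineIdeal {n : ℕ} (J : Ideal (MPoly n)) : Prop :=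
  ∃ V : Submodule ℂ (MPoly n), V ≤ MvPolynomial.homogeneousSubmodule (Fin n) ℂ 1 ∧
    Module.finrank ℂ V = n - 2 ∧ J = Ideal.span (V : Set (MPoly n))

/-- `V(T) ⊆ ℙ^{n-1}` is a smooth rational normal scroll surface: a smooth nondegenerate
integral surface of minimal degree `n - 2` (with sectional and arithmetic genus `0`)
containing a line (which rules out the Veronese surface). -/
def IsSmoothRNScroll {n : ℕ} (T : Ideal (MPoly n)) : Prop :=
  IsSurface T ∧ Nondeg T ∧ IsSmooth T 3 ∧ SurfInv T ((n : ℤ) - 2) 0 0 ∧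
    ∃ J : Ideal (MPoly n), IsLineIdeal J ∧ T ≤ J

/-- The linear projection on points determined by the matrix `L`. -/
def projPt {nb ns : ℕ} (L : Fin ns → Fin nb → ℂ) (a : Fin nb → ℂ) : Fin ns → ℂ :=
  fun t => ∑ j, L t j * a j

/-- The substitution algebra homomorphism determined by the matrix `L` (pullback of the
linear projection `ℙ^{nb-1} ⇢ ℙ^{ns-1}`). -/
def substHom {nb ns : ℕ} (L : Fin ns → Fin nb → ℂ) : MPoly ns →ₐ[ℂ] MPoly nb :=
  MvPolynomial.aeval fun t => ∑ j, MvPolynomial.C (L t j) * MvPolynomial.X j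

/-- The linear projection given by `L` maps `V(I')` isomorphically onto `V(I)`: the center of
projection misses `V(I')`, `V(I)` is the image, and the projection is (projectively) bijective
from `V(I')` onto `V(I)`. -/
def IsIsoProjection {nb ns : ℕ} (L : Fin ns → Fin nb → ℂ)
    (I' : Ideal (MPoly nb)) (I : Ideal (MPoly ns)) : Prop :=
  I = I'.comap (substHom L) ∧
  (∀ a ∈ zeroCone I', a ≠ 0 → projPt L a ≠ 0) ∧
  (∀ a ∈ zeroCone I', ∀ b ∈ zeroCone I', a ≠ 0 → b ≠ 0 →
    (∃ c : ℂ, c ≠ 0 ∧ projPt L a = c • projPt L b) → ∃ c : ℂ, c ≠ 0 ∧ a = c • b) ∧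
  (∀ y ∈ zeroCone I, y ≠ 0 → ∃ a ∈ zeroCone I', a ≠ 0 ∧ ∃ c : ℂ, c ≠ 0 ∧ y = c • projPt L a)

/-- `t` bounds the Castelnuovo–Mumford regularity of the surface `V(I) ⊆ ℙ^{n-1}`:
for every `t' ≥ t`, `H^i(ℙ, 𝓘(t'-i)) = 0` for all `i ≥ 1`, expressed through the standard
inductive characterization by successive general hyperplane sections. -/
def IsRegBound {n : ℕ} (I : Ideal (MPoly n)) (t : ℤ) : Prop :=
  GenericForms n 2 fun L => ∀ t' : ℤ, t ≤ t' →
    h1INat I (t' - 1) = 0 ∧ h1INat (sect I (L 0)) (t' - 1) = 0 ∧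
      h1INat (sect (sect I (L 0)) (L 1)) (t' - 1) = 0

end

/-! ### A linear Cauchy–Davenport theorem -/

namespace GenusBound

open Module

section CauchyDavenport

theorem finrank_map_inj {K V W : Type*} [Field K] [AddCommGroup V] [Module K V] [AddCommGroup W]
    [Module K W] (f : V →ₗ[K] W) (hf : Function.Injective f) (p : Submodule K V) :
    finrank K (p.map f) = finrank K p :=
  (LinearEquiv.finrank_eq (Submodule.equivMapOfInjective f hf p)).symm

theorem finrank_map_add_inf_ker {K V W : Type*} [Field K] [AddCommGroup V] [Module K V]
    [AddCommGroup W] [Module K W] (f : V →ₗ[K] W) (p : Submodule K V) [FiniteDimensional K p] :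
    finrank K (p.map f) + finrank K ↥(p ⊓ LinearMap.ker f) = finrank K p := by
  have h1 := LinearMap.finrank_range_add_finrank_ker (f.domRestrict p)
  rw [LinearMap.range_domRestrict] at h1
  rw [← h1]
  congr 1
  have h2 : (LinearMap.ker (f.domRestrict p)).map p.subtype = p ⊓ LinearMap.ker f := by
    ext z
    constructor
    · rintro ⟨⟨y, hy⟩, hk, rfl⟩
      exact ⟨hy, hk⟩
    · rintro ⟨h, h'⟩
      exact ⟨⟨z, h⟩, h', rfl⟩
  rw [← h2, finrank_map_inj _ p.injective_subtype]

variable {K F : Type*} [Field K] [Field F] [Algebra K F]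

/-- No nonzero finite-dimensional proper `K`-subspace of `F` is stable under multiplication by an
element outside `K`.  For finite `F/K` this says that there are no proper intermediate fields; for
infinite `F/K` it says that `K` is algebraically closed in `F`. -/
def NoStab (K F : Type*) [Field K] [Field F] [Algebra K F] : Prop :=
  ∀ x : F, x ∉ (algebraMap K F).range → ∀ U : Submodule K F, U ≠ ⊥ → FiniteDimensional K U →
    (∀ a ∈ U, x * a ∈ U) → U = ⊤

theorem exists_not_scalar_of_two_le {W : Submodule K F} [FiniteDimensional K W]
    (h : 2 ≤ finrank K W) {w : F} (hw0 : w ≠ 0) :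
    ∃ w' ∈ W, w' / w ∉ (algebraMap K F).range := by
  by_contra! hcon
  have hle : W ≤ Submodule.span K {w} := by
    intro w' hw'
    obtain ⟨c, hc⟩ := hcon w' hw'
    rw [Submodule.mem_span_singleton]
    refine ⟨c, ?_⟩
    rw [Algebra.smul_def, hc]
    field_simp
  have := Submodule.finrank_mono hle
  have h1 := finrank_span_singleton (K := K) hw0
  omega

/-- The linear analogue of the Cauchy–Davenport inequality, by the `e`-transform
`(U, W) ↦ (U + eW, W ∩ e⁻¹U)`. -/
theorem linear_cauchy_davenport (H : NoStab K F) (n : ℕ) :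
    ∀ (U W : Submodule K F), FiniteDimensional K U → FiniteDimensional K W → U ≠ ⊥ → W ≠ ⊥ →
      finrank K W ≤ n → U * W = ⊤ ∨ finrank K U + finrank K W ≤ finrank K ↥(U * W) + 1 := by
  induction n with
  | zero =>
    intro U W _ _ _ hW h
    exact absurd (Submodule.finrank_eq_zero.mp (Nat.le_zero.mp h)) hW
  | succ n ih =>
    intro U W hUf hWf hU hW hn
    have : FiniteDimensional K ↥(U * W) :=
      Module.Finite.iff_fg.mpr ((Module.Finite.iff_fg.mp hUf).mul (Module.Finite.iff_fg.mp hWf))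
    obtain ⟨w0, hw0W, hw0⟩ := Submodule.exists_mem_ne_zero_of_ne_bot hW
    by_cases hstuck : ∀ u ∈ U, ∀ w ∈ W, w ≠ 0 → ∀ w' ∈ W, u / w * w' ∈ U
    · by_cases h2 : 2 ≤ finrank K W
      · obtain ⟨w', hw', hx⟩ := exists_not_scalar_of_two_le h2 hw0
        have hUt : U = ⊤ := H (w' / w0) hx U hU hUf fun a ha => by
          have := hstuck a ha w0 hw0W hw0 w' hw'
          rwa [div_mul_eq_mul_div, mul_comm, ← div_mul_eq_mul_div] at this
        left
        rw [eq_top_iff]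
        intro z _
        have : z = z / w0 * w0 := by field_simp
        rw [this]
        exact Submodule.mul_mem_mul (by rw [hUt]; trivial) hw0W
      · right
        have hle : U.map (LinearMap.mulLeft K w0) ≤ U * W := by
          rintro _ ⟨u, hu, rfl⟩
          rw [LinearMap.mulLeft_apply, mul_comm w0]
          exact Submodule.mul_mem_mul hu hw0W
        have h3 := Submodule.finrank_mono hle
        rw [finrank_map_inj] at h3
        · omega
        · exact fun a b h => mul_left_cancel₀ hw0 h
    · push Not at hstuck
      obtain ⟨u, hu, w, hw, hwne, w', hw', hne⟩ := hstuck
      set e : F := u / w with he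
      have he0 : e ≠ 0 := by
        rintro h0
        rw [h0] at hne
        simp at hne
      let m : F →ₗ[K] F := LinearMap.mulLeft K e
      have hminj : Function.Injective m := fun a b h => mul_left_cancel₀ he0 h
      let eW := W.map m
      let W1 : Submodule K F := W ⊓ U.comap m
      have hW1le : W1 ≤ W := inf_le_left
      have : FiniteDimensional K W1 := Submodule.finiteDimensional_of_le hW1le
      have : FiniteDimensional K eW := inferInstance
      have : FiniteDimensional K ↥(U ⊔ eW) := inferInstance
      have hmap : W1.map m = U ⊓ eW := by
        ext z
        constructor
        · rintro ⟨a, ⟨ha1, ha2⟩, rfl⟩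
          exact ⟨ha2, ⟨a, ha1, rfl⟩⟩
        · rintro ⟨hz, ⟨a, ha, rfl⟩⟩
          exact ⟨a, ⟨ha, hz⟩, rfl⟩
      have hW1r : finrank K W1 = finrank K ↥(U ⊓ eW) := by
        rw [← hmap, finrank_map_inj _ hminj]
      have heWr : finrank K eW = finrank K W := finrank_map_inj _ hminj _
      have hsum := Submodule.finrank_sup_add_finrank_inf_eq U eW
      have hwW1 : w ∈ W1 := ⟨hw, by
        change e * w ∈ U
        rw [he]; rwa [div_mul_cancel₀ _ hwne]⟩
      have hlt : finrank K W1 < finrank K W := by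
        apply Submodule.finrank_lt_finrank_of_lt
        refine lt_of_le_of_ne hW1le fun h => ?_
        have : w' ∈ W1 := by rw [h]; exact hw'
        exact hne this.2
      have hprod : (U ⊔ eW) * W1 ≤ U * W := by
        rw [Submodule.sup_mul]
        refine sup_le (mul_le_mul_right hW1le U) ?_
        rw [Submodule.mul_le]
        rintro _ ⟨a, ha, rfl⟩ b hb
        have : m a * b = m b * a := by
          change e * a * b = e * b * a
          ring
        rw [this]
        exact Submodule.mul_mem_mul hb.2 ha
      have hUne : U ⊔ eW ≠ ⊥ := fun h => hU (le_bot_iff.mp (h ▸ le_sup_left))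
      have hW1ne : W1 ≠ ⊥ := fun h => hwne (by rw [h] at hwW1; simpa using hwW1)
      rcases ih (U ⊔ eW) W1 inferInstance inferInstance hUne hW1ne (by omega) with h | h
      · left
        exact top_le_iff.mp (h ▸ hprod)
      · right
        have := Submodule.finrank_mono hprod
        omega

/-- If no nonzero finite-dimensional subspace is stable under a non-scalar, the Cauchy–Davenport
inequality extends to the product of a subspace of `F` and a subspace of an `F`-vector space. -/
theorem module_cauchy_davenport (H : NoStab K F) (hinf : ¬ FiniteDimensional K F)
    {M : Type*} [AddCommGroup M] [Module K M] [Module F M] [IsScalarTower K F M]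
    (U : Submodule K F) (W X : Submodule K M) [FiniteDimensional K U] [FiniteDimensional K W]
    [FiniteDimensional K X] (hU : U ≠ ⊥) (hW : W ≠ ⊥) (hUW : ∀ u ∈ U, ∀ w ∈ W, u • w ∈ X) :
    finrank K U + finrank K W ≤ finrank K X + 1 := by
  obtain ⟨w0, hw0W, hw0⟩ := Submodule.exists_mem_ne_zero_of_ne_bot hW
  obtain ⟨u0, hu0U, hu0⟩ := Submodule.exists_mem_ne_zero_of_ne_bot hU
  -- the line `F • w0` and the quotient by it
  let ln : F →ₗ[K] M := (LinearMap.toSpanSingleton F M w0).restrictScalars K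
  have hln : Function.Injective ln := fun a b h => by
    have : a • w0 = b • w0 := h
    exact smul_left_injective F hw0 this
  let N : Submodule F M := Submodule.span F {w0}
  let q : M →ₗ[K] (M ⧸ N) := N.mkQ.restrictScalars K
  have hq : ∀ z, q z = 0 ↔ ∃ a : F, a • w0 = z := fun z => by
    change N.mkQ z = 0 ↔ _
    rw [Submodule.mkQ_apply, Submodule.Quotient.mk_eq_zero, Submodule.mem_span_singleton]
  let W0 : Submodule K F := W.comap ln
  let X0 : Submodule K F := X.comap ln
  have rn : ∀ Y : Submodule K M, FiniteDimensional K Y →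
      finrank K (Y.map q) + finrank K (Y.comap ln) = finrank K Y := by
    intro Y hY
    have h1 := LinearMap.finrank_range_add_finrank_ker (q.domRestrict Y)
    rw [LinearMap.range_domRestrict] at h1
    rw [← h1]
    congr 1
    have h2 : (LinearMap.ker (q.domRestrict Y)).map Y.subtype = (Y.comap ln).map ln := by
      ext z
      constructor
      · rintro ⟨⟨y, hy⟩, hk, rfl⟩
        obtain ⟨a, ha⟩ := (hq y).mp hk
        refine ⟨a, ?_, ha⟩
        change a • w0 ∈ Y
        rwa [ha]
      · rintro ⟨a, ha, rfl⟩
        exact ⟨⟨ln a, ha⟩, (hq _).mpr ⟨a, rfl⟩, rfl⟩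
    rw [← finrank_map_inj _ hln, ← h2,
      finrank_map_inj _ Y.injective_subtype]
  have fd0 : ∀ Y : Submodule K M, FiniteDimensional K Y → FiniteDimensional K (Y.comap ln) := by
    intro Y hY
    exact FiniteDimensional.of_injective
      ((ln.domRestrict (Y.comap ln)).codRestrict Y (fun a => a.2)) fun a b h => by
        have : ln a = ln b := congrArg Subtype.val h
        exact Subtype.ext (hln this)
  have := fd0 W inferInstance
  have := fd0 X inferInstance
  have hW0 : W0 ≠ ⊥ := fun h => by
    have : (1 : F) ∈ W0 := by
      change (1 : F) • w0 ∈ W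
      rwa [one_smul]
    rw [h] at this
    simp at this
  have hle : U * W0 ≤ X0 := by
    rw [Submodule.mul_le]
    intro u hu a ha
    change (u * a) • w0 ∈ X
    rw [mul_smul]
    exact hUW u hu _ ha
  have h0 : finrank K U + finrank K W0 ≤ finrank K X0 + 1 := by
    rcases linear_cauchy_davenport H _ U W0 inferInstance inferInstance hU hW0 le_rfl with h | h
    · exfalso
      rw [h, top_le_iff] at hle
      apply hinf
      have : FiniteDimensional K X0 := fd0 X inferInstance
      rw [hle] at this
      exact Module.Finite.equiv (Submodule.topEquiv (R := K) (M := F))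
    · have := Submodule.finrank_mono hle
      omega
  have h1 : finrank K (W.map q) ≤ finrank K (X.map q) := by
    let sm : (M ⧸ N) →ₗ[K] (M ⧸ N) := (LinearMap.lsmul F (M ⧸ N) u0).restrictScalars K
    have hsm : Function.Injective sm := fun a b h => by
      have : u0 • a = u0 • b := h
      exact smul_right_injective _ hu0 this
    rw [← finrank_map_inj _ hsm]
    apply Submodule.finrank_mono
    rintro _ ⟨_, ⟨w, hw, rfl⟩, rfl⟩
    exact ⟨u0 • w, hUW u0 hu0U w hw, rfl⟩
  have h2 := rn W inferInstance
  have h3 := rn X inferInstance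
  have h4 : finrank K (W.comap ln) = finrank K W0 := rfl
  have h5 : finrank K (X.comap ln) = finrank K X0 := rfl
  omega

end CauchyDavenport

end GenusBound

/-! ### A weak form of Green's theorem on Hilbert functions -/

namespace GenusBound

open Module

section BabyGreen

variable {K A : Type*} [Field K] [CommRing A] [Algebra K A]

theorem one_le_pow_sub {V : Submodule K A} (h1 : (1 : A) ∈ V) (t : ℕ) : (1 : A) ∈ V ^ t := by
  simpa using Submodule.pow_mem_pow V h1 t

theorem pow_mono_sub {V : Submodule K A} (h1 : (1 : A) ∈ V) {a b : ℕ} (h : a ≤ b) :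
    V ^ a ≤ V ^ b :=
  pow_le_pow_right₀ (by simpa [Submodule.one_le] using h1) h

theorem pow_fg_sub {V : Submodule K A} [hV : FiniteDimensional K V] (t : ℕ) :
    FiniteDimensional K ↥(V ^ t) :=
  Module.Finite.iff_fg.mpr ((Module.Finite.iff_fg.mp hV).pow t)

/-- The subspace `y V^q + V^q` of `V^(q+1)`. -/
def mulStep (V : Submodule K A) (q : ℕ) (y : A) : Submodule K A :=
  (V ^ q).map (LinearMap.mulLeft K y) ⊔ V ^ q

theorem mulStep_le {V : Submodule K A} (h1 : (1 : A) ∈ V) {q : ℕ} {y : A} (hy : y ∈ V) :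
    mulStep V q y ≤ V ^ (q + 1) := by
  refine sup_le ?_ (pow_mono_sub h1 (Nat.le_succ q))
  rintro _ ⟨a, ha, rfl⟩
  rw [LinearMap.mulLeft_apply, mul_comm, pow_succ]
  exact Submodule.mul_mem_mul ha hy

theorem exists_avoid [Infinite K] {V : Submodule K A} {k : ℕ}
    (L : List (Submodule K A × Submodule K A))
    (hL : ∀ p ∈ L, ¬ V ^ (k + 1) * p.1 ≤ p.2) :
    ∃ y ∈ V, ∀ p ∈ L, ¬ V ^ k * p.1.map (LinearMap.mulLeft K y) ≤ p.2 := by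
  classical
  let bad : Submodule K A × Submodule K A → Subspace K V := fun p =>
    { carrier := {y | V ^ k * p.1.map (LinearMap.mulLeft K (y : A)) ≤ p.2}
      add_mem' := by
        intro a b ha hb
        simp only [Set.mem_ofPred_eq, Submodule.mul_le] at ha hb ⊢
        rintro m hm _ ⟨n, hn, rfl⟩
        have h1 := ha m hm _ ⟨n, hn, rfl⟩
        have h2 := hb m hm _ ⟨n, hn, rfl⟩
        simp only [LinearMap.mulLeft_apply, Submodule.coe_add] at *
        rw [add_mul, mul_add]
        exact p.2.add_mem h1 h2
      zero_mem' := by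
        simp only [Set.mem_ofPred_eq, Submodule.mul_le]
        rintro m hm _ ⟨n, hn, rfl⟩
        simp
      smul_mem' := by
        intro c a ha
        simp only [Set.mem_ofPred_eq, Submodule.mul_le] at ha ⊢
        rintro m hm _ ⟨n, hn, rfl⟩
        have h1 := ha m hm _ ⟨n, hn, rfl⟩
        simp only [LinearMap.mulLeft_apply, Submodule.coe_smul] at *
        rw [smul_mul_assoc, mul_smul_comm]
        exact p.2.smul_mem _ h1 }
  have htop : (⊤ : Subspace K V) ∉ (L.map bad).toFinset := by
    intro h
    simp only [List.mem_toFinset, List.mem_map] at h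
    obtain ⟨p, hp, htop⟩ := h
    apply hL p hp
    rw [pow_succ, mul_assoc, Submodule.mul_le]
    intro m hm n hn
    refine Submodule.mul_induction_on hn ?_ ?_
    · intro v hv s hs
      have : (⟨v, hv⟩ : V) ∈ bad p := by rw [htop]; trivial
      exact (Submodule.mul_le.mp this) m hm _ ⟨s, hs, rfl⟩
    · intro a b ha hb
      rw [mul_add]
      exact p.2.add_mem ha hb
  have := Subspace.biUnion_ne_univ_of_top_notMem htop
  rw [Set.ne_univ_iff_exists_notMem] at this
  obtain ⟨y, hy⟩ := this
  refine ⟨y, y.2, fun p hp hcon => hy ?_⟩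
  simp only [Set.mem_iUnion]
  exact ⟨bad p, by simp only [List.mem_toFinset, List.mem_map]; exact ⟨p, hp, rfl⟩, hcon⟩

theorem exists_green_seq [Infinite K] {V : Submodule K A} {q : ℕ}
    (hno : ∀ y ∈ V, ¬ V ^ (q + 1) ≤ mulStep V q y) (k : ℕ) (hk : k ≤ q + 1) :
    ∀ L : List (Submodule K A × Submodule K A), (∀ p ∈ L, ¬ V ^ k * p.1 ≤ p.2) →
      ∃ y : ℕ → A, (∀ i < k, y i ∈ V) ∧
        (∀ p ∈ L, ¬ p.1.map (LinearMap.mulLeft K (∏ i ∈ Finset.range k, y i)) ≤ p.2) ∧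
        ∀ j < k, ¬ (V ^ (q + 1 - j)).map (LinearMap.mulLeft K (∏ i ∈ Finset.range j, y i)) ≤
          mulStep V q (y j) := by
  induction k with
  | zero =>
    intro L hL
    refine ⟨fun _ => 0, by simp, fun p hp => ?_, by simp⟩
    simpa using hL p hp
  | succ k ih =>
    intro L hL
    obtain ⟨Y, hYV, hY⟩ := exists_avoid L hL
    obtain ⟨y, hyV, hyL, hyj⟩ := ih (by omega)
      ((V ^ (q + 1 - k), mulStep V q Y) ::
        L.map fun p => (p.1.map (LinearMap.mulLeft K Y), p.2)) (by
        intro p hp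
        rw [List.mem_cons] at hp
        rcases hp with rfl | hp
        · rw [← pow_add, show k + (q + 1 - k) = q + 1 by omega]
          exact hno Y hYV
        · rw [List.mem_map] at hp
          obtain ⟨p', hp', rfl⟩ := hp
          exact hY p' hp')
    have hpr : ∀ j ≤ k, ∏ i ∈ Finset.range j, Function.update y k Y i
        = ∏ i ∈ Finset.range j, y i := by
      intro j hj
      refine Finset.prod_congr rfl fun i hi => ?_
      rw [Function.update_of_ne]
      have := Finset.mem_range.mp hi
      omega
    refine ⟨Function.update y k Y, ?_, ?_, ?_⟩
    · intro i hi
      by_cases hik : i = k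
      · subst hik; simpa using hYV
      · rw [Function.update_of_ne hik]; exact hyV i (by omega)
    · intro p hp
      have h := hyL (p.1.map (LinearMap.mulLeft K Y), p.2)
        (List.mem_cons_of_mem _ (List.mem_map.mpr ⟨p, hp, rfl⟩))
      rw [Finset.prod_range_succ, hpr k le_rfl, Function.update_self, LinearMap.mulLeft_mul,
        Submodule.map_comp]
      exact h
    · intro j hj
      rw [hpr j (by omega)]
      by_cases hjk : j = k
      · subst hjk
        rw [Function.update_self]
        exact hyL _ List.mem_cons_self
      · rw [Function.update_of_ne hjk]
        exact hyj j (by omega)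

/-- A weak form of Green's theorem: if the Hilbert function of the filtration `V^t` grows by at
most `q + 1` from step `q` to step `q + 1`, the growth comes from a single element `y ∈ V`.
Otherwise, for general `y_1, …, y_{q+1} ∈ V`, the subspaces
`y_1 ⋯ y_j V^(q+1-j) + V^q` would form a strict chain that is too long. -/
theorem baby_green [Infinite K] {V : Submodule K A} [FiniteDimensional K V] (h1 : (1 : A) ∈ V)
    {q : ℕ} (hq : finrank K ↥(V ^ (q + 1)) ≤ finrank K ↥(V ^ q) + (q + 1)) :
    ∃ y ∈ V, V ^ (q + 1) = mulStep V q y := by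
  have hfd : ∀ t, FiniteDimensional K ↥(V ^ t) := fun t => pow_fg_sub t
  by_contra! hcon
  have hno : ∀ y ∈ V, ¬ V ^ (q + 1) ≤ mulStep V q y := fun y hy h =>
    hcon y hy (le_antisymm h (mulStep_le h1 hy))
  have hlast : ¬ V ^ (q + 1) * (1 : Submodule K A) ≤ V ^ q := by
    rw [mul_one]
    exact fun h => hno 1 h1 (h.trans le_sup_right)
  obtain ⟨y, hyV, hyL, hyj⟩ := exists_green_seq hno (q + 1) le_rfl [(1, V ^ q)]
    (by simpa using hlast)
  have hyL := hyL _ List.mem_cons_self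
  set M : ℕ → Submodule K A := fun j =>
    (V ^ (q + 1 - j)).map (LinearMap.mulLeft K (∏ i ∈ Finset.range j, y i)) ⊔ V ^ q with hM
  have hprod : ∀ j ≤ q + 1, ∏ i ∈ Finset.range j, y i ∈ V ^ j := by
    intro j hj
    induction j with
    | zero => simp [Submodule.one_le.mp le_rfl]
    | succ j ih =>
      rw [Finset.prod_range_succ, pow_succ]
      exact Submodule.mul_mem_mul (ih (by omega)) (hyV j (by omega))
  have hMle : ∀ j < q + 1, M (j + 1) ≤ mulStep V q (y j) := by
    intro j hj
    refine sup_le ?_ le_sup_right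
    refine le_trans ?_ le_sup_left
    rintro _ ⟨a, ha, rfl⟩
    refine ⟨(∏ i ∈ Finset.range j, y i) * a, ?_, ?_⟩
    · have : V ^ q = V ^ j * V ^ (q + 1 - (j + 1)) := by
        rw [← pow_add]; congr 1; omega
      rw [SetLike.mem_coe, this]
      exact Submodule.mul_mem_mul (hprod j hj.le) ha
    · simp only [LinearMap.mulLeft_apply, Finset.prod_range_succ]
      ring
  have hMmono : ∀ j < q + 1, M (j + 1) ≤ M j := by
    intro j hj
    refine sup_le_sup_right ?_ _
    rintro _ ⟨a, ha, rfl⟩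
    refine ⟨y j * a, ?_, ?_⟩
    · have : V ^ (q + 1 - j) = V * V ^ (q + 1 - (j + 1)) := by
        rw [← pow_succ']; congr 1; omega
      rw [SetLike.mem_coe, this]
      exact Submodule.mul_mem_mul (hyV j hj) ha
    · simp only [LinearMap.mulLeft_apply, Finset.prod_range_succ]
      ring
  have hMfd : ∀ j, FiniteDimensional K (M j) := fun j => by
    have := hfd (q + 1 - j)
    have := hfd q
    exact Submodule.finite_sup _ _
  have hMlt : ∀ j < q + 1, M (j + 1) < M j := fun j hj =>
    lt_of_le_of_ne (hMmono j hj) fun h =>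
      hyj j hj ((le_sup_left (b := V ^ q)).trans ((le_of_eq h.symm).trans (hMle j hj)))
  have hcount : ∀ j ≤ q + 1, finrank K (M j) + j ≤ finrank K (M 0) := by
    intro j hj
    induction j with
    | zero => simp
    | succ j ih =>
      have := ih (by omega)
      have := hMfd j
      have := Submodule.finrank_lt_finrank_of_lt (hMlt j (by omega))
      omega
  have hM0 : M 0 = V ^ (q + 1) := by
    simp only [hM, Finset.range_zero, Finset.prod_empty, LinearMap.mulLeft_one, Submodule.map_id,
      Nat.sub_zero]
    exact sup_eq_left.mpr (pow_mono_sub h1 (Nat.le_succ q))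
  have hMl : V ^ q < M (q + 1) := by
    refine lt_of_le_of_ne le_sup_right fun h => hyL ?_
    have h2 : (V ^ (q + 1 - (q + 1))).map
        (LinearMap.mulLeft K (∏ i ∈ Finset.range (q + 1), y i)) ≤ M (q + 1) := le_sup_left
    rw [← h] at h2
    simpa using h2
  have := hMfd (q + 1)
  have h3 := Submodule.finrank_lt_finrank_of_lt hMl
  have h4 := hcount (q + 1) le_rfl
  rw [hM0] at h4
  omega

theorem mulStep_persist {V : Submodule K A} (h1 : (1 : A) ∈ V) {q : ℕ} {y : A} (hyV : y ∈ V)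
    (h : V ^ (q + 1) = mulStep V q y) {q' : ℕ} (hq : q ≤ q') :
    V ^ (q' + 1) = mulStep V q' y := by
  induction q', hq using Nat.le_induction with
  | base => exact h
  | succ n hn ih =>
    refine le_antisymm ?_ (mulStep_le h1 hyV)
    rw [pow_succ, ih, mulStep, Submodule.sup_mul]
    refine sup_le ?_ ?_
    · refine le_trans ?_ le_sup_left
      rw [Submodule.mul_le]
      rintro _ ⟨a, ha, rfl⟩ v hv
      refine ⟨a * v, ?_, by simp [mul_assoc]⟩
      rw [SetLike.mem_coe, pow_succ]
      exact Submodule.mul_mem_mul ha hv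
    · rw [← pow_succ]
      exact le_sup_right

/-- If `V^(q+2) = y V^(q+1) + V^(q+1)`, the increment of the Hilbert function at `q + 2` is
computed by the elements of `V^(q+1)` that stay in `V^(q+1)` when multiplied by `y`. -/
theorem finrank_step {V : Submodule K A} [FiniteDimensional K V] (h1 : (1 : A) ∈ V)
    {q : ℕ} {y : A} (h : V ^ (q + 1) = mulStep V q y) :
    finrank K ↥(V ^ (q + 1)) + finrank K ↥(V ^ q ⊓ (V ^ q).comap (LinearMap.mulLeft K y))
      = finrank K ↥(V ^ q) + finrank K ↥(V ^ q) := by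
  have hfd : ∀ t, FiniteDimensional K ↥(V ^ t) := fun t => pow_fg_sub t
  have i2 := hfd q
  have i3 := hfd (q + 1)
  let m := LinearMap.mulLeft K y
  have hf := finrank_map_add_inf_ker (Submodule.mkQ (V ^ q) ∘ₗ m) (V ^ q)
  have hg := finrank_map_add_inf_ker (Submodule.mkQ (V ^ q)) (V ^ (q + 1))
  have hrange : (V ^ (q + 1)).map (Submodule.mkQ (V ^ q))
      = (V ^ q).map (Submodule.mkQ (V ^ q) ∘ₗ m) := by
    rw [h, mulStep, Submodule.map_sup, ← Submodule.map_comp]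
    have : (V ^ q).map (Submodule.mkQ (V ^ q)) = ⊥ := by
      rw [← LinearMap.le_ker_iff_map]; exact (Submodule.ker_mkQ _).ge
    rw [this, sup_bot_eq]
  rw [hrange, Submodule.ker_mkQ, inf_eq_right.mpr (pow_mono_sub h1 (by omega))] at hg
  rw [LinearMap.ker_comp, Submodule.ker_mkQ] at hf
  change _ + finrank K ↥(V ^ q ⊓ (V ^ q).comap m) = _
  omega

theorem pow_le_inf_comap {V : Submodule K A} (h1 : (1 : A) ∈ V) {q : ℕ} {y : A} (hy : y ∈ V) :
    V ^ q ≤ V ^ (q + 1) ⊓ (V ^ (q + 1)).comap (LinearMap.mulLeft K y) := by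
  refine le_inf (pow_mono_sub h1 (by omega)) fun a ha => ?_
  rw [Submodule.mem_comap, LinearMap.mulLeft_apply, mul_comm, pow_succ]
  exact Submodule.mul_mem_mul ha hy

/-- The increments of the Hilbert function do not increase once `V^(q+1) = y V^q + V^q`. -/
theorem incr_antitone {V : Submodule K A} [FiniteDimensional K V] (h1 : (1 : A) ∈ V)
    {q : ℕ} {y : A} (h : V ^ (q + 2) = mulStep V (q + 1) y) (hyV : y ∈ V) :
    finrank K ↥(V ^ (q + 2)) + finrank K ↥(V ^ q)
      ≤ finrank K ↥(V ^ (q + 1)) + finrank K ↥(V ^ (q + 1)) := by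
  have i2 : FiniteDimensional K ↥(V ^ (q + 1)) := pow_fg_sub _
  have := finrank_step h1 h
  rw [show q + 1 + 1 = q + 2 from rfl] at this
  have i3 : FiniteDimensional K ↥(V ^ (q + 1) ⊓ (V ^ (q + 1)).comap (LinearMap.mulLeft K y)) :=
    Submodule.finiteDimensional_of_le inf_le_left
  have := Submodule.finrank_mono (pow_le_inf_comap (q := q) h1 hyV)
  omega

/-- If the increment does not drop, multiplication by `y` is injective on the graded piece. -/
theorem mem_of_mul_mem {V : Submodule K A} [FiniteDimensional K V] (h1 : (1 : A) ∈ V)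
    {q : ℕ} {y : A} (h : V ^ (q + 2) = mulStep V (q + 1) y) (hyV : y ∈ V)
    (he : finrank K ↥(V ^ (q + 1)) + finrank K ↥(V ^ (q + 1))
      ≤ finrank K ↥(V ^ (q + 2)) + finrank K ↥(V ^ q))
    {a : A} (ha : a ∈ V ^ (q + 1)) (hya : y * a ∈ V ^ (q + 1)) : a ∈ V ^ q := by
  have i2 : FiniteDimensional K ↥(V ^ (q + 1)) := pow_fg_sub _
  have := finrank_step h1 h
  rw [show q + 1 + 1 = q + 2 from rfl] at this
  have i3 : FiniteDimensional K ↥(V ^ (q + 1) ⊓ (V ^ (q + 1)).comap (LinearMap.mulLeft K y)) :=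
    Submodule.finiteDimensional_of_le inf_le_left
  rw [Submodule.eq_of_le_of_finrank_le (pow_le_inf_comap (q := q) h1 hyV) (by omega)]
  exact ⟨ha, hya⟩

end BabyGreen

end GenusBound

/-! ### Generic hyperplane sections -/

namespace GenusBound

open Module MvPolynomial

section GenericSection

set_option linter.unusedSectionVars false

/-- `(K, F)` is the generic hyperplane section of the field `E` with its coordinates
`ξ = (1, ξ_1, …, ξ_r)` over `k`: the field `K = k(u_0, …, u_r)` is purely transcendental, and
`F = E(u_1, …, u_r)` is purely transcendental over `E`, with `u_0 = - ∑_{j ≥ 1} u_j ξ_j`. -/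
structure GenSec {r : ℕ} (k E K F : Type*) [Field k] [Field E] [Field K] [Field F] [Algebra k E]
    [Algebra k K] [Algebra E F] [Algebra K F] (u : Fin (r + 1) → K) (ξ : Fin (r + 1) → E) :
    Prop where
  xi0 : ξ 0 = 1
  indepK : AlgebraicIndependent k u
  fracK : ∀ x : K, ∃ p q : MvPolynomial (Fin (r + 1)) k, aeval u q ≠ 0 ∧
    x * aeval u q = aeval u p
  rel : ∑ j, algebraMap K F (u j) * algebraMap E F (ξ j) = 0
  indepE : AlgebraicIndependent E (fun j : Fin r => algebraMap K F (u j.succ))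
  fracF : ∀ x : F, ∃ p q : MvPolynomial (Fin r) E,
    aeval (fun j : Fin r => algebraMap K F (u j.succ)) q ≠ 0 ∧
    x * aeval (fun j : Fin r => algebraMap K F (u j.succ)) q
      = aeval (fun j : Fin r => algebraMap K F (u j.succ)) p

/-- The `K`-span in `F` of a `k`-subspace of `E`. -/
def extS {k E : Type*} (K F : Type*) [Field k] [Field E] [Field K] [Field F] [Algebra k E]
    [Algebra E F] [Algebra K F] (W : Submodule k E) : Submodule K F :=
  Submodule.span K (algebraMap E F '' (W : Set E))

/-- The generic linear form `∑ ξ_j u_j` with coefficients in `E`. -/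
noncomputable def ellP {r : ℕ} {E : Type*} [Field E] (ξ : Fin (r + 1) → E) : MvPolynomial (Fin (r + 1)) E :=
  ∑ j, C (ξ j) * X j

/-- The combination `∑ p_i w_i`, as a polynomial with coefficients in `E`. -/
noncomputable def polW {r : ℕ} {k E : Type*} [Field k] [Field E] [Algebra k E] {N : ℕ} (w : Fin N → E)
    (p : Fin N → MvPolynomial (Fin (r + 1)) k) : MvPolynomial (Fin (r + 1)) E :=
  ∑ i, map (algebraMap k E) (p i) * C (w i)

variable {r : ℕ} {k E K F : Type*} [Field k] [Field E] [Field K] [Field F] [Algebra k E]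
    [Algebra k K] [Algebra E F] [Algebra K F] [Algebra k F] [IsScalarTower k K F]
    [IsScalarTower k E F] {u : Fin (r + 1) → K} {ξ : Fin (r + 1) → E}

theorem coeff_polW {N : ℕ} (w : Fin N → E) (p : Fin N → MvPolynomial (Fin (r + 1)) k)
    (m : Fin (r + 1) →₀ ℕ) : coeff m (polW w p) = ∑ i, coeff m (p i) • w i := by
  rw [polW, coeff_sum]
  refine Finset.sum_congr rfl fun i _ => ?_
  rw [mul_comm, coeff_C_mul, coeff_map, Algebra.smul_def, mul_comm]

theorem polW_inj {N : ℕ} {w : Fin N → E} (hw : LinearIndependent k w)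
    {p q : Fin N → MvPolynomial (Fin (r + 1)) k} (h : polW w p = polW w q) : p = q := by
  funext i
  ext m
  have h1 := congrArg (coeff m) h
  rw [coeff_polW, coeff_polW] at h1
  have h2 := Fintype.linearIndependent_iff.mp hw (fun i => coeff m (p i) - coeff m (q i))
    (by simp only [sub_smul, Finset.sum_sub_distrib, h1, sub_self]) i
  exact sub_eq_zero.mp h2

theorem exists_polW {N : ℕ} {w : Fin N → E} {W : Submodule k E}
    (hw : W ≤ Submodule.span k (Set.range w)) (P : MvPolynomial (Fin (r + 1)) E)
    (hP : ∀ m, coeff m P ∈ W) : ∃ p : Fin N → MvPolynomial (Fin (r + 1)) k, P = polW w p := by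
  classical
  have h1 : ∀ m, ∃ c : Fin N → k, ∑ i, c i • w i = coeff m P := fun m =>
    (Submodule.mem_span_range_iff_exists_fun k).mp (hw (hP m))
  choose c hc using h1
  refine ⟨fun i => ∑ m ∈ P.support, monomial m (c m i), ?_⟩
  ext m
  rw [coeff_polW]
  by_cases hm : m ∈ P.support
  · rw [← hc m]
    refine Finset.sum_congr rfl fun i _ => ?_
    rw [coeff_sum, Finset.sum_eq_single m]
    · rw [coeff_monomial, if_pos rfl]
    · intro b _ hb
      rw [coeff_monomial, if_neg hb]
    · exact fun h => absurd hm h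
  · rw [notMem_support_iff.mp hm]
    symm
    refine Finset.sum_eq_zero fun i _ => ?_
    rw [coeff_sum, Finset.sum_eq_zero, zero_smul]
    intro b hb
    rw [coeff_monomial, if_neg]
    rintro rfl
    exact hm hb

theorem aeval_polW {N : ℕ} (w : Fin N → E) (p : Fin N → MvPolynomial (Fin (r + 1)) k) :
    aeval (fun j => algebraMap K F (u j)) (polW w p)
      = ∑ i, algebraMap K F (aeval u (p i)) * algebraMap E F (w i) := by
  rw [polW, map_sum]
  refine Finset.sum_congr rfl fun i _ => ?_
  rw [map_mul, aeval_C, aeval_map_algebraMap]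
  congr 1
  exact aeval_algebraMap_apply F u (p i)

theorem ellP_ne_zero (h0 : ξ 0 = 1) : ellP ξ ≠ 0 := by
  classical
  intro h
  have h1 := congrArg (coeff (Finsupp.single 0 1)) h
  rw [ellP, coeff_sum, Finset.sum_eq_single 0] at h1
  · rw [coeff_C_mul, coeff_X, h0, coeff_zero] at h1
    simp at h1
  · intro b _ hb
    rw [coeff_C_mul, coeff_X, if_neg, mul_zero]
    intro h2
    exact hb (Finsupp.single_left_injective one_ne_zero h2)
  · simp

theorem GenSec.dvd_of_aeval_eq_zero (S : GenSec k E K F u ξ) (P : MvPolynomial (Fin (r + 1)) E)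
    (hP : aeval (fun j => algebraMap K F (u j)) P = 0) : ellP ξ ∣ P := by
  let φ : MvPolynomial (Fin (r + 1)) E →ₐ[E] MvPolynomial (Fin r) E :=
    aeval (Fin.cases (-∑ j : Fin r, C (ξ j.succ) * X j) X)
  let ι : MvPolynomial (Fin r) E →ₐ[E] MvPolynomial (Fin (r + 1)) E := rename Fin.succ
  let I : Ideal (MvPolynomial (Fin (r + 1)) E) := Ideal.span {ellP ξ}
  let q := Ideal.Quotient.mkₐ E I
  have hq : (q.comp ι).comp φ = q := by
    apply algHom_ext
    intro j
    refine Fin.cases ?_ (fun j => ?_) j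
    · simp only [AlgHom.comp_apply, φ, aeval_X, Fin.cases_zero, map_neg, map_sum, map_mul, ι]
      have : q (ellP ξ) = 0 := by
        simp [q, I]
      rw [ellP, Fin.sum_univ_succ, S.xi0] at this
      simp only [map_add, map_mul, map_sum, map_one, one_mul] at this
      simp only [rename_C, rename_X]
      linear_combination -this
    · simp only [AlgHom.comp_apply, φ, aeval_X, Fin.cases_succ, ι, rename_X]
  have hev : (aeval (fun j : Fin r => algebraMap K F (u j.succ))).comp φ
      = (aeval (fun j => algebraMap K F (u j)) : MvPolynomial (Fin (r + 1)) E →ₐ[E] F) := by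
    apply algHom_ext
    intro j
    refine Fin.cases ?_ (fun j => ?_) j
    · simp only [AlgHom.comp_apply, φ, aeval_X, Fin.cases_zero, map_neg, map_sum, map_mul, aeval_C]
      have := S.rel
      rw [Fin.sum_univ_succ, S.xi0, map_one, mul_one] at this
      rw [← add_eq_zero_iff_neg_eq.mp ((add_comm _ _).trans this)]
      congr 1
      exact Finset.sum_congr rfl fun _ _ => mul_comm _ _
    · simp only [AlgHom.comp_apply, φ, aeval_X, Fin.cases_succ]
  rw [← hev, AlgHom.comp_apply] at hP
  have h0 : φ P = 0 := (map_eq_zero_iff _ S.indepE).mp hP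
  have h1 : q P = 0 := by
    rw [← hq, AlgHom.comp_apply, h0, map_zero]
  have h2 : P ∈ I := Ideal.Quotient.eq_zero_iff_mem.mp h1
  exact Ideal.mem_span_singleton.mp h2

theorem GenSec.common_denom (S : GenSec k E K F u ξ) {N : ℕ} (c : Fin N → K) :
    ∃ (q : MvPolynomial (Fin (r + 1)) k) (p : Fin N → MvPolynomial (Fin (r + 1)) k),
      aeval u q ≠ 0 ∧ ∀ i, aeval u q * c i = aeval u (p i) := by
  classical
  choose p q hq hpq using S.fracK
  refine ⟨∏ i, q (c i), fun i => p (c i) * ∏ l ∈ Finset.univ.erase i, q (c l), ?_, fun i => ?_⟩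
  · rw [map_prod]
    exact Finset.prod_ne_zero_iff.mpr fun i _ => hq _
  · rw [← Finset.mul_prod_erase _ _ (Finset.mem_univ i), map_mul, map_mul, ← hpq]
    ring

/-- Multiplication by the generic linear form, on coordinate vectors. -/
noncomputable def kapP {M N : ℕ} (A : Fin (r + 1) → Fin M → Fin N → k)
    (p : Fin M → MvPolynomial (Fin (r + 1)) k) (i : Fin N) : MvPolynomial (Fin (r + 1)) k :=
  ∑ a, ∑ j, p a * (X j * C (A j a i))

theorem ellP_mul_polW {M N : ℕ} {A : Fin (r + 1) → Fin M → Fin N → k} {g : Fin M → E}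
    {w : Fin N → E} (hA : ∀ j a, ξ j * g a = ∑ i, A j a i • w i)
    (p : Fin M → MvPolynomial (Fin (r + 1)) k) :
    ellP ξ * polW g p = polW w (kapP A p) := by
  have e1 : ellP ξ * polW g p
      = ∑ a : Fin M, ∑ j : Fin (r + 1),
        (map (algebraMap k E) (p a) * X j * C (ξ j * g a) : MvPolynomial (Fin (r + 1)) E) := by
    rw [ellP, polW, Finset.sum_mul_sum, Finset.sum_comm]
    refine Finset.sum_congr rfl fun a _ => Finset.sum_congr rfl fun j _ => ?_
    rw [C_mul]; ring
  rw [e1, polW]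
  simp only [kapP, map_sum, Finset.sum_mul]
  rw [eq_comm, Finset.sum_comm]
  refine Finset.sum_congr rfl fun a _ => ?_
  rw [Finset.sum_comm]
  refine Finset.sum_congr rfl fun j _ => ?_
  rw [hA, map_sum, Finset.mul_sum]
  refine Finset.sum_congr rfl fun i _ => ?_
  simp only [map_mul, map_X, map_C, Algebra.smul_def]
  ring

/-- `kapP`, over the field `K`. -/
noncomputable def kapL {M N : ℕ} (u : Fin (r + 1) → K) (A : Fin (r + 1) → Fin M → Fin N → k) :
    (Fin M → K) →ₗ[K] (Fin N → K) where
  toFun c i := ∑ a, ∑ j, c a * (u j * algebraMap k K (A j a i))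
  map_add' c c' := by
    funext i
    simp only [Pi.add_apply, add_mul, Finset.sum_add_distrib]
  map_smul' z c := by
    funext i
    simp only [Pi.smul_apply, smul_eq_mul, RingHom.id_apply, Finset.mul_sum, mul_assoc]

theorem kapL_aeval {M N : ℕ} (A : Fin (r + 1) → Fin M → Fin N → k)
    (p : Fin M → MvPolynomial (Fin (r + 1)) k) :
    kapL u A (fun a => aeval u (p a)) = fun i => aeval u (kapP A p i) := by
  funext i
  simp [kapL, kapP]

/-- The dimension of the section of a subspace `W`: it drops by at least `dim V'` if `V' V ⊆ W`,
and by exactly `dim V'` if every polynomial with coefficients in `W` that is divisible by the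
generic linear form has its quotient in `V'`. -/
theorem GenSec.finrank_extS (S : GenSec k E K F u ξ) (W V' : Submodule k E)
    [FiniteDimensional k W] [FiniteDimensional k V'] (h : ∀ j, ∀ g ∈ V', ξ j * g ∈ W) :
    finrank K (extS K F W) + finrank k V' ≤ finrank k W ∧
    ((∀ Q : MvPolynomial (Fin (r + 1)) E, (∀ m, coeff m (ellP ξ * Q) ∈ W) →
      ∀ m, coeff m Q ∈ V') → finrank K (extS K F W) + finrank k V' = finrank k W) := by
  let wb := finBasis k W
  let gb := finBasis k V'
  set N := finrank k W with hN
  set M := finrank k V' with hM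
  let w : Fin N → E := fun i => (wb i : E)
  let g : Fin M → E := fun i => (gb i : E)
  have hwli : LinearIndependent k w := wb.linearIndependent.map' W.subtype (Submodule.ker_subtype W)
  have hgli : LinearIndependent k g :=
    gb.linearIndependent.map' V'.subtype (Submodule.ker_subtype V')
  have hwsp : W ≤ Submodule.span k (Set.range w) := by
    intro x hx
    rw [Submodule.mem_span_range_iff_exists_fun]
    refine ⟨wb.repr ⟨x, hx⟩, ?_⟩
    have := congrArg Subtype.val (wb.sum_repr ⟨x, hx⟩)
    rw [Submodule.coe_sum] at this
    exact this
  have hgsp : V' ≤ Submodule.span k (Set.range g) := by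
    intro x hx
    rw [Submodule.mem_span_range_iff_exists_fun]
    refine ⟨gb.repr ⟨x, hx⟩, ?_⟩
    have := congrArg Subtype.val (gb.sum_repr ⟨x, hx⟩)
    rw [Submodule.coe_sum] at this
    exact this
  have hA0 : ∀ j a, ∃ c : Fin N → k, ∑ i, c i • w i = ξ j * g a := fun j a =>
    (Submodule.mem_span_range_iff_exists_fun k).mp (hwsp (h j _ (gb a).2))
  choose A hA using hA0
  have hA' : ∀ j a, ξ j * g a = ∑ i, A j a i • w i := fun j a => (hA j a).symm
  let ev : (Fin N → K) →ₗ[K] F := Fintype.linearCombination K (fun i => algebraMap E F (w i))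
  have hev : ∀ c, ev c = ∑ i, algebraMap K F (c i) * algebraMap E F (w i) := fun c => by
    simp [ev, Fintype.linearCombination_apply, Algebra.smul_def]
  have hrange : LinearMap.range ev = extS K F W := by
    rw [Fintype.range_linearCombination, extS]
    apply le_antisymm
    · rw [Submodule.span_le]
      rintro _ ⟨i, rfl⟩
      exact Submodule.subset_span ⟨w i, (wb i).2, rfl⟩
    · rw [Submodule.span_le]
      rintro _ ⟨x, hx, rfl⟩
      obtain ⟨c, hc⟩ := (Submodule.mem_span_range_iff_exists_fun k).mp (hwsp hx)
      rw [← hc, map_sum]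
      refine Submodule.sum_mem _ fun i _ => ?_
      have : algebraMap E F (c i • w i) = algebraMap k K (c i) • algebraMap E F (w i) := by
        rw [Algebra.smul_def, map_mul, Algebra.smul_def, ← IsScalarTower.algebraMap_apply,
          ← IsScalarTower.algebraMap_apply]
      rw [this]
      exact Submodule.smul_mem _ _ (Submodule.subset_span ⟨i, rfl⟩)
  have hrn := LinearMap.finrank_range_add_finrank_ker ev
  rw [hrange, Module.finrank_fin_fun] at hrn
  have hevpol : ∀ p : Fin N → MvPolynomial (Fin (r + 1)) k, ev (fun i => aeval u (p i))
      = aeval (fun j => algebraMap K F (u j)) (polW w p) := fun p => by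
    rw [hev, aeval_polW]
  have hell : aeval (fun j => algebraMap K F (u j)) (ellP ξ) = 0 := by
    rw [ellP, map_sum, ← S.rel]
    refine Finset.sum_congr rfl fun j _ => ?_
    rw [map_mul, aeval_C, aeval_X, mul_comm]
  have hkapinj : Function.Injective (kapL u A) := by
    rw [← LinearMap.ker_eq_bot, LinearMap.ker_eq_bot']
    intro c hc
    obtain ⟨q, p, hq, hp⟩ := S.common_denom c
    have h1 : kapL u A (fun a => aeval u (p a)) = 0 := by
      have : (fun a => aeval u (p a)) = aeval u q • c := by
        funext a; rw [← hp]; rfl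
      rw [this, map_smul, hc, smul_zero]
    rw [kapL_aeval] at h1
    have h2 : kapP A p = 0 := by
      funext i
      exact (map_eq_zero_iff _ S.indepK).mp (congrFun h1 i)
    have h3 := ellP_mul_polW hA' p
    rw [h2] at h3
    have h4 : polW w (0 : Fin N → MvPolynomial (Fin (r + 1)) k) = 0 := by simp [polW]
    rw [h4] at h3
    have h5 : polW g p = 0 := (mul_eq_zero.mp h3).resolve_left (ellP_ne_zero S.xi0)
    have h6 : p = 0 := polW_inj hgli (h5.trans (by simp [polW]))
    funext a
    have := hp a
    rw [h6] at this
    simpa [hq] using this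
  have hkapker : LinearMap.range (kapL u A) ≤ LinearMap.ker ev := by
    rintro _ ⟨c, rfl⟩
    rw [LinearMap.mem_ker]
    obtain ⟨q, p, hq, hp⟩ := S.common_denom c
    have : aeval u q • ev (kapL u A c) = 0 := by
      rw [← map_smul, ← map_smul]
      have e : aeval u q • c = (fun a => aeval u (p a)) := by
        funext a; rw [← hp]; rfl
      rw [e, kapL_aeval, hevpol, ← ellP_mul_polW hA', map_mul, hell, zero_mul]
    exact (smul_eq_zero.mp this).resolve_left hq
  have hM' : finrank K (LinearMap.range (kapL u A)) = M := by
    rw [LinearMap.finrank_range_of_inj hkapinj, Module.finrank_fin_fun]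
  have h1 := Submodule.finrank_mono hkapker
  refine ⟨by omega, fun hdiv => ?_⟩
  have hker : LinearMap.ker ev ≤ LinearMap.range (kapL u A) := by
    intro c hc
    obtain ⟨q, p, hq, hp⟩ := S.common_denom c
    have e : aeval u q • c = (fun a => aeval u (p a)) := by
      funext a; rw [← hp]; rfl
    have h1 : aeval (fun j => algebraMap K F (u j)) (polW w p) = 0 := by
      rw [← hevpol, ← e, map_smul, LinearMap.mem_ker.mp hc, smul_zero]
    obtain ⟨Q, hQ⟩ := S.dvd_of_aeval_eq_zero _ h1
    have hQW : ∀ m, coeff m (ellP ξ * Q) ∈ W := fun m => by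
      rw [← hQ, coeff_polW]
      exact Submodule.sum_mem _ fun i _ => Submodule.smul_mem _ _ (wb i).2
    obtain ⟨p', hp'⟩ := exists_polW hgsp Q (hdiv Q hQW)
    rw [hp', ellP_mul_polW hA'] at hQ
    have h2 : p = kapP A p' := polW_inj hwli hQ
    have h3 : aeval u q • c ∈ LinearMap.range (kapL u A) := by
      rw [e, h2, ← kapL_aeval]
      exact ⟨_, rfl⟩
    have := Submodule.smul_mem _ (aeval u q)⁻¹ h3
    rwa [smul_smul, inv_mul_cancel₀ hq, one_smul] at this
  have h2 := Submodule.finrank_mono hker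
  omega

end GenericSection

end GenusBound

/-! ### Forms and local degree -/

namespace GenusBound

open Module MvPolynomial

section Filtered

set_option linter.unusedSectionVars false

/-- The space of linear forms: the `k`-span of the coordinates. -/
def linV {ι : Type*} (k : Type*) {E : Type*} [Field k] [CommRing E] [Algebra k E] (ξ : ι → E) :
    Submodule k E :=
  Submodule.span k (Set.range ξ)

theorem linV_pow_eq_map {ι k E : Type*} [Field k] [CommRing E] [Algebra k E] (ξ : ι → E) (t : ℕ) :
    linV k ξ ^ t = (homogeneousSubmodule ι k t).map (aeval ξ).toLinearMap := by
  rw [← homogeneousSubmodule_one_pow, Submodule.map_pow, homogeneousSubmodule_one_eq_span_X,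
    Submodule.map_span, linV, ← Set.range_comp]
  congr 3
  funext i
  simp

theorem mem_linV_pow {ι k E : Type*} [Field k] [CommRing E] [Algebra k E] {ξ : ι → E} {t : ℕ}
    {g : E} : g ∈ linV k ξ ^ t ↔ ∃ f : MvPolynomial ι k, f.IsHomogeneous t ∧ aeval ξ f = g := by
  rw [linV_pow_eq_map]
  rfl

theorem mem_linV {ι k E : Type*} [Field k] [CommRing E] [Algebra k E] (ξ : ι → E) (j : ι) :
    ξ j ∈ linV k ξ := Submodule.subset_span ⟨j, rfl⟩

theorem one_le_linV {r : ℕ} {k E : Type*} [Field k] [CommRing E] [Algebra k E]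
    {ξ : Fin (r + 1) → E} (h0 : ξ 0 = 1) : (1 : E) ∈ linV k ξ := h0 ▸ mem_linV ξ 0

instance linV_fd {r : ℕ} {k E : Type*} [Field k] [CommRing E] [Algebra k E]
    (ξ : Fin (r + 1) → E) : FiniteDimensional k (linV k ξ) :=
  FiniteDimensional.span_of_finite k (Set.finite_range ξ)

instance linV_pow_fd {r : ℕ} {k E : Type*} [Field k] [CommRing E] [Algebra k E]
    (ξ : Fin (r + 1) → E) (t : ℕ) : FiniteDimensional k (linV k ξ ^ t : Submodule k E) := by
  have h : (linV k ξ).FG := Submodule.fg_iff_finiteDimensional _ |>.mpr (linV_fd ξ)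
  exact Submodule.fg_iff_finiteDimensional _ |>.mp (h.pow t)

theorem linV_pow_mono {r : ℕ} {k E : Type*} [Field k] [CommRing E] [Algebra k E]
    {ξ : Fin (r + 1) → E} (h0 : ξ 0 = 1) {a b : ℕ} (h : a ≤ b) :
    linV k ξ ^ a ≤ linV k ξ ^ b :=
  pow_le_pow_right' (Submodule.one_le.mpr (one_le_linV h0)) h

theorem mul_mem_linV_pow {ι k E : Type*} [Field k] [CommRing E] [Algebra k E] {ξ : ι → E}
    {a b c : ℕ} (h : a + b = c) {x y : E} (hx : x ∈ linV k ξ ^ a) (hy : y ∈ linV k ξ ^ b) :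
    x * y ∈ linV k ξ ^ c := by
  rw [← h, pow_add]
  exact Submodule.mul_mem_mul hx hy

theorem xi_mul_mem {ι k E : Type*} [Field k] [CommRing E] [Algebra k E] {ξ : ι → E}
    {b c : ℕ} (h : b + 1 = c) (j : ι) {y : E} (hy : y ∈ linV k ξ ^ b) :
    ξ j * y ∈ linV k ξ ^ c :=
  mul_mem_linV_pow (a := 1) (by omega) (by rw [pow_one]; exact mem_linV ξ j) hy

theorem xi_pow_mem {ι k E : Type*} [Field k] [CommRing E] [Algebra k E] (ξ : ι → E)
    (j : ι) (b : ℕ) : ξ j ^ b ∈ linV k ξ ^ b :=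
  Submodule.pow_mem_pow _ (mem_linV ξ j) b

/-- `g` becomes a form of degree `t` locally on every coordinate chart. -/
def LocDeg {r : ℕ} (k : Type*) {E : Type*} [Field k] [CommRing E] [Algebra k E]
    (ξ : Fin (r + 1) → E) (t : ℕ) (g : E) : Prop :=
  ∀ j, ∃ N, ξ j ^ N * g ∈ linV k ξ ^ (N + t)

theorem LocDeg.mono {r : ℕ} {k E : Type*} [Field k] [CommRing E] [Algebra k E]
    {ξ : Fin (r + 1) → E} (h0 : ξ 0 = 1) {t t' : ℕ} (h : t ≤ t') {g : E} (hg : LocDeg k ξ t g) :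
    LocDeg k ξ t' g := fun j => by
  obtain ⟨N, hN⟩ := hg j
  exact ⟨N, linV_pow_mono h0 (by omega) hN⟩

theorem LocDeg.uniform {r : ℕ} {k E : Type*} [Field k] [CommRing E] [Algebra k E]
    {ξ : Fin (r + 1) → E} {t : ℕ} {g : E} (hg : LocDeg k ξ t g) :
    ∃ L, ∀ M, L ≤ M → ∀ x ∈ linV k ξ ^ M, x * g ∈ linV k ξ ^ (M + t) := by
  choose N hN using hg
  refine ⟨∑ j, N j + 1, fun M hM x hx => ?_⟩
  obtain ⟨f, hf, rfl⟩ := mem_linV_pow.mp hx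
  have key : ∀ α : Fin (r + 1) →₀ ℕ, α.degree = M →
      aeval ξ (monomial α (1 : k)) * g ∈ linV k ξ ^ (M + t) := by
    intro α hα
    have hj : ∃ j, N j ≤ α j := by
      by_contra! hcon
      have : ∑ j, α j ≤ ∑ j, N j := Finset.sum_le_sum fun j _ => (hcon j).le
      rw [Finsupp.degree_eq_sum] at hα
      omega
    obtain ⟨j, hj⟩ := hj
    have hα2 : α = (α - Finsupp.single j (N j)) + Finsupp.single j (N j) := by
      rw [tsub_add_cancel_of_le]
      rwa [Finsupp.single_le_iff]
    have hdeg : (α - Finsupp.single j (N j)).degree + N j = M := by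
      have := congrArg Finsupp.degree hα2
      rw [map_add, Finsupp.degree_single, hα] at this
      exact this.symm
    have hm : monomial α (1 : k)
        = monomial (α - Finsupp.single j (N j)) 1 * X j ^ N j := by
      rw [X_pow_eq_monomial, monomial_mul, ← hα2, one_mul]
    rw [hm, map_mul, map_pow, aeval_X, mul_assoc]
    exact mul_mem_linV_pow (by omega)
      (mem_linV_pow.mpr ⟨_, isHomogeneous_monomial 1 rfl, rfl⟩) (hN j)
  rw [f.as_sum, map_sum, Finset.sum_mul]
  refine Submodule.sum_mem _ fun α hα => ?_
  have h2 := key α (hf.degree_eq_sum_deg_support hα).symm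
  have h3 := Submodule.smul_mem _ (coeff α f) h2
  rwa [← smul_mul_assoc, ← map_smul, smul_monomial, smul_eq_mul, mul_one] at h3

theorem homogeneousComponent_mul_of_isHomogeneous {ι k : Type*} [CommRing k]
    {a f : MvPolynomial ι k} {D M : ℕ} (hf : f.IsHomogeneous D) (h : D ≤ M) :
    homogeneousComponent M (a * f) = homogeneousComponent (M - D) a * f := by
  classical
  conv_lhs => rw [← sum_homogeneousComponent a, Finset.sum_mul, map_sum]
  have h1 : ∀ i ∈ Finset.range (a.totalDegree + 1),
      homogeneousComponent M (homogeneousComponent i a * f)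
        = if i = M - D then homogeneousComponent i a * f else 0 := by
    intro i _
    have := homogeneousComponent_of_mem
      (m := M) ((homogeneousComponent_isHomogeneous i a).mul hf)
    rw [this]
    by_cases hi : i = M - D
    · rw [if_pos hi, if_pos (by omega)]
    · rw [if_neg hi, if_neg (by omega)]
  rw [Finset.sum_congr rfl h1, Finset.sum_ite_eq']
  split_ifs with h2
  · rfl
  · rw [homogeneousComponent_eq_zero, zero_mul]
    rw [Finset.mem_range] at h2
    omega

/-- In large degrees, a form that is locally of smaller degree is of smaller degree. The ideal
of homogeneous polynomials with this property is finitely generated. -/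
theorem locDeg_descend {r : ℕ} {k E : Type*} [Field k] [CommRing E] [Algebra k E]
    (ξ : Fin (r + 1) → E) : ∃ t0, ∀ M, t0 ≤ M → ∀ g ∈ linV k ξ ^ (M + 1), LocDeg k ξ M g →
      g ∈ linV k ξ ^ M := by
  classical
  let S : Set (MvPolynomial (Fin (r + 1)) k) :=
    {f | ∃ D, f.IsHomogeneous (D + 1) ∧ LocDeg k ξ D (aeval ξ f)}
  obtain ⟨s, hsS, hs⟩ := (Submodule.fg_span_iff_fg_span_finset_subset S).mp
    (IsNoetherian.noetherian (Ideal.span S))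
  have h1 : ∀ f ∈ s, ∃ D L, f.IsHomogeneous (D + 1) ∧
      ∀ M, L ≤ M → ∀ x ∈ linV k ξ ^ M, x * aeval ξ f ∈ linV k ξ ^ (M + D) := by
    intro f hf
    obtain ⟨D, hD, hl⟩ := hsS hf
    obtain ⟨L, hL⟩ := hl.uniform
    exact ⟨D, L, hD, hL⟩
  choose! D L hD hL using h1
  refine ⟨∑ f ∈ s, (D f + L f) + 1, fun M hM g hg hloc => ?_⟩
  obtain ⟨f, hf, rfl⟩ := mem_linV_pow.mp hg
  have hfs : f ∈ Submodule.span (MvPolynomial (Fin (r + 1)) k) (s : Set _) := by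
    rw [← hs]
    exact Submodule.subset_span ⟨M, hf, hloc⟩
  rw [Submodule.mem_span_finset] at hfs
  obtain ⟨a, -, ha⟩ := hfs
  have hle : ∀ p ∈ s, D p + L p ≤ M := fun p hp => by
    have := Finset.single_le_sum (f := fun f => D f + L f) (fun _ _ => Nat.zero_le _) hp
    omega
  have h2 : f = ∑ p ∈ s, homogeneousComponent (M - D p) (a p) * p := by
    conv_lhs => rw [← (homogeneousComponent_of_mem (m := M + 1) hf).trans (if_pos rfl), ← ha,
      map_sum]
    refine Finset.sum_congr rfl fun p hp => ?_
    rw [smul_eq_mul, homogeneousComponent_mul_of_isHomogeneous (hD p hp)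
      (by have := hle p hp; omega)]
    have e : M + 1 - (D p + 1) = M - D p := by omega
    rw [e]
  rw [h2, map_sum]
  refine Submodule.sum_mem _ fun p hp => ?_
  rw [map_mul]
  have := hL p hp (M - D p) (by have := hle p hp; omega) _
    (mem_linV_pow.mpr ⟨_, homogeneousComponent_isHomogeneous (M - D p) (a p), rfl⟩)
  have e : M - D p + D p = M := by have := hle p hp; omega
  rwa [e] at this

/-- If the generic linear form times `Q` has coefficients of degree `t + 1`, the coefficients of
`Q` are locally of degree `t`. -/
theorem locDeg_of_ellP_mul {r : ℕ} {k E : Type*} [Field k] [Field E] [Algebra k E]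
    {ξ : Fin (r + 1) → E} {t : ℕ} (Q : MvPolynomial (Fin (r + 1)) E)
    (hQ : ∀ m, coeff m (ellP ξ * Q) ∈ linV k ξ ^ (t + 1)) (m : Fin (r + 1) →₀ ℕ) :
    LocDeg k ξ t (coeff m Q) := by
  classical
  intro j
  suffices H : ∀ n : ℕ, ∀ m : Fin (r + 1) →₀ ℕ, Q.totalDegree < m j + n →
      ∃ N, ξ j ^ N * coeff m Q ∈ linV k ξ ^ (N + t) from
    H (Q.totalDegree + 1) m (by omega)
  intro n
  induction n with
  | zero =>
    intro m hm
    refine ⟨0, ?_⟩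
    rw [coeff_eq_zero_of_totalDegree_lt, mul_zero]
    · exact zero_mem _
    · refine lt_of_lt_of_le hm ?_
      rw [← Finsupp.degree_apply, add_zero]
      exact Finsupp.le_degree j m
  | succ n ih =>
    intro m hm
    have hc := hQ (m + Finsupp.single j 1)
    rw [ellP, Finset.sum_mul, coeff_sum, ← Finset.add_sum_erase _ _ (Finset.mem_univ j)] at hc
    rw [mul_assoc, coeff_C_mul, mul_comm (X j), coeff_mul_X] at hc
    have hother : ∀ i, ∃ N, ∀ N' ≥ N, i ≠ j →
        ξ j ^ N' * coeff (m + Finsupp.single j 1) (C (ξ i) * X i * Q) ∈ linV k ξ ^ (N' + t + 1) := by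
      intro i
      by_cases hij : i = j
      · exact ⟨0, fun _ _ h => absurd hij h⟩
      obtain ⟨N, hN⟩ := ih (m + Finsupp.single j 1 - Finsupp.single i 1) (by
        rw [Finsupp.tsub_apply, Finsupp.add_apply, Finsupp.single_eq_same,
          Finsupp.single_eq_of_ne (Ne.symm hij)]
        omega)
      refine ⟨N, fun N' hN' _ => ?_⟩
      rw [mul_assoc, coeff_C_mul, mul_comm (X i), coeff_mul_X']
      split_ifs
      · obtain ⟨e, rfl⟩ := Nat.exists_eq_add_of_le hN'
        have h2 := xi_mul_mem rfl i (mul_mem_linV_pow rfl (xi_pow_mem ξ j e) hN)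
        have e1 : e + (N + t) + 1 = N + e + t + 1 := by omega
        rw [e1] at h2
        convert h2 using 1
        ring
      · rw [mul_zero, mul_zero]
        exact zero_mem _
    choose N hN using hother
    refine ⟨∑ i, N i + 1, ?_⟩
    have h3 : ξ j ^ (∑ i, N i) * (ξ j * coeff m Q
        + ∑ i ∈ Finset.univ.erase j, coeff (m + Finsupp.single j 1) (C (ξ i) * X i * Q))
        ∈ linV k ξ ^ (∑ i, N i + t + 1) :=
      mul_mem_linV_pow (by omega) (xi_pow_mem ξ j _) hc
    rw [mul_add, Finset.mul_sum] at h3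
    have h4 := (Submodule.add_mem_iff_left _ (Submodule.sum_mem _ fun i hi =>
      hN i (∑ i, N i) (Finset.single_le_sum (fun _ _ => Nat.zero_le _) (Finset.mem_univ i))
        (Finset.ne_of_mem_erase hi))).mp h3
    have e1 : ∑ i, N i + 1 + t = ∑ i, N i + t + 1 := by omega
    rw [e1, pow_succ (ξ j), mul_assoc]
    exact h4

end Filtered

end GenusBound

/-! ### The Hilbert function of the generic section -/

namespace GenusBound

open Module MvPolynomial

section SectionHilb

set_option linter.unusedSectionVars false

variable {r : ℕ} {k E K F : Type*} [Field k] [Field E] [Field K] [Field F] [Algebra k E]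
    [Algebra k K] [Algebra E F] [Algebra K F] [Algebra k F] [IsScalarTower k K F]
    [IsScalarTower k E F] {u : Fin (r + 1) → K} {ξ : Fin (r + 1) → E}

/-- The filtered Hilbert function of the coordinates `ξ`. -/
noncomputable def hf {r : ℕ} (k : Type*) {E : Type*} [Field k] [CommRing E] [Algebra k E]
    (ξ : Fin (r + 1) → E) (t : ℕ) : ℕ := finrank k (linV k ξ ^ t : Submodule k E)

/-- The coordinates of the generic section. -/
def secX {r : ℕ} {E : Type*} (F : Type*) [CommRing E] [CommRing F] [Algebra E F]
    (ξ : Fin (r + 1) → E) : Fin (r + 1) → F := fun j => algebraMap E F (ξ j)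

theorem hf_mono (h0 : ξ 0 = 1) {a b : ℕ} (h : a ≤ b) : hf k ξ a ≤ hf k ξ b :=
  Submodule.finrank_mono (linV_pow_mono h0 h)

theorem hf_zero : hf k ξ 0 = 1 := by
  rw [hf, pow_zero]
  have : (1 : Submodule k E) = Submodule.span k {1} := Submodule.one_eq_span
  rw [this, finrank_span_singleton one_ne_zero]

theorem extS_linV_pow (t : ℕ) : extS K F (linV k ξ ^ t) = linV K (secX F ξ) ^ t := by
  rw [extS]
  have htow : ∀ c : k, algebraMap E F (algebraMap k E c) = algebraMap K F (algebraMap k K c) :=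
    fun c => by rw [← IsScalarTower.algebraMap_apply, ← IsScalarTower.algebraMap_apply]
  apply le_antisymm
  · rw [Submodule.span_le]
    rintro _ ⟨x, hx, rfl⟩
    obtain ⟨f, hf, rfl⟩ := mem_linV_pow.mp hx
    refine mem_linV_pow.mpr ⟨map (algebraMap k K) f, hf.map _, ?_⟩
    rw [aeval_map_algebraMap]
    exact aeval_algebraMap_apply F ξ f
  · intro x hx
    obtain ⟨f, hf, rfl⟩ := mem_linV_pow.mp hx
    rw [f.as_sum, map_sum]
    refine Submodule.sum_mem _ fun α hα => ?_
    have h1 : aeval (secX F ξ) (monomial α (coeff α f))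
        = coeff α f • algebraMap E F (aeval ξ (monomial α (1 : k))) := by
      rw [aeval_monomial, aeval_monomial, Algebra.smul_def, map_one, one_mul, Finsupp.prod,
        Finsupp.prod, map_prod]
      simp only [map_pow]
      rfl
    rw [h1]
    refine Submodule.smul_mem _ _ (Submodule.subset_span ⟨_, ?_, rfl⟩)
    exact mem_linV_pow.mpr
      ⟨_, isHomogeneous_monomial 1 (hf.degree_eq_sum_deg_support hα).symm, rfl⟩

theorem GenSec.hf_sec_le (S : GenSec k E K F u ξ) (t : ℕ) :
    hf K (secX F ξ) (t + 1) + hf k ξ t ≤ hf k ξ (t + 1) := by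
  have := (S.finrank_extS (linV k ξ ^ (t + 1)) (linV k ξ ^ t)
    (fun j g hg => xi_mul_mem rfl j hg)).1
  rwa [extS_linV_pow] at this

theorem GenSec.hf_sec_eq (S : GenSec k E K F u ξ) :
    ∃ t0, ∀ t, t0 ≤ t → hf K (secX F ξ) (t + 1) + hf k ξ t = hf k ξ (t + 1) := by
  obtain ⟨t0, ht0⟩ := locDeg_descend (k := k) ξ
  refine ⟨t0, fun t ht => ?_⟩
  have := (S.finrank_extS (linV k ξ ^ (t + 1)) (linV k ξ ^ t)
    (fun j g hg => xi_mul_mem rfl j hg)).2 (fun Q hQ m => by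
      have hl := locDeg_of_ellP_mul Q hQ m
      obtain ⟨N, hN⟩ := hl 0
      rw [S.xi0, one_pow, one_mul] at hN
      induction N with
      | zero => simpa using hN
      | succ N ih =>
        refine ih (ht0 (N + t) (by omega) _ ?_ (hl.mono S.xi0 (by omega)))
        have e : N + 1 + t = N + t + 1 := by omega
        rwa [e] at hN)
  rwa [extS_linV_pow] at this

theorem GenSec.hf_sec_one (S : GenSec k E K F u ξ)
    (hk : ∀ x : E, IsIntegral k x → x ∈ (algebraMap k E).range) :
    hf K (secX F ξ) 1 + 1 = hf k ξ 1 := by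
  have := (S.finrank_extS (linV k ξ ^ (0 + 1)) (linV k ξ ^ 0)
    (fun j g hg => xi_mul_mem rfl j hg)).2 (fun Q hQ m => by
      obtain ⟨L, hL⟩ := (locDeg_of_ellP_mul Q hQ m).uniform
      have h1 := hL L le_rfl
      have h2 : IsIntegral k (coeff m Q) := by
        refine isIntegral_of_smul_mem_submodule (M := E) (linV k ξ ^ L) ?_
          ((Submodule.fg_iff_finiteDimensional _).mpr inferInstance) _ ?_
        · intro hbot
          have : (1 : E) ∈ linV k ξ ^ L := by
            simpa [S.xi0] using xi_pow_mem (k := k) ξ 0 L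
          rw [hbot, Submodule.mem_bot] at this
          exact one_ne_zero this
        · intro n hn
          rw [smul_eq_mul, mul_comm]
          exact h1 n hn
      rw [pow_zero]
      obtain ⟨c, hc⟩ := hk _ h2
      exact Submodule.mem_one.mpr ⟨c, hc⟩)
  rw [extS_linV_pow] at this
  have h0 := hf_zero (k := k) (ξ := ξ)
  rw [hf] at h0
  rw [h0] at this
  exact this

end SectionHilb

end GenusBound

/-! ### Transfer of properties and existence of generic sections -/

namespace GenusBound

open Module MvPolynomial

section Transfer

set_option linter.unusedSectionVars false

variable {r : ℕ} {k E K F : Type*} [Field k] [Field E] [Field K] [Field F] [Algebra k E]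
    [Algebra k K] [Algebra E F] [Algebra K F] [Algebra k F] [IsScalarTower k K F]
    [IsScalarTower k E F] {u : Fin (r + 1) → K} {ξ : Fin (r + 1) → E}

/-- Substitution of `u_0 = - ∑_{j ≥ 1} u_j x_j` into a polynomial in `u` over `k[x]`. -/
noncomputable def tld (r : ℕ) (k : Type*) [Field k] :
    MvPolynomial (Fin (r + 1)) (MvPolynomial (Fin (r + 1)) k) →ₐ[MvPolynomial (Fin (r + 1)) k]
      MvPolynomial (Fin r) (MvPolynomial (Fin (r + 1)) k) :=
  aeval (Fin.cases (-∑ j : Fin r, C (X j.succ) * X j) X)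

/-- Evaluation of the inner variables: `k[x][u] → K[x]`. -/
noncomputable def thet {r : ℕ} {k K : Type*} [Field k] [Field K] [Algebra k K]
    (u : Fin (r + 1) → K) :
    MvPolynomial (Fin (r + 1)) (MvPolynomial (Fin (r + 1)) k) →+*
      MvPolynomial (Fin (r + 1)) K :=
  eval₂Hom (map (algebraMap k K)) (fun j => C (u j))

theorem GenSec.aeval_thet (S : GenSec k E K F u ξ)
    (P : MvPolynomial (Fin (r + 1)) (MvPolynomial (Fin (r + 1)) k)) :
    aeval (secX F ξ) (thet u P) = aeval (fun j : Fin r => algebraMap K F (u j.succ))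
      (map (aeval ξ : MvPolynomial (Fin (r + 1)) k →ₐ[k] E).toRingHom (tld r k P)) := by
  have h : ((aeval (secX F ξ) : MvPolynomial (Fin (r + 1)) K →ₐ[K] F) : _ →+* F).comp (thet u)
      = ((aeval (fun j : Fin r => algebraMap K F (u j.succ)) :
        MvPolynomial (Fin r) E →ₐ[E] F) : _ →+* F).comp
        ((map (aeval ξ : MvPolynomial (Fin (r + 1)) k →ₐ[k] E).toRingHom).comp
          (tld r k).toRingHom) := by
    apply ringHom_ext
    · intro p
      simp only [RingHom.comp_apply, thet, coe_eval₂Hom, eval₂_C, tld, RingHom.coe_coe,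
        AlgHom.toRingHom_eq_coe, algHom_C, algebraMap_eq, map_C, aeval_map_algebraMap]
      exact aeval_algebraMap_apply F ξ p
    · intro j
      refine Fin.cases ?_ (fun j => ?_) j
      · have := S.rel
        rw [Fin.sum_univ_succ, S.xi0, map_one, mul_one] at this
        simp only [RingHom.comp_apply, thet, coe_eval₂Hom, eval₂_X, tld, RingHom.coe_coe,
          AlgHom.toRingHom_eq_coe, aeval_X, Fin.cases_zero, map_neg, map_sum, map_mul, map_C,
          aeval_C, map_X]
        rw [eq_neg_of_add_eq_zero_left this]
        congr 1
        exact Finset.sum_congr rfl fun _ _ => mul_comm _ _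
      · simp only [RingHom.comp_apply, thet, coe_eval₂Hom, eval₂_X, tld, RingHom.coe_coe,
          AlgHom.toRingHom_eq_coe, aeval_X, Fin.cases_succ, map_X, aeval_C]
  exact congrArg (fun f => f P) h

/-- A polynomial over `k[u]` vanishes at the generic section iff all the coefficients of its
substitution vanish at the original coordinates. -/
theorem GenSec.aeval_thet_eq_zero_iff (S : GenSec k E K F u ξ)
    (P : MvPolynomial (Fin (r + 1)) (MvPolynomial (Fin (r + 1)) k)) :
    aeval (secX F ξ) (thet u P) = 0 ↔ ∀ m, aeval ξ (coeff m (tld r k P)) = 0 := by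
  rw [S.aeval_thet, map_eq_zero_iff _ S.indepE, MvPolynomial.ext_iff]
  simp only [coeff_map, coeff_zero]
  rfl

theorem thet_coeff (P : MvPolynomial (Fin (r + 1)) (MvPolynomial (Fin (r + 1)) k)) :
    thet u P = ∑ m ∈ P.support, C (∏ j, u j ^ m j) * map (algebraMap k K) (coeff m P) := by
  rw [thet, coe_eval₂Hom, eval₂_eq']
  refine Finset.sum_congr rfl fun m _ => ?_
  rw [mul_comm, map_prod]
  simp only [map_pow]

/-- Clearing denominators. -/
theorem GenSec.clear_denom (S : GenSec k E K F u ξ) (Q : MvPolynomial (Fin (r + 1)) K) :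
    ∃ (c : K) (P : MvPolynomial (Fin (r + 1)) (MvPolynomial (Fin (r + 1)) k)), c ≠ 0 ∧
      thet u P = C c * Q ∧ ∀ m, (coeff m P).support ⊆ Q.support := by
  classical
  obtain ⟨q, p, hq, hp⟩ := S.common_denom (fun i => coeff (Q.support.equivFin.symm i).1 Q)
  refine ⟨aeval u q, ∑ i, map C (p i) * C (monomial (Q.support.equivFin.symm i).1 1), hq, ?_, ?_⟩
  · conv_rhs => rw [Q.as_sum, ← Finset.sum_coe_sort, ← Q.support.equivFin.symm.sum_comp,
      Finset.mul_sum]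
    rw [map_sum]
    refine Finset.sum_congr rfl fun i _ => ?_
    rw [C_mul_monomial, hp i, map_mul]
    have h1 : thet u (C (monomial (Q.support.equivFin.symm i).1 (1 : k)))
        = monomial (Q.support.equivFin.symm i).1 1 := by
      simp [thet]
    have h2 : thet u (map C (p i)) = C (aeval u (p i)) := by
      have : (thet u).comp (map C) = (C : K →+* MvPolynomial (Fin (r + 1)) K).comp
          (aeval u : MvPolynomial (Fin (r + 1)) k →ₐ[k] K).toRingHom := by
        apply ringHom_ext
        · intro a; simp [thet]
        · intro j; simp [thet]
      exact congrArg (fun f => f (p i)) this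
    rw [h1, h2, C_mul_monomial, mul_one]
  · intro m
    rw [coeff_sum]
    refine (support_sum).trans ?_
    intro α hα
    rw [Finset.mem_biUnion] at hα
    obtain ⟨i, -, hi⟩ := hα
    rw [mul_comm, coeff_C_mul, coeff_map, mul_comm, C_mul_monomial] at hi
    have := support_monomial_subset hi
    rw [Finset.mem_singleton] at this
    rw [this]
    exact (Q.support.equivFin.symm i).2

/-- Vanishing of polynomials passes from one generic section to another if it passes between the
original coordinates. -/
theorem GenSec.transfer {E' F' : Type*} [Field E'] [Field F'] [Algebra k E'] [Algebra E' F']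
    [Algebra K F'] [Algebra k F'] [IsScalarTower k K F'] [IsScalarTower k E' F']
    {ξ' : Fin (r + 1) → E'} (S : GenSec k E K F u ξ) (S' : GenSec k E' K F' u ξ')
    (h : ∀ p : MvPolynomial (Fin (r + 1)) k, aeval ξ p = 0 → aeval ξ' p = 0)
    (Q : MvPolynomial (Fin (r + 1)) K) (hQ : aeval (secX F ξ) Q = 0) :
    aeval (secX F' ξ') Q = 0 := by
  obtain ⟨c, P, hc, hP, -⟩ := S.clear_denom Q
  have h1 : aeval (secX F ξ) (thet u P) = 0 := by rw [hP, map_mul, hQ, mul_zero]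
  have h2 : aeval (secX F' ξ') (thet u P) = 0 := (S'.aeval_thet_eq_zero_iff P).mpr fun m =>
    h _ ((S.aeval_thet_eq_zero_iff P).mp h1 m)
  rw [hP, map_mul, aeval_C] at h2
  exact (mul_eq_zero.mp h2).resolve_left (by simpa using hc)

end Transfer

section Existence

universe v

variable {r : ℕ} {k E : Type v} [Field k] [Field E] [Algebra k E]

/-- The form `∑ ξ_j u_j` is transcendental over `k(u)` if one of the `ξ_j` is transcendental. -/
theorem transcendental_sum (ξ : Fin r → E) (j : Fin r) (hj : Transcendental k (ξ j)) :
    letI : Algebra (MvPolynomial (Fin r) k) (MvPolynomial (Fin r) E) :=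
      (map (algebraMap k E)).toAlgebra
    Transcendental (MvPolynomial (Fin r) k)
      (-∑ i, C (ξ i) * X i : MvPolynomial (Fin r) E) := by
  classical
  let _ : Algebra (MvPolynomial (Fin r) k) (MvPolynomial (Fin r) E) :=
    (map (algebraMap k E)).toAlgebra
  intro halg
  let f : MvPolynomial (Fin r) k →+* MvPolynomial (Fin r) k :=
    (aeval (fun i => X i + if i = j then 1 else 0)).toRingHom
  let g : MvPolynomial (Fin r) E →+* MvPolynomial (Fin r) E :=
    (aeval (fun i => X i + if i = j then 1 else 0)).toRingHom
  have hfinj : Function.Injective f := by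
    have : Function.LeftInverse
        (aeval (fun i => X i - if i = j then 1 else 0) :
          MvPolynomial (Fin r) k →ₐ[k] MvPolynomial (Fin r) k) f := by
      intro p
      have : (aeval (fun i => X i - if i = j then 1 else 0) :
          MvPolynomial (Fin r) k →ₐ[k] MvPolynomial (Fin r) k).comp
          (aeval (fun i => X i + if i = j then 1 else 0)) = AlgHom.id k _ := by
        apply algHom_ext
        intro i
        by_cases h : i = j <;> simp [h]
      exact congrArg (fun f => f p) this
    exact this.injective
  have hcomp : RingHom.comp (algebraMap (MvPolynomial (Fin r) k) (MvPolynomial (Fin r) E)) f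
      = RingHom.comp g (algebraMap (MvPolynomial (Fin r) k) (MvPolynomial (Fin r) E)) := by
    have e : algebraMap (MvPolynomial (Fin r) k) (MvPolynomial (Fin r) E)
      = map (algebraMap k E) := rfl
    rw [e]
    apply ringHom_ext
    · intro a; simp [f, g]
    · intro i
      by_cases h : i = j <;> simp [f, g, h]
  have halg2 := halg.ringHom_of_comp_eq f g hfinj hcomp
  have h3 := halg.sub halg2
  have h4 : (-∑ i, C (ξ i) * X i : MvPolynomial (Fin r) E) - g (-∑ i, C (ξ i) * X i)
      = C (ξ j) := by
    simp [g, mul_add, Finset.sum_add_distrib]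
  rw [h4] at h3
  obtain ⟨p, hp0, hp⟩ := h3
  -- compare coefficients of the monomials in `u`
  apply hp0
  ext i m
  by_contra hne
  apply hj
  refine ⟨∑ a ∈ Finset.range (p.natDegree + 1), Polynomial.monomial a (coeff m (p.coeff a)),
    ?_, ?_⟩
  · intro h0
    apply hne
    have h5 := congrArg (fun q => Polynomial.coeff q i) h0
    simp only [Polynomial.finsetSum_coeff, Polynomial.coeff_monomial, Polynomial.coeff_zero,
      Finset.sum_ite_eq', Finset.mem_range] at h5
    rw [Polynomial.coeff_zero, coeff_zero]
    split_ifs at h5 with h6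
    · exact h5
    · rw [Polynomial.coeff_eq_zero_of_natDegree_lt (by omega), coeff_zero]
  · have h5 := congrArg (coeff m) hp
    rw [Polynomial.aeval_eq_sum_range, coeff_sum, coeff_zero] at h5
    rw [map_sum, ← h5]
    refine Finset.sum_congr rfl fun a _ => ?_
    rw [Polynomial.aeval_monomial, Algebra.smul_def, ← C_pow, mul_comm _ (C _), coeff_C_mul,
      mul_comm]
    rfl

theorem psi_injective (ξ : Fin (r + 1) → E) (hj : ∃ j : Fin r, Transcendental k (ξ j.succ)) :
    Function.Injective (aeval (Fin.cases (-∑ j : Fin r, C (ξ j.succ) * X j) X) :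
      MvPolynomial (Fin (r + 1)) k →ₐ[k] MvPolynomial (Fin r) E) := by
  obtain ⟨j, hj⟩ := hj
  have htr := transcendental_sum (fun j : Fin r => ξ j.succ) j hj
  let _ : Algebra (MvPolynomial (Fin r) k) (MvPolynomial (Fin r) E) :=
    (map (algebraMap k E)).toAlgebra
  rw [transcendental_iff_injective] at htr
  have hcomp : (aeval (Fin.cases (-∑ j : Fin r, C (ξ j.succ) * X j) X) :
      MvPolynomial (Fin (r + 1)) k →ₐ[k] MvPolynomial (Fin r) E).toRingHom
      = (Polynomial.aeval (-∑ i, C (ξ (Fin.succ i)) * X i : MvPolynomial (Fin r) E) :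
        Polynomial (MvPolynomial (Fin r) k) →ₐ[MvPolynomial (Fin r) k] _).toRingHom.comp
        (finSuccEquiv k r).toRingEquiv.toRingHom := by
    have ealg : ∀ p, algebraMap (MvPolynomial (Fin r) k) (MvPolynomial (Fin r) E) p
      = map (algebraMap k E) p := fun _ => rfl
    apply ringHom_ext
    · intro a
      simp [finSuccEquiv_apply, ealg, MvPolynomial.algebraMap_apply]
    · intro i
      refine Fin.cases ?_ (fun i => ?_) i
      · simp [finSuccEquiv_X_zero]
      · simp [finSuccEquiv_X_succ, ealg]
  intro p q hpq
  have h1 : ∀ p, (aeval (Fin.cases (-∑ j : Fin r, C (ξ j.succ) * X j) X) :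
      MvPolynomial (Fin (r + 1)) k →ₐ[k] MvPolynomial (Fin r) E) p
      = Polynomial.aeval (-∑ i, C (ξ (Fin.succ i)) * X i : MvPolynomial (Fin r) E)
        (finSuccEquiv k r p) := fun p => congrArg (fun f => f p) hcomp
  rw [h1, h1] at hpq
  exact (finSuccEquiv k r).injective (htr hpq)

/-- The field of rational functions in the coefficients of the generic linear form. -/
abbrev KK (r : ℕ) (k : Type v) [Field k] : Type v := FractionRing (MvPolynomial (Fin (r + 1)) k)

/-- The coefficients of the generic linear form. -/
noncomputable def uu (r : ℕ) (k : Type v) [Field k] (j : Fin (r + 1)) : KK r k :=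
  algebraMap (MvPolynomial (Fin (r + 1)) k) (KK r k) (X j)

theorem exists_genSec (ξ : Fin (r + 1) → E) (h0 : ξ 0 = 1)
    (hj : ∃ j : Fin r, Transcendental k (ξ j.succ)) :
    ∃ (F : Type v) (_ : Field F) (_ : Algebra E F) (_ : Algebra (KK r k) F) (_ : Algebra k F)
      (_ : IsScalarTower k (KK r k) F) (_ : IsScalarTower k E F),
      GenSec k E (KK r k) F (uu r k) ξ := by
  let ψ : MvPolynomial (Fin (r + 1)) k →ₐ[k] MvPolynomial (Fin r) E :=
    aeval (Fin.cases (-∑ j : Fin r, C (ξ j.succ) * X j) X)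
  have hψ : Function.Injective ψ := psi_injective ξ hj
  let F := FractionRing (MvPolynomial (Fin r) E)
  let Φ : KK r k →+* F := IsFractionRing.map (K := KK r k) (L := F) (j := ψ.toRingHom) hψ
  have hΦ : ∀ p, Φ (algebraMap _ _ p) = algebraMap _ F (ψ p) := fun p =>
    IsLocalization.map_eq _ p
  let _ : Algebra (KK r k) F := Φ.toAlgebra
  have halg : ∀ x, algebraMap (KK r k) F x = Φ x := fun _ => rfl
  have hu : ∀ j : Fin r, algebraMap (KK r k) F (uu r k j.succ)
      = algebraMap (MvPolynomial (Fin r) E) F (X j) := by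
    intro j
    rw [halg, uu, hΦ]
    simp [ψ]
  have hE : ∀ p : MvPolynomial (Fin r) E,
      aeval (fun j : Fin r => algebraMap (KK r k) F (uu r k j.succ)) p = algebraMap _ F p := by
    intro p
    simp only [hu]
    exact (aeval_algebraMap_apply F X p).trans (by rw [aeval_X_left_apply])
  have hK : ∀ p : MvPolynomial (Fin (r + 1)) k, aeval (uu r k) p = algebraMap _ (KK r k) p := by
    intro p
    exact (aeval_algebraMap_apply (KK r k) X p).trans (by rw [aeval_X_left_apply])
  refine ⟨F, inferInstance, inferInstance, inferInstance, inferInstance, ?_, inferInstance,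
    ⟨h0, ?_, ?_, ?_, ?_, ?_⟩⟩
  · refine IsScalarTower.of_algebraMap_eq fun x => ?_
    rw [halg, IsScalarTower.algebraMap_apply k (MvPolynomial (Fin (r + 1)) k) (KK r k), hΦ,
      AlgHom.commutes, ← IsScalarTower.algebraMap_apply]
  · intro p q hpq
    rw [hK, hK] at hpq
    exact IsFractionRing.injective _ _ hpq
  · intro x
    obtain ⟨p, q, hq, rfl⟩ := IsFractionRing.div_surjective (A := MvPolynomial (Fin (r + 1)) k) x
    have hq0 : algebraMap _ (KK r k) q ≠ 0 := by
      simpa using nonZeroDivisors.ne_zero hq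
    refine ⟨p, q, ?_, ?_⟩
    · rwa [hK]
    · rw [hK, hK, div_mul_cancel₀ _ hq0]
  · rw [Fin.sum_univ_succ, h0, map_one, mul_one, halg, uu, hΦ]
    simp only [hu]
    simp only [ψ, aeval_X, Fin.cases_zero, map_neg, map_sum, map_mul]
    rw [neg_add_eq_zero]
    refine Finset.sum_congr rfl fun j _ => ?_
    rw [mul_comm]
    rfl
  · intro p q hpq
    rw [hE, hE] at hpq
    exact IsFractionRing.injective _ _ hpq
  · intro x
    obtain ⟨p, q, hq, rfl⟩ := IsFractionRing.div_surjective (A := MvPolynomial (Fin r) E) x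
    have hq0 : algebraMap _ F q ≠ 0 := by
      simpa using nonZeroDivisors.ne_zero hq
    refine ⟨p, q, ?_, ?_⟩
    · rwa [hE]
    · rw [hE, hE, div_mul_cancel₀ _ hq0]

end Existence

end GenusBound

/-! ### Plateaus of the Hilbert function -/

namespace GenusBound

open Module MvPolynomial

section Persist

set_option linter.unusedSectionVars false

variable {K F : Type*} [Field K] [Field F] [Algebra K F]

/-- The data extracted from a plateau of length three of the first difference of
`t ↦ dim V^t`: from step `q` on the growth comes from `y`, and multiplication by `y` is injective
on `V^(q+1)/V^q` and on `V^(q+2)/V^(q+1)`. -/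
structure Plateau (V : Submodule K F) (q : ℕ) (y : F) : Prop where
  one_mem : (1 : F) ∈ V
  y_mem : y ∈ V
  step : V ^ (q + 1) = mulStep V q y
  inj1 : ∀ a ∈ V ^ (q + 1), y * a ∈ V ^ (q + 1) → a ∈ V ^ q
  inj2 : ∀ a ∈ V ^ (q + 2), y * a ∈ V ^ (q + 2) → a ∈ V ^ (q + 1)

/-- Three equal increments, bounded by the step number, produce a `Plateau`. -/
theorem exists_plateau [Infinite K] {V : Submodule K F} [FiniteDimensional K V]
    (h1 : (1 : F) ∈ V) {q σ : ℕ} (hσ : σ ≤ q + 1)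
    (e1 : finrank K ↥(V ^ (q + 1)) = finrank K ↥(V ^ q) + σ)
    (e2 : finrank K ↥(V ^ (q + 2)) = finrank K ↥(V ^ (q + 1)) + σ)
    (e3 : finrank K ↥(V ^ (q + 3)) = finrank K ↥(V ^ (q + 2)) + σ) :
    ∃ y, Plateau V q y := by
  obtain ⟨y, hy, hstep⟩ := baby_green (V := V) h1 (q := q) (by omega)
  refine ⟨y, h1, hy, hstep, fun a ha hya => ?_, fun a ha hya => ?_⟩
  · exact mem_of_mul_mem h1 (mulStep_persist h1 hy hstep (by omega)) hy (by omega) ha hya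
  · exact mem_of_mul_mem h1 (q := q + 1) (mulStep_persist h1 hy hstep (by omega)) hy
      (by rw [show q + 1 + 1 = q + 2 from rfl, show q + 1 + 2 = q + 3 from rfl]; omega) ha hya

theorem Plateau.le_of {V : Submodule K F} {q : ℕ} {y : F} (P : Plateau V q y) {t : ℕ} (ht : q ≤ t)
    {S : Submodule K F} (h1 : V ^ t ≤ S) (h2 : ∀ w ∈ V ^ t, y * w ∈ S) : V ^ (t + 1) ≤ S := by
  rw [mulStep_persist P.one_mem P.y_mem P.step ht]
  exact sup_le (Submodule.map_le_iff_le_comap.mpr fun w hw => h2 w hw) h1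

theorem Plateau.mul_mem {V : Submodule K F} {q : ℕ} {y : F} (P : Plateau V q y) {t : ℕ}
    {w : F} (hw : w ∈ V ^ t) : y * w ∈ V ^ (t + 1) := by
  rw [pow_succ']
  exact Submodule.mul_mem_mul P.y_mem hw

/-- The module `V^q ⊕ M[Y]`, where `M` is a complement of `V^q` in `V^(q+1)` with a basis indexed
by `Fin σ`: the model of what the filtration would be if the plateau lasted forever. -/
abbrev PMod (V : Submodule K F) (q σ : ℕ) : Type _ := ↥(V ^ q) × (Fin σ → Polynomial K)

/-- The comparison between the filtration up to degree `q + 3` and the model module. -/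
structure PIota (V : Submodule K F) (q : ℕ) (y : F) (σ : ℕ) (b : Fin σ → F)
    (io : F →ₗ[K] PMod V q σ) : Prop where
  bmem : ∀ a, b a ∈ V ^ (q + 1)
  span : ∀ S : Submodule K F, V ^ q ≤ S → (∀ a, b a ∈ S) → V ^ (q + 1) ≤ S
  iv : ∀ v : ↥(V ^ q), io v = (v, 0)
  ib : ∀ a, io (b a) = (0, Pi.single a 1)
  iyb : ∀ a, io (y * b a) = (0, Pi.single a Polynomial.X)
  iyyb : ∀ a, io (y * (y * b a)) = (0, Pi.single a (Polynomial.X * Polynomial.X))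

theorem Plateau.exists_iota {V : Submodule K F} [FiniteDimensional K V] {q : ℕ} {y : F}
    (P : Plateau V q y) :
    ∃ (σ : ℕ) (b : Fin σ → F) (io : F →ₗ[K] PMod V q σ), PIota V q y σ b io := by
  have hfd : ∀ t, FiniteDimensional K ↥(V ^ t) := fun t => pow_fg_sub t
  have i1 := hfd (q + 1)
  have hle : V ^ q ≤ V ^ (q + 1) := pow_mono_sub P.one_mem (by omega)
  have hle2 : V ^ (q + 1) ≤ V ^ (q + 2) := pow_mono_sub P.one_mem (by omega)
  -- a complement `M` of `V^q` inside `V^(q+1)`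
  obtain ⟨M0, hM0⟩ := Submodule.exists_isCompl ((V ^ q).comap (V ^ (q + 1)).subtype)
  let M : Submodule K F := M0.map (V ^ (q + 1)).subtype
  have hMle : M ≤ V ^ (q + 1) := Submodule.map_subtype_le _ _
  have hMd : ∀ m ∈ M, m ∈ V ^ q → m = 0 := by
    rintro m ⟨m0, hm0, rfl⟩ hm
    have : m0 ∈ (V ^ q).comap (V ^ (q + 1)).subtype ⊓ M0 := ⟨hm, hm0⟩
    rw [hM0.inf_eq_bot] at this
    rw [(Submodule.mem_bot K).mp this, map_zero]
  have hMs : V ^ (q + 1) ≤ V ^ q ⊔ M := by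
    intro w hw
    have : (⟨w, hw⟩ : ↥(V ^ (q + 1))) ∈ (V ^ q).comap (V ^ (q + 1)).subtype ⊔ M0 := by
      rw [hM0.sup_eq_top]; trivial
    obtain ⟨x, hx, z, hz, hxz⟩ := Submodule.mem_sup.mp this
    refine Submodule.mem_sup.mpr ⟨x, hx, z, ⟨z, hz, rfl⟩, ?_⟩
    exact congrArg Subtype.val hxz
  have iM : FiniteDimensional K M := Submodule.finiteDimensional_of_le hMle
  let bM := Module.finBasis K M
  set σ := finrank K M with hσ
  let b : Fin σ → F := fun a => (bM a : F)
  have hbM : ∀ a, b a ∈ M := fun a => (bM a).2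
  -- sums of basis elements
  let sm : (Fin σ → K) →ₗ[K] F := M.subtype ∘ₗ bM.equivFun.symm.toLinearMap
  have hsmM : ∀ c, sm c ∈ M := fun c => (bM.equivFun.symm c).2
  have hsm0 : ∀ c, sm c = 0 → c = 0 := by
    intro c hc
    have : bM.equivFun.symm c = 0 := Subtype.ext hc
    exact (LinearEquiv.map_eq_zero_iff _).mp this
  have hsm1 : ∀ a, sm (Pi.single a 1) = b a := by
    intro a
    show ((bM.equivFun.symm (Pi.single a 1) : M) : F) = (bM a : F)
    rw [Basis.equivFun_symm_apply]
    congr 1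
    rw [Finset.sum_eq_single a]
    · simp
    · intro c _ hc; simp [Pi.single_eq_of_ne hc]
    · simp
  let D := ↥(V ^ q) × (Fin σ → K) × (Fin σ → K) × (Fin σ → K)
  let mY : F →ₗ[K] F := LinearMap.mulLeft K y
  let al : D →ₗ[K] F := LinearMap.coprod (V ^ q).subtype
    (LinearMap.coprod sm (LinearMap.coprod (mY ∘ₗ sm) (mY ∘ₗ mY ∘ₗ sm)))
  let pc (f : Polynomial K) : (Fin σ → K) →ₗ[K] (Fin σ → Polynomial K) :=
    LinearMap.pi fun a => (LinearMap.toSpanSingleton K (Polynomial K) f) ∘ₗ LinearMap.proj a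
  have hpc : ∀ f a, pc f (Pi.single a 1) = Pi.single a f := by
    intro f a
    funext c
    show (Pi.single a (1 : K) : Fin σ → K) c • f = _
    by_cases h : c = a
    · subst h; simp
    · simp [Pi.single_eq_of_ne h]
  let be : D →ₗ[K] PMod V q σ := LinearMap.prodMap LinearMap.id
    (LinearMap.coprod (pc 1) (LinearMap.coprod (pc Polynomial.X)
      (pc (Polynomial.X * Polynomial.X))))
  have hal : Function.Injective al := by
    rw [injective_iff_map_eq_zero]
    rintro ⟨v, c, c', c''⟩ h
    have h' : (v : F) + (sm c + (y * sm c' + y * (y * sm c''))) = 0 := h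
    have hq1 : ∀ c, sm c ∈ V ^ (q + 1) := fun c => hMle (hsmM c)
    have e2 : sm c' + y * sm c'' ∈ V ^ (q + 1) := by
      refine P.inj2 _ (add_mem (hle2 (hq1 _)) (P.mul_mem (hq1 _))) ?_
      have : y * (sm c' + y * sm c'') = - ((v : F) + sm c) := by
        linear_combination h'
      rw [this]
      exact neg_mem (hle2 (add_mem (hle v.2) (hq1 _)))
    have e3 : sm c'' ∈ V ^ q := P.inj1 _ (hq1 _) (by simpa using sub_mem e2 (hq1 c'))
    have z3 : sm c'' = 0 := hMd _ (hsmM _) e3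
    rw [z3] at h'
    have e4 : sm c' ∈ V ^ q := by
      refine P.inj1 _ (hq1 _) ?_
      have : y * sm c' = - ((v : F) + sm c) := by linear_combination h'
      rw [this]
      exact neg_mem (add_mem (hle v.2) (hq1 _))
    have z4 : sm c' = 0 := hMd _ (hsmM _) e4
    rw [z4] at h'
    have z5 : sm c = 0 := by
      refine hMd _ (hsmM _) ?_
      have : sm c = - (v : F) := by linear_combination h'
      rw [this]
      exact neg_mem v.2
    rw [z5] at h'
    have z6 : v = 0 := Subtype.ext (by simpa using h')
    rw [z6, hsm0 _ z3, hsm0 _ z4, hsm0 _ z5]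
    rfl
  obtain ⟨la, hla⟩ := LinearMap.exists_leftInverse_of_injective al (LinearMap.ker_eq_bot.mpr hal)
  have hio : ∀ x, be (la (al x)) = be x := fun x => by
    have := LinearMap.congr_fun hla x
    rw [LinearMap.comp_apply, LinearMap.id_apply] at this
    rw [this]
  refine ⟨σ, b, be ∘ₗ la, fun a => hMle (hbM a), ?_, ?_, ?_, ?_, ?_⟩
  · intro S hS hb
    refine hMs.trans (sup_le hS fun m hm => ?_)
    have := bM.sum_repr ⟨m, hm⟩
    have h2 := congrArg Subtype.val this
    rw [Submodule.coe_sum] at h2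
    rw [← show _ = m from h2]
    exact Submodule.sum_mem _ fun a _ => S.smul_mem _ (hb a)
  · intro v
    have e : al (v, 0, 0, 0) = v := by
      show (v : F) + (sm 0 + (y * sm 0 + y * (y * sm 0))) = v
      simp
    rw [LinearMap.comp_apply, ← e, hio]
    show (v, pc 1 0 + (pc _ 0 + pc _ 0)) = _
    simp
  · intro a
    have e : al (0, Pi.single a 1, 0, 0) = b a := by
      show ((0 : ↥(V ^ q)) : F) + (sm (Pi.single a 1) + (y * sm 0 + y * (y * sm 0))) = _
      rw [hsm1]; simp
    rw [LinearMap.comp_apply, ← e, hio]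
    show ((0 : ↥(V ^ q)), pc 1 (Pi.single a 1) + (pc _ 0 + pc _ 0)) = _
    rw [hpc]; simp
  · intro a
    have e : al (0, 0, Pi.single a 1, 0) = y * b a := by
      show ((0 : ↥(V ^ q)) : F) + (sm 0 + (y * sm (Pi.single a 1) + y * (y * sm 0))) = _
      rw [hsm1]; simp
    rw [LinearMap.comp_apply, ← e, hio]
    show ((0 : ↥(V ^ q)), pc 1 0 + (pc _ (Pi.single a 1) + pc _ 0)) = _
    rw [hpc]; simp
  · intro a
    have e : al (0, 0, 0, Pi.single a 1) = y * (y * b a) := by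
      show ((0 : ↥(V ^ q)) : F) + (sm 0 + (y * sm 0 + y * (y * sm (Pi.single a 1)))) = _
      rw [hsm1]; simp
    rw [LinearMap.comp_apply, ← e, hio]
    show ((0 : ↥(V ^ q)), pc 1 0 + (pc _ 0 + pc _ (Pi.single a 1))) = _
    rw [hpc]; simp

end Persist

end GenusBound

/-! ### The model module of a plateau -/

namespace GenusBound

open Module MvPolynomial

/-- Commuting endomorphisms define a representation of the polynomial ring. -/
theorem exists_rep {ι K N : Type*} [Field K] [AddCommGroup N] [Module K N]
    (A : ι → Module.End K N) (hA : ∀ i j, A i * A j = A j * A i) :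
    ∃ Λ : MvPolynomial ι K →ₐ[K] Module.End K N, ∀ j, Λ (X j) = A j := by
  have hcomm : ∀ a ∈ Set.range A, ∀ b ∈ Set.range A, a * b = b * a := by
    rintro _ ⟨i, rfl⟩ _ ⟨j, rfl⟩
    exact hA i j
  have hmc := Algebra.isMulCommutative_adjoin K hcomm
  let _ : CommRing (Algebra.adjoin K (Set.range A)) :=
    { (inferInstance : Ring (Algebra.adjoin K (Set.range A))) with
      mul_comm := fun a b => hmc.is_comm.comm a b }
  let g : MvPolynomial ι K →ₐ[K] Algebra.adjoin K (Set.range A) :=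
    aeval fun j => (⟨A j, Algebra.subset_adjoin ⟨j, rfl⟩⟩ : Algebra.adjoin K (Set.range A))
  refine ⟨(Algebra.adjoin K (Set.range A)).val.comp g, fun j => ?_⟩
  show ((g (X j) : Algebra.adjoin K (Set.range A)) : Module.End K N) = A j
  rw [aeval_X]

section Persist

set_option linter.unusedSectionVars false

variable {K F : Type*} [Field K] [Field F] [Algebra K F]
variable {V : Submodule K F} {q : ℕ} {y : F} {σ : ℕ} {b : Fin σ → F} {io : F →ₗ[K] PMod V q σ}

/-- Multiplication by `y` on the model module. -/
noncomputable def opY (y : F) (io : F →ₗ[K] PMod V q σ) : Module.End K (PMod V q σ) :=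
  LinearMap.coprod (io ∘ₗ LinearMap.mulLeft K y ∘ₗ (V ^ q).subtype)
    (LinearMap.inr K _ _ ∘ₗ LinearMap.pi fun a =>
      LinearMap.mulLeft K (Polynomial.X : Polynomial K) ∘ₗ LinearMap.proj a)

/-- Multiplication by `x ∈ V` on the model module. -/
noncomputable def opX (y : F) (b : Fin σ → F) (io : F →ₗ[K] PMod V q σ) (x : F) :
    Module.End K (PMod V q σ) :=
  LinearMap.coprod (io ∘ₗ LinearMap.mulLeft K x ∘ₗ (V ^ q).subtype)
    (∑ a, (LinearMap.applyₗ (io (x * b a)) ∘ₗ (Polynomial.aeval (opY y io)).toLinearMap)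
      ∘ₗ LinearMap.proj a)

/-- Evaluation of the model module in `F`. -/
noncomputable def evE (y : F) (b : Fin σ → F) : PMod V q σ →ₗ[K] F :=
  LinearMap.coprod (V ^ q).subtype
    (∑ a, (LinearMap.mulRight K (b a) ∘ₗ (Polynomial.aeval y).toLinearMap) ∘ₗ LinearMap.proj a)

theorem opY_apply (v : ↥(V ^ q)) (p : Fin σ → Polynomial K) :
    opY y io (v, p) = io (y * v) + (0, fun a => Polynomial.X * p a) := rfl

theorem opX_apply (x : F) (v : ↥(V ^ q)) (p : Fin σ → Polynomial K) :
    opX y b io x (v, p) = io (x * v) + ∑ a, Polynomial.aeval (opY y io) (p a) (io (x * b a)) := by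
  simp [opX]

theorem evE_apply (v : ↥(V ^ q)) (p : Fin σ → Polynomial K) :
    evE y b (v, p) = (v : F) + ∑ a, Polynomial.aeval y (p a) * b a := by
  simp [evE]

theorem aeval_opY_inr (c : Polynomial K) (p : Fin σ → Polynomial K) :
    Polynomial.aeval (opY y io) c (0, p) = ((0 : ↥(V ^ q)), fun a => c * p a) := by
  induction c using Polynomial.induction_on' generalizing p with
  | add f g hf hg =>
    rw [map_add, LinearMap.add_apply, hf, hg]
    ext1
    · simp
    · funext a; simp [add_mul]
  | monomial n k =>
    induction n generalizing p with
    | zero =>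
      rw [Polynomial.aeval_monomial, pow_zero, mul_one, Module.algebraMap_end_apply]
      ext1
      · simp
      · funext a
        simp [Polynomial.smul_eq_C_mul]
    | succ n ih =>
      have e : (Polynomial.monomial (n + 1) k : Polynomial K)
          = Polynomial.monomial n k * Polynomial.X := by
        rw [Polynomial.monomial_mul_X]
      rw [e, map_mul, Polynomial.aeval_X, Module.End.mul_apply, opY_apply]
      have : y * ((0 : ↥(V ^ q)) : F) = 0 := by simp
      rw [this, map_zero, zero_add, ih]
      ext1
      · rfl
      · funext a
        show _ = Polynomial.monomial n k * Polynomial.X * p a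
        rw [mul_assoc]

variable (P : Plateau V q y) (I : PIota V q y σ b io)

include P I

theorem le_two {S : Submodule K F} (h1 : V ^ q ≤ S) (h2 : ∀ a, b a ∈ S)
    (h3 : ∀ a, y * b a ∈ S) : V ^ (q + 2) ≤ S := by
  have hS := I.span S h1 h2
  refine P.le_of (by omega) hS ?_
  intro w hw
  have : V ^ (q + 1) ≤ S.comap (LinearMap.mulLeft K y) :=
    I.span _ (fun v hv => hS (P.mul_mem hv)) h3
  exact this hw

theorem le_three {S : Submodule K F} (h1 : V ^ q ≤ S) (h2 : ∀ a, b a ∈ S)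
    (h3 : ∀ a, y * b a ∈ S) (h4 : ∀ a, y * (y * b a) ∈ S) : V ^ (q + 3) ≤ S := by
  have hS := le_two P I h1 h2 h3
  refine P.le_of (by omega) hS ?_
  intro w hw
  have : V ^ (q + 2) ≤ S.comap (LinearMap.mulLeft K y) :=
    le_two P I (fun v hv => hS (pow_mono_sub P.one_mem (by omega) (P.mul_mem hv))) h3 h4
  exact this hw

theorem opY_io {w : F} (hw : w ∈ V ^ (q + 2)) : opY y io (io w) = io (y * w) := by
  have : V ^ (q + 2) ≤ LinearMap.eqLocus (opY y io ∘ₗ io) (io ∘ₗ LinearMap.mulLeft K y) := by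
    refine le_two P I (fun v hv => ?_) (fun a => ?_) (fun a => ?_)
    · show opY y io (io v) = io (y * v)
      rw [I.iv ⟨v, hv⟩, opY_apply]
      have : ((0 : ↥(V ^ q)), fun a : Fin σ => (Polynomial.X : Polynomial K)
          * (0 : Fin σ → Polynomial K) a) = 0 := by
        ext1
        · rfl
        · funext a; simp
      rw [this, add_zero]
    · show opY y io (io (b a)) = io (y * b a)
      rw [I.ib, I.iyb, opY_apply]
      simp only [ZeroMemClass.coe_zero, mul_zero, map_zero, zero_add]
      congr 1
      funext c
      by_cases h : c = a
      · subst h; simp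
      · simp [Pi.single_eq_of_ne h]
    · show opY y io (io (y * b a)) = io (y * (y * b a))
      rw [I.iyb, I.iyyb, opY_apply]
      simp only [ZeroMemClass.coe_zero, mul_zero, map_zero, zero_add]
      congr 1
      funext c
      by_cases h : c = a
      · subst h; simp
      · simp [Pi.single_eq_of_ne h]
  exact this hw

theorem opX_io {x : F} (hx : x ∈ V) {w : F} (hw : w ∈ V ^ (q + 2)) :
    opX y b io x (io w) = io (x * w) := by
  have hxm : ∀ {t : ℕ} {w : F}, w ∈ V ^ t → x * w ∈ V ^ (t + 1) := fun hw => by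
    rw [pow_succ']; exact Submodule.mul_mem_mul hx hw
  have : V ^ (q + 2) ≤ LinearMap.eqLocus (opX y b io x ∘ₗ io) (io ∘ₗ LinearMap.mulLeft K x) := by
    refine le_two P I (fun v hv => ?_) (fun a => ?_) (fun a => ?_)
    · show opX y b io x (io v) = io (x * v)
      rw [I.iv ⟨v, hv⟩, opX_apply]
      simp
    · show opX y b io x (io (b a)) = io (x * b a)
      rw [I.ib, opX_apply, Finset.sum_eq_single a]
      · simp
      · intro c _ hc; simp [Pi.single_eq_of_ne hc]
      · simp
    · show opX y b io x (io (y * b a)) = io (x * (y * b a))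
      rw [I.iyb, opX_apply, Finset.sum_eq_single a]
      · simp only [ZeroMemClass.coe_zero, mul_zero, map_zero, zero_add, Pi.single_eq_same,
          Polynomial.aeval_X]
        rw [opY_io P I (hxm (I.bmem a)), mul_left_comm]
      · intro c _ hc; simp [Pi.single_eq_of_ne hc]
      · simp
  exact this hw

omit P in
theorem mk_eq (v : ↥(V ^ q)) (p : Fin σ → Polynomial K) :
    ((v, p) : PMod V q σ) = io v + ∑ a, Polynomial.aeval (opY y io) (p a) (io (b a)) := by
  rw [I.iv]
  have : ∀ a, Polynomial.aeval (opY y io) (p a) (io (b a))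
      = LinearMap.inr K ↥(V ^ q) (Fin σ → Polynomial K) (Pi.single a (p a)) := by
    intro a
    rw [I.ib, aeval_opY_inr]
    show _ = (_, _)
    congr 1
    funext c
    by_cases h : c = a
    · subst h; simp
    · simp [Pi.single_eq_of_ne h]
  rw [Finset.sum_congr rfl fun a _ => this a, ← map_sum, Finset.univ_sum_single]
  show _ = (v + 0, 0 + p)
  simp

/-- Operators commuting with `opY` are determined by their values on `io (V^(q+1))`. -/
theorem ext_op {A B : Module.End K (PMod V q σ)} (hA : A * opY y io = opY y io * A)
    (hB : B * opY y io = opY y io * B) (h : ∀ w ∈ V ^ (q + 1), A (io w) = B (io w)) : A = B := by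
  have hc : ∀ (A : Module.End K (PMod V q σ)), A * opY y io = opY y io * A →
      ∀ (c : Polynomial K) n,
      A (Polynomial.aeval (opY y io) c n) = Polynomial.aeval (opY y io) c (A n) := by
    intro A hA c n
    have : Commute A (Polynomial.aeval (opY y io) c) := by
      induction c using Polynomial.induction_on' with
      | add f g hf hg => rw [map_add]; exact hf.add_right hg
      | monomial n k =>
        rw [Polynomial.aeval_monomial]
        have h1 : Commute A (algebraMap K (Module.End K (PMod V q σ)) k) :=
          (Algebra.commutes k A).symm
        exact h1.mul_right (Commute.pow_right hA n)
    exact LinearMap.congr_fun this n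
  refine LinearMap.ext fun ⟨v, p⟩ => ?_
  rw [mk_eq I, map_add, map_add, map_sum, map_sum,
    h _ (pow_mono_sub P.one_mem (by omega) v.2)]
  congr 1
  refine Finset.sum_congr rfl fun a _ => ?_
  rw [hc A hA, hc B hB, h _ (I.bmem a)]

theorem opX_comm_opY {x : F} (hx : x ∈ V) : opX y b io x * opY y io = opY y io * opX y b io x := by
  refine LinearMap.ext fun ⟨v, p⟩ => ?_
  rw [Module.End.mul_apply, Module.End.mul_apply, opY_apply, map_add, opX_apply x v p,
    opX_apply x 0, map_add, map_sum,
    opX_io P I hx (pow_mono_sub P.one_mem (show q + 1 ≤ q + 2 by omega) (P.mul_mem v.2)),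
    opY_io P I (w := x * v) (pow_mono_sub P.one_mem (show q + 1 ≤ q + 2 by omega)
      (by rw [pow_succ']; exact Submodule.mul_mem_mul hx v.2)), mul_left_comm]
  simp only [ZeroMemClass.coe_zero, mul_zero, map_zero, zero_add, map_mul, Polynomial.aeval_X,
    Module.End.mul_apply]

theorem opX_comm {x x' : F} (hx : x ∈ V) (hx' : x' ∈ V) :
    opX y b io x * opX y b io x' = opX y b io x' * opX y b io x := by
  have hxm : ∀ {x : F}, x ∈ V → ∀ {t : ℕ} {w : F}, w ∈ V ^ t → x * w ∈ V ^ (t + 1) :=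
    fun hx _ _ hw => by rw [pow_succ']; exact Submodule.mul_mem_mul hx hw
  have hC : ∀ {x : F}, x ∈ V → Commute (opX y b io x) (opY y io) := fun hx => opX_comm_opY P I hx
  refine ext_op P I ((hC hx).mul_left (hC hx')) ((hC hx').mul_left (hC hx)) fun w hw => ?_
  have hw2 : w ∈ V ^ (q + 2) := pow_mono_sub P.one_mem (by omega) hw
  rw [Module.End.mul_apply, Module.End.mul_apply, opX_io P I hx' hw2, opX_io P I hx hw2,
    opX_io P I hx (hxm hx' hw), opX_io P I hx' (hxm hx hw), mul_left_comm]

theorem evE_io {w : F} (hw : w ∈ V ^ (q + 3)) : evE y b (io w) = w := by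
  have : V ^ (q + 3) ≤ LinearMap.eqLocus (evE y b ∘ₗ io) LinearMap.id := by
    refine le_three P I (fun v hv => ?_) (fun a => ?_) (fun a => ?_) (fun a => ?_)
    · show evE y b (io v) = v
      rw [I.iv ⟨v, hv⟩, evE_apply]; simp
    · show evE y b (io (b a)) = b a
      rw [I.ib, evE_apply, Finset.sum_eq_single a]
      · simp
      · intro c _ hc; simp [Pi.single_eq_of_ne hc]
      · simp
    · show evE y b (io (y * b a)) = y * b a
      rw [I.iyb, evE_apply, Finset.sum_eq_single a]
      · simp
      · intro c _ hc; simp [Pi.single_eq_of_ne hc]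
      · simp
    · show evE y b (io (y * (y * b a))) = y * (y * b a)
      rw [I.iyyb, evE_apply, Finset.sum_eq_single a]
      · simp [mul_assoc]
      · intro c _ hc; simp [Pi.single_eq_of_ne hc]
      · simp
  exact this hw

theorem evE_opY (n : PMod V q σ) : evE y b (opY y io n) = y * evE y b n := by
  obtain ⟨v, p⟩ := n
  rw [opY_apply, map_add, evE_io P I (pow_mono_sub P.one_mem (show q + 1 ≤ q + 3 by omega)
    (P.mul_mem v.2)), evE_apply, evE_apply, mul_add, Finset.mul_sum]
  simp [mul_assoc]

theorem evE_aeval_opY (c : Polynomial K) (n : PMod V q σ) :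
    evE y b (Polynomial.aeval (opY y io) c n) = Polynomial.aeval y c * evE y b n := by
  induction c using Polynomial.induction_on' generalizing n with
  | add f g hf hg => rw [map_add, LinearMap.add_apply, map_add, hf, hg, map_add, add_mul]
  | monomial m k =>
    induction m generalizing n with
    | zero =>
      rw [Polynomial.aeval_monomial, Polynomial.aeval_monomial, pow_zero, pow_zero, mul_one,
        mul_one, Module.algebraMap_end_apply, map_smul, Algebra.smul_def]
    | succ m ih =>
      rw [← Polynomial.monomial_mul_X, map_mul, map_mul, Polynomial.aeval_X, Polynomial.aeval_X,
        Module.End.mul_apply, ih, evE_opY P I, mul_assoc]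

theorem evE_opX {x : F} (hx : x ∈ V) (n : PMod V q σ) :
    evE y b (opX y b io x n) = x * evE y b n := by
  obtain ⟨v, p⟩ := n
  have hxm : ∀ {t : ℕ} {w : F}, w ∈ V ^ t → x * w ∈ V ^ (t + 1) := fun hw => by
    rw [pow_succ']; exact Submodule.mul_mem_mul hx hw
  rw [opX_apply, map_add, map_sum, evE_io P I (pow_mono_sub P.one_mem
    (show q + 1 ≤ q + 3 by omega) (hxm v.2)), evE_apply, mul_add, Finset.mul_sum]
  congr 1
  refine Finset.sum_congr rfl fun a _ => ?_
  rw [evE_aeval_opY P I, evE_io P I (pow_mono_sub P.one_mem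
    (show q + 2 ≤ q + 3 by omega) (hxm (I.bmem a))), mul_left_comm]

end Persist

end GenusBound

/-! ### Equations of low degree after a plateau -/

namespace GenusBound

open Module MvPolynomial

section Interp

set_option linter.unusedSectionVars false

variable {K F : Type*} [Field K] [Field F] [Algebra K F] {r : ℕ} {ξ : Fin (r + 1) → F}

theorem aeval_mem_linV_pow (h0 : ξ 0 = 1) {f : MvPolynomial (Fin (r + 1)) K} {t : ℕ}
    (hf : f.totalDegree ≤ t) : aeval ξ f ∈ linV K ξ ^ t := by
  rw [← sum_homogeneousComponent f, map_sum]
  refine Submodule.sum_mem _ fun i hi => ?_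
  refine linV_pow_mono h0 (a := i) (by have := Finset.mem_range.mp hi; omega) ?_
  exact mem_linV_pow.mpr ⟨_, homogeneousComponent_isHomogeneous i f, rfl⟩

theorem exists_of_mem_linV_pow {g : F} {t : ℕ} (hg : g ∈ linV K ξ ^ t) :
    ∃ f : MvPolynomial (Fin (r + 1)) K, f.totalDegree ≤ t ∧ aeval ξ f = g := by
  obtain ⟨f, hf, rfl⟩ := mem_linV_pow.mp hg
  exact ⟨f, hf.totalDegree_le, rfl⟩

/-- The ideal generated by the polynomials of degree at most `e` vanishing at `ξ`. -/
noncomputable def lowJ (K : Type*) {F : Type*} [Field K] [Field F] [Algebra K F] {r : ℕ}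
    (ξ : Fin (r + 1) → F) (e : ℕ) : Ideal (MvPolynomial (Fin (r + 1)) K) :=
  Ideal.span {f | f.totalDegree ≤ e ∧ aeval ξ f = 0}

theorem lowJ_le (e : ℕ) : lowJ K ξ e ≤ RingHom.ker (aeval (R := K) ξ) :=
  Ideal.span_le.mpr fun _ hf => hf.2

theorem sub_mem_lowJ {e : ℕ} {f g : MvPolynomial (Fin (r + 1)) K} (hf : f.totalDegree ≤ e)
    (hg : g.totalDegree ≤ e) (h : aeval ξ f = aeval ξ g) : f - g ∈ lowJ K ξ e :=
  Ideal.subset_span ⟨(totalDegree_sub f g).trans (max_le hf hg), by rw [map_sub, h, sub_self]⟩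

variable {q : ℕ} {y : F}

/-- After a plateau, equations of degree `q + 3` follow from those of degree at most `q + 2`. -/
theorem Plateau.mem_lowJ (P : Plateau (linV K ξ) q y) (h0 : ξ 0 = 1)
    {f : MvPolynomial (Fin (r + 1)) K} (hf : f.totalDegree ≤ q + 3) (hfξ : aeval ξ f = 0) :
    f ∈ lowJ K ξ (q + 2) := by
  obtain ⟨l, hl, hly⟩ := exists_of_mem_linV_pow (K := K) (ξ := ξ) (t := 1) (g := y)
    (by rw [pow_one]; exact P.y_mem)
  -- modulo `lowJ`, a polynomial of degree `q + 2` is `l * a + b` with `a`, `b` of degree `q + 1`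
  have hred : ∀ m : MvPolynomial (Fin (r + 1)) K, m.totalDegree ≤ q + 2 →
      ∃ a b : MvPolynomial (Fin (r + 1)) K, a.totalDegree ≤ q + 1 ∧ b.totalDegree ≤ q + 1 ∧
        m - (l * a + b) ∈ lowJ K ξ (q + 2) := by
    intro m hm
    have h1 := aeval_mem_linV_pow (K := K) h0 hm
    rw [show q + 2 = q + 1 + 1 from rfl,
      mulStep_persist P.one_mem P.y_mem P.step (show q ≤ q + 1 by omega)] at h1
    obtain ⟨_, ⟨a', ha', rfl⟩, b', hb', hab⟩ := Submodule.mem_sup.mp h1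
    obtain ⟨a, ha, rfl⟩ := exists_of_mem_linV_pow ha'
    obtain ⟨b, hb, rfl⟩ := exists_of_mem_linV_pow hb'
    refine ⟨a, b, ha, hb, sub_mem_lowJ hm ?_ ?_⟩
    · refine (totalDegree_add _ _).trans (max_le ((totalDegree_mul _ _).trans ?_) ?_) <;> omega
    · rw [map_add, map_mul, hly]; exact hab.symm
  have hred3 : ∀ m : MvPolynomial (Fin (r + 1)) K, m.totalDegree ≤ q + 3 →
      ∃ a b : MvPolynomial (Fin (r + 1)) K, a.totalDegree ≤ q + 2 ∧ b.totalDegree ≤ q + 2 ∧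
        m - (l * a + b) ∈ lowJ K ξ (q + 2) := by
    let S : Submodule K (MvPolynomial (Fin (r + 1)) K) :=
      { carrier := {m | ∃ a b : MvPolynomial (Fin (r + 1)) K,
          a.totalDegree ≤ q + 2 ∧ b.totalDegree ≤ q + 2 ∧ m - (l * a + b) ∈ lowJ K ξ (q + 2)}
        zero_mem' := ⟨0, 0, by simp, by simp, by simp⟩
        add_mem' := by
          rintro m m' ⟨a, b, ha, hb, h⟩ ⟨a', b', ha', hb', h'⟩
          refine ⟨a + a', b + b', (totalDegree_add _ _).trans (max_le ha ha'),
            (totalDegree_add _ _).trans (max_le hb hb'), ?_⟩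
          have : m + m' - (l * (a + a') + (b + b'))
            = (m - (l * a + b)) + (m' - (l * a' + b')) := by ring
          rw [this]
          exact add_mem h h'
        smul_mem' := by
          rintro c m ⟨a, b, ha, hb, h⟩
          refine ⟨c • a, c • b, (totalDegree_smul_le _ _).trans ha,
            (totalDegree_smul_le _ _).trans hb, ?_⟩
          have : c • m - (l * (c • a) + c • b) = C c * (m - (l * a + b)) := by
            simp only [smul_eq_C_mul]; ring
          rw [this]
          exact Ideal.mul_mem_left _ _ h }
    intro m hm
    show m ∈ S
    rw [m.as_sum]
    refine Submodule.sum_mem _ fun s hs => ?_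
    have hdeg : (s.sum fun _ e => e) ≤ q + 3 := (le_totalDegree hs).trans hm
    by_cases h00 : s = 0
    · refine ⟨0, monomial s (m.coeff s), by simp, ?_, by simp⟩
      rw [h00]
      simp
    · obtain ⟨j, hj⟩ := Finsupp.ne_iff.mp h00
      have hj' : s j ≠ 0 := by simpa using hj
      have hs1 : s = (s - Finsupp.single j 1) + Finsupp.single j 1 := by
        rw [tsub_add_cancel_of_le]
        rw [Finsupp.single_le_iff]
        omega
      set s' := s - Finsupp.single j 1
      have hdeg' : (s'.sum fun _ e => e) ≤ q + 2 := by
        rw [hs1, Finsupp.sum_add_index' (fun _ => rfl) (fun _ _ _ => rfl),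
          Finsupp.sum_single_index rfl] at hdeg
        omega
      obtain ⟨a, b, ha, hb, h⟩ := hred (monomial s' (m.coeff s))
        ((totalDegree_monomial_le _ _).trans hdeg')
      refine ⟨X j * a, X j * b, ?_, ?_, ?_⟩
      · refine (totalDegree_mul _ _).trans ?_
        rw [totalDegree_X]; omega
      · refine (totalDegree_mul _ _).trans ?_
        rw [totalDegree_X]; omega
      · have e : ∀ c : K, monomial s c = X j * monomial s' c := fun c => by
          conv_lhs => rw [hs1]
          rw [mul_comm, X, monomial_mul, mul_one]
        have : monomial s (m.coeff s) - (l * (X j * a) + X j * b)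
            = X j * (monomial s' (m.coeff s) - (l * a + b)) := by rw [e]; ring
        rw [this]
        exact Ideal.mul_mem_left _ _ h
  obtain ⟨a, b, ha, hb, h⟩ := hred3 f hf
  have h2 : y * aeval ξ a + aeval ξ b = 0 := by
    have := lowJ_le (K := K) (ξ := ξ) _ h
    rw [RingHom.mem_ker, map_sub, hfξ, map_add, map_mul, hly, zero_sub, neg_eq_zero] at this
    exact this
  have h3 : aeval ξ a ∈ linV K ξ ^ (q + 1) := by
    refine P.inj2 _ (aeval_mem_linV_pow h0 ha) ?_
    rw [eq_neg_of_add_eq_zero_left h2]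
    exact neg_mem (aeval_mem_linV_pow h0 hb)
  obtain ⟨a', ha', he⟩ := exists_of_mem_linV_pow h3
  have h4 := sub_mem_lowJ (ξ := ξ) (e := q + 2) ha (ha'.trans (by omega)) he.symm
  have h5 : l * a' + b ∈ lowJ K ξ (q + 2) := by
    refine Ideal.subset_span ⟨?_, ?_⟩
    · refine (totalDegree_add _ _).trans (max_le ((totalDegree_mul _ _).trans ?_) hb)
      omega
    · rw [map_add, map_mul, hly, he, h2]
  have : f = (f - (l * a + b)) + l * (a - a') + (l * a' + b) := by ring
  rw [this]
  exact add_mem (add_mem h (Ideal.mul_mem_left _ _ h4)) h5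

/-- The equations of degree at most `q + 2` of a finite scheme with a plateau do not cut it out,
even locally: they vanish on a strictly larger irreducible variety. -/
theorem Plateau.exists_prime [FiniteDimensional K F] (P : Plateau (linV K ξ) q y) (h0 : ξ 0 = 1)
    (hsurj : Function.Surjective (aeval (R := K) ξ))
    (hq : finrank K ↥(linV K ξ ^ q) < finrank K F) :
    ∃ 𝔮 : Ideal (MvPolynomial (Fin (r + 1)) K), 𝔮.IsPrime ∧ lowJ K ξ (q + 2) ≤ 𝔮 ∧
      𝔮 < RingHom.ker (aeval (R := K) ξ) := by
  obtain ⟨σ, b, io, I⟩ := P.exists_iota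
  have hξ : ∀ j, ξ j ∈ linV K ξ := fun j => mem_linV ξ j
  obtain ⟨Λ, hΛ⟩ := exists_rep (fun j : Fin (r + 1) => opX y b io (ξ j))
    fun i j => opX_comm P I (hξ i) (hξ j)
  have hΛio : ∀ f : MvPolynomial (Fin (r + 1)) K, f.totalDegree ≤ q + 3 →
      Λ f (io 1) = io (aeval ξ f) := by
    have hmon : ∀ (e : ℕ) (s : Fin (r + 1) →₀ ℕ), (s.sum fun _ e => e) = e → e ≤ q + 3 →
        ∀ c : K, Λ (monomial s c) (io 1) = io (aeval ξ (monomial s c)) := by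
      intro e
      induction e with
      | zero =>
        intro s hs _ c
        have : s = 0 := by
          rw [← Finsupp.degree_eq_zero_iff]; exact hs
        subst this
        rw [show (monomial (0 : Fin (r + 1) →₀ ℕ) c : MvPolynomial _ K) = algebraMap K _ c from rfl,
          AlgHom.commutes, AlgHom.commutes, Module.algebraMap_end_apply,
          Algebra.algebraMap_eq_smul_one, map_smul]
      | succ e ih =>
        intro s hs he c
        have h00 : s ≠ 0 := by rintro rfl; simp at hs
        obtain ⟨j, hj⟩ := Finsupp.ne_iff.mp h00
        have hj' : s j ≠ 0 := by simpa using hj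
        have hs1 : s = (s - Finsupp.single j 1) + Finsupp.single j 1 := by
          rw [tsub_add_cancel_of_le]
          rw [Finsupp.single_le_iff]
          omega
        set s' := s - Finsupp.single j 1
        have hdeg' : (s'.sum fun _ e => e) = e := by
          rw [hs1, Finsupp.sum_add_index' (fun _ => rfl) (fun _ _ _ => rfl),
            Finsupp.sum_single_index rfl] at hs
          omega
        have e1 : (monomial s c : MvPolynomial _ K) = X j * monomial s' c := by
          conv_lhs => rw [hs1]
          rw [mul_comm, X, monomial_mul, mul_one]
        rw [e1, map_mul, Module.End.mul_apply, hΛ, ih s' hdeg' (by omega), opX_io P I (hξ j),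
          map_mul (aeval ξ), aeval_X]
        refine aeval_mem_linV_pow h0 ((totalDegree_monomial_le _ _).trans ?_)
        exact (show (s'.sum fun _ e => e) ≤ q + 2 by omega)
    intro f hf
    rw [f.as_sum, map_sum, map_sum, map_sum, LinearMap.sum_apply]
    exact Finset.sum_congr rfl fun s hs =>
      hmon _ s rfl ((le_totalDegree hs).trans hf) _
  have hev : ∀ (f : MvPolynomial (Fin (r + 1)) K) n, evE y b (Λ f n) = aeval ξ f * evE y b n := by
    intro f
    induction f using MvPolynomial.induction_on with
    | C a =>
      intro n
      rw [show (C a : MvPolynomial (Fin (r + 1)) K) = algebraMap K _ a from rfl,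
        AlgHom.commutes, AlgHom.commutes, Module.algebraMap_end_apply, map_smul, Algebra.smul_def]
    | add f g hf hg => intro n; rw [map_add, LinearMap.add_apply, map_add, hf, hg, map_add, add_mul]
    | mul_X f j hf =>
      intro n
      rw [map_mul, Module.End.mul_apply, hf, hΛ, evE_opX P I (hξ j), map_mul, aeval_X, mul_assoc]
  -- the linear form `l` with `l(ξ) = y` acts as `Y`
  obtain ⟨l, hl, hly⟩ := mem_linV_pow.mp
    (show y ∈ linV K ξ ^ 1 by rw [pow_one]; exact P.y_mem)
  have hΛcY : ∀ f : MvPolynomial (Fin (r + 1)) K, Commute (Λ f) (opY y io) := by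
    intro f
    induction f using MvPolynomial.induction_on with
    | C a =>
      rw [show (C a : MvPolynomial (Fin (r + 1)) K) = algebraMap K _ a from rfl, AlgHom.commutes]
      exact Algebra.commutes _ _
    | add f g hf hg => rw [map_add]; exact hf.add_left hg
    | mul_X f j hf => rw [map_mul, hΛ]; exact hf.mul_left (opX_comm_opY P I (hξ j))
  have hΛl : Λ l = opY y io := by
    refine ext_op P I (hΛcY l) rfl fun w hw => ?_
    obtain ⟨f, hf, rfl⟩ := exists_of_mem_linV_pow hw
    have hl1 := hl.totalDegree_le
    rw [← hΛio f (by omega), ← Module.End.mul_apply, ← map_mul,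
      hΛio _ ((totalDegree_mul _ _).trans (by omega)), map_mul, hly, hΛio f (by omega),
      opY_io P I (pow_mono_sub P.one_mem (by omega) hw)]
  have hJ : ∀ f ∈ lowJ K ξ (q + 2), ∀ g : MvPolynomial (Fin (r + 1)) K, Λ g (Λ f (io 1)) = 0 := by
    intro f hf
    induction hf using Submodule.span_induction with
    | mem f hf =>
      intro g
      rw [hΛio f (hf.1.trans (by omega)), hf.2, map_zero, map_zero]
    | zero => intro g; simp
    | add f f' _ _ h h' => intro g; rw [map_add, LinearMap.add_apply, map_add, h, h', add_zero]
    | smul a f _ h =>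
      intro g
      rw [smul_eq_mul, map_mul, Module.End.mul_apply, ← Module.End.mul_apply (Λ g), ← map_mul, h]
  -- avoid the multiplicative set generated by `c(l)` and the complement of the kernel
  let c := minpoly K y
  have hc : c ≠ 0 := minpoly.ne_zero (Algebra.IsIntegral.isIntegral y)
  let x := Polynomial.aeval l c
  have hΛx : ∀ N, Λ (x ^ N) = Polynomial.aeval (opY y io) (c ^ N) := by
    intro N
    rw [map_pow, map_pow, ← hΛl]
    congr 1
    exact (Polynomial.aeval_algHom_apply Λ l c).symm
  have hPprime : (RingHom.ker (aeval (R := K) ξ)).IsPrime := RingHom.ker_isPrime _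
  let Mult : Submonoid (MvPolynomial (Fin (r + 1)) K) :=
    (RingHom.ker (aeval (R := K) ξ)).primeCompl ⊔ Submonoid.powers x
  have hdis : Disjoint (lowJ K ξ (q + 2) : Set (MvPolynomial (Fin (r + 1)) K)) Mult := by
    rw [Set.disjoint_left]
    intro z hzJ hzM
    obtain ⟨f, hf, _, ⟨N, rfl⟩, rfl⟩ := Submonoid.mem_sup.mp hzM
    have hf' : aeval ξ f ≠ 0 := hf
    -- the submodule generated by `f`
    let φ : MvPolynomial (Fin (r + 1)) K →ₗ[K] PMod (linV K ξ) q σ :=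
      LinearMap.applyₗ (Λ f (io 1)) ∘ₗ Λ.toLinearMap
    let W := LinearMap.range φ
    have hφ : ∀ g, φ g = Λ g (Λ f (io 1)) := fun g => rfl
    have hkill : ∀ w ∈ W, Polynomial.aeval (opY y io) (c ^ N) w = 0 := by
      rintro _ ⟨g, rfl⟩
      have := hJ _ hzJ g
      rw [hφ, ← hΛx, ← Module.End.mul_apply, ← Module.End.mul_apply, ← map_mul, ← map_mul]
      rw [← Module.End.mul_apply, ← map_mul] at this
      rw [← this]
      congr 2
      show x ^ N * g * f = g * (f * x ^ N)
      ring
    have hinj : Function.Injective ((LinearMap.fst K ↥(linV K ξ ^ q) (Fin σ → Polynomial K)).domRestrict W) := by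
      rw [injective_iff_map_eq_zero]
      rintro ⟨⟨v, p⟩, hw⟩ h
      have hv : v = 0 := h
      subst hv
      have := hkill _ hw
      rw [aeval_opY_inr] at this
      have hp : p = 0 := by
        funext a
        have := congrFun (congrArg Prod.snd this) a
        exact (mul_eq_zero.mp this).resolve_left (pow_ne_zero _ hc)
      subst hp
      rfl
    have hWfd : FiniteDimensional K W := FiniteDimensional.of_injective _ hinj
    have hWle : finrank K W ≤ finrank K ↥(linV K ξ ^ q) :=
      LinearMap.finrank_le_finrank_of_injective hinj
    have hsur : Function.Surjective ((evE y b).domRestrict W) := by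
      intro z
      obtain ⟨g, hg⟩ := hsurj (z / aeval ξ f)
      refine ⟨⟨φ g, ⟨g, rfl⟩⟩, ?_⟩
      show evE y b (φ g) = z
      rw [hφ, hev, hev, hg, evE_io P I (one_le_pow_sub P.one_mem _), mul_one,
        div_mul_cancel₀ _ hf']
    have := LinearMap.finrank_le_finrank_of_surjective hsur
    omega
  obtain ⟨𝔮, h𝔮, hle, hd⟩ := Ideal.exists_le_prime_disjoint _ _ hdis
  refine ⟨𝔮, h𝔮, hle, lt_of_le_of_ne ?_ ?_⟩
  · intro f hf
    by_contra hfn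
    exact Set.disjoint_left.mp hd hf ((le_sup_left : _ ≤ Mult) hfn)
  · intro h
    have hx : x ∈ 𝔮 := by
      rw [h, RingHom.mem_ker]
      have : aeval ξ x = Polynomial.aeval (aeval ξ l) c :=
        (Polynomial.aeval_algHom_apply (aeval (R := K) ξ) l c).symm
      rw [this, hly]
      exact minpoly.aeval K y
    exact Set.disjoint_left.mp hd hx ((le_sup_right : _ ≤ Mult) (Submonoid.mem_powers x))

end Interp

end GenusBound

/-! ### Descent of the low degree equations -/

namespace GenusBound

open Module MvPolynomial

section Descent

set_option linter.unusedSectionVars false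

variable {r : ℕ} {k E K F : Type*} [Field k] [Field E] [Field K] [Field F] [Algebra k E]
    [Algebra k K] [Algebra E F] [Algebra K F] [Algebra k F] [IsScalarTower k K F]
    [IsScalarTower k E F] {u : Fin (r + 1) → K} {ξ : Fin (r + 1) → E}

theorem thet_map_C (q : MvPolynomial (Fin (r + 1)) k) :
    thet u (map C q) = C (aeval u q) := by
  have : (thet u).comp (map C) = (C : K →+* MvPolynomial (Fin (r + 1)) K).comp
      (aeval u : MvPolynomial (Fin (r + 1)) k →ₐ[k] K).toRingHom := by
    apply ringHom_ext
    · intro a; simp [thet]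
    · intro j; simp [thet]
  exact congrArg (fun f => f q) this

theorem thet_injective (hu : AlgebraicIndependent k u) :
    Function.Injective (thet (k := k) u) := by
  classical
  rw [injective_iff_map_eq_zero]
  intro P hP
  ext m α
  rw [thet_coeff] at hP
  have h1 : aeval u (∑ m ∈ P.support, monomial m (coeff α (coeff m P))) = 0 := by
    have := congrArg (coeff α) hP
    rw [coeff_sum, coeff_zero] at this
    rw [map_sum, ← this]
    refine Finset.sum_congr rfl fun m _ => ?_
    rw [coeff_C_mul, coeff_map, aeval_monomial, mul_comm, Finsupp.prod_fintype _ _ (by simp)]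
  have h2 := (injective_iff_map_eq_zero _).mp hu _ h1
  have h3 := congrArg (coeff m) h2
  rw [coeff_sum, coeff_zero] at h3
  by_cases hm : m ∈ P.support
  · rw [Finset.sum_eq_single_of_mem m hm] at h3
    · rw [coeff_monomial, if_pos rfl] at h3
      rw [h3]; simp
    · intro b _ hb
      rw [coeff_monomial, if_neg hb]
  · rw [notMem_support_iff.mp hm]; rfl

/-- The derivation `∂/∂u_j - x_j ∂/∂u_0`, which preserves the relation `∑ u_j x_j = 0`. -/
noncomputable def derD (r : ℕ) (k : Type*) [Field k] (j : Fin r) :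
    Derivation (MvPolynomial (Fin (r + 1)) k)
      (MvPolynomial (Fin (r + 1)) (MvPolynomial (Fin (r + 1)) k))
      (MvPolynomial (Fin (r + 1)) (MvPolynomial (Fin (r + 1)) k)) :=
  pderiv j.succ - (X j.succ : MvPolynomial (Fin (r + 1)) k) • pderiv 0

theorem derD_apply (j : Fin r) (P : MvPolynomial (Fin (r + 1)) (MvPolynomial (Fin (r + 1)) k)) :
    derD r k j P = pderiv j.succ P - C (X j.succ) * pderiv 0 P := by
  rw [← smul_eq_C_mul]; rfl

theorem tld_derD (j : Fin r) (P : MvPolynomial (Fin (r + 1)) (MvPolynomial (Fin (r + 1)) k)) :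
    tld r k (derD r k j P) = pderiv j (tld r k P) := by
  classical
  induction P using MvPolynomial.induction_on with
  | C a =>
    rw [show (C a : MvPolynomial (Fin (r + 1)) (MvPolynomial (Fin (r + 1)) k))
      = algebraMap _ _ a from rfl, Derivation.map_algebraMap, map_zero, AlgHom.commutes,
      Derivation.map_algebraMap]
  | add f g hf hg => rw [map_add, map_add, hf, hg, map_add, map_add]
  | mul_X f i hf =>
    have hX : tld r k (derD r k j (X i)) = pderiv j (tld r k (X i)) := by
      refine Fin.cases ?_ (fun i => ?_) i
      · rw [derD_apply, pderiv_X_self, pderiv_X_of_ne (Fin.succ_ne_zero j).symm, zero_sub, mul_one,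
          map_neg, tld, algHom_C, aeval_X, Fin.cases_zero, map_neg, map_sum]
        congr 1
        rw [Finset.sum_eq_single j]
        · rw [Derivation.leibniz, pderiv_X_self, pderiv_C]; simp
        · intro c _ hc
          rw [Derivation.leibniz, pderiv_X_of_ne hc, pderiv_C]; simp
        · simp
      · rw [derD_apply, pderiv_X_of_ne (i := (0 : Fin (r + 1))) (by simp)]
        simp only [tld, aeval_X, Fin.cases_succ, mul_zero, sub_zero]
        by_cases h : i = j
        · subst h; rw [pderiv_X_self, pderiv_X_self, map_one]
        · rw [pderiv_X_of_ne h, pderiv_X_of_ne (by simpa using h), map_zero]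
    rw [Derivation.leibniz, map_add, smul_eq_mul, smul_eq_mul, map_mul, map_mul, hX, hf, map_mul,
      Derivation.leibniz, smul_eq_mul, smul_eq_mul]

theorem GenSec.aeval_thet_derD (S : GenSec k E K F u ξ) (j : Fin r)
    {P : MvPolynomial (Fin (r + 1)) (MvPolynomial (Fin (r + 1)) k)}
    (hP : aeval (secX F ξ) (thet u P) = 0) : aeval (secX F ξ) (thet u (derD r k j P)) = 0 := by
  rw [S.aeval_thet_eq_zero_iff] at hP ⊢
  intro m
  rw [tld_derD]
  suffices h : map (aeval ξ : MvPolynomial (Fin (r + 1)) k →ₐ[k] E).toRingHom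
      (pderiv j (tld r k P)) = 0 by
    have := congrArg (coeff m) h
    rw [coeff_map, coeff_zero] at this
    exact this
  rw [← pderiv_map]
  have : map (aeval ξ : MvPolynomial (Fin (r + 1)) k →ₐ[k] E).toRingHom (tld r k P) = 0 := by
    ext m
    rw [coeff_map, coeff_zero]
    exact hP m
  rw [this, map_zero]

/-- The coefficients `x`-degree of `thet u P`. -/
theorem totalDegree_thet_le {P : MvPolynomial (Fin (r + 1)) (MvPolynomial (Fin (r + 1)) k)}
    {e : ℕ} (h : ∀ m, (coeff m P).totalDegree ≤ e) : (thet u P).totalDegree ≤ e := by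
  rw [thet_coeff]
  refine (totalDegree_finsetSum_le fun m _ => ?_)
  refine (totalDegree_mul _ _).trans ?_
  rw [totalDegree_C, zero_add]
  exact (Finset.sup_mono (support_map_subset _ _)).trans (h m)

theorem coeff_pderiv_deg (i : Fin (r + 1))
    {P : MvPolynomial (Fin (r + 1)) (MvPolynomial (Fin (r + 1)) k)}
    {e : ℕ} (h : ∀ m, (coeff m P).totalDegree ≤ e) (m : Fin (r + 1) →₀ ℕ) :
    (coeff m (pderiv i P)).totalDegree ≤ e := by
  rw [coeff_pderiv]
  refine (totalDegree_mul _ _).trans ?_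
  have : ((m i : MvPolynomial (Fin (r + 1)) k) + 1) = C ((m i : k) + 1) := by simp
  rw [this, totalDegree_C, add_zero]
  exact h _

theorem coeff_derD_deg (j : Fin r)
    {P : MvPolynomial (Fin (r + 1)) (MvPolynomial (Fin (r + 1)) k)}
    {e : ℕ} (h : ∀ m, (coeff m P).totalDegree ≤ e) (m : Fin (r + 1) →₀ ℕ) :
    (coeff m (derD r k j P)).totalDegree ≤ e + 1 := by
  rw [derD_apply, coeff_sub, coeff_C_mul]
  refine (totalDegree_sub _ _).trans (max_le ?_ ((totalDegree_mul _ _).trans ?_))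
  · exact (coeff_pderiv_deg _ h m).trans (by omega)
  · rw [totalDegree_X]
    have := coeff_pderiv_deg 0 h m
    omega

/-- `k[x][u_1, …, u_r] → K[x]`. -/
noncomputable def thet1 {r : ℕ} {k K : Type*} [Field k] [Field K] [Algebra k K]
    (u : Fin (r + 1) → K) :
    MvPolynomial (Fin r) (MvPolynomial (Fin (r + 1)) k) →+* MvPolynomial (Fin (r + 1)) K :=
  eval₂Hom (map (algebraMap k K)) (fun j => C (u j.succ))

theorem thet_rename (G : MvPolynomial (Fin r) (MvPolynomial (Fin (r + 1)) k)) :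
    thet u (rename Fin.succ G) = thet1 u G := by
  rw [thet, coe_eval₂Hom, eval₂_rename]
  rfl

theorem derD_rename (j : Fin r) (G : MvPolynomial (Fin r) (MvPolynomial (Fin (r + 1)) k)) :
    derD r k j (rename Fin.succ G) = rename Fin.succ (pderiv j G) := by
  classical
  induction G using MvPolynomial.induction_on with
  | C a =>
    rw [rename_C, pderiv_C, map_zero, show (C a : MvPolynomial (Fin (r + 1)) _)
      = algebraMap _ _ a from rfl, Derivation.map_algebraMap]
  | add f g hf hg => rw [map_add, map_add, hf, hg, map_add, map_add]
  | mul_X f i hf =>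
    have hX : derD r k j (rename Fin.succ (X i : MvPolynomial (Fin r) _))
        = rename Fin.succ (pderiv j (X i : MvPolynomial (Fin r) (MvPolynomial (Fin (r + 1)) k)))
          := by
      rw [rename_X, derD_apply, pderiv_X_of_ne (i := (0 : Fin (r + 1))) (by simp), mul_zero,
        sub_zero]
      by_cases h : i = j
      · subst h; rw [pderiv_X_self, pderiv_X_self, map_one]
      · rw [pderiv_X_of_ne h, pderiv_X_of_ne (by simpa using h), map_zero]
    rw [map_mul, Derivation.leibniz, smul_eq_mul, smul_eq_mul, hf, hX, Derivation.leibniz,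
      map_add, smul_eq_mul, smul_eq_mul, map_mul, map_mul]

/-- Modulo an ideal containing the generic linear form, `thet` factors through `tld`. -/
theorem thet_sub_mem {J : Ideal (MvPolynomial (Fin (r + 1)) K)}
    (hL : C (u 0) + ∑ j : Fin r, C (u j.succ) * X j.succ ∈ J)
    (P : MvPolynomial (Fin (r + 1)) (MvPolynomial (Fin (r + 1)) k)) :
    thet u P - thet1 u (tld r k P) ∈ J := by
  have h : (Ideal.Quotient.mk J).comp (thet u)
      = (Ideal.Quotient.mk J).comp ((thet1 u).comp (tld r k).toRingHom) := by
    apply ringHom_ext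
    · intro p
      simp only [RingHom.comp_apply, thet, thet1, coe_eval₂Hom, eval₂_C, tld, RingHom.coe_coe,
        AlgHom.toRingHom_eq_coe, algHom_C, algebraMap_eq]
    · intro j
      refine Fin.cases ?_ (fun j => ?_) j
      · simp only [RingHom.comp_apply, thet, thet1, coe_eval₂Hom, eval₂_X, tld, RingHom.coe_coe,
          AlgHom.toRingHom_eq_coe, aeval_X, Fin.cases_zero]
        rw [Ideal.Quotient.eq]
        convert hL using 1
        rw [← coe_eval₂Hom, map_neg, map_sum, sub_neg_eq_add]
        congr 1
        refine Finset.sum_congr rfl fun j _ => ?_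
        rw [map_mul, coe_eval₂Hom, eval₂_X, eval₂_C, map_X, mul_comm]
      · simp only [RingHom.comp_apply, thet, thet1, coe_eval₂Hom, eval₂_X, tld, RingHom.coe_coe,
          AlgHom.toRingHom_eq_coe, aeval_X, Fin.cases_succ]
  exact Ideal.Quotient.eq.mp (congrArg (fun f => f P) h)

theorem thet1_mem {J : Ideal (MvPolynomial (Fin (r + 1)) K)}
    {G : MvPolynomial (Fin r) (MvPolynomial (Fin (r + 1)) k)}
    (h : ∀ m, map (algebraMap k K) (coeff m G) ∈ J) : thet1 u G ∈ J := by
  rw [thet1, coe_eval₂Hom, eval₂_eq']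
  exact Submodule.sum_mem _ fun m _ => Ideal.mul_mem_right _ _ (h m)

/-- An ideal closed under the derivations `∂/∂u_j` contains the coefficients of its elements. -/
theorem coeff_mem_of_closed [CharZero k] {J : Ideal (MvPolynomial (Fin (r + 1)) K)}
    (hJ : ∀ (G : MvPolynomial (Fin r) (MvPolynomial (Fin (r + 1)) k)) (j : Fin r),
      thet1 u G ∈ J → thet1 u (pderiv j G) ∈ J) :
    ∀ (e : ℕ) (G : MvPolynomial (Fin r) (MvPolynomial (Fin (r + 1)) k)), G.totalDegree ≤ e →
      thet1 u G ∈ J → ∀ m, map (algebraMap k K) (coeff m G) ∈ J := by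
  classical
  intro e
  induction e with
  | zero =>
    intro G hG h m
    rw [Nat.le_zero, totalDegree_eq_zero_iff_eq_C] at hG
    rw [hG] at h ⊢
    rw [thet1, coe_eval₂Hom, eval₂_C] at h
    rw [coeff_C]
    split_ifs
    · exact h
    · simp
  | succ e ih =>
    intro G hG h
    have hne : ∀ m ≠ 0, map (algebraMap k K) (coeff m G) ∈ J := by
      intro m hm
      obtain ⟨j, hj⟩ := Finsupp.ne_iff.mp hm
      have hj' : m j ≠ 0 := by simpa using hj
      have hs1 : (m - Finsupp.single j 1) + Finsupp.single j 1 = m := by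
        rw [tsub_add_cancel_of_le]
        rw [Finsupp.single_le_iff]
        omega
      have h1 := ih (pderiv j G) ?_ (hJ G j h) (m - Finsupp.single j 1)
      · rw [coeff_pderiv, hs1, map_mul] at h1
        have h2 : map (algebraMap k K) ((((m - Finsupp.single j 1 : Fin r →₀ ℕ) j : ℕ) : MvPolynomial (Fin (r + 1)) k)
            + 1) = C ((m j : K)) := by
          rw [Finsupp.tsub_apply, Finsupp.single_eq_same]
          obtain ⟨n, hn⟩ := Nat.exists_eq_succ_of_ne_zero hj'
          rw [hn]
          simp
        rw [h2] at h1
        have hK : (m j : K) ≠ 0 := by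
          have : CharZero K := charZero_of_injective_algebraMap (algebraMap k K).injective
          exact_mod_cast hj'
        have h3 := J.mul_mem_left (C ((m j : K)⁻¹)) h1
        rw [mul_left_comm, ← map_mul, inv_mul_cancel₀ hK, map_one, mul_one] at h3
        exact h3
      · refine Finset.sup_le fun s hs => ?_
        rw [MvPolynomial.mem_support_iff, coeff_pderiv] at hs
        have hs' : s + Finsupp.single j 1 ∈ G.support := by
          rw [MvPolynomial.mem_support_iff]
          exact left_ne_zero_of_mul hs
        have := (le_totalDegree hs').trans hG
        rw [Finsupp.sum_add_index' (fun _ => rfl) (fun _ _ _ => rfl),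
          Finsupp.sum_single_index rfl] at this
        exact (show (s.sum fun _ e => e) ≤ e by omega)
    intro m
    by_cases hm : m = 0
    · subst hm
      have h1 : thet1 u (G - C (coeff 0 G)) ∈ J := by
        refine thet1_mem fun m => ?_
        rw [coeff_sub, coeff_C]
        by_cases h0 : m = 0
        · subst h0; simp
        · rw [if_neg (Ne.symm h0), sub_zero]; exact hne m h0
      have h2 := J.sub_mem h h1
      rw [← map_sub, sub_sub_cancel, thet1, coe_eval₂Hom, eval₂_C] at h2
      exact h2
    · exact hne m hm

variable {q : ℕ} {y : F}

theorem GenSec.aeval_lin (S : GenSec k E K F u ξ) :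
    aeval (secX F ξ) (C (u 0) + ∑ j : Fin r, C (u j.succ) * X j.succ :
      MvPolynomial (Fin (r + 1)) K) = 0 := by
  have := S.rel
  rw [Fin.sum_univ_succ, S.xi0, map_one, mul_one] at this
  rw [map_add, map_sum, aeval_C]
  simp only [map_mul, aeval_C, aeval_X]
  exact this

/-- The ideal generated by the low degree equations of the generic section is stable under the
derivations `derD`. -/
theorem GenSec.lowJ_closed (S : GenSec k E K F u ξ) (Pl : Plateau (linV K (secX F ξ)) q y)
    {P : MvPolynomial (Fin (r + 1)) (MvPolynomial (Fin (r + 1)) k)}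
    (hP : thet u P ∈ lowJ K (secX F ξ) (q + 2)) (j : Fin r) :
    thet u (derD r k j P) ∈ lowJ K (secX F ξ) (q + 2) := by
  set J := lowJ K (secX F ξ) (q + 2) with hJdef
  have hs0 : secX F ξ 0 = 1 := by rw [secX, S.xi0, map_one]
  have key : ∀ Q ∈ J, ∃ (q0 : MvPolynomial (Fin (r + 1)) k)
      (P : MvPolynomial (Fin (r + 1)) (MvPolynomial (Fin (r + 1)) k)), aeval u q0 ≠ 0 ∧
      thet u P = C (aeval u q0) * Q ∧ thet u (derD r k j P) ∈ J := by
    intro Q hQ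
    have hcd : ∀ Q : MvPolynomial (Fin (r + 1)) K, ∃ (q0 : MvPolynomial (Fin (r + 1)) k)
        (P : MvPolynomial (Fin (r + 1)) (MvPolynomial (Fin (r + 1)) k)), aeval u q0 ≠ 0 ∧
        thet u P = C (aeval u q0) * Q ∧ ∀ m, (coeff m P).support ⊆ Q.support := by
      intro Q
      obtain ⟨c, P, hc, h1, h2⟩ := S.clear_denom Q
      obtain ⟨a, b, hb, hab⟩ := S.fracK c
      refine ⟨a, map C b * P, ?_, ?_, fun m => ?_⟩
      · rw [← hab]; exact mul_ne_zero hc hb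
      · rw [map_mul, thet_map_C, h1, ← hab, map_mul]; ring
      · rw [coeff_mul]
        refine support_sum.trans (Finset.biUnion_subset.mpr fun x _ => ?_)
        rw [coeff_map, ← smul_eq_C_mul]
        exact support_smul.trans (h2 _)
    induction hQ using Submodule.span_induction with
    | mem Q hQ =>
      obtain ⟨q0, P, h0, h1, h2⟩ := hcd Q
      refine ⟨q0, P, h0, h1, ?_⟩
      refine Pl.mem_lowJ hs0 (totalDegree_thet_le fun m => coeff_derD_deg j (e := q + 2) ?_ m) ?_
      · exact fun m => (Finset.sup_mono (h2 m)).trans hQ.1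
      · refine S.aeval_thet_derD j ?_
        rw [h1, map_mul, hQ.2, mul_zero]
    | zero => exact ⟨1, 0, by simp, by simp, by simp⟩
    | add Q1 Q2 hQ1 hQ2 ih1 ih2 =>
      obtain ⟨q1, P1, h1, e1, d1⟩ := ih1
      obtain ⟨q2, P2, h2, e2, d2⟩ := ih2
      refine ⟨q1 * q2, map C q2 * P1 + map C q1 * P2, ?_, ?_, ?_⟩
      · rw [map_mul]; exact mul_ne_zero h1 h2
      · rw [map_add, map_mul, map_mul, thet_map_C, thet_map_C, e1, e2, map_mul, map_mul]; ring
      · rw [map_add, Derivation.leibniz, Derivation.leibniz]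
        simp only [smul_eq_mul, map_add, map_mul]
        rw [e1, e2]
        refine add_mem (add_mem (J.mul_mem_left _ d1) ?_) (add_mem (J.mul_mem_left _ d2) ?_)
        · exact J.mul_mem_right _ (J.mul_mem_left _ hQ1)
        · exact J.mul_mem_right _ (J.mul_mem_left _ hQ2)
    | smul a Q hQ ih =>
      obtain ⟨q1, P1, h1, e1, d1⟩ := ih
      obtain ⟨q2, A, h2, e2, -⟩ := hcd a
      refine ⟨q2 * q1, A * P1, ?_, ?_, ?_⟩
      · rw [map_mul]; exact mul_ne_zero h2 h1
      · rw [map_mul, e1, e2, map_mul, map_mul, smul_eq_mul]; ring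
      · rw [Derivation.leibniz]
        simp only [smul_eq_mul, map_add, map_mul]
        rw [e1]
        exact add_mem (J.mul_mem_left _ d1) (J.mul_mem_right _ (J.mul_mem_left _ hQ))
  obtain ⟨q0, P', h0, h1, h2⟩ := key _ hP
  have h3 : P' = map C q0 * P := thet_injective S.indepK (by rw [h1, map_mul, thet_map_C])
  rw [h3, Derivation.leibniz] at h2
  simp only [smul_eq_mul, map_add, map_mul, thet_map_C] at h2
  have h4 := (J.add_mem_iff_left (J.mul_mem_right _ hP)).mp h2
  have h5 := J.mul_mem_left (C ((aeval u q0)⁻¹)) h4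
  rw [← mul_assoc, ← map_mul, inv_mul_cancel₀ h0, map_one, one_mul] at h5
  exact h5

/-- A plateau of the generic section of `ξ` produces a variety over `k` strictly containing the
one of `ξ`, on whose generic section the low degree equations of the section of `ξ` vanish. -/
theorem Plateau.exists_descent [CharZero k] [FiniteDimensional K F] (S : GenSec k E K F u ξ)
    (Pl : Plateau (linV K (secX F ξ)) q y)
    (hsurj : Function.Surjective (aeval (R := K) (secX F ξ)))
    (hq : finrank K ↥(linV K (secX F ξ) ^ q) < finrank K F) :
    ∃ T : Ideal (MvPolynomial (Fin (r + 1)) k), T.IsPrime ∧ (∀ p ∈ T, aeval ξ p = 0) ∧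
      X 0 - 1 ∈ T ∧ (∃ p, p ∉ T ∧ aeval ξ p = 0) ∧
      ∀ f : MvPolynomial (Fin (r + 1)) K, f.totalDegree ≤ q + 2 → aeval (secX F ξ) f = 0 →
        ∃ (c : K) (P : MvPolynomial (Fin (r + 1)) (MvPolynomial (Fin (r + 1)) k)), c ≠ 0 ∧
          thet u P = C c * f ∧ ∀ m, coeff m (tld r k P) ∈ T := by
  have hs0 : secX F ξ 0 = 1 := by rw [secX, S.xi0, map_one]
  obtain ⟨𝔮, h𝔮, hle, hlt⟩ := Pl.exists_prime hs0 hsurj hq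
  have hmap : ∀ p : MvPolynomial (Fin (r + 1)) k,
      aeval (secX F ξ) (map (algebraMap k K) p) = algebraMap E F (aeval ξ p) := fun p => by
    rw [aeval_map_algebraMap]
    exact aeval_algebraMap_apply F ξ p
  have hL : C (u 0) + ∑ j : Fin r, C (u j.succ) * X j.succ ∈ lowJ K (secX F ξ) (q + 2) := by
    refine Ideal.subset_span ⟨?_, S.aeval_lin⟩
    refine (totalDegree_add _ _).trans (max_le (by rw [totalDegree_C]; omega) ?_)
    refine totalDegree_finsetSum_le fun j _ => (totalDegree_mul _ _).trans ?_
    rw [totalDegree_C, totalDegree_X]; omega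
  refine ⟨𝔮.comap (map (algebraMap k K)), Ideal.comap_isPrime _ _, ?_, ?_, ?_, ?_⟩
  · intro p hp
    have := hlt.le hp
    rw [RingHom.mem_ker, hmap] at this
    exact (map_eq_zero_iff _ (algebraMap E F).injective).mp this
  · rw [Ideal.mem_comap, map_sub, map_X, map_one]
    refine hle (Ideal.subset_span ⟨?_, ?_⟩)
    · refine (totalDegree_sub _ _).trans (max_le ?_ ?_)
      · rw [totalDegree_X]; omega
      · rw [totalDegree_one]; omega
    · rw [map_sub, aeval_X, map_one, hs0, sub_self]
  · by_contra! hcon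
    obtain ⟨Q, hQ, hQn⟩ := Set.exists_of_ssubset hlt
    obtain ⟨c, P, hc, hP, -⟩ := S.clear_denom Q
    have h1 : aeval (secX F ξ) (thet u P) = 0 := by
      rw [hP, map_mul, RingHom.mem_ker.mp hQ, mul_zero]
    rw [S.aeval_thet_eq_zero_iff] at h1
    have h2 : thet u P ∈ 𝔮 := by
      have h3 := thet_sub_mem (hle hL) P
      have h4 : thet1 u (tld r k P) ∈ 𝔮 := thet1_mem fun m => by
        by_contra h
        exact hcon _ h (h1 m)
      simpa using add_mem h3 h4
    rw [hP] at h2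
    refine (h𝔮.mem_or_mem h2).elim (fun h => h𝔮.ne_top ?_) hQn
    exact Ideal.eq_top_of_isUnit_mem _ h ((isUnit_iff_ne_zero.mpr hc).map C)
  · intro f hf hf0
    obtain ⟨c, P, hc, hP, -⟩ := S.clear_denom f
    refine ⟨c, P, hc, hP, fun m => hle ?_⟩
    have h1 : thet u P ∈ lowJ K (secX F ξ) (q + 2) := by
      rw [hP]
      exact Ideal.mul_mem_left _ _ (Ideal.subset_span ⟨hf, hf0⟩)
    refine coeff_mem_of_closed (u := u) (fun G j hG => ?_) _ (tld r k P) le_rfl ?_ m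
    · rw [← thet_rename] at hG ⊢
      rw [← derD_rename]
      exact S.lowJ_closed Pl hG j
    · have := sub_mem h1 (thet_sub_mem hL P)
      simpa using this

end Descent

end GenusBound

namespace GenusBound

open Module MvPolynomial

/-! ### The variety produced by a plateau and its generic section -/

section LowDegree

variable {r : ℕ} {K F F' : Type*} [Field K] [Field F] [Field F'] [Algebra K F] [Algebra K F']
  {ζ : Fin (r + 1) → F} {ζ' : Fin (r + 1) → F'}

theorem hf_eq_of_low {e t : ℕ}
    (h : ∀ f : MvPolynomial (Fin (r + 1)) K, f.totalDegree ≤ e → (aeval ζ f = 0 ↔ aeval ζ' f = 0))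
    (ht : t ≤ e) : hf K ζ t = hf K ζ' t := by
  have hfd : FiniteDimensional K (homogeneousSubmodule (Fin (r + 1)) K t) := by
    rw [← homogeneousSubmodule_one_pow, homogeneousSubmodule_one_eq_span_X]
    exact linV_pow_fd (k := K) (X : Fin (r + 1) → MvPolynomial (Fin (r + 1)) K) t
  have h1 := finrank_map_add_inf_ker (aeval (R := K) ζ).toLinearMap
    (homogeneousSubmodule (Fin (r + 1)) K t)
  have h2 := finrank_map_add_inf_ker (aeval (R := K) ζ').toLinearMap
    (homogeneousSubmodule (Fin (r + 1)) K t)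
  have h3 : homogeneousSubmodule (Fin (r + 1)) K t ⊓ LinearMap.ker (aeval (R := K) ζ).toLinearMap
      = homogeneousSubmodule (Fin (r + 1)) K t ⊓
        LinearMap.ker (aeval (R := K) ζ').toLinearMap := by
    ext f
    simp only [Submodule.mem_inf, LinearMap.mem_ker, AlgHom.toLinearMap_apply]
    refine and_congr_right fun hf => h f ?_
    exact (IsHomogeneous.totalDegree_le hf).trans ht
  rw [h3] at h1
  rw [hf, hf, linV_pow_eq_map, linV_pow_eq_map]
  omega

theorem step_of_low {e q : ℕ} {y : F} (h0 : ζ 0 = 1) (h0' : ζ' 0 = 1)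
    (h : ∀ f : MvPolynomial (Fin (r + 1)) K, f.totalDegree ≤ e → aeval ζ f = 0 → aeval ζ' f = 0)
    (hq : q + 1 ≤ e) (hy : y ∈ linV K ζ)
    (hs : linV K ζ ^ (q + 1) = mulStep (linV K ζ) q y) :
    ∃ y' ∈ linV K ζ', linV K ζ' ^ (q + 1) = mulStep (linV K ζ') q y' := by
  rw [← pow_one (linV K ζ)] at hy
  obtain ⟨l, hl, rfl⟩ := exists_of_mem_linV_pow hy
  have hl' : aeval ζ' l ∈ linV K ζ' := by
    have := aeval_mem_linV_pow (K := K) h0' hl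
    rwa [pow_one] at this
  refine ⟨_, hl', le_antisymm (fun x hx => ?_) (mulStep_le (one_le_linV h0') hl')⟩
  obtain ⟨f, hf, rfl⟩ := exists_of_mem_linV_pow hx
  have h1 : aeval ζ f ∈ mulStep (linV K ζ) q (aeval ζ l) := hs ▸ aeval_mem_linV_pow h0 hf
  obtain ⟨_, ⟨b, hb, rfl⟩, a, ha, hab⟩ := Submodule.mem_sup.mp h1
  obtain ⟨b, hbd, rfl⟩ := exists_of_mem_linV_pow hb
  obtain ⟨a, had, rfl⟩ := exists_of_mem_linV_pow ha
  have h2 : aeval ζ' (l * b + a - f) = 0 := by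
    refine h _ ?_ ?_
    · refine (totalDegree_sub _ _).trans (max_le ((totalDegree_add _ _).trans (max_le
        ((totalDegree_mul _ _).trans ?_) ?_)) ?_) <;> omega
    · rw [map_sub, map_add, map_mul, sub_eq_zero]
      exact hab
  rw [map_sub, map_add, map_mul, sub_eq_zero] at h2
  rw [← h2]
  exact Submodule.add_mem_sup ⟨_, aeval_mem_linV_pow h0' hbd, rfl⟩ (aeval_mem_linV_pow h0' had)

end LowDegree

section Generation

set_option linter.unusedSectionVars false

variable {r : ℕ} {k E K F : Type*} [Field k] [Field E] [Field K] [Field F] [Algebra k E]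
    [Algebra k K] [Algebra E F] [Algebra K F] [Algebra k F] [IsScalarTower k K F]
    [IsScalarTower k E F] {u : Fin (r + 1) → K} {ξ : Fin (r + 1) → E}

theorem aeval_secX_map (p : MvPolynomial (Fin (r + 1)) k) :
    aeval (secX F ξ) (map (algebraMap k K) p) = algebraMap E F (aeval ξ p) := by
  rw [aeval_map_algebraMap]
  exact aeval_algebraMap_apply F ξ p

/-- The coordinates of the generic section generate its function field. -/
theorem GenSec.adjoin_secX (S : GenSec k E K F u ξ)
    (hE : IntermediateField.adjoin k (Set.range ξ) = ⊤) :
    IntermediateField.adjoin K (Set.range (secX F ξ)) = ⊤ := by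
  set L := IntermediateField.adjoin K (Set.range (secX F ξ)) with hL
  have hmem : ∀ Q : MvPolynomial (Fin (r + 1)) K, aeval (secX F ξ) Q ∈ L := fun Q =>
    IntermediateField.algebra_adjoin_le_adjoin K _ (by
      rw [Algebra.adjoin_range_eq_range_aeval]; exact ⟨Q, rfl⟩)
  have hEL : ∀ e : E, algebraMap E F e ∈ L := by
    intro e
    have he : e ∈ IntermediateField.adjoin k (Set.range ξ) := hE ▸ IntermediateField.mem_top
    rw [IntermediateField.mem_adjoin_range_iff] at he
    obtain ⟨p, q, rfl⟩ := he
    rw [map_div₀, ← aeval_secX_map (K := K), ← aeval_secX_map (K := K)]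
    exact L.div_mem (hmem _) (hmem _)
  have hpol : ∀ p : MvPolynomial (Fin r) E,
      aeval (fun j : Fin r => algebraMap K F (u j.succ)) p ∈ L := by
    intro p
    induction p using MvPolynomial.induction_on with
    | C a => rw [aeval_C]; exact hEL a
    | add p q hp hq => rw [map_add]; exact L.add_mem hp hq
    | mul_X p j hp => rw [map_mul, aeval_X]; exact L.mul_mem hp (L.algebraMap_mem _)
  rw [eq_top_iff]
  intro x _
  obtain ⟨p, q, hq, hx⟩ := S.fracF x
  rw [eq_div_of_mul_eq hq hx]
  exact L.div_mem (hpol p) (hpol q)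

end Generation

section FiniteSection

variable {r : ℕ} {K F : Type*} [Field K] [Field F] [Algebra K F] {ζ : Fin (r + 1) → F}

/-- If the Hilbert function of a generating tuple is constant from `N` on, the forms of degree `N`
fill the field. -/
theorem linV_pow_eq_top (h0 : ζ 0 = 1) (hF : IntermediateField.adjoin K (Set.range ζ) = ⊤)
    {N : ℕ} (hN : ∀ t, N ≤ t → hf K ζ t = hf K ζ N) {t : ℕ} (ht : N ≤ t) :
    linV K ζ ^ t = ⊤ := by
  have key : ∀ t, N ≤ t → linV K ζ ^ t = linV K ζ ^ N := fun t ht =>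
    (Submodule.eq_of_le_of_finrank_eq (linV_pow_mono h0 ht) (hN t ht).symm).symm
  have hpol : ∀ Q : MvPolynomial (Fin (r + 1)) K, aeval ζ Q ∈ linV K ζ ^ N := fun Q => by
    rw [← key (N + Q.totalDegree) (by omega)]
    exact aeval_mem_linV_pow h0 (by omega)
  rw [key t ht, eq_top_iff]
  intro x _
  have hx : x ∈ IntermediateField.adjoin K (Set.range ζ) := hF ▸ IntermediateField.mem_top
  rw [IntermediateField.mem_adjoin_range_iff] at hx
  obtain ⟨p, q, rfl⟩ := hx
  by_cases hq : aeval ζ q = 0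
  · rw [hq, div_zero]; exact zero_mem _
  have hint : IsIntegral K (aeval ζ q) := by
    refine isIntegral_of_smul_mem_submodule (M := F) (linV K ζ ^ N) ?_
          ((Submodule.fg_iff_finiteDimensional _).mpr inferInstance) _ ?_
    · intro hbot
      have : (1 : F) ∈ linV K ζ ^ N := by simpa [h0] using xi_pow_mem (k := K) ζ 0 N
      rw [hbot, Submodule.mem_bot] at this
      exact one_ne_zero this
    · intro n hn
      obtain ⟨f, -, rfl⟩ := exists_of_mem_linV_pow hn
      rw [smul_eq_mul, ← map_mul]
      exact hpol _
  have hinv : (aeval ζ q)⁻¹ ∈ Algebra.adjoin K {aeval ζ q} := hint.inv_mem_adjoin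
  rw [Algebra.adjoin_singleton_eq_range_aeval] at hinv
  obtain ⟨f, hf⟩ := hinv
  have : aeval ζ p / aeval ζ q = aeval ζ (p * Polynomial.aeval q f) := by
    rw [map_mul, div_eq_mul_inv, ← hf]
    congr 1
    exact (Polynomial.aeval_algHom_apply (aeval ζ) q f)
  rw [this]
  exact hpol _

end FiniteSection

section Transc

set_option linter.unusedSectionVars false

variable {r : ℕ} {k E E' K F F' : Type*} [Field k] [Field E] [Field K] [Field F] [Algebra k E]
    [Algebra k K] [Algebra E F] [Algebra K F] [Algebra k F] [IsScalarTower k K F]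
    [IsScalarTower k E F] {u : Fin (r + 1) → K} {ξ : Fin (r + 1) → E}
    [Field E'] [Field F'] [Algebra k E'] [Algebra E' F'] [Algebra K F'] [Algebra k F']
    [IsScalarTower k K F'] [IsScalarTower k E' F'] {ξ' : Fin (r + 1) → E'}

theorem transcendental_of_specializes
    (h : ∀ p : MvPolynomial (Fin (r + 1)) k, aeval ξ' p = 0 → aeval ξ p = 0)
    {j : Fin (r + 1)} (hj : Transcendental k (ξ j)) : Transcendental k (ξ' j) := by
  rw [transcendental_iff] at hj ⊢
  intro p hp
  refine hj p ?_
  have h1' : aeval ξ (Polynomial.aeval (X j : MvPolynomial (Fin (r + 1)) k) p)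
        = Polynomial.aeval (ξ j) p := by
    rw [← Polynomial.aeval_algHom_apply, aeval_X]
  rw [← h1']
  exact h _ (by rw [← Polynomial.aeval_algHom_apply, aeval_X]; exact hp)

/-- If `ξ` is a proper specialization of `ξ'`, the generic section of `ξ'` has a transcendental
coordinate. -/
theorem GenSec.exists_transcendental (S : GenSec k E K F u ξ) (S' : GenSec k E' K F' u ξ')
    (h : ∀ p : MvPolynomial (Fin (r + 1)) k, aeval ξ' p = 0 → aeval ξ p = 0)
    (hne : ∃ p : MvPolynomial (Fin (r + 1)) k, aeval ξ' p ≠ 0 ∧ aeval ξ p = 0) :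
    ∃ j : Fin r, Transcendental K (secX F' ξ' j.succ) := by
  by_contra! hcon
  obtain ⟨p, hp', hp⟩ := hne
  have halg : ∀ j, IsIntegral K (secX F' ξ' j) := by
    refine Fin.cases ?_ fun j => ?_
    · rw [secX, S'.xi0, map_one]; exact isIntegral_one
    · have := hcon j
      rw [Transcendental, not_not] at this
      exact this.isIntegral
  have hint : IsIntegral K (aeval (secX F' ξ') (map (algebraMap k K) p)) := by
    have hle : Algebra.adjoin K (Set.range (secX F' ξ')) ≤ integralClosure K F' :=
      Algebra.adjoin_le (by rintro _ ⟨j, rfl⟩; exact halg j)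
    rw [Algebra.adjoin_range_eq_range_aeval] at hle
    exact hle ⟨_, rfl⟩
  set x := aeval (secX F' ξ') (map (algebraMap k K) p) with hx
  have hx0 : x ≠ 0 := by
    rw [hx, aeval_secX_map]
    exact fun h0 => hp' ((map_eq_zero_iff _ (algebraMap E' F').injective).mp h0)
  have h1 : aeval (secX F ξ) (Polynomial.aeval (map (algebraMap k K) p) (minpoly K x)) = 0 := by
    refine S'.transfer S h _ ?_
    rw [← Polynomial.aeval_algHom_apply]
    exact minpoly.aeval K x
  rw [← Polynomial.aeval_algHom_apply, aeval_secX_map, hp, map_zero,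
    ← Polynomial.coeff_zero_eq_aeval_zero'] at h1
  exact minpoly.coeff_zero_ne_zero hint hx0 (by simpa using h1)

end Transc

end GenusBound

namespace GenusBound

open Module MvPolynomial

/-! ### Algebraically closed subfields and purely transcendental extensions -/

section Regular

variable {k E F : Type*} [Field k] [Field E] [Field F] [Algebra k E] [Algebra E F] [Algebra k F]
  [IsScalarTower k E F]

/-- A polynomial over `E` whose values at `k`-points are algebraic over `k` has coefficients
in `k`, if `k` is infinite and algebraically closed in `E`. -/
theorem mem_range_map_of_eval [Infinite k] {ι : Type*} (Θ : MvPolynomial ι E)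
    (h : ∀ c : ι → k, eval (fun i => algebraMap k E (c i)) Θ ∈ (algebraMap k E).range) :
    ∃ P : MvPolynomial ι k, map (algebraMap k E) P = Θ := by
  classical
  have hc : ∀ m, coeff m Θ ∈ (algebraMap k E).range := by
    intro m
    by_contra hm
    have hm' : coeff m Θ ∉ (1 : Submodule k E) := fun h' => hm (Submodule.mem_one.mp h')
    obtain ⟨f, hfm, hf⟩ := Submodule.exists_dual_map_eq_bot_of_notMem hm' inferInstance
    have hfk : ∀ c : k, f (algebraMap k E c) = 0 := fun c => by
      have : f (algebraMap k E c) ∈ (1 : Submodule k E).map f :=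
        ⟨_, Submodule.mem_one.mpr ⟨c, rfl⟩, rfl⟩
      rwa [hf, Submodule.mem_bot] at this
    have hP : (∑ n ∈ Θ.support, monomial n (f (coeff n Θ)) : MvPolynomial ι k) = 0 := by
      refine MvPolynomial.funext fun c => ?_
      rw [map_sum, map_zero]
      obtain ⟨b, hb⟩ := h c
      rw [← hfk b, hb]
      conv_rhs => rw [eval_eq]
      rw [map_sum]
      refine Finset.sum_congr rfl fun n _ => ?_
      rw [eval_monomial, ← smul_eq_mul, smul_eq_mul, mul_comm]
      rw [show (coeff n Θ * ∏ i ∈ n.support, (algebraMap k E (c i)) ^ n i : E)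
        = (n.prod fun i e => c i ^ e) • coeff n Θ from ?_, map_smul, smul_eq_mul]
      rw [Algebra.smul_def, Finsupp.prod, map_prod, mul_comm]
      simp only [map_pow]
    have := congrArg (coeff m) hP
    rw [coeff_sum, coeff_zero] at this
    rw [Finset.sum_eq_single m] at this
    · rw [coeff_monomial, if_pos rfl] at this
      exact hfm this
    · intro n _ hn
      rw [coeff_monomial, if_neg hn]
    · intro hn
      rw [coeff_monomial, if_pos rfl, notMem_support_iff.mp hn, map_zero]
  choose g hg using hc
  refine ⟨∑ n ∈ Θ.support, monomial n (g n), ?_⟩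
  rw [map_sum]
  conv_rhs => rw [Θ.as_sum]
  exact Finset.sum_congr rfl fun n _ => by rw [map_monomial, hg]

open scoped IntermediateField.algebraAdjoinAdjoin in
/-- If `k` is algebraically closed in `E`, then `k(u)` is algebraically closed in `E(u)` for
elements `u` algebraically independent over `E`. -/
theorem mem_adjoin_of_isAlgebraic [Infinite k]
    (hk : ∀ x : E, IsIntegral k x → x ∈ (algebraMap k E).range) {ι : Type*} {u : ι → F}
    (hu : AlgebraicIndependent E u) {θ : F} (h1 : θ ∈ IntermediateField.adjoin E (Set.range u))
    (h2 : IsAlgebraic ↥(IntermediateField.adjoin k (Set.range u)) θ) :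
    θ ∈ IntermediateField.adjoin k (Set.range u) := by
  have h3 : IsAlgebraic (Algebra.adjoin k (Set.range u)) θ :=
    (IsFractionRing.isAlgebraic_iff (Algebra.adjoin k (Set.range u))
      (IntermediateField.adjoin k (Set.range u)) F).mpr h2
  obtain ⟨⟨y, hy⟩, hy0, hint⟩ := h3.exists_integral_multiple
  have hyF : y ∈ IntermediateField.adjoin k (Set.range u) :=
    IntermediateField.algebra_adjoin_le_adjoin _ _ hy
  have hy0' : y ≠ 0 := fun h => hy0 (Subtype.ext h)
  have hint' : IsIntegral (Algebra.adjoin k (Set.range u)) (y * θ) := hint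
  -- it suffices to treat the integral multiple `y * θ`
  suffices h : y * θ ∈ IntermediateField.adjoin k (Set.range u) by
    have := div_mem h hyF
    rwa [mul_div_cancel_left₀ _ hy0'] at this
  have h4 : y * θ ∈ IntermediateField.adjoin E (Set.range u) := by
    refine mul_mem ?_ h1
    rw [Algebra.adjoin_range_eq_range_aeval] at hy
    obtain ⟨Y, rfl⟩ := hy
    refine IntermediateField.algebra_adjoin_le_adjoin _ _ ?_
    rw [Algebra.adjoin_range_eq_range_aeval]
    exact ⟨map (algebraMap k E) Y, by simp [aeval_map_algebraMap]⟩
  generalize y * θ = z at *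
  obtain ⟨p, hpm, hpz⟩ := hint'
  have hrep : ∀ a : Algebra.adjoin k (Set.range u), ∃ Y : MvPolynomial ι k, aeval u Y = (a : F) :=
    fun a => by
      obtain ⟨a, ha⟩ := a
      rw [Algebra.adjoin_range_eq_range_aeval] at ha
      exact ha
  let toA : MvPolynomial ι k →+* Algebra.adjoin k (Set.range u) :=
    ((aeval u).codRestrict _ fun Y => by
      rw [Algebra.adjoin_range_eq_range_aeval]; exact ⟨Y, rfl⟩ :
        MvPolynomial ι k →ₐ[k] Algebra.adjoin k (Set.range u))
  have htoA : ∀ Y, (toA Y : F) = aeval u Y := fun Y => rfl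
  have hsurj : Function.Surjective toA := fun a => by
    obtain ⟨Y, hY⟩ := hrep a
    exact ⟨Y, Subtype.ext hY⟩
  obtain ⟨P, hPp, -, hPm⟩ := Polynomial.lifts_and_natDegree_eq_and_monic
    ((Polynomial.mem_lifts p).mpr ((Polynomial.map_surjective _ hsurj) p)) hpm
  rw [← hPp, Polynomial.eval₂_map] at hpz
  let j : FractionRing (MvPolynomial ι E) →+* F := IsFractionRing.lift
    (g := ((aeval u : MvPolynomial ι E →ₐ[E] F) : MvPolynomial ι E →+* F)) hu
  have hj : ∀ Q, j (algebraMap _ _ Q) = aeval u Q := fun Q => IsFractionRing.lift_algebraMap _ _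
  rw [IntermediateField.mem_adjoin_range_iff] at h4
  obtain ⟨a, b, hab⟩ := h4
  have hz : z = j (algebraMap _ _ a / algebraMap _ _ b) := by
    rw [map_div₀, hj, hj, hab]
  set w := (algebraMap _ (FractionRing (MvPolynomial ι E)) a / algebraMap _ _ b) with hw
  have hwP : Polynomial.eval₂ ((algebraMap _ (FractionRing (MvPolynomial ι E))).comp
      (map (algebraMap k E))) w P = 0 := by
    apply j.injective
    rw [map_zero, Polynomial.hom_eval₂, ← hz, ← hpz]
    congr 1
    ext Y
    · simp [hj, toA]
      exact (IsScalarTower.algebraMap_apply k E F _).symm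
    · simp [hj, toA]
  have hwint : IsIntegral (MvPolynomial ι E) w := by
    refine ⟨P.map (map (algebraMap k E)), hPm.map _, ?_⟩
    rw [Polynomial.eval₂_map]
    exact hwP
  obtain ⟨Θ, hΘ⟩ := IsIntegrallyClosed.isIntegral_iff.mp hwint
  have hΘP : Polynomial.eval₂ (map (algebraMap k E)) Θ P = 0 := by
    apply IsFractionRing.injective (MvPolynomial ι E) (FractionRing (MvPolynomial ι E))
    rw [map_zero, Polynomial.hom_eval₂, hΘ]
    exact hwP
  obtain ⟨R, hR⟩ := mem_range_map_of_eval Θ fun c => by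
    refine hk _ ⟨P.map (eval c), hPm.map _, ?_⟩
    have := congrArg (eval fun i => algebraMap k E (c i)) hΘP
    rw [map_zero, Polynomial.hom_eval₂] at this
    rw [Polynomial.eval₂_map, ← this]
    congr 1
    ext Y
    · simp
    · simp
  have : z = aeval u R := by
    rw [hz, ← hΘ, hj, ← hR, aeval_map_algebraMap]
  rw [this]
  refine IntermediateField.algebra_adjoin_le_adjoin _ _ ?_
  rw [Algebra.adjoin_range_eq_range_aeval]
  exact ⟨R, rfl⟩

end Regular

end GenusBound

/-! ### Transcendence degree and Zariski's lemma -/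

namespace GenusBound

open Module MvPolynomial

section Trdeg

universe v

/-- The transcendence degree of a field generated by algebraically independent elements. -/
theorem trdeg_of_frac {A B : Type v} [Field A] [Field B] [Algebra A B] {n : ℕ} {u : Fin n → B}
    (hu : AlgebraicIndependent A u)
    (hf : ∀ x : B, ∃ p q : MvPolynomial (Fin n) A, aeval u q ≠ 0 ∧ x * aeval u q = aeval u p) :
    Algebra.trdeg A B = n := by
  have alg : Algebra.IsAlgebraic (Algebra.adjoin A (Set.range u)) B := by
    refine ⟨fun x => ?_⟩
    obtain ⟨p, q, hq, hx⟩ := hf x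
    have hmem : ∀ p : MvPolynomial (Fin n) A, aeval u p ∈ Algebra.adjoin A (Set.range u) :=
      fun p => by rw [Algebra.adjoin_range_eq_range_aeval]; exact ⟨p, rfl⟩
    refine ⟨Polynomial.C ⟨_, hmem q⟩ * Polynomial.X - Polynomial.C ⟨_, hmem p⟩, ?_, ?_⟩
    · intro h
      have := congrArg (fun P => Polynomial.coeff P 1) h
      simp only [Polynomial.coeff_sub, Polynomial.coeff_C_mul, Polynomial.coeff_X_one, mul_one,
        Polynomial.coeff_C_succ, sub_zero, Polynomial.coeff_zero] at this
      exact hq (congrArg Subtype.val this)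
    · rw [map_sub, map_mul, Polynomial.aeval_C, Polynomial.aeval_C, Polynomial.aeval_X, sub_eq_zero,
        mul_comm]
      exact hx
  have hb : IsTranscendenceBasis A u :=
    isTranscendenceBasis_iff_algebraicIndependent_isAlgebraic.mpr ⟨hu, alg⟩
  have := hb.lift_cardinalMk_eq_trdeg
  simpa using this.symm

variable {r : ℕ} {k E K F : Type v} [Field k] [Field E] [Field K] [Field F] [Algebra k E]
    [Algebra k K] [Algebra E F] [Algebra K F] [Algebra k F] [IsScalarTower k K F]
    [IsScalarTower k E F] {u : Fin (r + 1) → K} {ξ : Fin (r + 1) → E}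

theorem GenSec.trdeg (S : GenSec k E K F u ξ) : Algebra.trdeg k E = Algebra.trdeg K F + 1 := by
  have h1 := trdeg_of_frac S.indepK S.fracK
  have h2 := trdeg_of_frac S.indepE S.fracF
  have h3 := _root_.trdeg_add_eq k K (A := F)
  have h4 := _root_.trdeg_add_eq k E (A := F)
  rw [h1, ← h4, h2] at h3
  rw [← Cardinal.add_nat_inj r, ← h3]
  push_cast
  ring

/-- In a field of transcendence degree `1`, every transcendental element is a transcendence
basis. -/
theorem isAlgebraic_adjoin_of_trdeg_one (h : Algebra.trdeg K F = 1) {y : F}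
    (hy : Transcendental K y) : Algebra.IsAlgebraic (IntermediateField.adjoin K {y}) F := by
  have h1 : AlgebraicIndependent K (fun _ : Unit => y) :=
    (algebraicIndependent_unique_type_iff (ι := Unit)).mpr hy
  have h2 := AlgebraicIndependent.isTranscendenceBasis_of_lift_trdeg_le_of_finite h1
    (by rw [h]; simp)
  have := h2.isAlgebraic_field
  rwa [Set.range_const] at this

theorem trdeg_le_of_adjoin {s : Set F}
    (h : Algebra.IsAlgebraic (IntermediateField.adjoin K s) F) :
    Algebra.trdeg K F ≤ Cardinal.mk s := by
  have : Algebra.IsAlgebraic (Algebra.adjoin K s) F := by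
    open scoped IntermediateField.algebraAdjoinAdjoin in
    exact ⟨fun x => (IsFractionRing.isAlgebraic_iff (Algebra.adjoin K s)
      (IntermediateField.adjoin K s) F).mpr (h.1 x)⟩
  have := Algebra.IsAlgebraic.isDomain_of_adjoin_range K s (A := F)
  exact Algebra.IsAlgebraic.trdeg_le_cardinalMk K s

end Trdeg

section Zariski

variable {k F : Type*} [Field k] [Field F] [Algebra k F]

/-- The relative algebraic closure of `k(z)` in `F`. -/
noncomputable def relCl (k : Type*) {F : Type*} [Field k] [Field F] [Algebra k F] (z : F) :
    IntermediateField k F :=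
  (algebraicClosure (IntermediateField.adjoin k {z}) F).restrictScalars k

theorem mem_relCl {z x : F} :
    x ∈ relCl k z ↔ IsAlgebraic (IntermediateField.adjoin k {z}) x := by
  rw [relCl, IntermediateField.mem_restrictScalars, mem_algebraicClosure_iff]

theorem self_mem_relCl (z : F) : z ∈ relCl k z :=
  mem_relCl.mpr (isAlgebraic_algebraMap
    (⟨z, IntermediateField.mem_adjoin_simple_self k z⟩ : IntermediateField.adjoin k {z}))

/-- An element algebraic over the relative algebraic closure of `k(z)` belongs to it. -/
theorem mem_relCl_of_isAlgebraic {z x : F} (h : IsAlgebraic (relCl k z) x) : x ∈ relCl k z := by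
  have h' : IsAlgebraic (algebraicClosure (IntermediateField.adjoin k {z}) F) x := h
  rw [mem_relCl]
  exact IsAlgebraic.restrictScalars _ h'

/-- **Zariski**: if `F` is finite over `k(x, y)`, of transcendence degree two over the
algebraically closed subfield `k`, then `k(x + c y)` is algebraically closed in `F` for some
(in fact almost every) constant `c`. -/
theorem exists_shift_algClosed [CharZero k] (x y : F)
    (hfin : FiniteDimensional (IntermediateField.adjoin k {x, y}) F)
    (htr : ∀ z : F, ¬ Algebra.IsAlgebraic (IntermediateField.adjoin k {z}) F)
    (hk : ∀ z : F, IsIntegral k z → z ∈ (algebraMap k F).range) :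
    ∃ c : ℕ, ∀ θ ∈ relCl k (x + (c : F) * y), θ ∈ IntermediateField.adjoin k {x + (c : F) * y} := by
  have : CharZero F := charZero_of_injective_algebraMap (algebraMap k F).injective
  have hNF : ∀ (L : IntermediateField k F) (c : ℕ), (c : F) ∈ L := fun L c => natCast_mem L c
  let Ac : ℕ → IntermediateField k F := fun c =>
    relCl k (x + (c : F) * y) ⊔ IntermediateField.adjoin k {y}
  have hyA : ∀ c, y ∈ Ac c := fun c =>
    (le_sup_right : _ ≤ Ac c) (IntermediateField.mem_adjoin_simple_self k y)
  have hxA : ∀ c, x ∈ Ac c := fun c => by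
    have h1 : x + (c : F) * y ∈ Ac c := (le_sup_left : _ ≤ Ac c) (self_mem_relCl _)
    have := sub_mem h1 (mul_mem (hNF _ c) (hyA c))
    rwa [add_sub_cancel_right] at this
  have hle : ∀ c, IntermediateField.adjoin k {x, y} ≤ Ac c := fun c => by
    rw [IntermediateField.adjoin_le_iff]
    rintro z (rfl | rfl)
    · exact hxA c
    · exact hyA c
  have hFin : Finite (IntermediateField (IntermediateField.adjoin k {x, y}) F) :=
    Field.finite_intermediateField_of_exists_primitive_element _ _
      (Field.exists_primitive_element _ _)
  obtain ⟨c, c', hne, hcc⟩ := Finite.exists_ne_map_eq_of_infinite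
    (fun c => IntermediateField.extendScalars (hle c))
  have hA : Ac c = Ac c' := by
    have := congrArg (IntermediateField.restrictScalars k) hcc
    simpa using this
  refine ⟨c', fun θ hθ => ?_⟩
  set w := x + (c' : F) * y with hw
  set L := relCl k (x + (c : F) * y) with hL
  have hcne : (c' : F) - c ≠ 0 := sub_ne_zero.mpr (by exact_mod_cast hne.symm)
  have hyw : y = (w - (x + (c : F) * y)) / ((c' : F) - c) := by
    rw [eq_div_iff hcne, hw]; ring
  -- `w` is transcendental over `L`, as `x` and `y` cannot both be algebraic over `k(x + c y)`
  have hwt : Transcendental L w := by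
    intro hwa
    have hwL : w ∈ L := mem_relCl_of_isAlgebraic hwa
    have hyL : y ∈ L := by
      rw [hyw]
      exact div_mem (sub_mem hwL (self_mem_relCl _)) (sub_mem (hNF _ _) (hNF _ _))
    have hxL : x ∈ L := by
      have := sub_mem (self_mem_relCl (k := k) (x + (c : F) * y)) (mul_mem (hNF L c) hyL)
      rwa [add_sub_cancel_right] at this
    have hB : IntermediateField.adjoin k {x, y} ≤ L := by
      rw [IntermediateField.adjoin_le_iff]
      rintro z (rfl | rfl)
      · exact hxL
      · exact hyL
    refine htr (x + (c : F) * y) ⟨fun z => mem_relCl.mp (mem_relCl_of_isAlgebraic ?_)⟩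
    have hz : IsAlgebraic (IntermediateField.adjoin k {x, y}) z := Algebra.IsAlgebraic.isAlgebraic z
    obtain ⟨p, hp0, hp⟩ := hz
    refine ⟨p.map (IntermediateField.inclusion hB).toRingHom, ?_, ?_⟩
    · exact (Polynomial.map_ne_zero_iff (IntermediateField.inclusion hB).toRingHom.injective).mpr hp0
    · rw [Polynomial.aeval_def, Polynomial.eval₂_map]
      exact hp
  have hu : AlgebraicIndependent L (fun _ : Unit => w) :=
    (algebraicIndependent_unique_type_iff (ι := Unit)).mpr hwt
  have key := mem_adjoin_of_isAlgebraic (k := k) (E := L) (F := F) (u := fun _ : Unit => w)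
    (fun z hz => by
      obtain ⟨b, hb⟩ := hk (z : F) (hz.map (IsScalarTower.toAlgHom k L F))
      exact ⟨b, Subtype.ext hb⟩) hu (θ := θ) ?_ ?_
  · rwa [Set.range_const] at key
  · rw [Set.range_const]
    have h1 : θ ∈ Ac c := by
      rw [hA]
      exact (le_sup_left : _ ≤ Ac c') hθ
    have h2 : Ac c ≤ (IntermediateField.adjoin L {w}).restrictScalars k := by
      have hLle : ∀ z ∈ L, z ∈ IntermediateField.adjoin L {w} := fun z hz =>
        IntermediateField.algebraMap_mem _ (⟨z, hz⟩ : L)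
      refine sup_le hLle ?_
      rw [IntermediateField.adjoin_le_iff]
      intro z hz
      rw [Set.mem_singleton_iff.mp hz]
      change y ∈ IntermediateField.adjoin L {w}
      rw [hyw]
      exact div_mem (sub_mem (IntermediateField.mem_adjoin_simple_self _ _)
        (hLle _ (self_mem_relCl _))) (sub_mem (natCast_mem _ _) (natCast_mem _ _))
    exact h2 h1
  · rw [Set.range_const]
    exact mem_relCl.mp hθ

end Zariski

end GenusBound

/-! ### Irreducibility of the generic section of a surface -/

namespace GenusBound

open Module MvPolynomial

section AlgClosedSec

set_option linter.unusedSectionVars false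

universe v

theorem isAlgebraic_of_range_le {A B F : Type*} [Field A] [Field B] [Field F] [Algebra A F]
    [Algebra B F] (h : ∀ a : A, algebraMap A F a ∈ (algebraMap B F).range) {x : F}
    (hx : IsAlgebraic A x) : IsAlgebraic B x := by
  obtain ⟨p, hp0, hp⟩ := hx
  have hl : p.map (algebraMap A F) ∈ Polynomial.lifts (algebraMap B F) := by
    rw [Polynomial.lifts_iff_coeff_lifts]
    intro n
    rw [Polynomial.coeff_map]
    exact h _
  obtain ⟨q, hq⟩ := (Polynomial.mem_lifts _).mp hl
  refine ⟨q, ?_, ?_⟩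
  · rintro rfl
    rw [Polynomial.map_zero] at hq
    exact hp0 ((Polynomial.map_eq_zero _).mp hq.symm)
  · rw [Polynomial.aeval_def, ← Polynomial.eval_map, hq, Polynomial.eval_map]
    exact hp

variable {r : ℕ} {k E K F : Type v} [Field k] [Field E] [Field K] [Field F] [Algebra k E]
    [Algebra k K] [Algebra E F] [Algebra K F] [Algebra k F] [IsScalarTower k K F]
    [IsScalarTower k E F] {u : Fin (r + 1) → K} {ξ : Fin (r + 1) → E}

/-- The automorphisms `u_j ↦ u_j - c_j` of `F = E(u_1, …, u_r)` over `E`. -/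
theorem GenSec.exists_shift (S : GenSec k E K F u ξ) (c : Fin r → E) :
    ∃ σ : F →+* F, (∀ e, σ (algebraMap E F e) = algebraMap E F e) ∧
      ∀ j : Fin r, σ (algebraMap K F (u j.succ)) = algebraMap K F (u j.succ) - algebraMap E F (c j) := by
  set w : Fin r → F := fun j => algebraMap K F (u j.succ) with hw
  let τ : MvPolynomial (Fin r) E →ₐ[E] MvPolynomial (Fin r) E := aeval fun j => X j - C (c j)
  let τ' : MvPolynomial (Fin r) E →ₐ[E] MvPolynomial (Fin r) E := aeval fun j => X j + C (c j)
  have hττ : τ'.comp τ = AlgHom.id E _ := by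
    refine MvPolynomial.algHom_ext fun j => ?_
    simp [τ, τ']
  have hτ : Function.Injective τ := by
    refine Function.LeftInverse.injective (g := τ') fun p => ?_
    exact congrArg (fun f => f p) hττ
  let g : MvPolynomial (Fin r) E →+* F := ((aeval w).comp τ : MvPolynomial (Fin r) E →ₐ[E] F)
  have hg : Function.Injective g := fun p q hpq => hτ (S.indepE hpq)
  let _ : Algebra (MvPolynomial (Fin r) E) F := (aeval w).toRingHom.toAlgebra
  have ham : ∀ p, algebraMap (MvPolynomial (Fin r) E) F p = aeval w p := fun p => rfl
  have : FaithfulSMul (MvPolynomial (Fin r) E) F :=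
    (faithfulSMul_iff_algebraMap_injective _ _).mpr S.indepE
  have hfr : IsFractionRing (MvPolynomial (Fin r) E) F := IsFractionRing.of_field _ _ fun z => by
    obtain ⟨p, q, hq, h⟩ := S.fracF z
    exact ⟨p, q, (eq_div_iff hq).mpr h⟩
  refine ⟨IsFractionRing.lift hg, fun e => ?_, fun j => ?_⟩
  · have h1 : algebraMap E F e = algebraMap (MvPolynomial (Fin r) E) F (C e) := by
      rw [ham, aeval_C]
    conv_lhs => rw [h1, IsFractionRing.lift_algebraMap]
    simp [g, τ]
  · have h1 : algebraMap K F (u j.succ) = algebraMap (MvPolynomial (Fin r) E) F (X j) := by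
      rw [ham, aeval_X]
    conv_lhs => rw [h1, IsFractionRing.lift_algebraMap]
    simp [g, τ, hw]

theorem GenSec.adjoinE (S : GenSec k E K F u ξ) (x : F) :
    x ∈ IntermediateField.adjoin E (Set.range fun j : Fin r => algebraMap K F (u j.succ)) := by
  obtain ⟨p, q, hq, h⟩ := S.fracF x
  rw [IntermediateField.mem_adjoin_range_iff]
  exact ⟨p, q, (eq_div_iff hq).mpr h⟩

theorem GenSec.exists_transc (S : GenSec k E K F u ξ)
    (hE : IntermediateField.adjoin k (Set.range ξ) = ⊤) (htr : Algebra.trdeg K F = 1) :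
    ∃ i : Fin r, Transcendental K (secX F ξ i.succ) := by
  by_contra! hcon
  have halg : ∀ j, IsAlgebraic K (secX F ξ j) := by
    intro j
    refine Fin.cases ?_ (fun i => ?_) j
    · rw [secX, S.xi0, map_one]
      exact isAlgebraic_one
    · exact not_not.mp (hcon i)
  have h1 : Algebra.IsAlgebraic K (IntermediateField.adjoin K (Set.range (secX F ξ))) :=
    IntermediateField.isAlgebraic_adjoin fun x hx => by
      obtain ⟨j, rfl⟩ := hx
      exact (halg j).isIntegral
  rw [S.adjoin_secX hE] at h1
  have h2 : Algebra.IsAlgebraic K F := ⟨fun x => by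
    have := h1.1 ⟨x, IntermediateField.mem_top⟩
    exact this.algebraMap⟩
  rw [_root_.trdeg_eq_zero] at htr
  exact zero_ne_one htr

/-- The generic hyperplane section of a geometrically irreducible surface is geometrically
irreducible: `K` is algebraically closed in `F`. -/
theorem GenSec.algClosed [CharZero k] (S : GenSec k E K F u ξ)
    (hk : ∀ x : E, IsIntegral k x → x ∈ (algebraMap k E).range)
    (hE : IntermediateField.adjoin k (Set.range ξ) = ⊤) (htr : Algebra.trdeg K F = 1)
    (θ : F) (hθ : IsIntegral K θ) : θ ∈ (algebraMap K F).range := by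
  set w : Fin r → F := fun j => algebraMap K F (u j.succ) with hw
  set k1 : IntermediateField k F := IntermediateField.adjoin k (Set.range w) with hk1
  obtain ⟨i, hi⟩ := S.exists_transc hE htr
  set y := secX F ξ i.succ with hy
  set x := algebraMap K F (u 0) with hx
  have hwk1 : ∀ j, w j ∈ k1 := fun j => IntermediateField.subset_adjoin _ _ ⟨j, rfl⟩
  -- subfields containing `k1` and `x` contain `K`
  have hKle : ∀ (L : IntermediateField k1 F), x ∈ L → ∀ z : K, algebraMap K F z ∈ L := by
    intro L hxL z
    obtain ⟨p, q, hq, h⟩ := S.fracK z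
    have hu : ∀ j, algebraMap K F (u j) ∈ L := fun j => by
      refine Fin.cases hxL (fun i => ?_) j
      exact L.algebraMap_mem ⟨w i, hwk1 i⟩
    have hmem : ∀ p : MvPolynomial (Fin (r + 1)) k, algebraMap K F (aeval u p) ∈ L := by
      intro p
      induction p using MvPolynomial.induction_on with
      | C a =>
        rw [aeval_C, ← IsScalarTower.algebraMap_apply]
        exact L.algebraMap_mem ⟨algebraMap k F a, k1.algebraMap_mem a⟩
      | add p q hp hq => rw [map_add, map_add]; exact add_mem hp hq
      | mul_X p j hp => rw [map_mul, map_mul, aeval_X]; exact mul_mem hp (hu j)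
    have hz : z = aeval u p / aeval u q := (eq_div_iff hq).mpr h
    rw [hz, map_div₀]
    exact div_mem (hmem p) (hmem q)
  -- finiteness over `k1(x, y)`
  have hBx : x ∈ IntermediateField.adjoin k1 {x, y} :=
    IntermediateField.subset_adjoin _ _ (Or.inl rfl)
  have hBy : y ∈ IntermediateField.adjoin k1 {x, y} :=
    IntermediateField.subset_adjoin _ _ (Or.inr rfl)
  have hBalg : ∀ z : F, IsAlgebraic (IntermediateField.adjoin k1 {x, y}) z := by
    intro z
    refine isAlgebraic_of_range_le (A := IntermediateField.adjoin K {y}) ?_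
      ((isAlgebraic_adjoin_of_trdeg_one htr hi).1 z)
    rintro ⟨a, ha⟩
    refine ⟨⟨a, ?_⟩, rfl⟩
    induction ha using IntermediateField.adjoin_induction with
    | mem z hz => rw [Set.mem_singleton_iff.mp hz]; exact hBy
    | algebraMap z => exact hKle _ hBx z
    | add a b _ _ ha hb => exact add_mem ha hb
    | inv a _ ha => exact inv_mem ha
    | mul a b _ _ ha hb => exact mul_mem ha hb
  have hfin : FiniteDimensional (IntermediateField.adjoin k1 {x, y}) F := by
    have h1 : FiniteDimensional (IntermediateField.adjoin k1 {x, y})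
        (IntermediateField.adjoin (IntermediateField.adjoin k1 {x, y}) (Set.range (secX F ξ))) :=
      IntermediateField.finiteDimensional_adjoin fun z _ => (hBalg z).isIntegral
    have h2 : IntermediateField.adjoin (IntermediateField.adjoin k1 {x, y}) (Set.range (secX F ξ))
        = ⊤ := by
      rw [eq_top_iff]
      intro z _
      have hz : z ∈ IntermediateField.adjoin K (Set.range (secX F ξ)) := by
        rw [S.adjoin_secX hE]; exact IntermediateField.mem_top
      induction hz using IntermediateField.adjoin_induction with
      | mem z hz => exact IntermediateField.subset_adjoin _ _ hz
      | algebraMap z =>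
        exact IntermediateField.algebraMap_mem _
          (⟨_, hKle _ hBx z⟩ : IntermediateField.adjoin k1 {x, y})
      | add a b _ _ ha hb => exact add_mem (ha trivial) (hb trivial)
      | inv a _ ha => exact inv_mem (ha trivial)
      | mul a b _ _ ha hb => exact mul_mem (ha trivial) (hb trivial)
    rw [h2] at h1
    exact Module.Finite.equiv IntermediateField.topEquiv.toLinearEquiv
  -- the transcendence degree of `F` over `k1` is two
  have htr1 : ∀ z : F, ¬ Algebra.IsAlgebraic (IntermediateField.adjoin k1 {z}) F := by
    intro z hz
    have h1 : Algebra.IsAlgebraic (IntermediateField.adjoin k (Set.range w ∪ {z})) F :=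
      ⟨fun a => isAlgebraic_of_range_le (A := IntermediateField.adjoin k1 {z})
        (fun b => ⟨⟨b.1, by
          have h0 := (IntermediateField.mem_restrictScalars k).mpr b.2
          have h00 := IntermediateField.adjoin_adjoin_left k (Set.range w) {z}
          exact h00 ▸ h0⟩, rfl⟩) (hz.1 a)⟩
    have h2 := trdeg_le_of_adjoin h1
    have h3 : Cardinal.mk (Set.range w ∪ {z} : Set F) ≤ r + 1 := by
      refine (Cardinal.mk_union_le _ _).trans (add_le_add ?_ (by simp))
      refine (Cardinal.mk_range_le_lift (f := w) |>.trans_eq' ?_).trans_eq ?_ <;> simp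
    have h4 := _root_.trdeg_add_eq k K (A := F)
    rw [htr, trdeg_of_frac S.indepK S.fracK] at h4
    rw [← h4] at h2
    have h5 := h2.trans h3
    norm_cast at h5
    omega
  have hk1cl : ∀ z : F, IsIntegral k1 z → z ∈ (algebraMap k1 F).range := fun z hz =>
    have := mem_adjoin_of_isAlgebraic hk S.indepE (S.adjoinE z) hz.isAlgebraic
    ⟨⟨z, this⟩, rfl⟩
  have : CharZero k1 := charZero_of_injective_algebraMap (algebraMap k k1).injective
  obtain ⟨c, hc⟩ := exists_shift_algClosed x y hfin htr1 hk1cl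
  obtain ⟨σ, hσE, hσu⟩ := S.exists_shift (fun j => if j = i then (c : E) else 0)
  have hσw : ∀ j, σ (w j) = w j - if j = i then (c : F) else 0 := fun j => by
    rw [hw, hσu]
    split_ifs <;> simp
  have hσx : σ x = x + (c : F) * y := by
    have hrel := S.rel
    rw [Fin.sum_univ_succ, S.xi0, map_one, mul_one] at hrel
    have hx' : x = - ∑ j : Fin r, w j * secX F ξ j.succ := eq_neg_of_add_eq_zero_left hrel
    rw [hx', map_neg, map_sum]
    have : ∀ j, σ (w j * secX F ξ j.succ)
        = w j * secX F ξ j.succ - (if j = i then (c : F) * y else 0) := fun j => by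
      rw [map_mul, hσw, secX, hσE, sub_mul]
      split_ifs with h
      · rw [h, hy, secX]
      · rw [zero_mul]
    simp only [this, Finset.sum_sub_distrib, Finset.sum_ite_eq', Finset.mem_univ, if_true]
    ring
  have hσk : ∀ a : k, σ (algebraMap k F a) = algebraMap k F a := fun a => by
    rw [IsScalarTower.algebraMap_apply k E F, hσE]
  have hσk1 : ∀ a ∈ k1, σ a ∈ k1 := by
    intro a ha
    induction ha using IntermediateField.adjoin_induction with
    | mem z hz =>
      obtain ⟨j, rfl⟩ := hz
      rw [hσw]
      refine sub_mem (hwk1 j) ?_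
      split_ifs
      · exact natCast_mem _ _
      · exact zero_mem _
    | algebraMap z => rw [hσk]; exact k1.algebraMap_mem z
    | add a b _ _ ha hb => rw [map_add]; exact add_mem ha hb
    | inv a _ ha => rw [map_inv₀]; exact inv_mem ha
    | mul a b _ _ ha hb => rw [map_mul]; exact mul_mem ha hb
  have hσK : ∀ z : K, σ (algebraMap K F z) ∈ IntermediateField.adjoin k1 {x + (c : F) * y} := by
    intro z
    have : algebraMap K F z ∈ IntermediateField.adjoin k1 {x} :=
      hKle _ (IntermediateField.mem_adjoin_simple_self _ _) z
    generalize algebraMap K F z = z at this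
    induction this using IntermediateField.adjoin_induction with
    | mem z hz =>
      rw [Set.mem_singleton_iff.mp hz, hσx]
      exact IntermediateField.mem_adjoin_simple_self _ _
    | algebraMap z => exact IntermediateField.algebraMap_mem _ (⟨_, hσk1 z z.2⟩ : k1)
    | add a b _ _ ha hb => rw [map_add]; exact add_mem ha hb
    | inv a _ ha => rw [map_inv₀]; exact inv_mem ha
    | mul a b _ _ ha hb => rw [map_mul]; exact mul_mem ha hb
  -- `σ θ` is algebraic over `k1(σ x)`, hence belongs to it
  have hσθ : σ θ ∈ IntermediateField.adjoin k1 {x + (c : F) * y} := by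
    refine hc _ (mem_relCl.mpr ?_)
    obtain ⟨p, hp0, hp⟩ := hθ.isAlgebraic
    have h1 : IsAlgebraic (σ.comp (algebraMap K F)).fieldRange (σ θ) := by
      refine ⟨p.map (σ.comp (algebraMap K F)).rangeRestrictField, ?_, ?_⟩
      · exact (Polynomial.map_ne_zero_iff
          (σ.comp (algebraMap K F)).rangeRestrictField.injective).mpr hp0
      · rw [Polynomial.aeval_def, Polynomial.eval₂_map]
        have := congrArg σ hp
        rw [map_zero, Polynomial.aeval_def, Polynomial.hom_eval₂] at this
        exact this
    refine isAlgebraic_of_range_le (fun a => ?_) h1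
    obtain ⟨a, z, rfl⟩ := a
    exact ⟨⟨_, hσK z⟩, rfl⟩
  have hback : ∀ z ∈ IntermediateField.adjoin k1 {x + (c : F) * y},
      z ∈ (σ.comp (algebraMap K F)).fieldRange := by
    have hk1' : ∀ a ∈ k1, a ∈ (σ.comp (algebraMap K F)).fieldRange := by
      intro a ha
      induction ha using IntermediateField.adjoin_induction with
      | mem z hz =>
        obtain ⟨j, rfl⟩ := hz
        refine ⟨u j.succ + (if j = i then (c : K) else 0), ?_⟩
        have := hσw j
        rw [RingHom.comp_apply, map_add, map_add]
        change σ (w j) + _ = _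
        rw [this]
        split_ifs <;> simp
      | algebraMap z =>
        refine ⟨algebraMap k K z, ?_⟩
        rw [RingHom.comp_apply, ← IsScalarTower.algebraMap_apply, hσk]
      | add a b _ _ ha hb => exact add_mem ha hb
      | inv a _ ha => exact inv_mem ha
      | mul a b _ _ ha hb => exact mul_mem ha hb
    intro z hz
    induction hz using IntermediateField.adjoin_induction with
    | mem z hz => rw [Set.mem_singleton_iff.mp hz, ← hσx]; exact ⟨u 0, rfl⟩
    | algebraMap z => exact hk1' z z.2
    | add a b _ _ ha hb => exact add_mem ha hb
    | inv a _ ha => exact inv_mem ha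
    | mul a b _ _ ha hb => exact mul_mem ha hb
  obtain ⟨z, hz⟩ := hback _ hσθ
  exact ⟨z, σ.injective hz⟩

end AlgClosedSec

end GenusBound

/-! ### Specializing embeddings -/

namespace GenusBound

open Module MvPolynomial

section Embeddings

set_option linter.unusedSectionVars false

variable {k E Ω : Type*} [Field k] [Field E] [Field Ω] [Algebra k E] [Algebra E Ω] [Algebra k Ω]
  [IsScalarTower k E Ω]

theorem algHom_mem_adjoin (f : E →ₐ[k] Ω) {a z : E} (hz : z ∈ IntermediateField.adjoin k {a}) :
    f z ∈ IntermediateField.adjoin k {f a} := by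
  induction hz using IntermediateField.adjoin_induction with
  | mem z hz => rw [Set.mem_singleton_iff.mp hz]; exact IntermediateField.mem_adjoin_simple_self _ _
  | algebraMap z => rw [f.commutes]; exact IntermediateField.algebraMap_mem _ z
  | add a b _ _ ha hb => rw [map_add]; exact add_mem ha hb
  | inv a _ ha => rw [map_inv₀]; exact inv_mem ha
  | mul a b _ _ ha hb => rw [map_mul]; exact mul_mem ha hb

theorem exists_algHom_of_mem_adjoin (f : E →ₐ[k] Ω) {a : E} {z : Ω}
    (hz : z ∈ IntermediateField.adjoin k {f a}) : ∃ y ∈ IntermediateField.adjoin k {a}, f y = z := by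
  induction hz using IntermediateField.adjoin_induction with
  | mem z hz =>
    exact ⟨a, IntermediateField.mem_adjoin_simple_self _ _, (Set.mem_singleton_iff.mp hz).symm⟩
  | algebraMap z => exact ⟨_, IntermediateField.algebraMap_mem _ z, f.commutes z⟩
  | add a b _ _ ha hb =>
    obtain ⟨x, hx, rfl⟩ := ha
    obtain ⟨y, hy, rfl⟩ := hb
    exact ⟨_, add_mem hx hy, map_add _ _ _⟩
  | inv a _ ha =>
    obtain ⟨x, hx, rfl⟩ := ha
    exact ⟨_, inv_mem hx, map_inv₀ _ _⟩
  | mul a b _ _ ha hb =>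
    obtain ⟨x, hx, rfl⟩ := ha
    obtain ⟨y, hy, rfl⟩ := hb
    exact ⟨_, mul_mem hx hy, map_mul _ _ _⟩

/-- Let `k` be algebraically closed in `E`, a field of transcendence degree one over `k`, and let
`f`, `g` be embeddings of `E` in an extension `Ω` of `E`, whose images are not algebraic over `E`.
Then the composite `E · f(E)` is isomorphic to `E · g(E)`, both being the field of fractions of
`E ⊗ E`. -/
theorem exists_specHom [CharZero k] (hk : ∀ x : E, IsIntegral k x → x ∈ (algebraMap k E).range)
    {a : E} (hfin : FiniteDimensional (IntermediateField.adjoin k {a}) E) (f g : E →ₐ[k] Ω)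
    (hf : Transcendental E (f a)) (hg : Transcendental E (g a)) :
    ∃ Φ : IntermediateField.adjoin E (Set.range f) →+* Ω,
      (∀ e : E, Φ (algebraMap E _ e) = algebraMap E Ω e) ∧
      ∀ (e : E), Φ ⟨f e, IntermediateField.subset_adjoin _ _ ⟨e, rfl⟩⟩ = g e := by
  have hf' : AlgebraicIndependent E (fun _ : Unit => f a) :=
    (algebraicIndependent_unique_type_iff (ι := Unit)).mpr hf
  have hg' : AlgebraicIndependent E (fun _ : Unit => g a) :=
    (algebraicIndependent_unique_type_iff (ι := Unit)).mpr hg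
  set P0 := IntermediateField.adjoin E (Set.range fun _ : Unit => f a) with hP0
  let Φ0 : P0 →ₐ[E] Ω := (IntermediateField.val _).comp
    (hg'.aevalEquivField.toAlgHom.comp hf'.aevalEquivField.symm.toAlgHom)
  have hfa : f a ∈ P0 := IntermediateField.subset_adjoin _ _ ⟨(), rfl⟩
  have hΦ0a : Φ0 ⟨f a, hfa⟩ = g a := by
    have h1 : (⟨f a, hfa⟩ : P0) = hf'.aevalEquivField
        (algebraMap (MvPolynomial Unit E) (FractionRing (MvPolynomial Unit E)) (X ())) := by
      apply Subtype.ext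
      rw [AlgebraicIndependent.aevalEquivField_algebraMap_apply_coe, aeval_X]
    rw [h1]
    change ((hg'.aevalEquivField (hf'.aevalEquivField.symm (hf'.aevalEquivField _)) : _) : Ω) = _
    rw [AlgEquiv.symm_apply_apply, AlgebraicIndependent.aevalEquivField_algebraMap_apply_coe,
      aeval_X]
  have hkP0 : ∀ z ∈ IntermediateField.adjoin k {f a}, z ∈ P0 := by
    intro z hz
    have : IntermediateField.adjoin k {f a} ≤ P0.restrictScalars k := by
      rw [IntermediateField.adjoin_le_iff]
      intro z hz
      rw [Set.mem_singleton_iff.mp hz]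
      exact hfa
    exact this hz
  have hNP0 : ∀ z ∈ IntermediateField.adjoin k {a}, f z ∈ P0 := fun z hz =>
    hkP0 _ (algHom_mem_adjoin f hz)
  -- `Φ0` is compatible with `f` and `g` on `k(a)`
  have hΦ0N : ∀ z (hz : z ∈ IntermediateField.adjoin k {a}), Φ0 ⟨f z, hNP0 z hz⟩ = g z := by
    intro z hz
    induction hz using IntermediateField.adjoin_induction with
    | mem z hz =>
      have hza := Set.mem_singleton_iff.mp hz
      subst hza
      exact hΦ0a
    | algebraMap z =>
      rw [g.commutes, IsScalarTower.algebraMap_apply k E Ω, ← Φ0.commutes]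
      congr 1
      apply Subtype.ext
      change f _ = algebraMap E Ω (algebraMap k E z)
      rw [f.commutes, ← IsScalarTower.algebraMap_apply]
    | add x y hx hy h1 h2 =>
      refine (congrArg Φ0 (Subtype.ext (map_add f x y) : _ =
        (⟨f x, hNP0 x hx⟩ : P0) + ⟨f y, hNP0 y hy⟩)).trans ?_
      rw [map_add, h1, h2, map_add]
    | inv x hx h1 =>
      refine (congrArg Φ0 (Subtype.ext (map_inv₀ f x) : _ =
        (⟨f x, hNP0 x hx⟩ : P0)⁻¹)).trans ?_
      rw [map_inv₀, h1, map_inv₀]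
    | mul x y hx hy h1 h2 =>
      refine (congrArg Φ0 (Subtype.ext (map_mul f x y) : _ =
        (⟨f x, hNP0 x hx⟩ : P0) * ⟨f y, hNP0 y hy⟩)).trans ?_
      rw [map_mul, h1, h2, map_mul]
  obtain ⟨θ, hθ⟩ := Field.exists_primitive_element (IntermediateField.adjoin k {a}) E
  let N := IntermediateField.adjoin k {a}
  have hmon : (minpoly N θ).Monic := minpoly.monic (Algebra.IsIntegral.isIntegral θ)
  set m : Polynomial Ω := (minpoly N θ).map ((f : E →+* Ω).comp (algebraMap N E)) with hm
  have hmm : m.Monic := hmon.map _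
  have hmroot : m.eval (f θ) = 0 := by
    rw [hm, Polynomial.eval_map]
    have := congrArg f (minpoly.aeval N θ)
    rw [map_zero, Polynomial.aeval_def] at this
    rw [← this]
    exact (Polynomial.hom_eval₂ _ _ (f : E →+* Ω) θ).symm
  have hmc : ∀ i, m.coeff i ∈ IntermediateField.adjoin k {f a} := fun i => by
    rw [hm, Polynomial.coeff_map]
    exact algHom_mem_adjoin f (Subtype.mem _)
  obtain ⟨m1, hm1, -, hm1m⟩ := Polynomial.lifts_and_natDegree_eq_and_monic (p := m)
    (f := algebraMap (IntermediateField.adjoin k {f a}) Ω)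
    ((Polynomial.lifts_iff_coeff_lifts _).mpr fun i => ⟨⟨_, hmc i⟩, rfl⟩) hmm
  obtain ⟨m2, hm2, -, hm2m⟩ := Polynomial.lifts_and_natDegree_eq_and_monic (p := m)
    (f := algebraMap P0 Ω)
    ((Polynomial.lifts_iff_coeff_lifts _).mpr fun i => ⟨⟨_, hkP0 _ (hmc i)⟩, rfl⟩) hmm
  have hm2root : Polynomial.aeval (f θ) m2 = 0 := by
    rw [Polynomial.aeval_def, ← Polynomial.eval_map, hm2, hmroot]
  have hint : IsIntegral P0 (f θ) := ⟨m2, hm2m, hm2root⟩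
  set M := minpoly P0 (f θ) with hM
  have hMm : M.Monic := minpoly.monic hint
  have hdvd : M.map (algebraMap P0 Ω) ∣ m1.map (algebraMap _ Ω) := by
    rw [hm1, ← hm2]
    exact Polynomial.map_dvd _ (minpoly.dvd _ _ hm2root)
  -- the coefficients of the minimal polynomial of `f θ` over `E(f a)` belong to `k(f a)`
  have hMc : ∀ i, algebraMap P0 Ω (M.coeff i) ∈ IntermediateField.adjoin k {f a} := by
    intro i
    have h1 := Polynomial.isIntegral_coeff_of_dvd m1 _ hm1m (hMm.map (algebraMap P0 Ω)) hdvd i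
    rw [Polynomial.coeff_map] at h1
    have h2 := mem_adjoin_of_isAlgebraic (u := fun _ : Unit => f a) hk hf' (M.coeff i).2
      (by rw [Set.range_const]; exact h1.isAlgebraic)
    rwa [Set.range_const] at h2
  have hq : ∃ q : Polynomial N, q.map ((f : E →+* Ω).comp (algebraMap N E))
      = M.map (algebraMap P0 Ω) := by
    rw [← Polynomial.mem_lifts, Polynomial.lifts_iff_coeff_lifts]
    intro i
    rw [Polynomial.coeff_map]
    obtain ⟨y, hy, hy'⟩ := exists_algHom_of_mem_adjoin f (hMc i)
    exact ⟨⟨y, hy⟩, hy'⟩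
  obtain ⟨q, hq⟩ := hq
  have hqθ : Polynomial.aeval θ q = 0 := by
    apply f.injective
    rw [map_zero, Polynomial.aeval_def]
    refine (Polynomial.hom_eval₂ _ _ (f : E →+* Ω) θ).trans ?_
    rw [← Polynomial.eval_map, hq, Polynomial.eval_map]
    exact minpoly.aeval P0 (f θ)
  have hroot : Polynomial.eval₂ (Φ0 : P0 →+* Ω) (g θ) M = 0 := by
    have h1 : M.map (Φ0 : P0 →+* Ω) = q.map ((g : E →+* Ω).comp (algebraMap N E)) := by
      ext i
      rw [Polynomial.coeff_map, Polynomial.coeff_map]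
      have h2 := congrArg (fun p => Polynomial.coeff p i) hq
      simp only [Polynomial.coeff_map] at h2
      have h3 := hΦ0N (q.coeff i) (q.coeff i).2
      change _ = g (q.coeff i : E)
      rw [← h3]
      exact congrArg Φ0 (Subtype.ext h2.symm)
    rw [← Polynomial.eval_map, h1, Polynomial.eval_map]
    refine (Polynomial.hom_eval₂ _ _ (g : E →+* Ω) θ).symm.trans ?_
    rw [← Polynomial.aeval_def, hqθ, map_zero]
  let Ψ : IntermediateField.adjoin P0 {f θ} →+* Ω :=
    (AdjoinRoot.lift (Φ0 : P0 →+* Ω) (g θ) hroot).comp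
      (IntermediateField.adjoinRootEquivAdjoin P0 hint).symm.toRingEquiv.toRingHom
  have hΨ0 : ∀ z : P0, Ψ (algebraMap P0 _ z) = Φ0 z := fun z => by
    change AdjoinRoot.lift (Φ0 : P0 →+* Ω) (g θ) hroot
      ((IntermediateField.adjoinRootEquivAdjoin P0 hint).symm (algebraMap P0 _ z)) = _
    rw [AlgEquiv.commutes]
    exact AdjoinRoot.lift_of hroot
  have hΨθ : Ψ (IntermediateField.AdjoinSimple.gen P0 (f θ)) = g θ := by
    change AdjoinRoot.lift (Φ0 : P0 →+* Ω) (g θ) hroot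
      ((IntermediateField.adjoinRootEquivAdjoin P0 hint).symm _) = _
    rw [IntermediateField.adjoinRootEquivAdjoin_symm_apply_gen]
    exact AdjoinRoot.lift_root hroot
  have hPP0 : ∀ z ∈ P0, z ∈ IntermediateField.adjoin P0 {f θ} := fun z hz =>
    IntermediateField.algebraMap_mem _ (⟨z, hz⟩ : P0)
  have hfΨ : ∀ e : E, ∃ h : f e ∈ IntermediateField.adjoin P0 {f θ}, Ψ ⟨f e, h⟩ = g e := by
    intro e
    have he : e ∈ IntermediateField.adjoin N {θ} := by rw [hθ]; exact IntermediateField.mem_top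
    induction he using IntermediateField.adjoin_induction with
    | mem z hz =>
      have hza := Set.mem_singleton_iff.mp hz
      subst hza
      exact ⟨IntermediateField.mem_adjoin_simple_self _ _, hΨθ⟩
    | algebraMap z =>
      refine ⟨hPP0 _ (hNP0 _ z.2), ?_⟩
      have := hΨ0 ⟨f z, hNP0 _ z.2⟩
      exact this.trans (hΦ0N z z.2)
    | add x y _ _ h1 h2 =>
      obtain ⟨h1, h1'⟩ := h1
      obtain ⟨h2, h2'⟩ := h2
      refine ⟨by rw [map_add]; exact add_mem h1 h2, ?_⟩
      refine (congrArg Ψ (Subtype.ext (map_add f x y) : _ =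
        (⟨f x, h1⟩ : IntermediateField.adjoin P0 {f θ}) + ⟨f y, h2⟩)).trans ?_
      rw [map_add, h1', h2', map_add]
    | inv x _ h1 =>
      obtain ⟨h1, h1'⟩ := h1
      refine ⟨by rw [map_inv₀]; exact inv_mem h1, ?_⟩
      refine (congrArg Ψ (Subtype.ext (map_inv₀ f x) : _ =
        (⟨f x, h1⟩ : IntermediateField.adjoin P0 {f θ})⁻¹)).trans ?_
      rw [map_inv₀, h1', map_inv₀]
    | mul x y _ _ h1 h2 =>
      obtain ⟨h1, h1'⟩ := h1
      obtain ⟨h2, h2'⟩ := h2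
      refine ⟨by rw [map_mul]; exact mul_mem h1 h2, ?_⟩
      refine (congrArg Ψ (Subtype.ext (map_mul f x y) : _ =
        (⟨f x, h1⟩ : IntermediateField.adjoin P0 {f θ}) * ⟨f y, h2⟩)).trans ?_
      rw [map_mul, h1', h2', map_mul]
  have hle : IntermediateField.adjoin E (Set.range f)
      ≤ (IntermediateField.adjoin P0 {f θ}).restrictScalars E := by
    rw [IntermediateField.adjoin_le_iff]
    rintro _ ⟨e, rfl⟩
    exact (hfΨ e).1
  refine ⟨Ψ.comp (IntermediateField.inclusion hle).toRingHom, fun e => ?_, fun e => ?_⟩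
  · exact (hΨ0 (algebraMap E P0 e)).trans (Φ0.commutes e)
  · exact (hfΨ e).2

end Embeddings

end GenusBound

/-! ### Monodromy: absence of intermediate fields -/

namespace GenusBound

open Module MvPolynomial

section Star

/-- If the only relation over `P` among the `w_j` is the linear one with coefficients `η_j`, then
every relation is preserved by a homomorphism `Φ` which preserves this linear one. -/
theorem eval₂_eq_zero_of_rel {r : ℕ} {P Ω : Type*} [Field P] [Field Ω] [Algebra P Ω]
    {w : Fin r → Ω} {η : Fin r → P} {j0 : Fin r} (hη : η j0 ≠ 0)
    (hw : AlgebraicIndependent P (fun j : {j : Fin r // j ≠ j0} => w j))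
    (hrel : ∑ j, w j * algebraMap P Ω (η j) = 0) (Φ : P →+* Ω)
    (hrelΦ : ∑ j, w j * Φ (η j) = 0) {H : MvPolynomial (Fin r) P} (hH : aeval w H = 0) :
    eval₂Hom Φ w H = 0 := by
  let sub : MvPolynomial (Fin r) P →ₐ[P] MvPolynomial {j : Fin r // j ≠ j0} P :=
    aeval fun j => if h : j ≠ j0 then X ⟨j, h⟩ else -∑ i : {j : Fin r // j ≠ j0},
      C (η i / η j0) * X i
  have key : ∀ Ψ : P →+* Ω, ∑ j, w j * Ψ (η j) = 0 →
      ∀ H, eval₂Hom Ψ (fun j : {j : Fin r // j ≠ j0} => w j) (sub H) = eval₂Hom Ψ w H := by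
    intro Ψ hΨ H
    have hne : Ψ (η j0) ≠ 0 := (map_ne_zero Ψ).mpr hη
    induction H using MvPolynomial.induction_on with
    | C a =>
      rw [← algebraMap_eq, AlgHom.commutes, algebraMap_eq, algebraMap_eq, eval₂Hom_C, eval₂Hom_C]
    | add p q hp hq => rw [map_add, map_add, map_add, hp, hq]
    | mul_X p j hp =>
      rw [map_mul, map_mul, map_mul, hp]
      congr 1
      rw [eval₂Hom_X']
      simp only [sub, aeval_X]
      by_cases h : j = j0
      · subst h
        rw [dif_neg (by simp), map_neg, map_sum]
        have h1 : ∑ i : {i : Fin r // i ≠ j}, w i * Ψ (η i) + w j * Ψ (η j) = 0 := by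
          rw [← hΨ]
          have := Fintype.sum_subtype_add_sum_subtype (fun i => i ≠ j) (fun i => w i * Ψ (η i))
          rw [← this]
          congr 1
          have hu : ∀ x : {i : Fin r // ¬ i ≠ j}, x = ⟨j, by simp⟩ := fun x =>
            Subtype.ext (not_not.mp x.2)
          rw [Fintype.sum_eq_single (⟨j, by simp⟩ : {i : Fin r // ¬ i ≠ j})
            (fun x hx => absurd (hu x) hx)]
        have h2 : ∑ i : {i : Fin r // i ≠ j}, eval₂Hom Ψ (fun j : {i : Fin r // i ≠ j} => w j)
            (C (η i / η j) * X i) = (∑ i : {i : Fin r // i ≠ j}, w i * Ψ (η i)) / Ψ (η j) := by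
          rw [Finset.sum_div]
          refine Finset.sum_congr rfl fun i _ => ?_
          rw [map_mul, eval₂Hom_C, eval₂Hom_X', map_div₀]
          ring
        rw [h2, eq_neg_of_add_eq_zero_left h1]
        field_simp
      · rw [dif_pos h, eval₂Hom_X']
  have h0 : sub H = 0 := by
    apply hw
    rw [map_zero]
    exact (key (algebraMap P Ω) hrel H).trans hH
  rw [← key Φ hrelΦ, h0, map_zero]

end Star

section NoStabilizer

set_option linter.unusedSectionVars false

universe v

variable {r : ℕ} {k E K F : Type v} [Field k] [Field E] [Field K] [Field F] [Algebra k E]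
    [Algebra k K] [Algebra E F] [Algebra K F] [Algebra k F] [IsScalarTower k K F]
    [IsScalarTower k E F] {u : Fin (r + 1) → K} {ξ : Fin (r + 1) → E}

/-- The conjugate under `σ` of the embedding of `E` in an extension of `F`. -/
noncomputable def conjE (k E : Type*) {K F Ω : Type*} [Field k] [Field E] [Field K] [Field F] [Field Ω]
    [Algebra k E] [Algebra k K] [Algebra E F] [Algebra K F] [Algebra k F] [IsScalarTower k K F]
    [IsScalarTower k E F] [Algebra K Ω] [Algebra k Ω] [IsScalarTower k K Ω]
    (σ : F →ₐ[K] Ω) : E →ₐ[k] Ω :=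
  (σ.restrictScalars k).comp (IsScalarTower.toAlgHom k E F)

theorem GenSec.conj_indep (S : GenSec k E K F u ξ)
    (hE : IntermediateField.adjoin k (Set.range ξ) = ⊤)
    {Ω : Type v} [Field Ω] [Algebra F Ω] [Algebra K Ω] [Algebra k Ω] [Algebra E Ω]
    [IsScalarTower K F Ω] [IsScalarTower k K Ω] [IsScalarTower E F Ω] [IsScalarTower k E Ω]
    [Algebra.IsAlgebraic F Ω] {a : E} (halg : Algebra.IsAlgebraic (IntermediateField.adjoin k {a}) E)
    (σ : F →ₐ[K] Ω) (hσ : σ ≠ IsScalarTower.toAlgHom K F Ω) :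
    Transcendental E (conjE k E σ a) ∧ ∃ j0 : Fin r,
      conjE k E σ (ξ j0.succ) - algebraMap E Ω (ξ j0.succ) ≠ 0 ∧
      AlgebraicIndependent (IntermediateField.adjoin E (Set.range (conjE k E σ)))
        (fun j : {j : Fin r // j ≠ j0} => algebraMap K Ω (u j.1.succ)) := by
  set f := conjE k E σ with hf
  set w : Fin r → Ω := fun j => algebraMap K Ω (u j.succ) with hw
  have hj0 : ∃ j0 : Fin r, f (ξ j0.succ) - algebraMap E Ω (ξ j0.succ) ≠ 0 := by
    by_contra! hcon
    apply hσ
    have hgen := S.adjoin_secX hE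
    have h1 : ∀ j, σ (secX F ξ j) = algebraMap F Ω (secX F ξ j) := by
      intro j
      refine Fin.cases ?_ (fun i => ?_) j
      · rw [secX, S.xi0, map_one, map_one, map_one]
      · have := sub_eq_zero.mp (hcon i)
        rw [secX, ← IsScalarTower.algebraMap_apply, ← this]
        rfl
    ext x
    have hx : x ∈ IntermediateField.adjoin K (Set.range (secX F ξ)) := by
      rw [hgen]; exact IntermediateField.mem_top
    change σ x = algebraMap F Ω x
    induction hx using IntermediateField.adjoin_induction with
    | mem z hz => obtain ⟨j, rfl⟩ := hz; exact h1 j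
    | algebraMap z => rw [σ.commutes, ← IsScalarTower.algebraMap_apply]
    | add a b _ _ ha hb => rw [map_add, map_add, ha, hb]
    | inv a _ ha => rw [map_inv₀, map_inv₀, ha]
    | mul a b _ _ ha hb => rw [map_mul, map_mul, ha, hb]
  obtain ⟨j0, hj0⟩ := hj0
  have hrel : ∑ j, w j * (f (ξ j.succ) - algebraMap E Ω (ξ j.succ)) = 0 := by
    have h1 := congrArg (algebraMap F Ω) S.rel
    have h2 := congrArg σ S.rel
    rw [map_sum, map_zero, Fin.sum_univ_succ] at h1 h2
    rw [S.xi0, map_one, mul_one] at h1 h2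
    rw [σ.commutes] at h2
    rw [← IsScalarTower.algebraMap_apply] at h1
    simp only [map_mul, σ.commutes, ← IsScalarTower.algebraMap_apply] at h1 h2
    have h3 : ∑ j : Fin r, algebraMap K Ω (u j.succ) * σ (algebraMap E F (ξ j.succ))
        = ∑ j : Fin r, algebraMap K Ω (u j.succ) * algebraMap E Ω (ξ j.succ) :=
      add_left_cancel (h2.trans h1.symm)
    simp only [mul_sub, Finset.sum_sub_distrib]
    exact sub_eq_zero.mpr h3
  -- everything in `f E` is algebraic over each field which contains `f a`
  have hfalg : ∀ (M : IntermediateField E Ω), f a ∈ M → ∀ e, IsAlgebraic M (f e) := by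
    intro M hM e
    have hle : ∀ z ∈ IntermediateField.adjoin k {a}, f z ∈ M := by
      intro z hz
      have h1 := algHom_mem_adjoin f hz
      have h2 : IntermediateField.adjoin k {f a} ≤ M.restrictScalars k := by
        rw [IntermediateField.adjoin_le_iff]
        intro z hz
        rw [Set.mem_singleton_iff.mp hz]
        exact hM
      exact h2 h1
    let g : IntermediateField.adjoin k {a} →+* M :=
      ((f : E →+* Ω).comp (algebraMap (IntermediateField.adjoin k {a}) E)).codRestrict M
        (fun z => hle _ z.2)
    refine (halg.1 e).ringHom_of_comp_eq g (f : E →+* Ω) ?_ ?_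
    · exact g.injective
    · rfl
  let x : {j : Fin r // j ≠ j0} ⊕ Unit → Ω := Sum.elim (fun j => w j) (fun _ => f a)
  have hbasis : IsTranscendenceBasis E x := by
    set M := IntermediateField.adjoin E (Set.range x) with hM
    have hfa : f a ∈ M := IntermediateField.subset_adjoin _ _ ⟨Sum.inr (), rfl⟩
    have hwj : ∀ j, j ≠ j0 → w j ∈ M := fun j hj =>
      IntermediateField.subset_adjoin _ _ ⟨Sum.inl ⟨j, hj⟩, rfl⟩
    have hc1 : ∀ z ∈ M, z ∈ algebraicClosure M Ω := fun z hz =>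
      (algebraicClosure M Ω).algebraMap_mem (⟨z, hz⟩ : M)
    have hcE : ∀ e : E, algebraMap E Ω e ∈ algebraicClosure M Ω := fun e =>
      hc1 _ (M.algebraMap_mem e)
    have hcf : ∀ e : E, f e ∈ algebraicClosure M Ω := fun e =>
      (mem_algebraicClosure_iff).mpr (hfalg M hfa e)
    have hcw : ∀ j, w j ∈ algebraicClosure M Ω := by
      intro j
      by_cases hj : j = j0
      · rw [hj]
        have h1 := Finset.add_sum_erase Finset.univ
          (fun j => w j * (f (ξ j.succ) - algebraMap E Ω (ξ j.succ))) (Finset.mem_univ j0)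
        rw [hrel] at h1
        have h2 : w j0 = -(∑ j ∈ Finset.univ.erase j0,
            w j * (f (ξ j.succ) - algebraMap E Ω (ξ j.succ)))
            / (f (ξ j0.succ) - algebraMap E Ω (ξ j0.succ)) := by
          rw [eq_div_iff hj0]
          exact eq_neg_of_add_eq_zero_left h1
        rw [h2]
        refine div_mem (neg_mem (sum_mem fun i hi => ?_)) (sub_mem (hcf _) (hcE _))
        exact mul_mem (hc1 _ (hwj i (Finset.ne_of_mem_erase hi))) (sub_mem (hcf _) (hcE _))
      · exact hc1 _ (hwj j hj)
    have hcF : ∀ z : F, algebraMap F Ω z ∈ algebraicClosure M Ω := by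
      intro z
      have hz := S.adjoinE z
      induction hz using IntermediateField.adjoin_induction with
      | mem z hz =>
        obtain ⟨j, rfl⟩ := hz
        have := hcw j
        change algebraMap F Ω (algebraMap K F (u j.succ)) ∈ _
        rwa [← IsScalarTower.algebraMap_apply]
      | algebraMap z => rw [← IsScalarTower.algebraMap_apply]; exact hcE z
      | add a b _ _ ha hb => rw [map_add]; exact add_mem ha hb
      | inv a _ ha => rw [map_inv₀]; exact inv_mem ha
      | mul a b _ _ ha hb => rw [map_mul]; exact mul_mem ha hb
    have hMalg : Algebra.IsAlgebraic M Ω := by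
      refine ⟨fun z => ?_⟩
      have h1 : IsAlgebraic F z := Algebra.IsAlgebraic.isAlgebraic z
      have h2 : IsAlgebraic (algebraicClosure M Ω) z :=
        isAlgebraic_of_range_le (fun y => ⟨⟨_, hcF y⟩, rfl⟩) h1
      exact h2.restrictScalars M
    have hAalg : Algebra.IsAlgebraic (Algebra.adjoin E (Set.range x)) Ω := by
      open scoped IntermediateField.algebraAdjoinAdjoin in
      exact ⟨fun z => (IsFractionRing.isAlgebraic_iff (Algebra.adjoin E (Set.range x))
        (IntermediateField.adjoin E (Set.range x)) Ω).mpr (hMalg.1 z)⟩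
    refine Algebra.IsAlgebraic.isTranscendenceBasis_of_lift_le_trdeg_of_finite E x ?_
    have h2 := trdeg_of_frac S.indepE S.fracF
    have h4 := _root_.trdeg_add_eq E F (A := Ω)
    rw [_root_.trdeg_eq_zero (R := F) (A := Ω), add_zero, h2] at h4
    rw [← h4]
    have h5 : Fintype.card {j : Fin r // j ≠ j0} + 1 ≤ r := by
      have := Fintype.card_subtype_compl (fun j : Fin r => j = j0)
      rw [Fintype.card_subtype_eq, Fintype.card_fin] at this
      have h6 : 0 < r := j0.pos
      have h7 : Fintype.card {j : Fin r // j ≠ j0} = r - 1 := this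
      omega
    rw [Cardinal.mk_fintype, Cardinal.lift_natCast, Cardinal.lift_natCast, Fintype.card_sum,
      Fintype.card_unit]
    exact_mod_cast h5
  obtain ⟨h1, h2⟩ := AlgebraicIndependent.sumElim_iff.mp hbasis.1
  refine ⟨(algebraicIndependent_unique_type_iff (ι := Unit)).mp h1, j0, hj0, ?_⟩
  set R0 := Algebra.adjoin E (Set.range fun _ : Unit => f a) with hR0
  set P := IntermediateField.adjoin E (Set.range f) with hP
  have hfR : f a ∈ R0 := Algebra.subset_adjoin ⟨(), rfl⟩
  have hle : ∀ z ∈ R0, z ∈ P := by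
    have : R0 ≤ P.toSubalgebra := by
      rw [hR0, Algebra.adjoin_le_iff]
      rintro _ ⟨_, rfl⟩
      exact IntermediateField.subset_adjoin _ _ ⟨a, rfl⟩
    exact fun z hz => this hz
  let _ : Algebra R0 P := ((algebraMap R0 Ω).codRestrict P (fun z => hle _ z.2)).toAlgebra
  have _ : IsScalarTower R0 P Ω := .of_algebraMap_eq fun _ => rfl
  have hPalg : Algebra.IsAlgebraic R0 P := by
    refine ⟨fun z => ?_⟩
    rw [← isAlgebraic_algHom_iff (IsScalarTower.toAlgHom R0 P Ω) Subtype.val_injective]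
    change IsAlgebraic R0 (z : Ω)
    open scoped IntermediateField.algebraAdjoinAdjoin in
    rw [IsFractionRing.isAlgebraic_iff (Algebra.adjoin E (Set.range fun _ : Unit => f a))
        (IntermediateField.adjoin E (Set.range fun _ : Unit => f a)) Ω]
    have hz := z.2
    have hfM : f a ∈ IntermediateField.adjoin E (Set.range fun _ : Unit => f a) :=
      IntermediateField.subset_adjoin _ _ ⟨(), rfl⟩
    revert hz
    generalize (z : Ω) = z'
    intro hz
    induction hz using IntermediateField.adjoin_induction with
    | mem z hz => obtain ⟨e, rfl⟩ := hz; exact hfalg _ hfM e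
    | algebraMap z =>
      exact isAlgebraic_algebraMap
        (⟨algebraMap E Ω z, IntermediateField.algebraMap_mem _ z⟩ :
          IntermediateField.adjoin E (Set.range fun _ : Unit => f a))
    | add a b _ _ ha hb => exact ha.add hb
    | inv a _ ha => exact ha.inv
    | mul a b _ _ ha hb => exact ha.mul hb
  exact h2.extendScalars P

/-- The monodromy of the generic hyperplane section of a curve acts doubly transitively: if one
conjugation different from the identity fixes `θ`, then all of them do. -/
theorem GenSec.conj_fix [CharZero k] (S : GenSec k E K F u ξ)
    (hk : ∀ x : E, IsIntegral k x → x ∈ (algebraMap k E).range)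
    (hE : IntermediateField.adjoin k (Set.range ξ) = ⊤)
    {Ω : Type v} [Field Ω] [Algebra F Ω] [Algebra K Ω] [Algebra k Ω] [Algebra E Ω]
    [IsScalarTower K F Ω] [IsScalarTower k K Ω] [IsScalarTower E F Ω] [IsScalarTower k E Ω]
    [Algebra.IsAlgebraic F Ω] {a : E} (hfin : FiniteDimensional (IntermediateField.adjoin k {a}) E)
    (σ σ' : F →ₐ[K] Ω) (hσ : σ ≠ IsScalarTower.toAlgHom K F Ω) {θ : F}
    (hθ : σ θ = algebraMap F Ω θ) : σ' θ = algebraMap F Ω θ := by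
  by_cases hσ' : σ' = IsScalarTower.toAlgHom K F Ω
  · rw [hσ']; rfl
  have halg : Algebra.IsAlgebraic (IntermediateField.adjoin k {a}) E := inferInstance
  obtain ⟨hfa, j0, hj0, hind⟩ := S.conj_indep hE halg σ hσ
  obtain ⟨hga, -⟩ := S.conj_indep hE halg σ' hσ'
  set f := conjE k E σ with hf
  set g := conjE k E σ' with hg
  set w : Fin r → Ω := fun j => algebraMap K Ω (u j.succ) with hw
  set P := IntermediateField.adjoin E (Set.range f) with hP
  obtain ⟨Φ, hΦE, hΦf⟩ : ∃ Φ : P →+* Ω, (∀ e : E, Φ (algebraMap E P e) = algebraMap E Ω e) ∧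
      ∀ e : E, Φ ⟨f e, IntermediateField.subset_adjoin _ _ ⟨e, rfl⟩⟩ = g e :=
    exists_specHom hk hfin f g hfa hga
  have hfP : ∀ e, f e ∈ P := fun e => IntermediateField.subset_adjoin _ _ ⟨e, rfl⟩
  let fP : E →+* P := (f : E →+* Ω).codRestrict P hfP
  let η : Fin r → P := fun j => fP (ξ j.succ) - algebraMap E P (ξ j.succ)
  have hrel : ∀ τ : F →ₐ[K] Ω, ∑ j, w j * (conjE k E τ (ξ j.succ) - algebraMap E Ω (ξ j.succ)) = 0 := by
    intro τ
    have h1 := congrArg (algebraMap F Ω) S.rel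
    have h2 := congrArg τ S.rel
    rw [map_sum, map_zero, Fin.sum_univ_succ] at h1 h2
    rw [S.xi0, map_one, mul_one] at h1 h2
    rw [τ.commutes] at h2
    rw [← IsScalarTower.algebraMap_apply] at h1
    simp only [map_mul, τ.commutes, ← IsScalarTower.algebraMap_apply] at h1 h2
    have h3 : ∑ j : Fin r, algebraMap K Ω (u j.succ) * τ (algebraMap E F (ξ j.succ))
        = ∑ j : Fin r, algebraMap K Ω (u j.succ) * algebraMap E Ω (ξ j.succ) :=
      add_left_cancel (h2.trans h1.symm)
    simp only [mul_sub, Finset.sum_sub_distrib]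
    exact sub_eq_zero.mpr h3
  obtain ⟨p, q, hq, hpq⟩ := S.fracF θ
  set wF : Fin r → F := fun j => algebraMap K F (u j.succ) with hwF
  -- evaluation of a conjugate polynomial
  have hev : ∀ (τ : F →ₐ[K] Ω) (p : MvPolynomial (Fin r) E),
      τ (aeval wF p) = eval₂Hom (conjE k E τ : E →+* Ω) w p := by
    intro τ p
    induction p using MvPolynomial.induction_on with
    | C a => rw [aeval_C, eval₂Hom_C]; rfl
    | add p q hp hq => rw [map_add, map_add, map_add, hp, hq]
    | mul_X p j hp => rw [map_mul, map_mul, map_mul, hp, aeval_X, eval₂Hom_X', τ.commutes]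
  have hevι : ∀ (p : MvPolynomial (Fin r) E),
      algebraMap F Ω (aeval wF p) = eval₂Hom (algebraMap E Ω) w p := by
    intro p
    induction p using MvPolynomial.induction_on with
    | C a => rw [aeval_C, eval₂Hom_C, ← IsScalarTower.algebraMap_apply]
    | add p q hp hq => rw [map_add, map_add, map_add, hp, hq]
    | mul_X p j hp =>
      rw [map_mul, map_mul, map_mul, hp, aeval_X, eval₂Hom_X', hwF, ← IsScalarTower.algebraMap_apply]
  let H : MvPolynomial (Fin r) P :=
    map (algebraMap E P) p * map fP q - map (algebraMap E P) q * map fP p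
  have hH : aeval w H = 0 := by
    have h1 : ∀ (p : MvPolynomial (Fin r) E), aeval w (map (algebraMap E P) p)
        = algebraMap F Ω (aeval wF p) := fun p => by
      rw [hevι]; exact eval₂_map _ _ _ _
    have h2 : ∀ (p : MvPolynomial (Fin r) E), aeval w (map fP p) = σ (aeval wF p) := fun p => by
      rw [hev]; exact eval₂_map _ _ _ _
    rw [map_sub, map_mul, map_mul, h1, h1, h2, h2, ← hpq, map_mul, map_mul, hθ]
    ring
  have hη : η j0 ≠ 0 := fun h => hj0 (congrArg Subtype.val h)
  have e1 : ∑ j, w j * algebraMap P Ω (η j) = 0 := by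
    rw [← hrel σ]
    exact Finset.sum_congr rfl fun j _ => rfl
  have e2 : ∑ j, w j * Φ (η j) = 0 := by
    rw [← hrel σ']
    refine Finset.sum_congr rfl fun j _ => ?_
    have h1 : Φ (η j) = Φ (fP (ξ j.succ)) - Φ (algebraMap E P (ξ j.succ)) := map_sub Φ _ _
    have h2 : Φ (fP (ξ j.succ)) = g (ξ j.succ) := hΦf _
    rw [h1, h2, hΦE]
  have h0 : eval₂Hom Φ w H = 0 :=
    eval₂_eq_zero_of_rel (w := w) (η := η) (j0 := j0) hη hind e1 Φ e2 hH
  have h1 : ∀ (p : MvPolynomial (Fin r) E), eval₂Hom Φ w (map (algebraMap E P) p)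
      = algebraMap F Ω (aeval wF p) := fun p => by
    rw [hevι]
    refine (eval₂_map _ _ _ _).trans ?_
    congr 1
    ext e
    exact hΦE e
  have h2 : ∀ (p : MvPolynomial (Fin r) E), eval₂Hom Φ w (map fP p) = σ' (aeval wF p) := fun p => by
    rw [hev]
    refine (eval₂_map _ _ _ _).trans ?_
    congr 1
    ext e
    exact hΦf e
  rw [map_sub, map_mul, map_mul, h1, h1, h2, h2, ← hpq, map_mul, map_mul] at h0
  have h3 : algebraMap F Ω (aeval wF q) ≠ 0 := (map_ne_zero _).mpr hq
  have h4 : σ' (aeval wF q) ≠ 0 := (map_ne_zero _).mpr hq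
  apply mul_right_cancel₀ h4
  apply mul_left_cancel₀ h3
  linear_combination -h0

/-- The field of a generic hyperplane section of a curve has no intermediate field. -/
theorem GenSec.noStab [CharZero k] (S : GenSec k E K F u ξ)
    (hk : ∀ x : E, IsIntegral k x → x ∈ (algebraMap k E).range)
    (hE : IntermediateField.adjoin k (Set.range ξ) = ⊤) [FiniteDimensional K F] : NoStab K F := by
  intro x hx U hU _ hstab
  have _ : CharZero K := charZero_of_injective_algebraMap (algebraMap k K).injective
  have htr : Algebra.trdeg k E = 1 := by
    rw [S.trdeg, _root_.trdeg_eq_zero (R := K) (A := F), zero_add]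
  obtain ⟨a, ha⟩ : ∃ a : E, Transcendental k a := by
    by_contra! hcon
    have : Algebra.IsAlgebraic k E := ⟨fun x => not_not.mp (hcon x)⟩
    rw [_root_.trdeg_eq_zero] at htr
    exact zero_ne_one htr
  have halg := isAlgebraic_adjoin_of_trdeg_one htr ha
  have hfin : FiniteDimensional (IntermediateField.adjoin k {a}) E := by
    have h1 : FiniteDimensional (IntermediateField.adjoin k {a})
        (IntermediateField.adjoin (IntermediateField.adjoin k {a}) (Set.range ξ)) :=
      IntermediateField.finiteDimensional_adjoin fun x _ => (halg.1 x).isIntegral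
    have h2 : IntermediateField.adjoin (IntermediateField.adjoin k {a}) (Set.range ξ) = ⊤ := by
      rw [eq_top_iff]
      intro z _
      have hz : z ∈ IntermediateField.adjoin k (Set.range ξ) := by
        rw [hE]; exact IntermediateField.mem_top
      have : IntermediateField.adjoin k (Set.range ξ) ≤ (IntermediateField.adjoin
          (IntermediateField.adjoin k {a}) (Set.range ξ)).restrictScalars k := by
        rw [IntermediateField.adjoin_le_iff]
        exact IntermediateField.subset_adjoin _ _
      exact this hz
    rw [h2] at h1
    exact Module.Finite.equiv (IntermediateField.topEquiv.toLinearEquiv)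
  have hfix : ∀ (σ σ' : F →ₐ[K] AlgebraicClosure F),
      σ ≠ IsScalarTower.toAlgHom K F (AlgebraicClosure F) →
      σ x = algebraMap F _ x → σ' x = algebraMap F _ x := fun σ σ' hσ hx =>
    S.conj_fix hk hE hfin σ σ' hσ hx
  have htop : IntermediateField.adjoin K {x} = ⊤ := by
    by_contra hne
    set M := IntermediateField.adjoin K {x} with hM
    have h1 : Fintype.card (F →ₐ[M] AlgebraicClosure F) = finrank M F := AlgHom.card M F _
    have h2 : finrank M F ≠ 1 := fun h => hne (IntermediateField.finrank_eq_one_iff_eq_top.mp h)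
    have h3 : 0 < finrank M F := finrank_pos
    obtain ⟨τ, hτ⟩ := Fintype.exists_ne_of_one_lt_card (α := F →ₐ[M] AlgebraicClosure F)
      (by omega) (IsScalarTower.toAlgHom M F (AlgebraicClosure F))
    have hσ : ∀ σ' : F →ₐ[K] AlgebraicClosure F, σ' x = algebraMap F _ x := by
      intro σ'
      refine hfix (τ.restrictScalars K) σ' (fun h => hτ ?_) ?_
      · ext z
        exact DFunLike.congr_fun h z
      · exact τ.commutes ⟨x, IntermediateField.mem_adjoin_simple_self _ _⟩
    have hsub : ∀ τ1 τ2 : M →ₐ[K] AlgebraicClosure F, τ1 = τ2 := by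
      intro τ1 τ2
      obtain ⟨σ1, rfl⟩ := IsAlgClosed.surjective_domRestrict_of_isAlgebraic (E := F) τ1
      obtain ⟨σ2, rfl⟩ := IsAlgClosed.surjective_domRestrict_of_isAlgebraic (E := F) τ2
      apply IntermediateField.algHom_ext_of_eq_adjoin K hM
      intro z hz
      have hzx := Set.mem_singleton_iff.mp hz
      subst hzx
      exact (hσ σ1).trans (hσ σ2).symm
    have h4 : Fintype.card (M →ₐ[K] AlgebraicClosure F) = finrank K M := AlgHom.card K M _
    have h5 : Fintype.card (M →ₐ[K] AlgebraicClosure F) ≤ 1 :=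
      Fintype.card_le_one_iff.mpr hsub
    have h6 : 0 < finrank K M := finrank_pos
    have h7 : finrank K M = 1 := by omega
    rw [hM, IntermediateField.finrank_adjoin_simple_eq_one_iff] at h7
    obtain ⟨y, hy⟩ := IntermediateField.mem_bot.mp h7
    exact hx ⟨y, hy⟩
  have hall : ∀ z : F, ∀ a ∈ U, z * a ∈ U := by
    intro z
    have hz : z ∈ Algebra.adjoin K {x} := by
      rw [← IntermediateField.adjoin_simple_toSubalgebra_of_isAlgebraic
        (Algebra.IsAlgebraic.isAlgebraic x), htop]
      exact IntermediateField.mem_top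
    induction hz using Algebra.adjoin_induction with
    | mem z hz => rw [Set.mem_singleton_iff.mp hz]; exact hstab
    | algebraMap z => intro a ha; rw [← Algebra.smul_def]; exact U.smul_mem _ ha
    | add a b _ _ ha hb => intro c hc; rw [add_mul]; exact U.add_mem (ha c hc) (hb c hc)
    | mul a b _ _ ha hb => intro c hc; rw [mul_assoc]; exact ha _ (hb c hc)
  obtain ⟨y, hy, hy0⟩ := Submodule.exists_mem_ne_zero_of_ne_bot hU
  rw [eq_top_iff]
  intro z _
  have := hall (z / y) y hy
  rwa [div_mul_cancel₀ _ hy0] at this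

end NoStabilizer

end GenusBound

/-! ### The surface of a plateau -/

namespace GenusBound

open Module MvPolynomial

section Sequences

theorem eventually_const_of_bounded {h : ℕ → ℕ} {B N : ℕ} (hm : ∀ t, h t ≤ h (t + 1))
    (hB : ∀ t, N ≤ t → h t ≤ B) : ∃ M, ∀ t, M ≤ t → h t = h M := by
  have hmono : Monotone h := monotone_nat_of_le_succ hm
  have hB' : ∀ t, h t ≤ B := fun t => (hmono (le_max_right N t)).trans (hB _ (le_max_left N t))
  obtain ⟨M, hM⟩ := WellFoundedGT.monotone_chain_condition
    (⟨fun t => (⟨h t, Nat.lt_succ_of_le (hB' t)⟩ : Fin (B + 1)), fun a b hab => hmono hab⟩ :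
      ℕ →o Fin (B + 1))
  exact ⟨M, fun t ht => (congrArg Fin.val (hM t ht)).symm⟩

theorem linear_of_step {h : ℕ → ℕ} {s N : ℕ} (hs : ∀ t, N ≤ t → h (t + 1) = h t + s) :
    ∃ b : ℤ, ∀ t, N ≤ t → (h t : ℤ) = s * t + b := by
  refine ⟨h N - s * N, fun t ht => ?_⟩
  induction t, ht using Nat.le_induction with
  | base => ring
  | succ n hn ih => rw [hs n hn]; push_cast; rw [ih]; ring

theorem quadratic_of_step {h : ℕ → ℕ} {s : ℕ} {b : ℤ} {N : ℕ}
    (hs : ∀ t : ℕ, N ≤ t → (h (t + 1) : ℤ) = h t + (s * (t + 1) + b)) :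
    ∃ c : ℤ, ∀ t : ℕ, N ≤ t → (h t : ℤ) = s * ((t : ℤ) * (t + 1) / 2) + b * t + c := by
  refine ⟨h N - s * ((N : ℤ) * (N + 1) / 2) - b * N, fun t ht => ?_⟩
  induction t, ht using Nat.le_induction with
  | base => ring
  | succ n hn ih =>
    have h1 : ((n + 1 : ℕ) : ℤ) * (((n + 1 : ℕ) : ℤ) + 1) / 2 = (n : ℤ) * (n + 1) / 2 + (n + 1) := by
      rw [← Int.add_mul_ediv_right _ _ (by norm_num : (2 : ℤ) ≠ 0)]
      congr 1
      push_cast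
      ring
    rw [hs n hn, ih, h1]
    push_cast
    ring

end Sequences

section SurfaceOfPlateau

set_option linter.unusedSectionVars false

universe v

/-- The function field of the integral scheme defined by a prime ideal with `x_0 = 1`. -/
theorem exists_field_of_prime {r : ℕ} {k : Type v} [Field k]
    (T : Ideal (MvPolynomial (Fin (r + 1)) k)) [T.IsPrime] (h0 : X 0 - 1 ∈ T) :
    ∃ (E : Type v) (_ : Field E) (_ : Algebra k E) (ξ : Fin (r + 1) → E), ξ 0 = 1 ∧
      IntermediateField.adjoin k (Set.range ξ) = ⊤ ∧ ∀ p, aeval ξ p = 0 ↔ p ∈ T := by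
  let A := MvPolynomial (Fin (r + 1)) k ⧸ T
  let ξ : Fin (r + 1) → FractionRing A := fun j => algebraMap A _ (Ideal.Quotient.mk T (X j))
  have hev : ∀ p, aeval ξ p = algebraMap A (FractionRing A) (Ideal.Quotient.mk T p) := by
    intro p
    have h1 : (aeval ξ : _ →ₐ[k] FractionRing A)
        = (IsScalarTower.toAlgHom k A (FractionRing A)).comp (Ideal.Quotient.mkₐ k T) := by
      ext j
      simp [ξ]
      rfl
    rw [h1]
    rfl
  refine ⟨FractionRing A, inferInstance, inferInstance, ξ, ?_, ?_, fun p => ?_⟩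
  · have h1 : Ideal.Quotient.mk T (X 0) = 1 := by
      rw [← map_one (Ideal.Quotient.mk T)]
      exact Ideal.Quotient.eq.mpr h0
    change algebraMap A _ (Ideal.Quotient.mk T (X 0)) = 1
    rw [h1, map_one]
  · rw [eq_top_iff]
    intro x _
    obtain ⟨a, b, hb, rfl⟩ := IsFractionRing.div_surjective (A := A) x
    obtain ⟨p, rfl⟩ := Ideal.Quotient.mk_surjective a
    obtain ⟨q, rfl⟩ := Ideal.Quotient.mk_surjective b
    rw [IntermediateField.mem_adjoin_range_iff]
    exact ⟨p, q, by rw [hev, hev]⟩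
  · rw [hev, map_eq_zero_iff _ (IsFractionRing.injective A (FractionRing A)),
      Ideal.Quotient.eq_zero_iff_mem]

variable {r : ℕ} {k E F : Type v} [Field k] [Field E] [Field F] [Algebra k E]
    [Algebra E F] [Algebra (KK r k) F] [Algebra k F] [IsScalarTower k (KK r k) F]
    [IsScalarTower k E F] {ξ : Fin (r + 1) → E}

/-- A plateau of value `σ` of the first difference of the Hilbert function of the general
hyperplane section of a curve forces the curve to lie on a surface of degree at most `σ`. -/
theorem exists_surface [CharZero k] (S : GenSec k E (KK r k) F (uu r k) ξ)
    [FiniteDimensional (KK r k) F]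
    (hsurj : Function.Surjective (aeval (R := KK r k) (secX F ξ)))
    (hj : ∃ j : Fin r, Transcendental k (ξ j.succ)) {q σ : ℕ} (hσ1 : 1 ≤ σ) (hσ : σ ≤ q + 1)
    (e1 : hf (KK r k) (secX F ξ) (q + 1) = hf (KK r k) (secX F ξ) q + σ)
    (e2 : hf (KK r k) (secX F ξ) (q + 2) = hf (KK r k) (secX F ξ) (q + 1) + σ)
    (e3 : hf (KK r k) (secX F ξ) (q + 3) = hf (KK r k) (secX F ξ) (q + 2) + σ) :
    ∃ (E' : Type v) (_ : Field E') (_ : Algebra k E') (ξ' : Fin (r + 1) → E'), ξ' 0 = 1 ∧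
      IntermediateField.adjoin k (Set.range ξ') = ⊤ ∧ Algebra.trdeg k E' = 2 ∧
      (∀ p : MvPolynomial (Fin (r + 1)) k, aeval ξ' p = 0 → aeval ξ p = 0) ∧
      (∃ p : MvPolynomial (Fin (r + 1)) k, aeval ξ' p ≠ 0 ∧ aeval ξ p = 0) ∧
      ∃ s ≤ σ, ∃ (b c : ℤ) (N : ℕ), ∀ t : ℕ, N ≤ t →
        (hf k ξ' t : ℤ) = s * ((t : ℤ) * (t + 1) / 2) + b * t + c := by
  set K := KK r k with hK
  have _ : CharZero K := charZero_of_injective_algebraMap (algebraMap k K).injective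
  have hs0 : secX F ξ 0 = 1 := by rw [secX, S.xi0, map_one]
  obtain ⟨y, Pl⟩ := exists_plateau (V := linV K (secX F ξ)) (hs0 ▸ mem_linV (secX F ξ) 0) hσ e1 e2 e3
  have hlt : finrank K ↥(linV K (secX F ξ) ^ q) < finrank K F := by
    have h1 : finrank K ↥(linV K (secX F ξ) ^ (q + 1)) ≤ finrank K F := Submodule.finrank_le _
    have h2 : finrank K ↥(linV K (secX F ξ) ^ (q + 1)) = finrank K ↥(linV K (secX F ξ) ^ q) + σ := e1
    omega
  obtain ⟨T, hT, hTξ, hT0, ⟨p0, hp0T, hp0⟩, hlow⟩ := Pl.exists_descent S hsurj hlt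
  obtain ⟨E', _, _, ξ', h0', hE', hker⟩ := exists_field_of_prime T hT0
  have hspec : ∀ p, aeval ξ' p = 0 → aeval ξ p = 0 := fun p hp => hTξ p ((hker p).mp hp)
  have hne : ∃ p, aeval ξ' p ≠ 0 ∧ aeval ξ p = 0 := ⟨p0, fun h => hp0T ((hker _).mp h), hp0⟩
  obtain ⟨j, hj⟩ := hj
  obtain ⟨F', _, _, _, _, _, _, S'⟩ := exists_genSec (r := r) (k := k) ξ' h0'
    ⟨j, transcendental_of_specializes hspec hj⟩
  have hs0' : secX F' ξ' 0 = 1 := by rw [secX, S'.xi0, map_one]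
  have hlow1 : ∀ f : MvPolynomial (Fin (r + 1)) K, f.totalDegree ≤ q + 2 →
      aeval (secX F ξ) f = 0 → aeval (secX F' ξ') f = 0 := by
    intro f hf hf0
    obtain ⟨c, P, hc, hP, hPT⟩ := hlow f hf hf0
    have h1 : aeval (secX F' ξ') (thet (uu r k) P) = 0 :=
      (S'.aeval_thet_eq_zero_iff P).mpr fun m => (hker _).mpr (hPT m)
    rw [hP, map_mul, aeval_C] at h1
    exact (mul_eq_zero.mp h1).resolve_left ((map_ne_zero _).mpr hc)
  have hfeq : ∀ t ≤ q + 2, hf K (secX F ξ) t = hf K (secX F' ξ') t := fun t ht =>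
    hf_eq_of_low (e := q + 2) (fun f hf => ⟨hlow1 f hf, fun h => S'.transfer S hspec f h⟩) ht
  obtain ⟨y', hy', hstep⟩ := step_of_low hs0 hs0' hlow1 (by omega) Pl.y_mem Pl.step
  have h1' : (1 : F') ∈ linV K (secX F' ξ') := hs0' ▸ mem_linV (secX F' ξ') 0
  have hanti : ∀ t, q ≤ t → hf K (secX F' ξ') (t + 2) + hf K (secX F' ξ') t
      ≤ hf K (secX F' ξ') (t + 1) + hf K (secX F' ξ') (t + 1) := fun t ht =>
    incr_antitone h1' (mulStep_persist h1' hy' hstep (by omega)) hy'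
  have hinc : ∀ t, q + 1 ≤ t → hf K (secX F' ξ') (t + 1) ≤ hf K (secX F' ξ') t + σ := by
    intro t ht
    induction t, ht using Nat.le_induction with
    | base => rw [← hfeq _ le_rfl, ← hfeq _ (by omega)]; exact e2.le
    | succ n hn ih =>
      have := hanti n (by omega)
      rw [show n + 1 + 1 = n + 2 from rfl]
      omega
  obtain ⟨F2, _, _, _, _, _, _, S2⟩ := exists_genSec (r := r) (k := K) (secX F' ξ') hs0'
    (S.exists_transcendental S' hspec hne)
  set ζ := secX F2 (secX F' ξ') with hζ
  have hζ0 : ζ 0 = 1 := by rw [hζ, secX, hs0', map_one]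
  obtain ⟨s, hs, N, hN⟩ : ∃ s ≤ σ, ∃ N, ∀ t, N ≤ t → hf (KK r K) ζ t = s := by
    obtain ⟨M, hM⟩ := eventually_const_of_bounded (h := hf (KK r K) ζ) (B := σ) (N := q + 2)
      (fun t => hf_mono hζ0 (Nat.le_succ t)) (fun t ht => by
        obtain ⟨t, rfl⟩ : ∃ t', t = t' + 1 := ⟨t - 1, by omega⟩
        have h1 : hf (KK r K) ζ (t + 1) + hf K (secX F' ξ') t ≤ _ := S2.hf_sec_le t
        have h2 := hinc t (by omega)
        omega)
    refine ⟨hf (KK r K) ζ (max M (q + 2)), ?_, max M (q + 2), fun t ht => ?_⟩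
    · obtain ⟨t, ht⟩ : ∃ t', max M (q + 2) = t' + 1 := ⟨max M (q + 2) - 1, by omega⟩
      rw [ht]
      have h1 : hf (KK r K) ζ (t + 1) + hf K (secX F' ξ') t ≤ _ := S2.hf_sec_le t
      have h2 := hinc t (by omega)
      omega
    · rw [hM t (by omega), hM (max M (q + 2)) (by omega)]
  have hgen' := S'.adjoin_secX hE'
  have hgen2 := S2.adjoin_secX hgen'
  have hfd : FiniteDimensional (KK r K) F2 := by
    have h1 := linV_pow_eq_top hζ0 hgen2 (N := N) (fun t ht => by rw [hN t ht, hN N le_rfl]) le_rfl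
    have h2 : FiniteDimensional (KK r K) ↥(linV (KK r K) ζ ^ N) := inferInstance
    rw [h1] at h2
    exact Module.Finite.equiv Submodule.topEquiv
  have htr : Algebra.trdeg k E' = 2 := by
    rw [S'.trdeg, S2.trdeg, _root_.trdeg_eq_zero (R := KK r K) (A := F2)]
    norm_num
  refine ⟨E', _, _, ξ', h0', hE', htr, hspec, hne, s, hs, ?_⟩
  obtain ⟨t2, ht2⟩ := S2.hf_sec_eq
  obtain ⟨t1, ht1⟩ := S'.hf_sec_eq
  obtain ⟨b, hb⟩ := linear_of_step (h := hf K (secX F' ξ')) (s := s) (N := max t2 N) (fun t ht => by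
    have h1 := ht2 t (by omega)
    have h2 := hN (t + 1) (by omega)
    rw [h2] at h1
    omega)
  obtain ⟨c, hc⟩ := quadratic_of_step (h := hf k ξ') (s := s) (b := b) (N := max t1 (max t2 N))
    (fun t ht => by
      have h1 := ht1 t (by omega)
      have h2 := hb (t + 1) (by omega)
      push_cast at h2
      rw [← h2, ← h1]
      push_cast
      ring)
  exact ⟨b, c, _, hc⟩

end SurfaceOfPlateau

end GenusBound

/-! ### Homogeneous ideals and function fields -/

namespace GenusBound

open Module MvPolynomial

section Cone

variable {r : ℕ} {E : Type} [Field E] [Algebra ℂ E] (ξ : Fin (r + 1) → E)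

/-- The map from the homogeneous coordinate ring of `ℙ^r` to `E[X]`, sending `x_j` to `ξ_j X`. -/
noncomputable def conePhi : MPoly (r + 1) →ₐ[ℂ] Polynomial E :=
  aeval fun j => Polynomial.C (ξ j) * Polynomial.X

/-- The homogeneous prime ideal of the projective variety with affine coordinate functions `ξ`. -/
noncomputable def homI : Ideal (MPoly (r + 1)) := RingHom.ker (conePhi ξ)

theorem conePhi_homog {p : MPoly (r + 1)} {t : ℕ} (hp : p.IsHomogeneous t) :
    conePhi ξ p = Polynomial.C (aeval ξ p) * Polynomial.X ^ t := by
  have h1 : ∀ m ∈ p.support, conePhi ξ (monomial m (coeff m p))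
      = Polynomial.C (aeval ξ (monomial m (coeff m p))) * Polynomial.X ^ t := by
    intro m hm
    have hd : m.degree = t := by
      have := hp (MvPolynomial.mem_support_iff.mp hm)
      rwa [Finsupp.degree_eq_weight_one]
    rw [conePhi, aeval_monomial, aeval_monomial, Finsupp.prod_fintype _ _ (fun _ => pow_zero _),
      Finsupp.prod_fintype _ _ (fun _ => pow_zero _)]
    simp only [mul_pow, Finset.prod_mul_distrib, Finset.prod_pow_eq_pow_sum]
    rw [show ∑ i, m i = t by rw [← hd, Finsupp.degree_eq_sum]]
    rw [map_mul, map_prod, IsScalarTower.algebraMap_apply ℂ E (Polynomial E)]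
    simp only [map_pow, Polynomial.algebraMap_eq]
    ring
  conv_lhs => rw [p.as_sum, map_sum]
  conv_rhs => rw [p.as_sum, map_sum, map_sum, Finset.sum_mul]
  exact Finset.sum_congr rfl h1

theorem conePhi_coeff (p : MPoly (r + 1)) (i : ℕ) :
    (conePhi ξ p).coeff i = aeval ξ (homogeneousComponent i p) := by
  conv_lhs => rw [← sum_homogeneousComponent p, map_sum, Polynomial.finsetSum_coeff]
  have h1 : ∀ j ∈ Finset.range (p.totalDegree + 1),
      (conePhi ξ (homogeneousComponent j p)).coeff i
        = if j = i then aeval ξ (homogeneousComponent i p) else 0 := by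
    intro j _
    rw [conePhi_homog ξ (homogeneousComponent_isHomogeneous j p), Polynomial.coeff_C_mul,
      Polynomial.coeff_X_pow]
    by_cases h : i = j
    · subst h; simp
    · rw [if_neg h, if_neg (Ne.symm h), mul_zero]
  rw [Finset.sum_congr rfl h1, Finset.sum_ite_eq']
  split_ifs with h
  · rfl
  · rw [homogeneousComponent_eq_zero _ _ (by simpa using h), map_zero]

theorem mem_homI {p : MPoly (r + 1)} :
    p ∈ homI ξ ↔ ∀ i, aeval ξ (homogeneousComponent i p) = 0 := by
  rw [homI, RingHom.mem_ker, Polynomial.ext_iff]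
  simp only [← conePhi_coeff, Polynomial.coeff_zero]

theorem mem_homI_homog {p : MPoly (r + 1)} {t : ℕ} (hp : p.IsHomogeneous t) :
    p ∈ homI ξ ↔ aeval ξ p = 0 := by
  rw [homI, RingHom.mem_ker]
  change conePhi ξ p = 0 ↔ _
  rw [conePhi_homog ξ hp, mul_eq_zero, Polynomial.C_eq_zero]
  simp

theorem homI_prime : (homI ξ).IsPrime := RingHom.ker_isPrime _

theorem homI_homog : IsHomogIdeal (homI ξ) := by
  intro f hf k
  rw [mem_homI_homog ξ (homogeneousComponent_isHomogeneous k f)]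
  exact (mem_homI ξ).mp hf k

theorem hilbNat_homI (t : ℕ) : hilbNat (homI ξ) t = hf ℂ ξ t := by
  have hfin : FiniteDimensional ℂ (homogeneousSubmodule (Fin (r + 1)) ℂ t) := by
    rw [← homogeneousSubmodule_one_pow, homogeneousSubmodule_one_eq_span_X]
    have h : (Submodule.span ℂ (Set.range (X : Fin (r + 1) → MPoly (r + 1)))).FG :=
      Submodule.fg_span (Set.finite_range _)
    exact Submodule.fg_iff_finiteDimensional _ |>.mp (h.pow t)
  rw [hilbNat, degQZ, if_pos (Int.natCast_nonneg t), degQ, hf, linV_pow_eq_map, Int.toNat_natCast]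
  have h1 := finrank_map_add_inf_ker (Ideal.Quotient.mkₐ ℂ (homI ξ)).toLinearMap
    (homogeneousSubmodule (Fin (r + 1)) ℂ t)
  have h2 := finrank_map_add_inf_ker (aeval ξ : MPoly (r + 1) →ₐ[ℂ] E).toLinearMap
    (homogeneousSubmodule (Fin (r + 1)) ℂ t)
  have h3 : homogeneousSubmodule (Fin (r + 1)) ℂ t ⊓
      LinearMap.ker (Ideal.Quotient.mkₐ ℂ (homI ξ)).toLinearMap
      = homogeneousSubmodule (Fin (r + 1)) ℂ t ⊓
        LinearMap.ker (aeval ξ : MPoly (r + 1) →ₐ[ℂ] E).toLinearMap := by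
    ext p
    simp only [Submodule.mem_inf, LinearMap.mem_ker]
    refine and_congr_right fun hp => ?_
    change Ideal.Quotient.mk (homI ξ) p = 0 ↔ aeval ξ p = 0
    rw [Ideal.Quotient.eq_zero_iff_mem]
    exact mem_homI_homog ξ hp
  rw [h3] at h1
  exact Nat.add_right_cancel (h1.trans h2.symm)

/-- A homogeneous prime ideal not containing `x_0` is the ideal of the variety with affine
coordinates `x_j / x_0`. -/
theorem exists_model (I : Ideal (MPoly (r + 1))) (hI : IsHomogIdeal I) (hp : I.IsPrime)
    (h0 : (X 0 : MPoly (r + 1)) ∉ I) :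
    ∃ (E : Type) (_ : Field E) (_ : Algebra ℂ E) (ξ : Fin (r + 1) → E), ξ 0 = 1 ∧
      IntermediateField.adjoin ℂ (Set.range ξ) = ⊤ ∧ homI ξ = I := by
  let A := MPoly (r + 1) ⧸ I
  let L := FractionRing A
  let a : MPoly (r + 1) →ₐ[ℂ] L :=
    (IsScalarTower.toAlgHom ℂ A L).comp (Ideal.Quotient.mkₐ ℂ I)
  have ha : ∀ p, a p = 0 ↔ p ∈ I := by
    intro p
    change algebraMap A L (Ideal.Quotient.mk I p) = 0 ↔ _
    rw [map_eq_zero_iff _ (IsFractionRing.injective A L), Ideal.Quotient.eq_zero_iff_mem]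
  have ha0 : a (X 0) ≠ 0 := fun h => h0 ((ha _).mp h)
  let η : Fin (r + 1) → L := fun j => a (X j) / a (X 0)
  let E := IntermediateField.adjoin ℂ (Set.range η)
  let ξ : Fin (r + 1) → E := fun j => ⟨η j, IntermediateField.subset_adjoin _ _ ⟨j, rfl⟩⟩
  have hval : ∀ p, algebraMap E L (aeval ξ p) = aeval η p := fun p => by
    have h1 := aeval_algebraMap_apply (R := ℂ) L ξ p
    exact h1.symm
  have hhom : ∀ (p : MPoly (r + 1)) (t : ℕ), p.IsHomogeneous t → a (X 0) ^ t * aeval η p = a p := by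
    intro p t hp
    have h1 : ∀ m ∈ p.support, a (X 0) ^ t * aeval η (monomial m (coeff m p))
        = a (monomial m (coeff m p)) := by
      intro m hm
      have hd : m.degree = t := by
        have := hp (MvPolynomial.mem_support_iff.mp hm)
        rwa [Finsupp.degree_eq_weight_one]
      have hm1 : a (monomial m (coeff m p)) = algebraMap ℂ L (coeff m p) * ∏ i, a (X i) ^ m i := by
        rw [monomial_eq, map_mul, Finsupp.prod_fintype _ _ (fun _ => pow_zero _), map_prod]
        simp only [map_pow]
        congr 1
      rw [hm1, aeval_monomial, Finsupp.prod_fintype _ _ (fun _ => pow_zero _)]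
      simp only [η, div_pow, Finset.prod_div_distrib, Finset.prod_pow_eq_pow_sum]
      rw [show ∑ i, m i = t by rw [← hd, Finsupp.degree_eq_sum]]
      rw [mul_left_comm, mul_div_cancel₀ _ (pow_ne_zero _ ha0)]
    conv_lhs => rw [p.as_sum, map_sum, Finset.mul_sum]
    conv_rhs => rw [p.as_sum, map_sum]
    exact Finset.sum_congr rfl h1
  refine ⟨E, inferInstance, inferInstance, ξ, ?_, ?_, ?_⟩
  · apply Subtype.ext
    exact div_self ha0
  · have h1 : IntermediateField.lift (IntermediateField.adjoin ℂ (Set.range ξ)) = E := by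
      rw [IntermediateField.lift_adjoin, ← Set.range_comp]
      rfl
    apply IntermediateField.lift_injective E
    rw [h1, IntermediateField.lift_top]
  · have hcomp : ∀ p i, aeval ξ (homogeneousComponent i p) = 0 ↔ homogeneousComponent i p ∈ I := by
      intro p i
      rw [← ha, ← hhom _ i (homogeneousComponent_isHomogeneous i p), ← hval,
        mul_eq_zero, or_iff_right (pow_ne_zero _ ha0)]
      exact (map_eq_zero (algebraMap E L)).symm
    ext p
    rw [mem_homI]
    constructor
    · intro h
      rw [← sum_homogeneousComponent p]
      exact I.sum_mem fun i _ => (hcomp p i).mp (h i)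
    · intro h i
      exact (hcomp p i).mpr (hI p h i)

theorem homI_le {E' : Type} [Field E'] [Algebra ℂ E'] {ξ : Fin (r + 1) → E}
    {ξ' : Fin (r + 1) → E'} (h : ∀ p : MPoly (r + 1), aeval ξ' p = 0 → aeval ξ p = 0) :
    homI ξ' ≤ homI ξ := fun _ hp =>
  (mem_homI ξ).mpr fun i => h _ ((mem_homI ξ').mp hp i)

/-- Homogenization: strictness of the inclusion of affine ideals passes to the cones. -/
theorem homI_lt {E' : Type} [Field E'] [Algebra ℂ E'] {ξ : Fin (r + 1) → E}
    {ξ' : Fin (r + 1) → E'} (h0 : ξ 0 = 1) (h0' : ξ' 0 = 1)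
    (h : ∀ p : MPoly (r + 1), aeval ξ' p = 0 → aeval ξ p = 0)
    (hne : ∃ p : MPoly (r + 1), aeval ξ' p ≠ 0 ∧ aeval ξ p = 0) :
    homI ξ' < homI ξ := by
  refine lt_of_le_of_ne (homI_le h) fun heq => ?_
  obtain ⟨p, hp', hp⟩ := hne
  let P : MPoly (r + 1) := ∑ i ∈ Finset.range (p.totalDegree + 1),
    X 0 ^ (p.totalDegree - i) * homogeneousComponent i p
  have hP : P.IsHomogeneous p.totalDegree := by
    apply IsHomogeneous.sum
    intro i hi
    have h1 := (isHomogeneous_X_pow (R := ℂ) (0 : Fin (r + 1)) (p.totalDegree - i)).mul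
      (homogeneousComponent_isHomogeneous i p)
    rwa [Nat.sub_add_cancel (by simpa [Nat.lt_succ_iff] using hi)] at h1
  have hev : ∀ {E'' : Type} [Field E''] [Algebra ℂ E''] (ζ : Fin (r + 1) → E''), ζ 0 = 1 →
      aeval ζ P = aeval ζ p := by
    intro E'' _ _ ζ hζ
    conv_rhs => rw [← sum_homogeneousComponent p]
    rw [map_sum, map_sum]
    refine Finset.sum_congr rfl fun i _ => ?_
    rw [map_mul, map_pow, aeval_X, hζ, one_pow, one_mul]
  apply hp'
  rw [← hev ξ' h0', ← mem_homI_homog ξ' hP, heq, mem_homI_homog ξ hP, hev ξ h0, hp]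

theorem ringKrullDim_homI_le {n : ℕ} (htr : Algebra.trdeg ℂ E = n) :
    ringKrullDim (MPoly (r + 1) ⧸ homI ξ) ≤ (n + 1 : ℕ) := by
  obtain ⟨m, _, f, hinj, hint⟩ := exists_integral_inj_algHom_of_quotient (homI ξ)
    (homI_prime ξ).ne_top
  let Ψ : (MPoly (r + 1) ⧸ homI ξ) →ₐ[ℂ] Polynomial E :=
    Ideal.kerLiftAlg (conePhi ξ)
  have hΨ : Function.Injective Ψ := Ideal.kerLiftAlg_injective _
  have hm : m ≤ n + 1 := by
    have h1 := trdeg_le_of_injective ((Ψ.comp f)) (hΨ.comp hinj)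
    rw [MvPolynomial.trdeg_of_isDomain, ← _root_.trdeg_add_eq ℂ E (A := Polynomial E),
      Polynomial.trdeg_of_isDomain, htr] at h1
    simp only [Cardinal.mk_fin, Cardinal.lift_natCast] at h1
    exact_mod_cast h1
  have h2 : ringKrullDim (MPoly (r + 1) ⧸ homI ξ) ≤ ringKrullDim (MvPolynomial (Fin m) ℂ) := by
    let _ : Algebra (MvPolynomial (Fin m) ℂ) (MPoly (r + 1) ⧸ homI ξ) := f.toRingHom.toAlgebra
    have _ : Algebra.IsIntegral (MvPolynomial (Fin m) ℂ) (MPoly (r + 1) ⧸ homI ξ) := ⟨hint⟩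
    refine Order.krullDim_le_of_strictMono (PrimeSpectrum.comap (algebraMap (MvPolynomial (Fin m) ℂ)
      (MPoly (r + 1) ⧸ homI ξ))) fun p q hpq => ?_
    exact Ideal.IsIntegral.comap_lt_comap (R := MvPolynomial (Fin m) ℂ) (I := p.asIdeal)
      (J := q.asIdeal) hpq
  refine h2.trans ?_
  rw [MvPolynomial.ringKrullDim_of_isNoetherianRing, ringKrullDim_eq_zero_of_field, zero_add,
    Nat.card_fin]
  exact_mod_cast hm

theorem isSurface_homI {E' : Type} [Field E'] [Algebra ℂ E'] {ξ : Fin (r + 1) → E}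
    {ξ' : Fin (r + 1) → E'} (hC : IsCurve (homI ξ)) (hlt : homI ξ' < homI ξ)
    (htr : Algebra.trdeg ℂ E' = 2) : IsSurface (homI ξ') := by
  refine ⟨homI_homog ξ', homI_prime ξ', le_antisymm (ringKrullDim_homI_le ξ' (n := 2) htr) ?_⟩
  have _ := homI_prime ξ'
  obtain ⟨x, hx, hx'⟩ := SetLike.exists_of_lt hlt
  have h1 := ringKrullDim_succ_le_of_surjective (Ideal.Quotient.factor hlt.le)
    (Ideal.Quotient.factor_surjective hlt.le) (r := Ideal.Quotient.mk (homI ξ') x)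
    (mem_nonZeroDivisors_of_ne_zero (fun h => hx' (Ideal.Quotient.eq_zero_iff_mem.mp h)))
    (by rw [Ideal.Quotient.factor_mk, Ideal.Quotient.eq_zero_iff_mem]; exact hx)
  rw [hC.2.2] at h1
  exact h1

theorem surfInv_homI {s : ℕ} {b c : ℤ} {N : ℕ} (h : ∀ t : ℕ, N ≤ t →
    (hf ℂ ξ t : ℤ) = s * ((t : ℤ) * (t + 1) / 2) + b * t + c) :
    SurfInv (homI ξ) s (1 - b) (c - 1) := by
  refine ⟨N, fun t ht => ?_⟩
  lift t to ℕ using (by omega)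
  rw [hilbZ, hilbNat_homI, h t (by exact_mod_cast ht)]
  ring

end Cone

end GenusBound

/-! ### Numerical estimate without plateaus -/

namespace GenusBound

section CaseCTail

/-- A nonincreasing positive sequence of drops in which no value up to `s` occurs three times in a
row: bound for the remaining defects. -/
theorem tail_bound {u : ℕ → ℤ} {q0 s : ℕ} (h0 : ∀ q, u (q + 1) ≤ u q)
    (hanti : ∀ q, q0 ≤ q → u (q + 1) - u (q + 2) ≤ u q - u (q + 1))
    (hplat : ∀ q, q0 ≤ q → 1 ≤ u q - u (q + 1) → u q - u (q + 1) ≤ s →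
      u (q + 1) - u (q + 2) = u q - u (q + 1) → u (q + 2) - u (q + 3) ≠ u q - u (q + 1))
    {N : ℕ} (hN : ∀ q, N ≤ q → u q = 0) (σ : ℕ) :
    σ ≤ s → ∀ q, q0 ≤ q → u q - u (q + 1) ≤ σ → u q ≤ σ * (σ + 1) ∧
      ∀ M, 6 * ∑ i ∈ Finset.range M, u (q + 1 + i) ≤ σ * (σ + 1) * (4 * σ - 1) := by
  have hmono : ∀ a b, a ≤ b → u b ≤ u a := fun a b hab => by
    induction b, hab using Nat.le_induction with
    | base => exact le_rfl
    | succ n _ ih => exact (h0 n).trans ih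
  have hpos : ∀ q, 0 ≤ u q := fun q => by
    rw [← hN (max N q) (le_max_left _ _)]
    exact hmono _ _ (le_max_right _ _)
  induction σ with
  | zero =>
    intro _ q hq hle
    have hc : ∀ k, u (q + k) - u (q + k + 1) ≤ 0 := by
      intro k
      induction k with
      | zero => simpa using hle
      | succ k ih =>
        have := hanti (q + k) (by omega)
        rw [show q + (k + 1) = q + k + 1 by ring]
        change u (q + k + 1) - u (q + k + 2) ≤ 0
        linarith
    have hc' : ∀ k, u q ≤ u (q + k) := by
      intro k
      induction k with
      | zero => simp
      | succ k ih => have := hc k; rw [← add_assoc]; linarith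
    have hz : u q ≤ 0 := (hc' N).trans (hN _ (by omega)).le
    refine ⟨by simpa using hz, fun M => ?_⟩
    have h1 : ∑ i ∈ Finset.range M, u (q + 1 + i) ≤ 0 :=
      Finset.sum_nonpos fun i _ => (hmono q _ (by omega)).trans hz
    have h2 : 6 * ∑ i ∈ Finset.range M, u (q + 1 + i) ≤ 0 := by linarith
    simpa using h2
  | succ σ ih =>
    intro hσ q hq hle
    push_cast at hle ⊢
    have hσ0 : (0 : ℤ) ≤ σ := by positivity
    by_cases h1 : u q - u (q + 1) ≤ σ
    · obtain ⟨i1, i2⟩ := ih (by omega) q hq h1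
      refine ⟨by nlinarith, fun M => (i2 M).trans (by nlinarith)⟩
    have e1 : u q - u (q + 1) = σ + 1 := by omega
    have hsplit : ∀ (p M : ℕ), ∑ i ∈ Finset.range M, u (p + 1 + i)
        ≤ u (p + 1) + ∑ i ∈ Finset.range M, u (p + 1 + 1 + i) := by
      intro p M
      have h2 : ∑ i ∈ Finset.range M, u (p + 1 + i) ≤ ∑ i ∈ Finset.range (M + 1), u (p + 1 + i) := by
        rw [Finset.sum_range_succ]; linarith [hpos (p + 1 + M)]
      refine h2.trans ?_
      rw [Finset.sum_range_succ', add_comm]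
      simp only [add_zero]
      refine add_le_add_right (le_of_eq (Finset.sum_congr rfl fun i _ => ?_)) _
      congr 1; ring
    by_cases h2 : u (q + 1) - u (q + 2) ≤ σ
    · obtain ⟨i1, i2⟩ := ih (by omega) (q + 1) (by omega) h2
      refine ⟨by nlinarith, fun M => ?_⟩
      have := hsplit q M
      have := i2 M
      nlinarith
    have e2 : u (q + 1) - u (q + 2) = σ + 1 := by have := hanti q hq; omega
    have h3 : u (q + 2) - u (q + 3) ≤ σ := by
      have a1 := hplat q hq (by omega) (by omega) (by omega)
      have a2 : u (q + 2) - u (q + 3) ≤ u (q + 1) - u (q + 2) := hanti (q + 1) (by omega)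
      omega
    obtain ⟨i1, i2⟩ := ih (by omega) (q + 2) (by omega) h3
    refine ⟨by nlinarith, fun M => ?_⟩
    have a1 := hsplit q M
    have a2 : ∑ i ∈ Finset.range M, u (q + 1 + 1 + i)
        ≤ u (q + 2) + ∑ i ∈ Finset.range M, u (q + 2 + 1 + i) := hsplit (q + 1) M
    have a3 := i2 M
    nlinarith

end CaseCTail

section CaseCNumerics

/-- Lower bounds for the increments `h(j+1) - h(j)` before the first small one. -/
def headL (n s : ℤ) (j : ℕ) : ℤ := if j = 0 then n + 1 else min ((j : ℤ) + 1) s + 1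

/-- Partial sums of `headL`. -/
def headA (n s : ℤ) (J : ℕ) : ℤ := ∑ j ∈ Finset.range J, headL n s j

/-- Partial sums of `headA`. -/
def headS (n s : ℤ) (J : ℕ) : ℤ := ∑ i ∈ Finset.range J, headA n s (i + 1)

theorem headA_succ (n s : ℤ) (J : ℕ) : headA n s (J + 1) = headA n s J + headL n s J :=
  Finset.sum_range_succ _ _

theorem headS_succ (n s : ℤ) (J : ℕ) : headS n s (J + 1) = headS n s J + headA n s (J + 1) :=
  Finset.sum_range_succ _ _

theorem headA_low {n s : ℤ} {J : ℕ} (hs : ((J + 1 : ℕ) : ℤ) ≤ s) :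
    2 * headA n s (J + 1) = (J + 1) ^ 2 + 3 * (J + 1) + 2 * n - 2 := by
  induction J with
  | zero => simp [headA, headL]; ring
  | succ J ih =>
    rw [headA_succ, mul_add, ih (by push_cast at hs ⊢; linarith), headL, if_neg (by omega),
      min_eq_left (by push_cast at hs ⊢; linarith)]
    push_cast
    ring

theorem headS_low {n s : ℤ} {J : ℕ} (hs : (J : ℤ) ≤ s) :
    6 * headS n s J = J * (J + 1) * (J + 5) + 6 * (n - 1) * J := by
  induction J with
  | zero => simp [headS]
  | succ J ih =>
    have h1 := headA_low (n := n) hs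
    have h2 := ih (by push_cast at hs; linarith)
    rw [headS_succ]
    push_cast at h1 ⊢
    linear_combination h2 + 3 * h1

theorem headA_high {n : ℤ} {s : ℕ} (hs : 1 ≤ s) {J : ℕ} (hJ : s ≤ J) :
    2 * headA n s J = 2 * (s + 1) * J - (s * (s - 1) - 2 * (n - 1)) := by
  induction J, hJ using Nat.le_induction with
  | base =>
    obtain ⟨s, rfl⟩ : ∃ s', s = s' + 1 := ⟨s - 1, by omega⟩
    rw [headA_low le_rfl]
    push_cast
    ring
  | succ J hJ ih =>
    rw [headA_succ, mul_add, ih, headL, if_neg (by omega), min_eq_right (by exact_mod_cast (by omega))]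
    push_cast
    ring

theorem headS_high {n : ℤ} {s : ℕ} (hs : 1 ≤ s) {J : ℕ} (hJ : s ≤ J) :
    6 * headS n s J = 3 * (s + 1) * J * (J + 1) - 3 * (s * (s - 1) - 2 * (n - 1)) * J
      + s * (s - 1) * (s - 2) := by
  induction J, hJ using Nat.le_induction with
  | base => rw [headS_low le_rfl]; ring
  | succ J hJ ih =>
    have h1 := headA_high (n := n) hs (J := J + 1) (by omega)
    rw [headS_succ]
    push_cast at h1 ⊢
    linear_combination ih + 3 * h1

/-- The quadratic `2xN - t x(x+1)` on the integers is maximal at `x = N / t`. -/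
theorem quad_max {N t : ℤ} (ht : 0 < t) (x : ℤ) :
    2 * x * N - t * x * (x + 1) ≤ 2 * (N / t) * N - t * (N / t) * (N / t + 1) := by
  have h1 := Int.emod_add_mul_ediv N t
  have h2 := Int.emod_nonneg N ht.ne'
  have h3 := Int.emod_lt_of_pos N ht
  generalize N / t = q at *
  generalize N % t = e at *
  subst h1
  rcases lt_trichotomy x q with h | h | h
  · nlinarith [mul_nonneg (sub_nonneg.mpr (Int.le_sub_one_of_lt h)) (sub_nonneg.mpr h.le),
      mul_nonneg (mul_nonneg (sub_nonneg.mpr (Int.le_sub_one_of_lt h)) (sub_nonneg.mpr h.le)) ht.le,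
      mul_nonneg (sub_nonneg.mpr h.le) h2]
  · subst h; exact le_rfl
  · nlinarith [mul_nonneg (mul_nonneg (sub_nonneg.mpr h) (sub_nonneg.mpr h.le)) ht.le,
      mul_nonneg (sub_nonneg.mpr h.le) (sub_nonneg.mpr h3.le)]

theorem two_binom2 (m : ℤ) : 2 * binom2 m = m * (m - 1) := by
  rw [binom2, Int.mul_ediv_cancel' (Int.even_mul_pred_self m).two_dvd]

theorem pow_large (n : ℕ) (hn : 11 ≤ n) : 12 * n ^ 3 ≤ 2 ^ (n + 3) := by
  induction n, hn using Nat.le_induction with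
  | base => norm_num
  | succ n hn ih =>
    have h1 : 12 * (n + 1) ^ 3 ≤ 2 * (12 * n ^ 3) := by
      obtain ⟨k, rfl⟩ := Nat.exists_eq_add_of_le hn
      ring_nf
      have : 0 ≤ k ^ 3 := Nat.zero_le _
      nlinarith [Nat.zero_le k, Nat.zero_le (k ^ 2)]
    calc 12 * (n + 1) ^ 3 ≤ 2 * (12 * n ^ 3) := h1
      _ ≤ 2 * 2 ^ (n + 3) := by omega
      _ = 2 ^ (n + 1 + 3) := by ring

theorem d0_ge {n : ℕ} (hn : 2 ≤ n) : 8 * (n : ℤ) ^ 3 ≤ d0 ((n + 2 : ℕ) : ℤ) := by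
  by_cases h : n ≤ 10
  · interval_cases n <;> norm_num [d0, show Int.toNat 12 = 12 from rfl]
  · rw [d0, if_neg (by push_cast; omega), if_neg (by push_cast; omega), Int.toNat_natCast]
    have h1 := pow_large n (by omega)
    have h2 : (12 * n ^ 3 : ℤ) ≤ 2 ^ (n + 2 + 1) := by exact_mod_cast h1
    nlinarith [pow_nonneg (by positivity : (0 : ℤ) ≤ n) 3]

/-- The numerical inequality for the finitely many small `n`. -/
theorem threshold_small {n : ℕ} {s c : ℤ} (hn : 2 ≤ n) (hn' : n ≤ 10) (hs1 : (n : ℤ) + 1 ≤ s)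
    (hs2 : s ≤ 2 * n) (hc : c = s * (s - 1) / 2 - ((n : ℤ) - 1)) :
    0 ≤ (d0 ((n + 2 : ℕ) : ℤ) + c) / (s + 1) ∧ c ≤ (d0 ((n + 2 : ℕ) : ℤ) + c) / (s + 1) ∧
    s * (s + 1) * (4 * s - 1) ≤ 3 * ((d0 ((n + 2 : ℕ) : ℤ) + c) / (s + 1)) *
      ((d0 ((n + 2 : ℕ) : ℤ) + c) / (s + 1) + 1 - 2 * c) + s * (s - 1) * (s - 2) := by
  subst hc
  interval_cases n <;> norm_num at hs1 hs2 <;> interval_cases s <;>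
    norm_num [d0, show Int.toNat 12 = 12 from rfl]

/-- The degree threshold, in the form of a lower bound for the index at which the lower bound for
the Hilbert function reaches `d`. -/
theorem threshold_ineq {n : ℕ} {s D I c : ℤ} (hn : 2 ≤ n) (hs1 : (n : ℤ) + 1 ≤ s)
    (hs2 : s ≤ 2 * n) (hD : d0 ((n + 2 : ℕ) : ℤ) ≤ D) (hc : 2 * c = s * (s - 1) - 2 * ((n : ℤ) - 1))
    (hI : D + c < (s + 1) * (I + 1)) :
    s * (s + 1) * (4 * s - 1) ≤ 3 * I * (I + 1 - 2 * c) + s * (s - 1) * (s - 2) := by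
  have hs0 : 0 < s + 1 := by omega
  by_cases hn2 : n ≤ 10
  · obtain ⟨h2, h3, h4⟩ := threshold_small (c := c) hn hn2 hs1 hs2 (by
      have := (Int.even_mul_pred_self s).two_dvd
      omega)
    set I0 := (d0 ((n + 2 : ℕ) : ℤ) + c) / (s + 1) with hI0
    have h1 : I0 ≤ I := by
      have a1 : I0 * (s + 1) ≤ d0 ((n + 2 : ℕ) : ℤ) + c := Int.ediv_mul_le _ hs0.ne'
      by_contra h
      nlinarith [mul_nonneg hs0.le (sub_nonneg.mpr (Int.add_one_le_of_lt (not_le.mp h)))]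
    nlinarith [mul_nonneg (sub_nonneg.mpr h1) (sub_nonneg.mpr h3),
      mul_nonneg (sub_nonneg.mpr h1) (sub_nonneg.mpr (h3.trans h1))]
  · have hn3 : 11 ≤ n := by omega
    have hd : (12 * n ^ 3 : ℤ) ≤ D := by
      have h1 := pow_large n hn3
      rw [d0, if_neg (by push_cast; omega)] at hD
      rw [if_neg (by push_cast; omega), Int.toNat_natCast] at hD
      have h3 : (12 * n ^ 3 : ℤ) ≤ 2 ^ (n + 2 + 1) := by exact_mod_cast h1
      linarith
    have hn4 : (11 : ℤ) ≤ n := by exact_mod_cast hn3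
    generalize (n : ℤ) = x at *
    have hc1 : c ≤ 2 * x ^ 2 - 2 * x + 1 := by nlinarith
    have hc0 : 0 ≤ c := by nlinarith
    have h5 : 5 * x ^ 2 ≤ I := by
      by_contra h
      have h' : I + 1 ≤ 5 * x ^ 2 := by omega
      have h6 : (s + 1) * (I + 1) ≤ (2 * x + 1) * (5 * x ^ 2) := by
        calc (s + 1) * (I + 1) ≤ (s + 1) * (5 * x ^ 2) := by gcongr
          _ ≤ _ := by gcongr
      nlinarith [mul_nonneg (sq_nonneg x) (sub_nonneg.mpr hn4)]
    have h7 : 5 * x ^ 2 * (x ^ 2) ≤ I * (I + 1 - 2 * c) := by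
      apply mul_le_mul h5 (by nlinarith) (by positivity) (by nlinarith)
    have h8 : s * (s + 1) * (4 * s - 1) ≤ 2 * x * (2 * x + 1) * (8 * x) := by
      gcongr
      · nlinarith
      · linarith
    have h9 : 0 ≤ s * (s - 1) * (s - 2) := by
      apply mul_nonneg (mul_nonneg _ _) <;> linarith
    nlinarith [pow_nonneg (by linarith : (0 : ℤ) ≤ x) 3, mul_nonneg (pow_nonneg (by linarith : (0 : ℤ) ≤ x) 3) (sub_nonneg.mpr hn4), mul_nonneg (pow_nonneg (by linarith : (0 : ℤ) ≤ x) 2) (sub_nonneg.mpr hn4)]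

theorem caseC_num {n s : ℕ} {D : ℤ} (hn : 2 ≤ n) (hs1 : n + 1 ≤ s)
    (hs2 : s ≤ 2 * n) (hD : d0 ((n + 2 : ℕ) : ℤ) ≤ D) (J : ℕ) :
    6 * (J * D - headS n s J) + s * (s + 1) * (4 * s - 1)
      ≤ 6 * (binom2 (D / s) * s + D / s * (D % s)) := by
  have hs0 : (0 : ℤ) < s := by exact_mod_cast (by omega)
  obtain ⟨c, hc⟩ : ∃ c : ℤ, 2 * c = s * (s - 1) - 2 * ((n : ℤ) - 1) := by
    obtain ⟨c, hc⟩ := (Int.even_mul_pred_self (s : ℤ)).two_dvd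
    exact ⟨c - (n - 1), by rw [mul_sub, ← hc]⟩
  have key := threshold_ineq (n := n) (s := s) (D := D) (I := (D + c) / (s + 1)) (c := c) hn
    (by exact_mod_cast hs1) (by exact_mod_cast hs2) hD hc
    ((Int.lt_mul_ediv_self_add (x := D + c) (k := (s : ℤ) + 1) (by linarith)).trans_eq (by ring))
  have hDs : (s : ℤ) ^ 2 + 3 * s + 2 * n - 2 ≤ 2 * D := by
    have hs1' : (n : ℤ) + 1 ≤ s := by exact_mod_cast hs1
    have hs2' : (s : ℤ) ≤ 2 * n := by exact_mod_cast hs2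
    have hn' : (2 : ℤ) ≤ n := by exact_mod_cast hn
    have h1 : 4 * (n : ℤ) ^ 2 + 8 * n ≤ 2 * D := by
      nlinarith [d0_ge hn, mul_nonneg (sq_nonneg (n : ℤ)) (sub_nonneg.mpr hn')]
    nlinarith
  have hbig : ∀ J : ℕ, s ≤ J → 6 * (J * D - headS n s J) + s * (s + 1) * (4 * s - 1)
      ≤ 6 * (binom2 (D / s) * s + D / s * (D % s)) := by
    intro J hJ
    have h1 := headS_high (n := n) (by omega : 1 ≤ s) hJ
    have h2 := quad_max (N := D + c) (t := s + 1) (by linarith) J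
    have h3 := quad_max (N := D) (t := s) hs0 ((D + c) / (s + 1))
    have h4 := two_binom2 (D / s)
    have h5 := Int.emod_add_mul_ediv D s
    generalize (D + c) / (s + 1) = I at *
    generalize binom2 (D / s) = B at *
    generalize D / s = m at *
    have h6 : 2 * (B * s + m * (D % s)) = 2 * m * D - s * m * (m + 1) := by
      linear_combination s * h4 + 2 * m * h5
    rw [show 6 * (J * D - headS n s J) = 6 * J * D - 6 * headS n s J by ring, h1]
    rw [← hc]
    nlinarith
  rcases le_total s J with hJ | hJ
  · exact hbig J hJ
  · refine le_trans ?_ (hbig s le_rfl)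
    suffices h : (J : ℤ) * D - headS n s J ≤ s * D - headS n s s by linarith
    have hstep : ∀ K : ℕ, J ≤ K → K ≤ s →
        (J : ℤ) * D - headS n s J ≤ K * D - headS n s K := by
      intro K hK
      induction K, hK using Nat.le_induction with
      | base => exact fun _ => le_rfl
      | succ K hK ih =>
        intro hKs
        have h1 := ih (by omega)
        have h2 := headA_low (n := n) (s := s) (J := K) (by exact_mod_cast hKs)
        have h3 : (K : ℤ) + 1 ≤ s := by exact_mod_cast hKs
        rw [headS_succ]
        push_cast
        nlinarith
    exact hstep s hJ le_rfl

end CaseCNumerics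

end GenusBound

/-! ### The bound without plateaus -/

namespace GenusBound

section CaseCGlue

/-- If the first difference of the Hilbert function of the general hyperplane section never
takes a small value three times in a row, the genus is small. -/
theorem caseC {h : ℕ → ℕ} {n s : ℕ} {d : ℤ} (hn : 2 ≤ n) (hs1 : n + 1 ≤ s)
    (hs2 : s ≤ 2 * n) (hD : d0 ((n + 2 : ℕ) : ℤ) ≤ d - 1) (h0 : h 0 = 1) (h1 : h 1 = n + 2)
    (hmono : ∀ t, h t ≤ h (t + 1)) {N : ℕ} (hN : ∀ t, N ≤ t → (h t : ℤ) = d)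
    (hanti : ∀ q, h (q + 1) ≤ h q + (q + 1) → ∀ q', q ≤ q' →
      h (q' + 2) + h q' ≤ h (q' + 1) + h (q' + 1))
    (hplat : ∀ q σ, 1 ≤ σ → σ ≤ q + 1 → σ ≤ s → h (q + 1) = h q + σ →
      h (q + 2) = h (q + 1) + σ → h (q + 3) ≠ h (q + 2) + σ) (M : ℕ) :
    ∑ i ∈ Finset.range M, (d - h (i + 1))
      ≤ binom2 ((d - 1) / s) * s + (d - 1) / s * ((d - 1) % s) := by
  classical
  have hex : ∃ q, h (q + 1) ≤ h q + min (q + 1) s := by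
    refine ⟨N, ?_⟩
    have a := hN N le_rfl
    have b := hN (N + 1) (by omega)
    omega
  obtain ⟨q0, hq0, hmin⟩ : ∃ q0, h (q0 + 1) ≤ h q0 + min (q0 + 1) s ∧
      ∀ q < q0, h q + min (q + 1) s + 1 ≤ h (q + 1) := by
    refine ⟨Nat.find hex, Nat.find_spec hex, fun q hq => ?_⟩
    have := Nat.find_min hex hq
    omega
  have hcz : ∀ q, q0 ≤ q → h (q + 1) ≤ h q + min (q0 + 1) s := by
    intro q hq
    induction q, hq using Nat.le_induction with
    | base => exact hq0
    | succ q hq ih =>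
      have := hanti q0 (by omega) q hq
      change h (q + 2) ≤ _
      omega
  set u : ℕ → ℤ := fun q => d - h q with hu
  have key := tail_bound (u := u) (q0 := q0) (s := s)
    (fun q => by have := hmono q; simp only [hu]; omega)
    (fun q hq => by have := hanti q0 (by omega) q hq; simp only [hu]; omega)
    (fun q hq a1 a2 a3 a4 => by
      have b1 := hcz q hq
      have b2 := hmono q
      simp only [hu] at a1 a2 a3 a4
      exact hplat q (h (q + 1) - h q) (by omega) (by omega) (by omega) (by omega) (by omega)
        (by omega))
    (N := N) (fun q hq => by have := hN q hq; simp only [hu]; omega) s le_rfl q0 le_rfl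
    (by simp only [hu]; omega)
  have hhead : ∀ i, i ≤ q0 → 1 + headA n s i ≤ h i := by
    intro i
    induction i with
    | zero => intro _; simp [headA, h0]
    | succ i ih =>
      intro hi
      have a := ih (by omega)
      have b := hmin i (by omega)
      rw [headA_succ]
      rcases Nat.eq_zero_or_pos i with rfl | hi0
      · simp [headA, headL, h1]; omega
      · rw [headL, if_neg (by omega)]
        have : ((min (i + 1) s : ℕ) : ℤ) = min ((i : ℤ) + 1) s := by push_cast; rfl
        omega
  have hsum : ∑ i ∈ Finset.range q0, u (i + 1) ≤ q0 * (d - 1) - headS n s q0 := by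
    have : (q0 : ℤ) * (d - 1) - headS n s q0
        = ∑ i ∈ Finset.range q0, ((d - 1) - headA n s (i + 1)) := by
      rw [Finset.sum_sub_distrib, headS]; simp; ring
    rw [this]
    refine Finset.sum_le_sum fun i hi => ?_
    have := hhead (i + 1) (by have := Finset.mem_range.mp hi; omega)
    simp only [hu]; omega
  have hpos : ∀ i, 0 ≤ u i := by
    have hm : Monotone h := monotone_nat_of_le_succ hmono
    intro i
    have a := hN (max N i) (le_max_left _ _)
    have b := hm (le_max_right N i)
    simp only [hu]; omega
  have hMle : ∑ i ∈ Finset.range M, u (i + 1) ≤ ∑ i ∈ Finset.range (q0 + M), u (i + 1) :=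
    Finset.sum_le_sum_of_subset_of_nonneg (Finset.range_mono (by omega)) fun i _ _ => hpos _
  rw [Finset.sum_range_add] at hMle
  have hk := key.2 M
  have hc := caseC_num (D := d - 1) hn hs1 hs2 hD q0
  have e : ∑ i ∈ Finset.range M, u (q0 + 1 + i) = ∑ x ∈ Finset.range M, u (q0 + x + 1) :=
    Finset.sum_congr rfl fun i _ => by congr 1; omega
  rw [e] at hk
  have : 6 * ∑ i ∈ Finset.range M, u (i + 1) ≤ 6 * (binom2 ((d - 1) / s) * s + (d - 1) / s * ((d - 1) % s)) := by
    linarith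
  simp only [hu] at this
  linarith

end CaseCGlue

end GenusBound

/-! ### Summation for points on a curve -/

namespace GenusBound

section CaseDNum

theorem sum_ramp_le (a : ℤ) (ha : 0 ≤ a) (m : ℕ) :
    2 * ∑ i ∈ Finset.range m, max 0 (a - i) ≤ a * (a + 1) := by
  induction m generalizing a with
  | zero => simp; positivity
  | succ m ih =>
    rw [Finset.sum_range_succ']
    rcases ha.eq_or_lt with rfl | h
    · rw [Finset.sum_eq_zero fun i _ => max_eq_left (by push_cast; omega)]
      simp
    · have := ih (a - 1) (by omega)
      have e : ∀ i : ℕ, a - ((i + 1 : ℕ) : ℤ) = a - 1 - i := fun i => by push_cast; ring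
      simp only [e]
      rw [max_eq_right (by simpa using ha)]
      push_cast
      nlinarith

/-- Summation of the lower bounds for the Hilbert function of the general hyperplane section of
a curve on a surface of degree `s` and sectional genus at most `π`. -/
theorem caseD_num {h : ℕ → ℕ} {d s π π0 : ℤ} {r : ℕ} (hs : 0 < s) (hd : 1 ≤ d)
    (hπ : π ≤ π0) (hπs : 2 * π ≤ s)
    (hle : ∀ i, (h i : ℤ) ≤ d)
    (hlow : ∀ i : ℕ, 1 ≤ i → (i : ℤ) ≤ (d - 1) / s → 1 + i * s - max π (π0 - i + 1) ≤ h i)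
    (hhigh : ∀ t : ℕ, (d - 1) / s + 1 ≤ t → d - max 0 ((2 * π - (t * s - d)) / 2) ≤ h t)
    (M : ℕ) :
    ∑ i ∈ Finset.range M, (d - h (i + 1)) ≤ Gstar r d s π (-(binom2 (π0 - π + 1))) := by
  obtain ⟨m, hm⟩ : ∃ m : ℕ, (d - 1) / s = m :=
    ⟨((d - 1) / s).toNat, (Int.toNat_of_nonneg (Int.ediv_nonneg (by omega) hs.le)).symm⟩
  rw [Gstar, hm]
  rw [hm] at hlow hhigh
  set ε := (d - 1) % s with hε
  have hdm : d = m * s + ε + 1 := by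
    have := Int.emod_add_mul_ediv (d - 1) s
    rw [hm] at this
    linarith
  have hεs : ε < s := Int.emod_lt_of_pos _ hs
  have hle2 : ∑ i ∈ Finset.range M, (d - h (i + 1)) ≤
      ∑ i ∈ Finset.range (m + 1 + M), (d - (h (i + 1) : ℤ)) :=
    Finset.sum_le_sum_of_subset_of_nonneg (Finset.range_mono (by omega)) fun i _ _ => by
      have := hle (i + 1); omega
  refine hle2.trans ?_
  rw [Finset.sum_range_add, Finset.sum_range_succ]
  have h3 : ∑ x ∈ Finset.range M, (d - (h (m + 1 + x + 1) : ℤ)) ≤ 0 := by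
    refine Finset.sum_nonpos fun x _ => ?_
    have a := hhigh (m + 1 + x + 1) (by push_cast; omega)
    have b : (2 * π - (((m + 1 + x + 1 : ℕ) : ℤ) * s - d)) / 2 ≤ 0 := by
      have : (((m + 1 + x + 1 : ℕ) : ℤ) * s - d) ≥ s := by
        push_cast
        rw [hdm]
        nlinarith [mul_nonneg (Int.natCast_nonneg x) hs.le]
      omega
    rw [max_eq_left b] at a
    omega
  have h2 : d - (h (m + 1) : ℤ) ≤ max 0 ((2 * π - (s - 1 - ε)) / 2) := by
    have a := hhigh (m + 1) (by push_cast; omega)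
    have e : (((m + 1 : ℕ) : ℤ) * s - d) = s - 1 - ε := by push_cast; rw [hdm]; ring
    rw [e] at a
    linarith
  have h1 : 2 * ∑ i ∈ Finset.range m, (d - (h (i + 1) : ℤ)) ≤
      2 * (binom2 m * s + m * (ε + π) + binom2 (π0 - π + 1)) := by
    have b : ∀ i ∈ Finset.range m, d - (h (i + 1) : ℤ) ≤
        (d - 1 + π - s) - s * i + max 0 (π0 - π - i) := by
      intro i hi
      have hi := Finset.mem_range.mp hi
      have := hlow (i + 1) (by omega) (by exact_mod_cast hi)
      have e : max π (π0 - ((i + 1 : ℕ) : ℤ) + 1) = π + max 0 (π0 - π - i) := by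
        push_cast; omega
      rw [e] at this
      push_cast at this
      linarith
    have c := Finset.sum_le_sum b
    have g : ∀ m : ℕ, 2 * ∑ i ∈ Finset.range m, (i : ℤ) = m * (m - 1) := by
      intro m
      induction m with
      | zero => simp
      | succ m ih => rw [Finset.sum_range_succ, mul_add, ih]; push_cast; ring
    refine (mul_le_mul_of_nonneg_left c (by norm_num : (0 : ℤ) ≤ 2)).trans ?_
    rw [Finset.sum_add_distrib, Finset.sum_sub_distrib, ← Finset.mul_sum]
    simp only [Finset.sum_const, Finset.card_range, nsmul_eq_mul]
    have t1 := two_binom2 (m : ℤ)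
    have t2 := two_binom2 (π0 - π + 1)
    have t3 := sum_ramp_le (π0 - π) (by omega) m
    have t4 := g m
    have t5 : s * (2 * ∑ i ∈ Finset.range m, (i : ℤ)) = s * (m * (m - 1)) := by rw [t4]
    have t6 : (m : ℤ) * d = m * (m * s + ε + 1) := by rw [← hdm]
    have t7 : s * (2 * binom2 m) = s * (m * (m - 1)) := by rw [t1]
    nlinarith
  linarith

end CaseDNum

end GenusBound

/-! ### Persistence of the kernel -/

namespace GenusBound

open Module

section KerPersist

set_option linter.unusedSectionVars false

variable {K R F : Type*} [Field K] [CommRing R] [Algebra K R] [Field F] [Algebra K F]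

theorem mulLeft_mem_pow {V : Submodule K R} {l v x : R} {t : ℕ} (hv : v ∈ V)
    (hx : x ∈ (V ^ t).map (LinearMap.mulLeft K l)) :
    v * x ∈ (V ^ (t + 1)).map (LinearMap.mulLeft K l) := by
  obtain ⟨a, ha, rfl⟩ := hx
  refine ⟨v * a, ?_, ?_⟩
  · rw [pow_succ']
    exact Submodule.mul_mem_mul hv ha
  · simp only [LinearMap.mulLeft_apply]; ring

theorem mulLeft_pow_le {V : Submodule K R} (h1 : (1 : R) ∈ V) {l : R} {a b : ℕ} (h : a ≤ b) :
    (V ^ a).map (LinearMap.mulLeft K l) ≤ (V ^ b).map (LinearMap.mulLeft K l) :=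
  Submodule.map_mono (pow_mono_sub h1 h)

/-- Let `ρ` be the restriction to the hyperplane section `l = 0`, onto a finite field extension.
If the section is cut out in degree `t ≥ 3` exactly by `l`, the same holds in degree `t + 1`,
because `V^(t-1)` already surjects onto `F`. -/
theorem ker_persist_of_three (ρ : R →ₐ[K] F) {V : Submodule K R} (h1 : (1 : R) ∈ V) {l : R}
    {t : ℕ} (htop : (V ^ (t + 1)).map ρ.toLinearMap = ⊤)
    (hker : ∀ x ∈ V ^ (t + 2), ρ x = 0 → x ∈ (V ^ (t + 1)).map (LinearMap.mulLeft K l)) :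
    ∀ x ∈ V ^ (t + 3), ρ x = 0 → x ∈ (V ^ (t + 2)).map (LinearMap.mulLeft K l) := by
  have hsplit : ∀ x ∈ V ^ (t + 3), ∃ y ∈ V ^ (t + 2),
      x - y ∈ (V ^ (t + 2)).map (LinearMap.mulLeft K l) ∧ ρ (x - y) = 0 := by
    intro x hx
    rw [pow_succ'] at hx
    refine Submodule.mul_induction_on hx (fun v hv x hx => ?_) (fun x y hx hy => ?_)
    · obtain ⟨x', hx', e⟩ : ρ x ∈ (V ^ (t + 1)).map ρ.toLinearMap := by rw [htop]; trivial
      have e : ρ x' = ρ x := e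
      refine ⟨v * x', ?_, ?_, ?_⟩
      · rw [pow_succ' _ (t + 1)]; exact Submodule.mul_mem_mul hv hx'
      · rw [← mul_sub]
        refine mulLeft_mem_pow hv (hker _ (Submodule.sub_mem _ hx (pow_mono_sub h1 (by omega) hx'))
          (by rw [map_sub, e, sub_self]))
      · rw [← mul_sub, map_mul, map_sub, e, sub_self, mul_zero]
    · obtain ⟨a, ha, ha', ha''⟩ := hx
      obtain ⟨b, hb, hb', hb''⟩ := hy
      refine ⟨a + b, Submodule.add_mem _ ha hb, ?_, ?_⟩
      · rw [add_sub_add_comm]; exact Submodule.add_mem _ ha' hb'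
      · rw [add_sub_add_comm, map_add, ha'', hb'', add_zero]
  intro x hx hρ
  obtain ⟨y, hy, hxy, hr⟩ := hsplit x hx
  have : ρ y = 0 := by
    rw [map_sub, hρ, zero_sub, neg_eq_zero] at hr; exact hr
  have := mulLeft_pow_le h1 (Nat.le_succ _) (hker y hy this)
  simpa using Submodule.add_mem _ hxy this

/-- The case `t = 2`: a functional on the cubics that vanishes on the multiples of `l` induces
a symmetric trilinear form on the linear forms of the section; its radical `N` is shown to be
everything by comparing `dim (N · V)` with the linear Cauchy–Davenport bound. -/
theorem ker_persist_two (H : NoStab K F) [FiniteDimensional K F] (ρ : R →ₐ[K] F)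
    {V : Submodule K R} [FiniteDimensional K V] (h1 : (1 : R) ∈ V) {l : R} (hl : ρ l = 0)
    (hlV : l ∈ V) {n : ℕ} (hV : finrank K V = n + 2)
    (hρV : finrank K (V.map ρ.toLinearMap) = n + 1) (hs : finrank K F ≤ 2 * n)
    (htop : (V ^ 2).map ρ.toLinearMap = ⊤)
    (hker : ∀ x ∈ V ^ 2, ρ x = 0 → x ∈ (V ^ 1).map (LinearMap.mulLeft K l)) :
    ∀ x ∈ V ^ 3, ρ x = 0 → x ∈ (V ^ 2).map (LinearMap.mulLeft K l) := by
  intro x hx hρx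
  by_contra hcon
  obtain ⟨φ, hφx, hφ⟩ := Submodule.exists_le_ker_of_notMem hcon
  -- a section of `V^2 → F`
  have hsurj : Function.Surjective (ρ.toLinearMap.domRestrict (V ^ 2)) := by
    intro f
    obtain ⟨a, ha, e⟩ : f ∈ (V ^ 2).map ρ.toLinearMap := by rw [htop]; trivial
    exact ⟨⟨a, ha⟩, e⟩
  obtain ⟨σ, hσ⟩ := LinearMap.exists_rightInverse_of_surjective _
    (LinearMap.range_eq_top.mpr hsurj)
  have hσ : ∀ f, ρ (σ f : R) = f := fun f => LinearMap.congr_fun hσ f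
  let τ : F →ₗ[K] R := (V ^ 2).subtype ∘ₗ σ
  have hτ : ∀ f, ρ (τ f) = f := hσ
  have hτV : ∀ f, τ f ∈ V ^ 2 := fun f => (σ f).2
  let ψ : R →ₗ[K] K := φ - φ ∘ₗ τ ∘ₗ ρ.toLinearMap
  have hψ : ∀ z, ψ z = φ z - φ (τ (ρ z)) := fun z => rfl
  have hψl : ∀ z ∈ (V ^ 2).map (LinearMap.mulLeft K l), ψ z = 0 := by
    intro z hz
    have h2 : φ z = 0 := hφ hz
    obtain ⟨a, ha, rfl⟩ := hz
    rw [hψ, h2, LinearMap.mulLeft_apply, map_mul, hl, zero_mul, map_zero, map_zero, sub_zero]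
  have hdiff : ∀ z ∈ V ^ 2, z - τ (ρ z) ∈ (V ^ 1).map (LinearMap.mulLeft K l) := fun z hz =>
    hker _ (Submodule.sub_mem _ hz (hτV _)) (by rw [map_sub, hτ, sub_self])
  have hψ2 : ∀ z ∈ V ^ 2, ψ z = 0 := by
    intro z hz
    have : φ (z - τ (ρ z)) = 0 := hφ (mulLeft_pow_le h1 (by omega) (hdiff z hz))
    rw [hψ, ← map_sub, this]
  have hψv : ∀ v ∈ V, ∀ z ∈ V ^ 2, ψ (v * z) = ψ (v * τ (ρ z)) := by
    intro v hv z hz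
    have := hψl _ (mulLeft_mem_pow hv (hdiff z hz))
    rw [mul_sub, map_sub] at this
    exact sub_eq_zero.mp this
  let Λ : R →ₗ[K] Dual K F := ((LinearMap.mul K R).compr₂ ψ).compl₂ τ
  have hΛ : ∀ v f, Λ v f = ψ (v * τ f) := fun v f => rfl
  set N := V ⊓ LinearMap.ker Λ with hN
  have hNmem : ∀ w ∈ N, ∀ z ∈ V ^ 2, ψ (w * z) = 0 := by
    intro w hw z hz
    rw [hψv w hw.1 z hz, ← hΛ, LinearMap.mem_ker.mp hw.2]; rfl
  have hmemN : ∀ w ∈ V, (∀ z ∈ V ^ 2, ψ (w * z) = 0) → w ∈ N := fun w hw h =>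
    ⟨hw, LinearMap.mem_ker.mpr (LinearMap.ext fun f => h _ (hτV f))⟩
  have h1N : (1 : R) ∈ N := hmemN 1 h1 fun z hz => by rw [one_mul]; exact hψ2 z hz
  have hlN : l ∈ N := hmemN l hlV fun z hz => hψl _ ⟨z, hz, rfl⟩
  have iN : FiniteDimensional K N := Submodule.finiteDimensional_of_le inf_le_left
  -- dimension of the image of the radical in the section
  have hkerV : finrank K ↥(V ⊓ LinearMap.ker ρ.toLinearMap) = 1 := by
    have := finrank_map_add_inf_ker ρ.toLinearMap V
    omega
  have hρN : finrank K N ≤ finrank K (N.map ρ.toLinearMap) + 1 := by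
    have a := finrank_map_add_inf_ker ρ.toLinearMap N
    have i : FiniteDimensional K ↥(V ⊓ LinearMap.ker ρ.toLinearMap) :=
      Submodule.finiteDimensional_of_le inf_le_left
    have b : finrank K ↥(N ⊓ LinearMap.ker ρ.toLinearMap) ≤
        finrank K ↥(V ⊓ LinearMap.ker ρ.toLinearMap) :=
      Submodule.finrank_mono (inf_le_inf_right _ inf_le_left)
    omega
  set NV := N.map ρ.toLinearMap * V.map ρ.toLinearMap with hNV
  have hann : V.map Λ ≤ NV.dualAnnihilator := by
    rintro _ ⟨v, hv, rfl⟩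
    rw [Submodule.mem_dualAnnihilator]
    intro f hf
    refine Submodule.mul_induction_on hf (fun a ha b hb => ?_) (fun a b ha hb => ?_)
    · obtain ⟨w, hw, rfl⟩ := ha
      obtain ⟨z, hz, rfl⟩ := hb
      have hwz : w * z ∈ V ^ 2 := by rw [pow_two]; exact Submodule.mul_mem_mul hw.1 hz
      have hvz : v * z ∈ V ^ 2 := by rw [pow_two]; exact Submodule.mul_mem_mul hv hz
      have e : ρ.toLinearMap w * ρ.toLinearMap z = ρ (w * z) := (map_mul ρ w z).symm
      rw [e, hΛ, ← hψv v hv _ hwz, show v * (w * z) = w * (v * z) by ring]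
      exact hNmem w hw _ hvz
    · rw [map_add, ha, hb, add_zero]
  have hrank := finrank_map_add_inf_ker Λ V
  have hle : finrank K (V.map Λ) ≤ finrank K NV.dualAnnihilator := Submodule.finrank_mono hann
  have hsum := Subspace.finrank_add_finrank_dualAnnihilator_eq NV
  have hcd := linear_cauchy_davenport H _ (N.map ρ.toLinearMap) (V.map ρ.toLinearMap)
    inferInstance inferInstance
    (fun h => one_ne_zero (α := F) (by
      have : (1 : F) ∈ N.map ρ.toLinearMap := ⟨1, h1N, map_one ρ⟩
      rwa [h, Submodule.mem_bot] at this))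
    (fun h => one_ne_zero (α := F) (by
      have : (1 : F) ∈ V.map ρ.toLinearMap := ⟨1, h1, map_one ρ⟩
      rwa [h, Submodule.mem_bot] at this)) le_rfl
  rw [← hNV] at hcd
  have hzero : V.map Λ = ⊥ := by
    rcases hcd with h | h
    · rw [h, Submodule.dualAnnihilator_top] at hann
      exact le_bot_iff.mp hann
    · exfalso
      have hrank' : finrank K (V.map Λ) + finrank K N = finrank K V := hrank
      omega
  have hψ3 : ∀ z ∈ V ^ 3, ψ z = 0 := by
    intro z hz
    rw [pow_succ'] at hz
    refine Submodule.mul_induction_on hz (fun v hv z hz => ?_) (fun a b ha hb => ?_)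
    · have : Λ v ∈ V.map Λ := ⟨v, hv, rfl⟩
      rw [hzero, Submodule.mem_bot] at this
      rw [hψv v hv z hz, ← hΛ, this]; rfl
    · rw [map_add, ha, hb, add_zero]
  have := hψ3 x hx
  rw [hψ, hρx, map_zero, map_zero, sub_zero] at this
  exact hφx this

end KerPersist

end GenusBound

/-! ### Persistence of minimal growth for a curve section -/

namespace GenusBound

open Module MvPolynomial
open scoped TensorProduct Pointwise

section BaseChange

set_option linter.unusedSectionVars false

variable {r : ℕ} {k E K F : Type*} [Field k] [Field E] [Field K] [Field F] [Algebra k E]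
    [Algebra k K] [Algebra E F] [Algebra K F] [Algebra k F] [IsScalarTower k K F]
    [IsScalarTower k E F] {u : Fin (r + 1) → K} {ξ : Fin (r + 1) → E}

/-- The coordinates in the constant extension `K ⊗ E`. -/
def tenX {r : ℕ} (k : Type*) {E : Type*} (K : Type*) [Field k] [Field E] [Field K] [Algebra k E]
    [Algebra k K] (ξ : Fin (r + 1) → E) : Fin (r + 1) → K ⊗[k] E := fun j => 1 ⊗ₜ ξ j

theorem linV_tenX_pow (t : ℕ) :
    linV K (tenX k K ξ) ^ t = (linV k ξ ^ t).baseChange K := by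
  rw [linV, linV, Submodule.span_pow, Submodule.span_pow, Submodule.baseChange_span]
  have e : Set.range (tenX k K ξ) =
      (Algebra.TensorProduct.includeRight : E →ₐ[k] K ⊗[k] E) '' Set.range ξ := by
    rw [← Set.range_comp]; rfl
  rw [e, ← Set.image_pow]
  rfl

theorem finrank_tenX_pow (t : ℕ) : finrank K ↥(linV K (tenX k K ξ) ^ t) = hf k ξ t := by
  rw [linV_tenX_pow, hf, ← Module.finrank_baseChange (R := K) (S := k)]
  symm
  exact LinearEquiv.finrank_eq (Submodule.toBaseChange.toLinearEquiv K _)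

/-- Polynomials in `u` over `E`, as elements of `K ⊗ E`. -/
noncomputable def polT (u : Fin (r + 1) → K) : MvPolynomial (Fin (r + 1)) E →ₐ[k] K ⊗[k] E :=
  ((Algebra.TensorProduct.comm k E K).toAlgHom.comp
    (Algebra.TensorProduct.map (AlgHom.id k E) (aeval (R := k) u))).comp
    ((algebraTensorAlgEquiv k E).symm.toAlgHom.restrictScalars k)

theorem polT_apply (u : Fin (r + 1) → K) (e : E) (p : MvPolynomial (Fin (r + 1)) k) :
    polT (E := E) u (C e * map (algebraMap k E) p) = aeval u p ⊗ₜ[k] e := by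
  have : C e * map (algebraMap k E) p = algebraTensorAlgEquiv k E (e ⊗ₜ p) := by
    rw [algebraTensorAlgEquiv_tmul, MvPolynomial.smul_eq_C_mul]
  rw [this, polT]
  change Algebra.TensorProduct.comm k E K (Algebra.TensorProduct.map (AlgHom.id k E)
    (aeval (R := k) u) ((algebraTensorAlgEquiv k E).symm (algebraTensorAlgEquiv k E (e ⊗ₜ p)))) = _
  rw [AlgEquiv.symm_apply_apply]
  rfl

theorem polT_injective (S : GenSec k E K F u ξ) :
    Function.Injective (polT (k := k) (E := E) u) := by
  have h : Function.Injective (LinearMap.lTensor E (aeval (R := k) u).toLinearMap) :=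
    Module.Flat.lTensor_preserves_injective_linearMap _ S.indepK
  have h2 : Function.Injective (Algebra.TensorProduct.map (AlgHom.id k E) (aeval (R := k) u)) := h
  exact ((Algebra.TensorProduct.comm k E K).injective.comp h2).comp
    (algebraTensorAlgEquiv k E).symm.injective

theorem polT_clear (S : GenSec k E K F u ξ) (x : K ⊗[k] E) :
    ∃ (q : MvPolynomial (Fin (r + 1)) k) (P : MvPolynomial (Fin (r + 1)) E), aeval u q ≠ 0 ∧
      (aeval u q ⊗ₜ[k] (1 : E)) * x = polT u P := by
  induction x using TensorProduct.induction_on with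
  | zero => exact ⟨1, 0, by simp, by simp⟩
  | tmul a e =>
    obtain ⟨p, q, hq, h⟩ := S.fracK a
    refine ⟨q, C e * map (algebraMap k E) p, hq, ?_⟩
    rw [polT_apply, Algebra.TensorProduct.tmul_mul_tmul, one_mul, mul_comm, h]
  | add x y hx hy =>
    obtain ⟨q, P, hq, h⟩ := hx
    obtain ⟨q', P', hq', h'⟩ := hy
    refine ⟨q * q', map (algebraMap k E) q' * P + map (algebraMap k E) q * P', ?_, ?_⟩
    · rw [map_mul]; exact mul_ne_zero hq hq'
    · have e : ∀ q : MvPolynomial (Fin (r + 1)) k,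
          polT (E := E) u (map (algebraMap k E) q) = aeval u q ⊗ₜ[k] (1 : E) := fun q => by
        rw [← polT_apply, C_1, one_mul]
      rw [map_add, map_mul (polT u), map_mul (polT u), ← h, ← h', e, e, map_mul]
      have e2 : (aeval u q * aeval u q') ⊗ₜ[k] (1 : E)
          = (aeval u q ⊗ₜ[k] (1 : E)) * (aeval u q' ⊗ₜ[k] (1 : E)) := by
        rw [Algebra.TensorProduct.tmul_mul_tmul, one_mul]
      rw [e2]
      ring

/-- The generic linear form in `K ⊗ E`. -/
noncomputable def ellT (k : Type*) {E K : Type*} [Field k] [Field E] [Field K] [Algebra k E]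
    [Algebra k K] (u : Fin (r + 1) → K) (ξ : Fin (r + 1) → E) : K ⊗[k] E := ∑ j, u j ⊗ₜ ξ j

theorem polT_ellP : polT u (ellP ξ) = ellT k u ξ := by
  rw [ellP, map_sum, ellT]
  refine Finset.sum_congr rfl fun j _ => ?_
  have := polT_apply (k := k) u (ξ j) (X j)
  rwa [map_X, aeval_X] at this

theorem ellT_mul_injective (S : GenSec k E K F u ξ) :
    Function.Injective (LinearMap.mulLeft K (ellT k u ξ)) := by
  rw [← LinearMap.ker_eq_bot, LinearMap.ker_eq_bot']
  intro x hx
  rw [LinearMap.mulLeft_apply] at hx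
  obtain ⟨q, P, hq, h⟩ := polT_clear S x
  have h1 : polT (k := k) u (ellP ξ * P) = 0 := by
    rw [map_mul, polT_ellP, ← h, mul_left_comm, hx, mul_zero]
  have h2 := (map_eq_zero_iff _ (polT_injective S)).mp h1
  have h3 : P = 0 := (mul_eq_zero.mp h2).resolve_left (ellP_ne_zero S.xi0)
  rw [h3, map_zero] at h
  have h4 : aeval u q • x = 0 := by
    rw [Algebra.smul_def, Algebra.TensorProduct.algebraMap_apply]; exact h
  exact (smul_eq_zero.mp h4).resolve_left hq

/-- Restriction to the generic hyperplane section. -/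
noncomputable def resT (k E K F : Type*) [Field k] [Field E] [Field K] [Field F] [Algebra k E]
    [Algebra k K] [Algebra E F] [Algebra K F] [Algebra k F] [IsScalarTower k K F]
    [IsScalarTower k E F] : K ⊗[k] E →ₐ[K] F :=
  Algebra.TensorProduct.productLeftAlgHom (Algebra.ofId K F) (IsScalarTower.toAlgHom k E F)

theorem resT_tmul (a : K) (e : E) :
    resT k E K F (a ⊗ₜ e) = algebraMap K F a * algebraMap E F e := by
  simp [resT, Algebra.ofId_apply]

theorem resT_ellT (S : GenSec k E K F u ξ) : resT k E K F (ellT k u ξ) = 0 := by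
  rw [ellT, map_sum, ← S.rel]
  exact Finset.sum_congr rfl fun j _ => resT_tmul _ _

theorem map_resT_pow (t : ℕ) :
    (linV K (tenX k K ξ) ^ t).map (resT k E K F).toLinearMap = linV K (secX F ξ) ^ t := by
  rw [Submodule.map_pow, linV, Submodule.map_span, ← Set.range_comp, linV]
  congr 3
  funext j
  change resT k E K F (1 ⊗ₜ ξ j) = _
  rw [resT_tmul, map_one, one_mul]; rfl

theorem ellT_mem : ellT k u ξ ∈ linV K (tenX k K ξ) := by
  refine Submodule.sum_mem _ fun j _ => ?_
  have : u j ⊗ₜ[k] ξ j = u j • tenX k K ξ j := by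
    rw [tenX, TensorProduct.smul_tmul', smul_eq_mul, mul_one]
  rw [this]
  exact Submodule.smul_mem _ _ (mem_linV _ j)

end BaseChange

section SectionStep

set_option linter.unusedSectionVars false

variable {r : ℕ} {k E K F : Type*} [Field k] [Field E] [Field K] [Field F] [Algebra k E]
    [Algebra k K] [Algebra E F] [Algebra K F] [Algebra k F] [IsScalarTower k K F]
    [IsScalarTower k E F] {u : Fin (r + 1) → K} {ξ : Fin (r + 1) → E}

theorem ker_resT (S : GenSec k E K F u ξ) [FiniteDimensional K F] {t : ℕ}
    (htop : linV K (secX F ξ) ^ (t + 1) = ⊤) :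
    (hf k ξ (t + 1) = hf k ξ t + finrank K F) ↔
      ∀ x ∈ linV K (tenX k K ξ) ^ (t + 1), resT k E K F x = 0 →
        x ∈ (linV K (tenX k K ξ) ^ t).map (LinearMap.mulLeft K (ellT k u ξ)) := by
  have h1 := finrank_map_add_inf_ker (resT k E K F).toLinearMap (linV K (tenX k K ξ) ^ (t + 1))
  rw [map_resT_pow, htop, finrank_top, finrank_tenX_pow] at h1
  have h2 := finrank_map_inj _ (ellT_mul_injective S) (linV K (tenX k K ξ) ^ t)
  rw [finrank_tenX_pow] at h2
  have hle : (linV K (tenX k K ξ) ^ t).map (LinearMap.mulLeft K (ellT k u ξ)) ≤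
      linV K (tenX k K ξ) ^ (t + 1) ⊓ LinearMap.ker (resT k E K F).toLinearMap := by
    rintro _ ⟨a, ha, rfl⟩
    refine ⟨?_, ?_⟩
    · rw [LinearMap.mulLeft_apply, pow_succ']
      exact Submodule.mul_mem_mul ellT_mem ha
    · change resT k E K F (ellT k u ξ * a) = 0
      rw [map_mul, resT_ellT S, zero_mul]
  constructor
  · intro h x hx hx0
    have i : FiniteDimensional K ↥(linV K (tenX k K ξ) ^ (t + 1) ⊓
        LinearMap.ker (resT k E K F).toLinearMap) := Submodule.finiteDimensional_of_le inf_le_left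
    have := Submodule.eq_of_le_of_finrank_eq hle (by omega)
    rw [this]
    exact ⟨hx, hx0⟩
  · intro h
    have : (linV K (tenX k K ξ) ^ t).map (LinearMap.mulLeft K (ellT k u ξ)) =
      linV K (tenX k K ξ) ^ (t + 1) ⊓ LinearMap.ker (resT k E K F).toLinearMap :=
      le_antisymm hle fun x hx => h x hx.1 hx.2
    rw [← this] at h1
    omega

/-- Once the Hilbert function grows by the degree of the generic section in some degree at least
two, it does so in the following degree. -/
theorem GenSec.step_persist (S : GenSec k E K F u ξ) [FiniteDimensional K F] (H : NoStab K F)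
    {n : ℕ} (h1 : hf k ξ 1 = n + 2) (h1' : hf K (secX F ξ) 1 = n + 1)
    (hs : finrank K F ≤ 2 * n) (htop : linV K (secX F ξ) ^ 2 = ⊤) {t : ℕ}
    (h : hf k ξ (t + 2) = hf k ξ (t + 1) + finrank K F) :
    hf k ξ (t + 3) = hf k ξ (t + 2) + finrank K F := by
  have hs0 : secX F ξ 0 = 1 := by rw [secX, S.xi0, map_one]
  have ht0 : tenX k K ξ 0 = 1 := by rw [tenX, S.xi0]; rfl
  have htop' : ∀ t, linV K (secX F ξ) ^ (t + 2) = ⊤ := fun t =>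
    top_le_iff.mp (htop ▸ linV_pow_mono hs0 (by omega))
  rw [ker_resT S (t := t + 1) (htop' _)] at h
  rw [ker_resT S (t := t + 2) (htop' (t + 1))]
  rcases t with _ | t
  · refine ker_persist_two H (resT k E K F) (one_le_linV ht0) (resT_ellT S) ellT_mem (n := n)
      ?_ ?_ hs ?_ h
    · have := finrank_tenX_pow (k := k) (K := K) (ξ := ξ) 1
      rw [pow_one] at this
      rw [this, h1]
    · have := map_resT_pow (k := k) (K := K) (F := F) (ξ := ξ) 1
      rw [pow_one, pow_one] at this
      rw [this, ← h1', hf, pow_one]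
    · rw [map_resT_pow, htop]
  · exact ker_persist_of_three (resT k E K F) (one_le_linV ht0)
      (by rw [map_resT_pow, htop']) h

end SectionStep

end GenusBound

/-! ### Functions with bounded poles at infinity -/

namespace GenusBound

open Module Polynomial

section AtInfinity

set_option linter.unusedSectionVars false

variable {k E : Type*} [Field k] [Field E] [Algebra k E]

/-- The affine coordinate ring `⋃ V^N`, as a subspace. -/
def affO (V : Submodule k E) : Submodule k E := ⨆ N : ℕ, V ^ N

theorem mem_affO {V : Submodule k E} (h1 : (1 : E) ∈ V) {x : E} :
    x ∈ affO V ↔ ∃ N : ℕ, x ∈ V ^ N :=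
  Submodule.mem_iSup_of_directed _
    (Monotone.directed_le fun _ _ h => pow_mono_sub h1 h)

theorem aeval_mem_pow {V : Submodule k E} (h1 : (1 : E) ∈ V) {y : E} (hy : y ∈ V) {q : k[X]}
    {j : ℕ} (hq : q.natDegree ≤ j) : aeval y q ∈ V ^ j := by
  rw [aeval_eq_sum_range]
  refine Submodule.sum_mem _ fun i hi => Submodule.smul_mem _ _ ?_
  have := Finset.mem_range.mp hi
  exact pow_mono_sub h1 (by omega) (Submodule.pow_mem_pow V hy i)

/-- The functions with a pole of order at most `t` along the points at infinity, where a function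
belongs to `V^j` up to a monic polynomial of degree `j` in `y`. -/
def infO (V : Submodule k E) (h1 : (1 : E) ∈ V) {y : E} (hy : y ∈ V) (t : ℕ) : Submodule k E where
  carrier := {g | ∃ q : k[X], q.Monic ∧ aeval y q * g ∈ V ^ (q.natDegree + t)}
  zero_mem' := ⟨1, monic_one, by simp⟩
  add_mem' := by
    rintro a b ⟨q, hq, ha⟩ ⟨q', hq', hb⟩
    refine ⟨q * q', hq.mul hq', ?_⟩
    rw [hq.natDegree_mul hq', map_mul, mul_add]
    refine Submodule.add_mem _ ?_ ?_
    · have := Submodule.mul_mem_mul (aeval_mem_pow h1 hy (le_refl q'.natDegree)) ha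
      rw [← pow_add] at this
      convert this using 1
      all_goals ring
    · have := Submodule.mul_mem_mul (aeval_mem_pow h1 hy (le_refl q.natDegree)) hb
      rw [← pow_add] at this
      convert this using 1
      all_goals ring
  smul_mem' := by
    rintro c a ⟨q, hq, ha⟩
    exact ⟨q, hq, by rw [mul_smul_comm]; exact Submodule.smul_mem _ _ ha⟩

variable {V : Submodule k E} (h1 : (1 : E) ∈ V) {y : E} (hy : y ∈ V)

theorem pow_le_infO (t : ℕ) : V ^ t ≤ infO V h1 hy t := fun x hx =>
  ⟨1, monic_one, by simpa using hx⟩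

theorem infO_mono {a b : ℕ} (h : a ≤ b) : infO V h1 hy a ≤ infO V h1 hy b := by
  rintro x ⟨q, hq, hx⟩
  exact ⟨q, hq, pow_mono_sub h1 (by omega) hx⟩

theorem mul_mem_infO {a b : ℕ} {x z : E} (hx : x ∈ infO V h1 hy a) (hz : z ∈ infO V h1 hy b) :
    x * z ∈ infO V h1 hy (a + b) := by
  obtain ⟨q, hq, hx⟩ := hx
  obtain ⟨q', hq', hz⟩ := hz
  refine ⟨q * q', hq.mul hq', ?_⟩
  rw [hq.natDegree_mul hq', map_mul]
  have := Submodule.mul_mem_mul hx hz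
  rw [← pow_add] at this
  convert this using 1
  all_goals ring

/-- Finitely many functions have a common denominator at infinity, of any large degree. -/
theorem infO_common {t : ℕ} (G : Submodule k E) [hG : FiniteDimensional k G]
    (h : G ≤ infO V h1 hy t) (j0 : ℕ) : ∃ q : k[X], q.Monic ∧ j0 ≤ q.natDegree ∧
      ∀ g ∈ G, aeval y q * g ∈ V ^ (q.natDegree + t) := by
  classical
  obtain ⟨s, hs⟩ := (Submodule.fg_iff_finiteDimensional G).mpr hG
  have key : ∀ s : Finset E, (∀ g ∈ s, g ∈ infO V h1 hy t) → ∃ q : k[X], q.Monic ∧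
      j0 ≤ q.natDegree ∧ ∀ g ∈ s, aeval y q * g ∈ V ^ (q.natDegree + t) := by
    intro s
    induction s using Finset.induction_on with
    | empty => exact fun _ => ⟨X ^ j0, monic_X_pow _, by simp, by simp⟩
    | insert g s _ ih =>
      intro hs
      obtain ⟨q, hq, hj, hqs⟩ := ih fun g hg => hs g (Finset.mem_insert_of_mem hg)
      obtain ⟨q', hq', hg⟩ := hs g (Finset.mem_insert_self _ _)
      refine ⟨q * q', hq.mul hq', ?_, ?_⟩
      · rw [hq.natDegree_mul hq']; omega
      · intro g' hg'
        rw [hq.natDegree_mul hq', map_mul]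
        rcases Finset.mem_insert.mp hg' with rfl | hg'
        · have := Submodule.mul_mem_mul (aeval_mem_pow h1 hy (le_refl q.natDegree)) hg
          rw [← pow_add] at this
          convert this using 1
          all_goals ring
        · have := Submodule.mul_mem_mul (aeval_mem_pow h1 hy (le_refl q'.natDegree)) (hqs g' hg')
          rw [← pow_add] at this
          convert this using 1
          all_goals ring
  obtain ⟨q, hq, hj, hqs⟩ := key s fun g hg => h (hs ▸ Submodule.subset_span hg)
  refine ⟨q, hq, hj, fun g hg => ?_⟩
  have : G ≤ (V ^ (q.natDegree + t)).comap (LinearMap.mulLeft k (aeval y q)) := by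
    rw [← hs, Submodule.span_le]
    exact fun g hg => hqs g hg
  exact this hg

variable [FiniteDimensional k V] {s t0 : ℕ} {p : ℤ}

theorem finrank_infO_le (htr : Transcendental k y)
    (hdim : ∀ t : ℕ, t0 ≤ t → (finrank k ↥(V ^ t) : ℤ) = s * t + 1 - p) {N : ℕ}
    (G : Submodule k E) [FiniteDimensional k G] (h : G ≤ infO V h1 hy N) :
    finrank k G ≤ finrank k ↥(G ⊓ infO V h1 hy 0) + N * s := by
  obtain ⟨q, hq, hj, hG⟩ := infO_common h1 hy G h t0
  have hq0 : aeval y q ≠ 0 := fun h => hq.ne_zero (transcendental_iff.mp htr q h)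
  have hinj : Function.Injective (LinearMap.mulLeft k (aeval y q)) := fun a b h =>
    mul_left_cancel₀ hq0 h
  have hfd : ∀ t, FiniteDimensional k ↥(V ^ t) := fun t => pow_fg_sub t
  have i1 := hfd (q.natDegree + N)
  have i2 := hfd q.natDegree
  set qG := G.map (LinearMap.mulLeft k (aeval y q)) with hqG
  have hle : qG ≤ V ^ (q.natDegree + N) := by
    rintro _ ⟨g, hg, rfl⟩; exact hG g hg
  have hinf : qG ⊓ V ^ q.natDegree ≤ (G ⊓ infO V h1 hy 0).map (LinearMap.mulLeft k (aeval y q)) := by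
    rintro _ ⟨⟨g, hg, rfl⟩, hx⟩
    exact ⟨g, ⟨hg, q, hq, hx⟩, rfl⟩
  have a1 := Submodule.finrank_sup_add_finrank_inf_eq qG (V ^ q.natDegree)
  have a2 : finrank k ↥(qG ⊔ V ^ q.natDegree) ≤ finrank k ↥(V ^ (q.natDegree + N)) :=
    Submodule.finrank_mono (sup_le hle (pow_mono_sub h1 (by omega)))
  have a3 := Submodule.finrank_mono hinf
  rw [finrank_map_inj _ hinj] at a3
  have a4 : finrank k qG = finrank k G := finrank_map_inj _ hinj G
  have b1 := hdim (q.natDegree + N) (by omega)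
  have b2 := hdim q.natDegree hj
  push_cast at b1
  have : (finrank k ↥(V ^ (q.natDegree + N)) : ℤ) = finrank k ↥(V ^ q.natDegree) + N * s := by
    rw [b1, b2]; ring
  have : finrank k ↥(V ^ (q.natDegree + N)) = finrank k ↥(V ^ q.natDegree) + N * s := by
    exact_mod_cast this
  omega

theorem affO_inf_infO (hstep : ∀ t, t0 ≤ t → V ^ (t + 1) = mulStep V t y)
    (hdim : ∀ t : ℕ, t0 ≤ t → (finrank k ↥(V ^ t) : ℤ) = s * t + 1 - p) {t : ℕ} (ht : t0 ≤ t)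
    {g : E} (hg : g ∈ affO V) (hg' : g ∈ infO V h1 hy t) : g ∈ V ^ t := by
  have hcan : ∀ M, t0 ≤ M → ∀ a ∈ V ^ (M + 1), y * a ∈ V ^ (M + 1) → a ∈ V ^ M := by
    intro M hM a ha hya
    refine mem_of_mul_mem h1 (hstep (M + 1) (by omega)) hy ?_ ha hya
    have b0 := hdim M hM
    have b1 := hdim (M + 1) (by omega)
    have b2 := hdim (M + 2) (by omega)
    push_cast at b1 b2
    zify
    rw [b0, b1, b2]
    linarith
  have hcan2 : ∀ j M, t0 ≤ M → ∀ a ∈ V ^ (M + 1), y ^ j * a ∈ V ^ (j + M) → a ∈ V ^ M := by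
    intro j
    induction j with
    | zero => intro M hM a ha h; simpa using h
    | succ j ih =>
      intro M hM a ha h
      refine ih M hM a ha (hcan (j + M) (by omega) _ ?_ ?_)
      · rw [add_assoc, pow_add]
        exact Submodule.mul_mem_mul (Submodule.pow_mem_pow V hy j) ha
      · rw [← mul_assoc, ← pow_succ']
        convert h using 2; ring
  obtain ⟨N, hN⟩ := (mem_affO h1).mp hg
  obtain ⟨q, hq, hqg⟩ := hg'
  have hdesc : ∀ M, t ≤ M → g ∈ V ^ (M + 1) → g ∈ V ^ M := by
    intro M hM hgM
    refine hcan2 q.natDegree M (by omega) g hgM ?_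
    have e : y ^ q.natDegree * g = aeval y q * g - aeval y q.eraseLead * g := by
      have := hq.as_sum
      have h2 : aeval y q = y ^ q.natDegree + aeval y q.eraseLead := by
        conv_lhs => rw [← eraseLead_add_C_mul_X_pow q, hq.leadingCoeff]
        simp [add_comm]
      rw [h2]; ring
    rw [e]
    refine Submodule.sub_mem _ (pow_mono_sub h1 (by omega) hqg) ?_
    rcases Nat.eq_zero_or_pos q.natDegree with h0 | h0
    · have : q.eraseLead = 0 := by
        rw [hq.natDegree_eq_zero.mp h0, ← C_1, eraseLead_C]
      rw [this, map_zero, zero_mul]; exact Submodule.zero_mem _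
    · have := Submodule.mul_mem_mul (aeval_mem_pow h1 hy (eraseLead_natDegree_le q)) hgM
      rw [← pow_add] at this
      exact pow_mono_sub h1 (by omega) this
  have : ∀ M, g ∈ V ^ (t + M) → g ∈ V ^ t := by
    intro M
    induction M with
    | zero => exact id
    | succ M ih => exact fun h => ih (hdesc (t + M) (by omega) h)
  exact this N (pow_mono_sub h1 (by omega) hN)

theorem affO_inf_infO_zero (halg : ∀ x : E, IsIntegral k x → x ∈ (algebraMap k E).range)
    (hstep : ∀ t, t0 ≤ t → V ^ (t + 1) = mulStep V t y)
    (hdim : ∀ t : ℕ, t0 ≤ t → (finrank k ↥(V ^ t) : ℤ) = s * t + 1 - p)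
    {g : E} (hg : g ∈ affO V) (hg' : g ∈ infO V h1 hy 0) : g ∈ (algebraMap k E).range := by
  apply halg
  have hfd : FiniteDimensional k ↥(V ^ t0) := pow_fg_sub t0
  obtain ⟨N, hN⟩ := (mem_affO h1).mp hg
  have hpow : ∀ i : ℕ, g ^ i ∈ V ^ t0 := by
    intro i
    refine affO_inf_infO h1 hy hstep hdim le_rfl
      ((mem_affO h1).mpr ⟨N * i, by rw [pow_mul]; exact Submodule.pow_mem_pow _ hN i⟩) ?_
    refine infO_mono h1 hy (Nat.zero_le _) ?_
    induction i with
    | zero => rw [pow_zero]; exact pow_le_infO h1 hy 0 (by simp)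
    | succ i ih => rw [pow_succ]; exact mul_mem_infO h1 hy ih hg'
  refine isIntegral_of_smul_mem_submodule (M := E) (Submodule.span k (Set.range fun i : ℕ => g ^ i))
    ?_ ?_ _ ?_
  · intro hbot
    have : (1 : E) ∈ Submodule.span k (Set.range fun i : ℕ => g ^ i) :=
      Submodule.subset_span ⟨0, pow_zero g⟩
    rw [hbot, Submodule.mem_bot] at this
    exact one_ne_zero this
  · rw [Submodule.fg_iff_finiteDimensional]
    refine Submodule.finiteDimensional_of_le (S₂ := V ^ t0) (Submodule.span_le.mpr ?_)
    rintro _ ⟨i, rfl⟩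
    exact hpow i
  · intro n hn
    have : Submodule.span k (Set.range fun i : ℕ => g ^ i) ≤
        (Submodule.span k (Set.range fun i : ℕ => g ^ i)).comap (LinearMap.mulLeft k g) := by
      rw [Submodule.span_le]
      rintro _ ⟨i, rfl⟩
      exact Submodule.subset_span ⟨i + 1, pow_succ' g i⟩
    exact this hn

theorem exists_mem_infO (htr : Transcendental k y)
    (hdim : ∀ t : ℕ, t0 ≤ t → (finrank k ↥(V ^ t) : ℤ) = s * t + 1 - p)
    (hfrac : ∀ g : E, ∃ a ∈ affO V, ∃ b ∈ affO V, b ≠ 0 ∧ g * b = a) (g : E) :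
    ∃ t, g ∈ infO V h1 hy t := by
  obtain ⟨a, ha, b, hb, hb0, hgab⟩ := hfrac g
  obtain ⟨c, hc⟩ := (mem_affO h1).mp hb
  obtain ⟨c', hc'⟩ := (mem_affO h1).mp ha
  have hfd : ∀ t, FiniteDimensional k ↥(V ^ t) := fun t => pow_fg_sub t
  have hinj : Function.Injective (LinearMap.mulLeft k b) := fun a b' h =>
    mul_left_cancel₀ hb0 h
  -- for large `M` the polynomials in `y` of degree at most `M + c` meet `b V^M`
  obtain ⟨M, hM0, hM⟩ : ∃ M : ℕ, t0 ≤ M ∧ s * c < M + c + 1 :=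
    ⟨t0 + s * c, by omega, by omega⟩
  have i1 := hfd M
  have i2 := hfd (M + c)
  let P : Submodule k E := (degreeLT k (M + c + 1)).map (aeval (R := k) y).toLinearMap
  have hPinj : Function.Injective (aeval (R := k) y).toLinearMap :=
    transcendental_iff_injective.mp htr
  have hdegfin : finrank k (degreeLT k (M + c + 1)) = M + c + 1 := by
    rw [LinearEquiv.finrank_eq (degreeLTEquiv k (M + c + 1))]; simp
  have ideg : FiniteDimensional k (degreeLT k (M + c + 1)) :=
    Module.Finite.equiv (degreeLTEquiv k (M + c + 1)).symm
  have hPfin : finrank k P = M + c + 1 := by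
    rw [finrank_map_inj _ hPinj, hdegfin]
  have iP : FiniteDimensional k P := inferInstance
  have hPle : P ≤ V ^ (M + c) := by
    rintro _ ⟨q, hq, rfl⟩
    refine aeval_mem_pow h1 hy ?_
    rcases eq_or_ne q 0 with rfl | h0
    · simp
    · have := (natDegree_lt_iff_degree_lt h0).mpr (mem_degreeLT.mp hq)
      omega
  set bV := (V ^ M).map (LinearMap.mulLeft k b) with hbV
  have hbVle : bV ≤ V ^ (M + c) := by
    rintro _ ⟨x, hx, rfl⟩
    rw [add_comm, pow_add]
    exact Submodule.mul_mem_mul hc hx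
  have hbVfin : finrank k bV = finrank k ↥(V ^ M) := finrank_map_inj _ hinj _
  have a1 := Submodule.finrank_sup_add_finrank_inf_eq P bV
  have a2 := Submodule.finrank_mono (sup_le hPle hbVle)
  have b1 := hdim M hM0
  have b2 := hdim (M + c) (by omega)
  have b3 : (finrank k ↥(V ^ (M + c)) : ℤ) = finrank k ↥(V ^ M) + (s * c : ℕ) := by
    rw [b1, b2]; push_cast; ring
  have hpos : 0 < finrank k ↥(P ⊓ bV) := by omega
  have hne : P ⊓ bV ≠ ⊥ := by
    intro h; rw [h, finrank_bot] at hpos; exact lt_irrefl _ hpos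
  obtain ⟨z, ⟨⟨q, hq, hqz⟩, x, hx, hxz⟩, hz0⟩ := Submodule.exists_mem_ne_zero_of_ne_bot hne
  have hqz : aeval y q = z := hqz
  have hxz : b * x = z := hxz
  have hq0 : q ≠ 0 := by rintro rfl; exact hz0 (by rw [← hqz, map_zero])
  have hlc : q.leadingCoeff ≠ 0 := leadingCoeff_ne_zero.mpr hq0
  refine ⟨c' + M, q * C q.leadingCoeff⁻¹, monic_mul_leadingCoeff_inv hq0, ?_⟩
  have e : aeval y (q * C q.leadingCoeff⁻¹) * g = q.leadingCoeff⁻¹ • (a * x) := by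
    rw [map_mul, aeval_C, hqz, ← hxz, ← hgab, Algebra.smul_def]; ring
  rw [e]
  refine Submodule.smul_mem _ _ (pow_mono_sub h1 (Nat.le_add_left _ _) ?_)
  rw [pow_add]
  exact Submodule.mul_mem_mul hc' hx

/-- A space of functions meeting `O + O_∞(0)` trivially has dimension at most the genus. -/
theorem finrank_le_genus (htr : Transcendental k y)
    (halg : ∀ x : E, IsIntegral k x → x ∈ (algebraMap k E).range)
    (hstep : ∀ t, t0 ≤ t → V ^ (t + 1) = mulStep V t y)
    (hdim : ∀ t : ℕ, t0 ≤ t → (finrank k ↥(V ^ t) : ℤ) = s * t + 1 - p)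
    (hfrac : ∀ g : E, ∃ a ∈ affO V, ∃ b ∈ affO V, b ≠ 0 ∧ g * b = a)
    (G : Submodule k E) [hG : FiniteDimensional k G]
    (hdis : G ⊓ (affO V ⊔ infO V h1 hy 0) = ⊥) : (finrank k G : ℤ) ≤ p := by
  classical
  obtain ⟨N, hN0, hGN⟩ : ∃ N, t0 ≤ N ∧ G ≤ infO V h1 hy N := by
    obtain ⟨S, hS⟩ := (Submodule.fg_iff_finiteDimensional G).mpr hG
    choose f hf using exists_mem_infO h1 hy htr hdim hfrac
    refine ⟨t0 + ∑ g ∈ S, f g, by omega, ?_⟩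
    rw [← hS, Submodule.span_le]
    intro g hg
    exact infO_mono h1 hy ((Finset.single_le_sum (fun _ _ => Nat.zero_le _) hg).trans
      (Nat.le_add_left _ _)) (hf g)
  have i1 : FiniteDimensional k ↥(V ^ N) := pow_fg_sub N
  have hVN : V ^ N ≤ affO V := le_iSup (fun N : ℕ => V ^ N) N
  have hdis2 : G ⊓ V ^ N = ⊥ :=
    le_bot_iff.mp (hdis ▸ inf_le_inf_left _ (hVN.trans le_sup_left))
  have a1 := Submodule.finrank_sup_add_finrank_inf_eq G (V ^ N)
  rw [hdis2, finrank_bot] at a1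
  have a2 := finrank_infO_le h1 hy htr hdim (G ⊔ V ^ N) (sup_le hGN (pow_le_infO h1 hy N))
  have a3 : (G ⊔ V ^ N) ⊓ infO V h1 hy 0 ≤ Submodule.span k {1} := by
    rintro x ⟨hx, hx0⟩
    obtain ⟨g, hg, v, hv, rfl⟩ := Submodule.mem_sup.mp hx
    have hg0 : g ∈ G ⊓ (affO V ⊔ infO V h1 hy 0) := by
      refine ⟨hg, ?_⟩
      have := Submodule.sub_mem _
        ((le_sup_right : infO V h1 hy 0 ≤ affO V ⊔ infO V h1 hy 0) hx0)
        ((le_sup_left : affO V ≤ affO V ⊔ infO V h1 hy 0) (hVN hv))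
      simpa using this
    rw [hdis, Submodule.mem_bot] at hg0
    rw [hg0, zero_add] at hx0 ⊢
    obtain ⟨c, hc⟩ := affO_inf_infO_zero h1 hy halg hstep hdim (hVN hv) hx0
    rw [Submodule.mem_span_singleton]
    exact ⟨c, by rw [← hc, Algebra.smul_def, mul_one]⟩
  have a4 := (Submodule.finrank_mono a3).trans (finrank_span_singleton (one_ne_zero (α := E))).le
  have b := hdim N hN0
  have a5 : finrank k G + finrank k ↥(V ^ N) ≤ 1 + N * s := by omega
  zify at a5
  rw [b] at a5
  linarith

end AtInfinity

end GenusBound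

/-! ### Clifford's inequality -/

namespace GenusBound

open Module Polynomial

section Clifford

set_option linter.unusedSectionVars false

variable {k E : Type*} [Field k] [Field E] [Algebra k E]

/-- A field extension in which the base field is algebraically closed has no proper
finite-dimensional stable subspace. -/
theorem noStab_of_algClosed (halg : ∀ x : E, IsIntegral k x → x ∈ (algebraMap k E).range) :
    NoStab k E := by
  intro x hx U hU hfd hst
  refine absurd (halg x ?_) hx
  exact isIntegral_of_smul_mem_submodule (M := E) U hU
    ((Submodule.fg_iff_finiteDimensional U).mpr hfd) x fun n hn => hst n hn

/-- The dual of `E` as an `E`-module, by precomposition with multiplication. -/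
@[reducible] def dualMod (k E : Type*) [Field k] [Field E] [Algebra k E] :
    Module E (Dual k E) where
  smul e φ := φ ∘ₗ LinearMap.mulLeft k e
  one_smul φ := by ext x; change φ (1 * x) = φ x; rw [one_mul]
  mul_smul a b φ := by
    ext x; change φ (a * b * x) = φ (b * (a * x)); congr 1; ring
  smul_zero a := rfl
  smul_add a φ ψ := rfl
  add_smul a b φ := by
    ext x; change φ ((a + b) * x) = φ (a * x) + φ (b * x); rw [add_mul, map_add]
  zero_smul φ := by ext x; change φ (0 * x) = 0; rw [zero_mul, map_zero]

variable {V : Submodule k E} {y : E}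
variable [FiniteDimensional k V] {s t0 : ℕ} {p : ℤ}

theorem genus_nonneg (h1 : (1 : E) ∈ V) (hy : y ∈ V) (htr : Transcendental k y)
    (halg : ∀ x : E, IsIntegral k x → x ∈ (algebraMap k E).range)
    (hstep : ∀ t, t0 ≤ t → V ^ (t + 1) = mulStep V t y)
    (hdim : ∀ t : ℕ, t0 ≤ t → (finrank k ↥(V ^ t) : ℤ) = s * t + 1 - p)
    (hfrac : ∀ g : E, ∃ a ∈ affO V, ∃ b ∈ affO V, b ≠ 0 ∧ g * b = a) : 0 ≤ p := by
  have := finrank_le_genus h1 hy htr halg hstep hdim hfrac ⊥ (by simp)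
  simpa using this

/-- `H¹(O)` is at most `p`-dimensional. -/
theorem rank_quot_le (h1 : (1 : E) ∈ V) (hy : y ∈ V) (htr : Transcendental k y)
    (halg : ∀ x : E, IsIntegral k x → x ∈ (algebraMap k E).range)
    (hstep : ∀ t, t0 ≤ t → V ^ (t + 1) = mulStep V t y)
    (hdim : ∀ t : ℕ, t0 ≤ t → (finrank k ↥(V ^ t) : ℤ) = s * t + 1 - p)
    (hfrac : ∀ g : E, ∃ a ∈ affO V, ∃ b ∈ affO V, b ≠ 0 ∧ g * b = a) :
    FiniteDimensional k (E ⧸ (affO V ⊔ infO V h1 hy 0)) ∧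
      (finrank k (E ⧸ (affO V ⊔ infO V h1 hy 0)) : ℤ) ≤ p := by
  have hp := genus_nonneg h1 hy htr halg hstep hdim hfrac
  set Y := affO V ⊔ infO V h1 hy 0 with hY
  obtain ⟨σ, hσ⟩ := LinearMap.exists_rightInverse_of_surjective Y.mkQ (Submodule.range_mkQ Y)
  have hσ' : ∀ z, Y.mkQ (σ z) = z := fun z => LinearMap.congr_fun hσ z
  have hinj : Function.Injective σ := fun a b h => by rw [← hσ' a, ← hσ' b, h]
  have hr : Module.rank k (E ⧸ Y) ≤ (p.toNat : ℕ) := by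
    refine rank_le fun S hS => ?_
    have hf : finrank k (Submodule.span k (S : Set (E ⧸ Y))) = S.card :=
      finrank_span_finset_eq_card hS
    have hG : (finrank k ((Submodule.span k (S : Set (E ⧸ Y))).map σ) : ℤ) ≤ p := by
      refine finrank_le_genus h1 hy htr halg hstep hdim hfrac _ ?_
      rw [← hY, Submodule.eq_bot_iff]
      rintro _ ⟨⟨z, -, rfl⟩, hz⟩
      have : Y.mkQ (σ z) = 0 := (Submodule.Quotient.mk_eq_zero Y).mpr hz
      rw [hσ'] at this
      rw [this, map_zero]
    rw [finrank_map_inj σ hinj, hf] at hG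
    omega
  have hfd : FiniteDimensional k (E ⧸ Y) :=
    Module.rank_lt_aleph0_iff.mp (hr.trans_lt (Cardinal.natCast_lt_aleph0))
  refine ⟨hfd, ?_⟩
  have := finrank_le_of_rank_le hr
  omega

variable {P : Submodule k E}

theorem le_of_mem_ideal (hPm : ∀ u ∈ P, ∀ x ∈ affO V, u * x ∈ P)
    (hdim : ∀ t : ℕ, t0 ≤ t → (finrank k ↥(V ^ t) : ℤ) = s * t + 1 - p) {d N0 : ℕ}
    (hd : ∀ N, N0 ≤ N → finrank k ↥(V ^ N) = finrank k ↥(V ^ N ⊓ P) + d) {t : ℕ} {f : E}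
    (hf0 : f ≠ 0) (hf : f ∈ V ^ t) (hfP : f ∈ P) : d ≤ t * s := by
  set N := max t0 N0
  have hfd : ∀ t, FiniteDimensional k ↥(V ^ t) := fun t => pow_fg_sub t
  have i1 := hfd N
  have i2 := hfd (N + t)
  have hinj : Function.Injective (LinearMap.mulLeft k f) := fun a b h =>
    mul_left_cancel₀ hf0 h
  have hle : (V ^ N).map (LinearMap.mulLeft k f) ≤ V ^ (N + t) ⊓ P := by
    rintro _ ⟨x, hx, rfl⟩
    refine ⟨?_, hPm f hfP x (le_iSup (fun N : ℕ => V ^ N) N hx)⟩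
    rw [add_comm, pow_add]
    exact Submodule.mul_mem_mul hf hx
  have a1 := Submodule.finrank_mono hle
  rw [finrank_map_inj _ hinj] at a1
  have a2 := hd (N + t) (by omega)
  have b1 := hdim N (by omega)
  have b2 := hdim (N + t) (by omega)
  push_cast at b2
  zify at *
  linarith

/-- Clifford's inequality: for `c < d` conditions imposed by the ideal `P` on `V^t`. -/
theorem clifford (h1 : (1 : E) ∈ V) (hy : y ∈ V) (hP : P ≤ affO V)
    (hPm : ∀ u ∈ P, ∀ x ∈ affO V, u * x ∈ P)
    (htr : Transcendental k y)
    (halg : ∀ x : E, IsIntegral k x → x ∈ (algebraMap k E).range)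
    (hstep : ∀ t, t0 ≤ t → V ^ (t + 1) = mulStep V t y)
    (hdim : ∀ t : ℕ, t0 ≤ t → (finrank k ↥(V ^ t) : ℤ) = s * t + 1 - p)
    (hfrac : ∀ g : E, ∃ a ∈ affO V, ∃ b ∈ affO V, b ≠ 0 ∧ g * b = a) {d N0 : ℕ}
    (hd : ∀ N, N0 ≤ N → finrank k ↥(V ^ N) = finrank k ↥(V ^ N ⊓ P) + d) {t c : ℕ} (ht : t0 ≤ t)
    (hne : V ^ t ⊓ P ≠ ⊥) (hc : finrank k ↥(V ^ t) = finrank k ↥(V ^ t ⊓ P) + c) (hcd : c < d) :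
    (finrank k ↥(V ^ t ⊓ P) : ℤ) + (d - c) ≤ p + 1 := by
  obtain ⟨iq, hq⟩ := rank_quot_le h1 hy htr halg hstep hdim hfrac
  have hfd : ∀ t, FiniteDimensional k ↥(V ^ t) := fun t => pow_fg_sub t
  set N := max t N0
  have i1 := hfd N
  have i2 := hfd t
  have htN : V ^ t ≤ V ^ N := pow_mono_sub h1 (le_max_left _ _)
  set A := V ^ t ⊔ (V ^ N ⊓ P) with hA
  have hAN : A ≤ V ^ N := sup_le htN inf_le_left
  have iA : FiniteDimensional k A := Submodule.finiteDimensional_of_le hAN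
  have a1 := Submodule.finrank_sup_add_finrank_inf_eq (V ^ t) (V ^ N ⊓ P)
  rw [← hA, ← inf_assoc, inf_eq_left.mpr htN] at a1
  have a2 := hd N (le_max_right _ _)
  obtain ⟨C, hC⟩ := Submodule.exists_isCompl A
  set G := C ⊓ V ^ N with hGdef
  have iG : FiniteDimensional k G := Submodule.finiteDimensional_of_le (inf_le_right : G ≤ V ^ N)
  have hGA : A ⊓ G = ⊥ := by
    rw [hGdef, ← inf_assoc, hC.inf_eq_bot, bot_inf_eq]
  have hGsup : A ⊔ G = V ^ N := by
    rw [hGdef, ← sup_inf_assoc_of_le _ hAN, hC.sup_eq_top, top_inf_eq]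
  have a3 := Submodule.finrank_sup_add_finrank_inf_eq A G
  rw [hGA, hGsup, finrank_bot] at a3
  have hGfin : finrank k G + c = d := by omega
  set B := P ⊔ infO V h1 hy t with hB
  have hGB : ∀ x ∈ G, x ∈ B → x = 0 := by
    intro x hx hxB
    obtain ⟨u, hu, v, hv, rfl⟩ := Submodule.mem_sup.mp hxB
    have hxN : u + v ∈ V ^ N := hx.2
    have hvA : v ∈ affO V := by
      have := Submodule.sub_mem (affO V) (le_iSup (fun N : ℕ => V ^ N) N hxN) (hP hu)
      rwa [add_sub_cancel_left] at this
    have hvt := affO_inf_infO h1 hy hstep hdim ht hvA hv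
    have huN : u ∈ V ^ N := by
      have := Submodule.sub_mem _ hxN (htN hvt)
      simpa using this
    have : u + v ∈ A ⊓ G := by
      refine ⟨?_, hx⟩
      rw [add_comm]
      exact Submodule.add_mem_sup hvt ⟨huN, hu⟩
    rw [hGA] at this
    exact this
  have hinj : LinearMap.ker (B.mkQ ∘ₗ G.subtype) = ⊥ := by
    rw [LinearMap.ker_eq_bot']
    rintro ⟨x, hx⟩ h
    have : x ∈ B := (Submodule.Quotient.mk_eq_zero B).mp h
    exact Subtype.ext (hGB x hx this)
  obtain ⟨L, hL⟩ := LinearMap.exists_leftInverse_of_injective _ hinj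
  set pr : E →ₗ[k] G := L ∘ₗ B.mkQ with hpr
  have hprB : ∀ x ∈ B, pr x = 0 := by
    intro x hx
    have : B.mkQ x = 0 := (Submodule.Quotient.mk_eq_zero B).mpr hx
    rw [hpr, LinearMap.comp_apply, this, map_zero]
  have hprs : Function.Surjective pr := fun x => ⟨x, LinearMap.congr_fun hL x⟩
  have hdinj : Function.Injective pr.dualMap := LinearMap.dualMap_injective_of_surjective hprs
  set W : Submodule k (Dual k E) := (⊤ : Submodule k (Dual k G)).map pr.dualMap with hW
  have hWfin : finrank k W = finrank k G := by
    rw [hW, finrank_map_inj _ hdinj, finrank_top, Subspace.dual_finrank_eq]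
  have iW : FiniteDimensional k W := inferInstance
  set Y := affO V ⊔ infO V h1 hy 0 with hY
  let eX := Y.dualQuotEquivDualAnnihilator
  have iX : FiniteDimensional k Y.dualAnnihilator := Module.Finite.equiv eX
  have hXfin : finrank k Y.dualAnnihilator = finrank k (E ⧸ Y) := by
    rw [← LinearEquiv.finrank_eq eX, Subspace.dual_finrank_eq]
  have iU : FiniteDimensional k ↥(V ^ t ⊓ P) :=
    Submodule.finiteDimensional_of_le (inf_le_left : V ^ t ⊓ P ≤ V ^ t)
  have hinf : ¬ FiniteDimensional k E := by
    intro h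
    exact htr (Algebra.IsAlgebraic.isAlgebraic y)
  let _ : Module E (Dual k E) := dualMod k E
  have hst : IsScalarTower k E (Dual k E) := ⟨fun c e φ => by
    ext x
    change φ (c • e * x) = c • φ (e * x)
    rw [smul_mul_assoc, map_smul]⟩
  have hWne : W ≠ ⊥ := by
    intro h
    rw [h, finrank_bot] at hWfin
    omega
  have key := module_cauchy_davenport (noStab_of_algClosed halg) hinf (V ^ t ⊓ P) W
    Y.dualAnnihilator hne hWne (by
      rintro u ⟨hut, huP⟩ _ ⟨φ, -, rfl⟩
      rw [Submodule.mem_dualAnnihilator]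
      intro x hx
      obtain ⟨a, ha, b, hb, rfl⟩ := Submodule.mem_sup.mp hx
      change φ (pr (u * (a + b))) = 0
      rw [hprB, map_zero]
      rw [mul_add]
      refine Submodule.add_mem_sup (hPm u huP a ha) ?_
      have := mul_mem_infO h1 hy (pow_le_infO h1 hy t hut) hb
      rwa [add_zero] at this)
  rw [hXfin, hWfin] at key
  omega

end Clifford

end GenusBound

/-! ### The Hilbert function of a curve of small degree -/

namespace GenusBound

open Module MvPolynomial

universe v

section Fractions

variable {r : ℕ} {k E : Type*} [Field k] [Field E] [Algebra k E] {ζ : Fin (r + 1) → E}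

theorem aeval_mem_affO (h0 : ζ 0 = 1) (f : MvPolynomial (Fin (r + 1)) k) :
    aeval ζ f ∈ affO (linV k ζ) :=
  (mem_affO (one_le_linV h0)).mpr ⟨_, aeval_mem_linV_pow h0 le_rfl⟩

theorem exists_of_mem_affO (h0 : ζ 0 = 1) {x : E} (hx : x ∈ affO (linV k ζ)) :
    ∃ f : MvPolynomial (Fin (r + 1)) k, aeval ζ f = x := by
  obtain ⟨N, hN⟩ := (mem_affO (one_le_linV h0)).mp hx
  obtain ⟨f, -, hf⟩ := exists_of_mem_linV_pow hN
  exact ⟨f, hf⟩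

theorem exists_frac_affO (h0 : ζ 0 = 1) (hE : IntermediateField.adjoin k (Set.range ζ) = ⊤)
    (g : E) : ∃ a ∈ affO (linV k ζ), ∃ b ∈ affO (linV k ζ), b ≠ 0 ∧ g * b = a := by
  have hg : g ∈ IntermediateField.adjoin k (Set.range ζ) := hE ▸ IntermediateField.mem_top
  obtain ⟨p, q, rfl⟩ := (IntermediateField.mem_adjoin_range_iff k ζ g).mp hg
  by_cases hq : aeval ζ q = 0
  · refine ⟨0, Submodule.zero_mem _, 1, ?_, one_ne_zero, by rw [hq, div_zero, zero_mul]⟩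
    simpa using aeval_mem_affO (k := k) h0 1
  · exact ⟨_, aeval_mem_affO h0 p, _, aeval_mem_affO h0 q, hq, div_mul_cancel₀ _ hq⟩

/-- Once the Hilbert function of a curve of degree `s` is linear, from some `t0 ≥ s - 1` on, the
curve has a Noether normalization by an element of `V`. -/
theorem exists_noether [CharZero k] (h0 : ζ 0 = 1)
    (halg : ∀ x : E, IsIntegral k x → x ∈ (algebraMap k E).range) {s t0 : ℕ} {p : ℤ}
    (hs : 1 ≤ s) (hst : s ≤ t0 + 1)
    (hdim : ∀ t : ℕ, t0 ≤ t → (hf k ζ t : ℤ) = s * t + 1 - p) :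
    ∃ y ∈ linV k ζ, Transcendental k y ∧
      ∀ t, t0 ≤ t → linV k ζ ^ (t + 1) = mulStep (linV k ζ) t y := by
  have hstep : hf k ζ (t0 + 1) = hf k ζ t0 + s := by
    have a := hdim t0 le_rfl
    have b := hdim (t0 + 1) (by omega)
    zify
    rw [a, b]; push_cast; ring
  have h1 := one_le_linV (k := k) h0
  have hle : finrank k ↥(linV k ζ ^ (t0 + 1)) ≤ finrank k ↥(linV k ζ ^ t0) + (t0 + 1) := by
    unfold hf at hstep; omega
  obtain ⟨y, hy, hq⟩ := baby_green h1 hle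
  refine ⟨y, hy, fun halgy => ?_, fun t ht => mulStep_persist h1 hy hq ht⟩
  obtain ⟨c, rfl⟩ := halg y halgy.isIntegral
  have : mulStep (linV k ζ) t0 (algebraMap k E c) ≤ linV k ζ ^ t0 := by
    refine sup_le ?_ le_rfl
    rintro _ ⟨x, hx, rfl⟩
    change algebraMap k E c * x ∈ _
    rw [← Algebra.smul_def]
    exact Submodule.smul_mem _ _ hx
  rw [← hq] at this
  have hm : hf k ζ (t0 + 1) ≤ hf k ζ t0 := Submodule.finrank_mono this
  omega

end Fractions

section CurveHilbert

variable {r : ℕ} {k E : Type v} [Field k] [Field E] [Algebra k E] {ζ : Fin (r + 1) → E}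

/-- The Hilbert function of a curve of degree `s ≤ 2n` in `ℙ^(n+1)`: it is bounded below as
required, linear from degree `s` on, and the arithmetic genus is nonnegative. -/
theorem curve_hf [CharZero k] (h0 : ζ 0 = 1)
    (hE : IntermediateField.adjoin k (Set.range ζ) = ⊤)
    (halg : ∀ x : E, IsIntegral k x → x ∈ (algebraMap k E).range)
    (hj : ∃ j : Fin r, Transcendental k (ζ j.succ)) {n s N : ℕ} {p : ℤ}
    (h1 : hf k ζ 1 = n + 2) (hs1 : n + 1 ≤ s) (hs2 : s ≤ 2 * n)
    (hdim : ∀ t : ℕ, N ≤ t → (hf k ζ t : ℤ) = s * t + 1 - p) :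
    0 ≤ p ∧ (∀ t : ℕ, s ≤ t → (hf k ζ t : ℤ) = s * t + 1 - p) ∧
      ∀ i : ℕ, 1 ≤ i → 1 + i * s - max p (s - n - 1 - i + 1) ≤ (hf k ζ i : ℤ) := by
  classical
  obtain ⟨F, _, _, _, _, _, _, S⟩ := exists_genSec ζ h0 hj
  have hγ0 : secX F ζ 0 = 1 := by rw [secX, h0, map_one]
  have hstepN : ∀ t, N ≤ t → hf k ζ (t + 1) = hf k ζ t + s := by
    intro t ht
    have a := hdim t ht
    have b := hdim (t + 1) (by omega)
    zify
    rw [a, b]; push_cast; ring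
  -- the points `Z` of a general section
  obtain ⟨M, hM⟩ := eventually_const_of_bounded (h := hf (KK r k) (secX F ζ)) (B := s) (N := N + 1)
    (fun t => hf_mono hγ0 (Nat.le_succ t)) (fun t ht => by
      obtain ⟨t', rfl⟩ : ∃ t', t = t' + 1 := ⟨t - 1, by omega⟩
      have a := S.hf_sec_le t'
      have b := hstepN t' (by omega)
      omega)
  have htopM : ∀ t, M ≤ t → linV (KK r k) (secX F ζ) ^ t = ⊤ := fun t ht =>
    linV_pow_eq_top hγ0 (S.adjoin_secX hE) hM ht
  have hfdF : FiniteDimensional (KK r k) F := by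
    have : FiniteDimensional (KK r k) ↥(linV (KK r k) (secX F ζ) ^ M) := inferInstance
    rw [htopM M le_rfl] at this
    exact Module.Finite.equiv (Submodule.topEquiv (R := KK r k) (M := F))
  have hfF : ∀ t, linV (KK r k) (secX F ζ) ^ t = ⊤ → hf (KK r k) (secX F ζ) t = finrank (KK r k) F := by
    intro t ht
    rw [hf, ht, finrank_top]
  have hFs : finrank (KK r k) F = s := by
    obtain ⟨t0, ht0⟩ := S.hf_sec_eq
    have a := ht0 (N + M + t0) (by omega)
    have b := hstepN (N + M + t0) (by omega)
    have c := hfF (N + M + t0 + 1) (htopM _ (by omega))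
    omega
  have hns : NoStab (KK r k) F := S.noStab halg hE
  have hF1 : hf (KK r k) (secX F ζ) 1 = n + 1 := by
    have a := S.hf_sec_one halg
    omega
  have htop : linV (KK r k) (secX F ζ) ^ 2 = ⊤ := by
    have hne : linV (KK r k) (secX F ζ) ≠ ⊥ := by
      intro h
      have := one_le_linV (k := KK r k) hγ0
      rw [h, Submodule.mem_bot] at this
      exact one_ne_zero this
    have e1 : finrank (KK r k) (linV (KK r k) (secX F ζ)) = n + 1 := by
      rw [hf, pow_one] at hF1; exact hF1
    rcases linear_cauchy_davenport hns _ (linV (KK r k) (secX F ζ)) (linV (KK r k) (secX F ζ))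
      inferInstance inferInstance hne hne le_rfl with h | h
    · rw [pow_two]; exact h
    · have := Submodule.finrank_le (linV (KK r k) (secX F ζ) * linV (KK r k) (secX F ζ))
      omega
  have hge : ∀ t, hf k ζ (t + 1) + s ≤ hf k ζ (t + 2) := by
    intro t
    have a := S.hf_sec_le (t + 1)
    have hT : linV (KK r k) (secX F ζ) ^ (t + 2) = ⊤ :=
      top_le_iff.mp (htop ▸ linV_pow_mono hγ0 (by omega))
    have b := hfF (t + 2) hT
    change hf (KK r k) (secX F ζ) (t + 2) + hf k ζ (t + 1) ≤ hf k ζ (t + 2) at a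
    omega
  have hpers : ∀ t, hf k ζ (t + 2) = hf k ζ (t + 1) + s →
      hf k ζ (t + 3) = hf k ζ (t + 2) + s := by
    intro t ht
    have := S.step_persist hns h1 hF1 (by omega) htop (t := t) (by rw [hFs]; exact ht)
    rwa [hFs] at this
  have hex : ∃ t, hf k ζ (t + 2) = hf k ζ (t + 1) + s := ⟨N, hstepN (N + 1) (by omega)⟩
  set T := Nat.find hex with hT
  have hTge : ∀ t, T ≤ t → hf k ζ (t + 2) = hf k ζ (t + 1) + s := by
    intro t ht
    induction t, ht using Nat.le_induction with
    | base => exact Nat.find_spec hex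
    | succ t _ ih => exact hpers t ih
  have hlow : ∀ i, i ≤ T → n + 2 + i * (s + 1) ≤ hf k ζ (i + 1) := by
    intro i
    induction i with
    | zero => intro _; change n + 2 + 0 * (s + 1) ≤ hf k ζ 1; omega
    | succ i ih =>
      intro hi
      have a := ih (by omega)
      have b := hge i
      have c : hf k ζ (i + 2) ≠ hf k ζ (i + 1) + s := Nat.find_min hex (by omega)
      change n + 2 + (i + 1) * (s + 1) ≤ hf k ζ (i + 2)
      have e : (i + 1) * (s + 1) = i * (s + 1) + (s + 1) := by ring
      omega
  obtain ⟨b, hb⟩ := linear_of_step (h := fun t => hf k ζ t) (s := s) (N := T + 1) (fun t ht => by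
    obtain ⟨t', rfl⟩ : ∃ t', t = t' + 1 := ⟨t - 1, by omega⟩
    exact hTge t' (by omega))
  have hbp : b = 1 - p := by
    have a := hb (N + (T + 1)) (by omega)
    have c := hdim (N + (T + 1)) (by omega)
    have := a.symm.trans c
    push_cast at this
    linarith
  subst hbp
  have hp : 0 ≤ p := by
    obtain ⟨y, hy, htr, hst⟩ := exists_noether h0 halg (t0 := max N s) (by omega) (by omega)
      (fun t ht => hdim t (le_trans (le_max_left _ _) ht))
    exact genus_nonneg (one_le_linV h0) hy htr halg hst
      (fun t ht => hdim t (le_trans (le_max_left _ _) ht)) (exists_frac_affO h0 hE)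
  have hTp : (T : ℤ) ≤ s - n - 1 - p := by
    have a := hlow T le_rfl
    have c := hb (T + 1) le_rfl
    zify at a
    push_cast at c
    nlinarith
  refine ⟨hp, fun t ht => ?_, fun i hi => ?_⟩
  · have := hb t (by omega)
    linarith
  · obtain ⟨j, rfl⟩ : ∃ j, i = j + 1 := ⟨i - 1, by omega⟩
    rcases le_total j T with hj | hj
    · have a := hlow j hj
      have := le_max_right p ((s : ℤ) - n - 1 - (j + 1 : ℕ) + 1)
      zify at a
      push_cast at this ⊢
      nlinarith
    · have a := hb (j + 1) (by omega)
      have := le_max_left p ((s : ℤ) - n - 1 - (j + 1 : ℕ) + 1)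
      push_cast at this a ⊢
      nlinarith

end CurveHilbert

end GenusBound

/-! ### Points on a curve -/

namespace GenusBound

open Module MvPolynomial

section TwoMaps

variable {K M A B : Type*} [Field K] [AddCommGroup M] [Module K M] [AddCommGroup A] [Module K A]
  [AddCommGroup B] [Module K B]

theorem finrank_two_maps (φ : M →ₗ[K] A) (ψ : M →ₗ[K] B)
    (h : LinearMap.ker φ ≤ LinearMap.ker ψ) (p : Submodule K M) [FiniteDimensional K p] :
    finrank K (p.map φ) = finrank K ↥(p.map φ ⊓ (LinearMap.ker ψ).map φ) + finrank K (p.map ψ) := by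
  have e : p.map φ ⊓ (LinearMap.ker ψ).map φ = (p ⊓ LinearMap.ker ψ).map φ := by
    apply le_antisymm
    · rintro _ ⟨⟨f, hf, rfl⟩, Q, hQ, hQf⟩
      refine ⟨f, ⟨hf, ?_⟩, rfl⟩
      have : Q - f ∈ LinearMap.ker ψ := h (by rw [LinearMap.mem_ker, map_sub, hQf, sub_self])
      have := Submodule.sub_mem _ hQ this
      rwa [sub_sub_cancel] at this
    · exact le_inf (Submodule.map_mono inf_le_left) (Submodule.map_mono inf_le_right)
  have i : FiniteDimensional K ↥(p ⊓ LinearMap.ker ψ) :=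
    Submodule.finiteDimensional_of_le (inf_le_left : p ⊓ LinearMap.ker ψ ≤ p)
  have a := finrank_map_add_inf_ker φ p
  have b := finrank_map_add_inf_ker ψ p
  have c := finrank_map_add_inf_ker φ (p ⊓ LinearMap.ker ψ)
  rw [inf_assoc, inf_eq_right.mpr h] at c
  rw [e]
  omega

end TwoMaps

section PointsOnCurve

variable {r : ℕ} {k E F : Type*} [Field k] [Field E] [Field F] [Algebra k E] [Algebra k F]
  {ζ : Fin (r + 1) → E} {γ : Fin (r + 1) → F}

/-- The ideal, in the affine coordinate ring of the curve `ζ`, of the points `γ`. -/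
noncomputable def ptIdeal (k : Type*) {E F : Type*} [Field k] [Field E] [Field F] [Algebra k E]
    [Algebra k F] (ζ : Fin (r + 1) → E) (γ : Fin (r + 1) → F) : Submodule k E :=
  (LinearMap.ker (aeval (R := k) γ).toLinearMap).map (aeval (R := k) ζ).toLinearMap

theorem ptIdeal_le (h0 : ζ 0 = 1) : ptIdeal k ζ γ ≤ affO (linV k ζ) := by
  rintro _ ⟨Q, -, rfl⟩
  exact aeval_mem_affO h0 Q

theorem ptIdeal_mul (h0 : ζ 0 = 1) : ∀ u ∈ ptIdeal k ζ γ, ∀ x ∈ affO (linV k ζ),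
    u * x ∈ ptIdeal k ζ γ := by
  rintro _ ⟨Q, hQ, rfl⟩ x hx
  obtain ⟨f, rfl⟩ := exists_of_mem_affO h0 hx
  refine ⟨Q * f, ?_, map_mul (aeval ζ) Q f⟩
  have hQ : aeval γ Q = 0 := hQ
  change aeval γ (Q * f) = 0
  rw [map_mul, hQ, zero_mul]

theorem hf_ptIdeal (h : ∀ Q : MvPolynomial (Fin (r + 1)) k, aeval ζ Q = 0 → aeval γ Q = 0)
    (t : ℕ) : hf k ζ t = finrank k ↥(linV k ζ ^ t ⊓ ptIdeal k ζ γ) + hf k γ t := by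
  have i : FiniteDimensional k (homogeneousSubmodule (Fin (r + 1)) k t) :=
    (Submodule.fg_iff_finiteDimensional _).mp (homogeneousSubmodule_fg (Fin (r + 1)) k t)
  have := finrank_two_maps (aeval (R := k) ζ).toLinearMap (aeval (R := k) γ).toLinearMap
    (fun Q hQ => h Q hQ) (homogeneousSubmodule (Fin (r + 1)) k t)
  rw [← linV_pow_eq_map, ← linV_pow_eq_map] at this
  exact this

end PointsOnCurve

section CaseD

universe v

variable {r : ℕ} {k E : Type v} {F : Type*} [Field k] [Field E] [Field F] [Algebra k E]
  [Algebra k F] {ζ : Fin (r + 1) → E} {γ : Fin (r + 1) → F}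

/-- The genus bound when the points `γ` lie on a curve `ζ` of degree `s` and genus `p ≤ π`. -/
theorem caseD [CharZero k] (h0 : ζ 0 = 1)
    (hE : IntermediateField.adjoin k (Set.range ζ) = ⊤)
    (halg : ∀ x : E, IsIntegral k x → x ∈ (algebraMap k E).range)
    (hj : ∃ j : Fin r, Transcendental k (ζ j.succ)) {n s N d N0 : ℕ} {p π : ℤ}
    (h1 : hf k ζ 1 = n + 2) (hs1 : n + 1 ≤ s) (hs2 : s ≤ 2 * n)
    (hdim : ∀ t : ℕ, N ≤ t → (hf k ζ t : ℤ) = s * t + 1 - p)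
    (h : ∀ Q : MvPolynomial (Fin (r + 1)) k, aeval ζ Q = 0 → aeval γ Q = 0)
    (hγ0 : γ 0 = 1) (hd : ∀ t, N0 ≤ t → hf k γ t = d) (hpπ : p ≤ π) (hπ : π ≤ s - n - 1)
    (hds : s * s + 1 ≤ d) {r' : ℕ} (M : ℕ) :
    ∑ i ∈ Finset.range M, ((d : ℤ) - hf k γ (i + 1))
      ≤ Gstar r' d s π (-(binom2 (s - n - 1 - π + 1))) := by
  obtain ⟨hp, hdim', hlow⟩ := curve_hf h0 hE halg hj h1 hs1 hs2 hdim
  obtain ⟨y, hy, htr, hst⟩ := exists_noether h0 halg (t0 := s) (by omega) (by omega) hdim'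
  have hone := one_le_linV (k := k) h0
  have hd' : ∀ t, N0 ≤ t → finrank k ↥(linV k ζ ^ t)
      = finrank k ↥(linV k ζ ^ t ⊓ ptIdeal k ζ γ) + d := fun t ht => by
    have := hf_ptIdeal h t
    rwa [hd t ht] at this
  have hle : ∀ i, hf k γ i ≤ d := fun i => by
    rw [← hd (max i N0) (le_max_right _ _)]
    exact hf_mono hγ0 (le_max_left _ _)
  have hs0 : (0 : ℤ) < s := by omega
  refine caseD_num hs0 (by omega) hπ (by omega) (fun i => by exact_mod_cast hle i) ?_ ?_ M
  · intro i hi him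
    have hbot : linV k ζ ^ i ⊓ ptIdeal k ζ γ = ⊥ := by
      by_contra hne
      obtain ⟨f, ⟨hf1, hf2⟩, hf0⟩ := Submodule.exists_mem_ne_zero_of_ne_bot hne
      have a := le_of_mem_ideal (ptIdeal_mul h0) hdim' hd' hf0 hf1 hf2
      have b : (i : ℤ) * s ≤ d - 1 := (Int.le_ediv_iff_mul_le hs0).mp him
      zify at a
      linarith
    have e := hf_ptIdeal h i
    rw [hbot, finrank_bot, zero_add] at e
    rw [← e]
    refine le_trans ?_ (hlow i hi)
    have := max_le_max_right ((s : ℤ) - n - 1 - i + 1) hpπ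
    linarith
  · intro t ht
    have hts : (d : ℤ) ≤ t * s := by
      have := (Int.ediv_lt_iff_lt_mul hs0).mp (show ((d : ℤ) - 1) / s < t by omega)
      linarith
    have hst' : s ≤ t := by
      by_contra hcon
      have : t * s ≤ s * s := Nat.mul_le_mul_right s (by omega)
      zify at this hds
      linarith
    have hm0 := le_max_left (0 : ℤ) ((2 * π - (t * s - d)) / 2)
    have hm1 := le_max_right (0 : ℤ) ((2 * π - (t * s - d)) / 2)
    rcases (hle t).eq_or_lt with hc | hc
    · rw [hc]; linarith
    have e := hf_ptIdeal h t
    have e2 := hdim' t hst'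
    have key : 2 * ((d : ℤ) - hf k γ t) ≤ 2 * π - (t * s - d) := by
      by_cases hbot : linV k ζ ^ t ⊓ ptIdeal k ζ γ = ⊥
      · rw [hbot, finrank_bot, zero_add] at e
        rw [← e, e2]
        linarith
      · have a := clifford hone hy (ptIdeal_le h0) (ptIdeal_mul h0) htr halg hst hdim'
          (exists_frac_affO h0 hE) hd' hst' hbot e hc
        zify at e
        rw [e2] at e
        linarith
    omega

end CaseD

end GenusBound

/-! ### The genus bound -/

namespace GenusBound

open Module MvPolynomial

theorem isIntegral_mem_range {E : Type*} [Field E] [Algebra ℂ E] (x : E) (hx : IsIntegral ℂ x) :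
    x ∈ (algebraMap ℂ E).range :=
  minpoly.mem_range_of_degree_eq_one ℂ x
    (IsAlgClosed.degree_eq_one_of_irreducible ℂ (minpoly.irreducible hx))

section Nondegenerate

variable {r : ℕ} {E : Type} [Field E] [Algebra ℂ E] {ξ : Fin (r + 1) → E}

theorem hf_one_of_nondeg (h : Nondeg (homI ξ)) : hf ℂ ξ 1 = r + 1 := by
  have i : FiniteDimensional ℂ (homogeneousSubmodule (Fin (r + 1)) ℂ 1) :=
    (Submodule.fg_iff_finiteDimensional _).mp (homogeneousSubmodule_fg (Fin (r + 1)) ℂ 1)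
  have a := finrank_map_add_inf_ker (aeval (R := ℂ) ξ).toLinearMap
    (homogeneousSubmodule (Fin (r + 1)) ℂ 1)
  have hbot : homogeneousSubmodule (Fin (r + 1)) ℂ 1 ⊓
      LinearMap.ker (aeval (R := ℂ) ξ).toLinearMap = ⊥ := by
    rw [Submodule.eq_bot_iff]
    rintro f ⟨hf, hf0⟩
    exact h f hf ((mem_homI_homog ξ hf).mpr hf0)
  rw [hbot, finrank_bot, add_zero, ← linV_pow_eq_map] at a
  have b : finrank ℂ (homogeneousSubmodule (Fin (r + 1)) ℂ 1) = r + 1 := by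
    rw [homogeneousSubmodule_one_eq_span_X, finrank_span_eq_card (linearIndependent_X _ _),
      Fintype.card_fin]
  exact a.trans b

theorem exists_transcendental_of_two_le (h0 : ξ 0 = 1) (h : 2 ≤ hf ℂ ξ 1) :
    ∃ j : Fin r, Transcendental ℂ (ξ j.succ) := by
  by_contra! hcon
  have hall : ∀ j, ξ j ∈ Submodule.span ℂ {(1 : E)} := by
    intro j
    rw [Submodule.mem_span_singleton]
    refine Fin.cases ⟨1, by rw [h0, one_smul]⟩ (fun i => ?_) j
    have : IsAlgebraic ℂ (ξ i.succ) := by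
      by_contra hi; exact hcon i hi
    obtain ⟨c, hc⟩ := isIntegral_mem_range _ this.isIntegral
    exact ⟨c, by rw [← hc, Algebra.smul_def, mul_one]⟩
  have hle : linV ℂ ξ ^ 1 ≤ Submodule.span ℂ {(1 : E)} := by
    rw [pow_one, linV, Submodule.span_le]
    rintro _ ⟨j, rfl⟩
    exact hall j
  have := (Submodule.finrank_mono hle).trans (finrank_span_singleton (one_ne_zero (α := E))).le
  unfold hf at h
  omega

end Nondegenerate

/-- If three successive increments of the Hilbert function of the general hyperplane section are
equal to `σ ≤ s`, the curve lies on a surface of degree `s`, and the section of that surface gives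
the bound. -/
theorem bound_of_plateau {n s d N0 q σ : ℕ} {π : ℤ} {E F : Type} [Field E] [Field F] [Algebra ℂ E]
    [Algebra E F] [Algebra (KK (n + 2) ℂ) F] [Algebra ℂ F] [IsScalarTower ℂ (KK (n + 2) ℂ) F]
    [IsScalarTower ℂ E F] {ξ : Fin (n + 2 + 1) → E}
    (S : GenSec ℂ E (KK (n + 2) ℂ) F (uu (n + 2) ℂ) ξ) (h0 : ξ 0 = 1)
    [FiniteDimensional (KK (n + 2) ℂ) F]
    (hsurj : Function.Surjective (aeval (R := KK (n + 2) ℂ) (secX F ξ)))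
    (hj : ∃ j : Fin (n + 2), Transcendental ℂ (ξ j.succ))
    (hs1 : n + 1 ≤ s) (hs2 : s ≤ 2 * n) (hπ : π ≤ s - n - 1) (hds : s * s + 1 ≤ d)
    (hcurve : IsCurve (homI ξ)) (hnd : Nondeg (homI ξ))
    (hlt : NotInSurfDegLT (homI ξ) s) (hgt : NotInSurfSecGT (homI ξ) s π)
    (hd : ∀ t, N0 ≤ t → hf (KK (n + 2) ℂ) (secX F ξ) t = d)
    (hσ1 : 1 ≤ σ) (hσ : σ ≤ q + 1) (hσs : σ ≤ s)
    (e1 : hf (KK (n + 2) ℂ) (secX F ξ) (q + 1) = hf (KK (n + 2) ℂ) (secX F ξ) q + σ)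
    (e2 : hf (KK (n + 2) ℂ) (secX F ξ) (q + 2) = hf (KK (n + 2) ℂ) (secX F ξ) (q + 1) + σ)
    (e3 : hf (KK (n + 2) ℂ) (secX F ξ) (q + 3) = hf (KK (n + 2) ℂ) (secX F ξ) (q + 2) + σ)
    (r' M : ℕ) :
    ∑ i ∈ Finset.range M, ((d : ℤ) - hf (KK (n + 2) ℂ) (secX F ξ) (i + 1))
      ≤ Gstar r' d s π (-(binom2 (s - n - 1 - π + 1))) := by
  obtain ⟨E', _, _, ξ', h0', hE', htr', hspec, hne, s', hs', b, c, N, hpoly⟩ :=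
    exists_surface S hsurj hj hσ1 hσ e1 e2 e3
  have hle : homI ξ' ≤ homI ξ := homI_le hspec
  have hsurf : IsSurface (homI ξ') :=
    isSurface_homI hcurve (homI_lt h0 h0' hspec hne) htr'
  have hinv : SurfInv (homI ξ') s' (1 - b) (c - 1) := surfInv_homI ξ' hpoly
  have hss : s' = s := by
    by_contra hcon
    exact hlt _ _ _ _ hsurf hinv (by omega) hle
  subst hss
  have hb : 1 - b ≤ π := by
    by_contra hcon
    exact hgt _ _ _ hsurf hinv (by omega) hle
  have hj' : ∃ j : Fin (n + 2), Transcendental ℂ (ξ' j.succ) := by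
    obtain ⟨j, hj⟩ := hj
    exact ⟨j, transcendental_of_specializes hspec hj⟩
  have hnd' : Nondeg (homI ξ') := fun f hf hfI => hnd f hf (hle hfI)
  obtain ⟨E1, _, _, _, _, _, _, S1⟩ := exists_genSec ξ' h0' hj'
  have htr1 : Algebra.trdeg (KK (n + 2) ℂ) E1 = 1 := by
    have := S1.trdeg
    rw [htr', ← one_add_one_eq_two] at this
    exact (Cardinal.add_one_inj.mp this).symm
  have hk' : ∀ x : E', IsIntegral ℂ x → x ∈ (algebraMap ℂ E').range := isIntegral_mem_range
  have hone : hf (KK (n + 2) ℂ) (secX E1 ξ') 1 = n + 2 := by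
    have a := S1.hf_sec_one hk'
    have b := hf_one_of_nondeg hnd'
    omega
  have hchar : CharZero (KK (n + 2) ℂ) :=
    charZero_of_injective_algebraMap (algebraMap ℂ (KK (n + 2) ℂ)).injective
  obtain ⟨t0, ht0⟩ := S1.hf_sec_eq
  have hdim : ∀ t : ℕ, N + t0 + 1 ≤ t →
      (hf (KK (n + 2) ℂ) (secX E1 ξ') t : ℤ) = s' * t + 1 - (1 - b) := by
    intro t ht
    obtain ⟨t, rfl⟩ : ∃ t', t = t' + 1 := ⟨t - 1, by omega⟩
    have a := ht0 t (by omega)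
    have b1 := hpoly t (by omega)
    have b2 := hpoly (t + 1) (by omega)
    zify at a
    rw [b1, b2] at a
    have e : ((t + 1 : ℕ) : ℤ) * ((t + 1 : ℕ) + 1) / 2 = (t : ℤ) * (t + 1) / 2 + (t + 1) := by
      rw [show ((t + 1 : ℕ) : ℤ) * ((t + 1 : ℕ) + 1) = (t : ℤ) * (t + 1) + (t + 1) * 2 by
        push_cast; ring, Int.add_mul_ediv_right _ _ two_ne_zero]
    rw [e] at a
    push_cast at a ⊢
    linarith
  exact caseD (by rw [secX, h0', map_one]) (S1.adjoin_secX hE') (S1.algClosed hk' hE' htr1)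
    (S1.exists_transc hE' htr1) hone hs1 hs2 hdim (S1.transfer S hspec)
    (by rw [secX, h0, map_one]) hd hb hπ hds M

theorem genus_bound {n s d : ℕ} {π g : ℤ} (hn : 2 ≤ n) (hs1 : n + 1 ≤ s) (hs2 : s ≤ 2 * n)
    (hπ0 : 0 ≤ π) (hπ : π ≤ s - n - 1) (hd : d0 ((n + 2 : ℕ) : ℤ) < d)
    (IC : Ideal (MPoly (n + 2 + 1))) (hcurve : IsCurve IC) (hnd : Nondeg IC)
    (hinv : CurveInv IC d g) (hlt : NotInSurfDegLT IC s) (hgt : NotInSurfSecGT IC s π) :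
    g ≤ Gstar (n + 2 : ℕ) d s π (-(binom2 (s - n - 1 - π + 1))) := by
  have hX0 : (X 0 : MPoly (n + 2 + 1)) ∉ IC := fun h =>
    X_ne_zero (R := ℂ) (0 : Fin (n + 2 + 1)) (hnd _ (isHomogeneous_X ℂ 0) h)
  obtain ⟨E, _, _, ξ, h0, hE, rfl⟩ := exists_model IC hcurve.1 hcurve.2.1 hX0
  obtain ⟨N', hN'⟩ := hinv
  obtain ⟨N, hN⟩ : ∃ N : ℕ, ∀ t : ℕ, N ≤ t → (hf ℂ ξ t : ℤ) = d * t + 1 - g := by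
    refine ⟨N'.toNat, fun t ht => ?_⟩
    have := hN' t (by omega)
    rwa [hilbZ, hilbNat_homI] at this
  have hC1 := hf_one_of_nondeg hnd
  have hj := exists_transcendental_of_two_le h0 (by omega)
  have hk : ∀ x : E, IsIntegral ℂ x → x ∈ (algebraMap ℂ E).range := isIntegral_mem_range
  obtain ⟨F, _, _, _, _, _, _, S⟩ := exists_genSec ξ h0 hj
  have hγ0 : secX F ξ 0 = 1 := by rw [secX, h0, map_one]
  have hstep : ∀ t, N ≤ t → hf ℂ ξ (t + 1) = hf ℂ ξ t + d := by
    intro t ht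
    have a := hN t ht
    have b := hN (t + 1) (by omega)
    zify
    rw [a, b]; push_cast; ring
  set h := hf (KK (n + 2) ℂ) (secX F ξ) with hh
  have hmono : ∀ t, h t ≤ h (t + 1) := fun t => hf_mono hγ0 (Nat.le_succ t)
  obtain ⟨M, hM⟩ := eventually_const_of_bounded (h := h) (B := d) (N := N + 1) hmono
    (fun t ht => by
      obtain ⟨t', rfl⟩ : ∃ t', t = t' + 1 := ⟨t - 1, by omega⟩
      have a : h (t' + 1) + hf ℂ ξ t' ≤ hf ℂ ξ (t' + 1) := S.hf_sec_le t'
      have b := hstep t' (by omega)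
      omega)
  have htop : linV (KK (n + 2) ℂ) (secX F ξ) ^ M = ⊤ :=
    linV_pow_eq_top hγ0 (S.adjoin_secX hE) hM le_rfl
  have hfdF : FiniteDimensional (KK (n + 2) ℂ) F := by
    have : FiniteDimensional (KK (n + 2) ℂ) ↥(linV (KK (n + 2) ℂ) (secX F ξ) ^ M) := inferInstance
    rw [htop] at this
    exact Module.Finite.equiv (Submodule.topEquiv (R := KK (n + 2) ℂ) (M := F))
  have hsurj : Function.Surjective (aeval (R := KK (n + 2) ℂ) (secX F ξ)) := by
    intro x
    have hx : x ∈ linV (KK (n + 2) ℂ) (secX F ξ) ^ M := htop ▸ Submodule.mem_top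
    obtain ⟨f, -, hf⟩ := exists_of_mem_linV_pow hx
    exact ⟨f, hf⟩
  have hd' : ∀ t, M ≤ t → h t = d := by
    obtain ⟨t0, ht0⟩ := S.hf_sec_eq
    have a : h (N + M + t0 + 1) + hf ℂ ξ (N + M + t0) = hf ℂ ξ (N + M + t0 + 1) :=
      ht0 (N + M + t0) (by omega)
    have b := hstep (N + M + t0) (by omega)
    have c := hM (N + M + t0 + 1) (by omega)
    intro t ht
    rw [hM t ht]
    omega
  have hh0 : h 0 = 1 := hf_zero
  have hh1 : h 1 = n + 2 := by
    have a : h 1 + 1 = hf ℂ ξ 1 := S.hf_sec_one hk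
    omega
  have hg : g ≤ ∑ i ∈ Finset.range N, ((d : ℤ) - h (i + 1)) := by
    have key : ∀ m : ℕ, 1 + ∑ i ∈ Finset.range m, (h (i + 1) : ℤ) ≤ hf ℂ ξ m := by
      intro m
      induction m with
      | zero => simp [hf_zero]
      | succ m ih =>
        rw [Finset.sum_range_succ]
        have a : h (m + 1) + hf ℂ ξ m ≤ hf ℂ ξ (m + 1) := S.hf_sec_le m
        zify at a
        linarith
    have a := key N
    rw [hN N le_rfl] at a
    rw [Finset.sum_sub_distrib, Finset.sum_const, Finset.card_range, nsmul_eq_mul]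
    linarith
  refine hg.trans ?_
  by_cases hplat : ∀ q σ, 1 ≤ σ → σ ≤ q + 1 → σ ≤ s → h (q + 1) = h q + σ →
      h (q + 2) = h (q + 1) + σ → h (q + 3) ≠ h (q + 2) + σ
  · have hanti : ∀ q, h (q + 1) ≤ h q + (q + 1) → ∀ q', q ≤ q' →
        h (q' + 2) + h q' ≤ h (q' + 1) + h (q' + 1) := by
      intro q hq q' hqq
      have hone := one_le_linV (k := KK (n + 2) ℂ) hγ0
      obtain ⟨y, hy, he⟩ := baby_green hone hq
      exact incr_antitone hone (mulStep_persist hone hy he (show q ≤ q' + 1 by omega)) hy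
    refine (caseC hn hs1 hs2 (d := d) (by omega) hh0 hh1 hmono
      (fun t ht => by rw [hd' t ht]) hanti hplat N).trans ?_
    have hb : 0 ≤ binom2 ((s : ℤ) - n - 1 - π + 1) := by
      have := two_binom2 ((s : ℤ) - n - 1 - π + 1)
      nlinarith
    have hd0 : 0 ≤ d0 ((n + 2 : ℕ) : ℤ) := le_trans (by positivity) (d0_ge hn)
    have hm : 0 ≤ ((d : ℤ) - 1) / s := Int.ediv_nonneg (by omega) (by omega)
    have hmx := le_max_left (0 : ℤ) ((2 * π - (s - 1 - ((d : ℤ) - 1) % s)) / 2)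
    rw [Gstar]
    nlinarith [mul_nonneg hm hπ0]
  · push Not at hplat
    obtain ⟨q, σ, hσ1, hσ, hσs, e1, e2, e3⟩ := hplat
    have hds : s * s + 1 ≤ d := by
      have a := d0_ge hn
      have b : s * s ≤ (2 * n) * (2 * n) := Nat.mul_le_mul hs2 hs2
      have c : (n : ℤ) ^ 3 = n * (n * n) := by ring
      zify at b ⊢
      nlinarith
    exact bound_of_plateau S h0 hsurj hj hs1 hs2 hπ hds hcurve hnd hlt hgt hd' hσ1 hσ hσs
      e1 e2 e3 _ _

end GenusBound

/-- Theorem 1.1(b).  Under the hypotheses of Theorem 1.1, the arithmetic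
genus of `C` satisfies `p_a(C) ≤ G*(r,d,s,π, -binom(π₀-π+1, 2))`. -/
theorem statement_1 (r : ℕ) (d s π g : ℤ) (hr : 4 ≤ r)
    (hs1 : (r : ℤ) - 1 ≤ s) (hs2 : s ≤ 2 * (r : ℤ) - 4)
    (hπ1 : 0 ≤ π) (hπ2 : π ≤ s - (r : ℤ) + 1)
    (hd : d0 (r : ℤ) < d)
    (IC : Ideal (MPoly (r + 1)))
    (hcurve : IsCurve IC) (hnd : Nondeg IC) (hinv : CurveInv IC d g)
    (h1 : NotInSurfDegLT IC s) (h2 : NotInSurfSecGT IC s π) :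
    g ≤ Gstar (r : ℤ) d s π (-(binom2 (s - (r : ℤ) + 1 - π + 1))) := by
  obtain ⟨n, rfl⟩ : ∃ n, r = n + 2 := ⟨r - 2, by omega⟩
  obtain ⟨s', rfl⟩ : ∃ s' : ℕ, s = s' := ⟨s.toNat, by omega⟩
  have hn : 2 ≤ n := by omega
  have hd0 : 0 ≤ d0 ((n + 2 : ℕ) : ℤ) := le_trans (by positivity) (GenusBound.d0_ge hn)
  obtain ⟨d', rfl⟩ : ∃ d' : ℕ, d = d' := ⟨d.toNat, by omega⟩
  have key := GenusBound.genus_bound hn (by omega) (by omega) hπ1 (by omega) hd IC hcurve hnd hinv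
    h1 h2
  have e : (s' : ℤ) - ((n + 2 : ℕ) : ℤ) + 1 - π + 1 = s' - n - 1 - π + 1 := by
    push_cast
    ring
  rw [e]
  exact key
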